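/- Let S be a connected topological 2-manifold without boundary (a Hausdorff, second-countable topological space locally homeomorphic to ℝ²), and let C ⊆ S be a closed connected subset which, in the subspace topology, is a topological 2-manifold with boundary (every point of C has a neighborhood in C homeomorphic to ℝ² or to the closed half-plane {(x,y) ∈ ℝ² : y ≥ 0}). Assume there exists a loop c : S¹ → C such that the composition of c with the inclusion C ↪ S is null-homotopic in S, but c is not null-homotopic in C. Then some connected component of S \ int(C) (the complement of the interior of C in S) is homeomorphic to the closed unit disc D². (Lemma A.3.) -/

import Mathlib

/-!
Pass to the universal cover `p : M → S`, a simply connected surface, and let `B = p ⁻¹' C`, a closed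
subsurface with boundary. The contraction of the loop lifts to a homotopy in `M`, with compact image
`K`, from a constant to a loop lying in one component `Q` of `B`. Since `M` is simply connected,
every component `V` of `M \ Q` is bounded by a connected 1-manifold, i.e. by a line or by a Jordan
curve. If no such `V` is bounded by a Jordan curve, contained in `K` and subject to `NoG V` (see
below), then `K` can be retracted into `Q` one `V` at a time (`IsBSurface.exists_fill`): the part of
a line met by `K` lies in an arc, an absolute retract, and a circle is a retract of `closure V ∩ K`
unless `V ⊆ K` and `NoG V` (`exists_retract_jordan`).
Pushing the retracted homotopy down to `C` would then contract the loop in `C`. Hence some hole `V`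
of `Q` has compact closure and satisfies `NoG V`, and an innermost choice among the finitely many
components of `B` inside it (`IsBSurface.exists_innermost`) gives a closed disc that is a component
of `(interior B)ᶜ` or of `B`. Such a disc projects homeomorphically onto a component of
`(interior C)ᶜ` or of `C` (`component_disc`), because a deck transformation preserving a disc has a
fixed point by Brouwer's theorem. The second case is absurd: `C` would be a disc, and the loop
contractible in it.

The plane topology behind this is developed on `M` itself, through circle-valued maps and their
logarithms (Eilenberg's method) in place of homology. `LocEq` compares the windings of two maps at
a puncture; simple connectedness makes the local windings `sigma M x` coherent. Whether a closed set
separates two points is detected by the existence of a logarithm on it of a map with opposite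
singularities at these points (`hasLog_theta`, `mem_component_of_hasLog`), which yields
Janiszewski's theorem and its consequences for arcs and crosscuts. They are local to an open set `V`
satisfying `NoG V`: a single singularity in `V` is always visible from outside `V`, as it is for
bounded `V` in the plane and for every `V` in the sphere, but not for the exterior of a disc in the
plane. `IsCell V w U γ` records the inside `U` of a Jordan curve `γ`. Cells
can be cut by crosscuts into arbitrarily small cells (`cuttable_small`), and cutting two cells
alternately, in matching combinatorial patterns, produces a homeomorphism between them
(`IsCell.homeo`); comparison with the round disc is the Schoenflies theorem (`IsCell.homeo_disc`).
-/

open Set Topology Filter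

namespace SurfaceDisc

/-! ### Circle-valued maps and their logarithms -/

/-- `f` has a continuous real logarithm on `s`: `f = exp (i φ)` there. -/
def HasLog {X : Type*} [TopologicalSpace X] (f : X → Circle) (s : Set X) : Prop :=
  ∃ φ : X → ℝ, ContinuousOn φ s ∧ ∀ x ∈ s, f x = Circle.exp (φ x)

/-- Every circle-valued map on `s` has a logarithm. -/
def AllLog {X : Type*} [TopologicalSpace X] (s : Set X) : Prop :=
  ∀ f : X → Circle, ContinuousOn f s → HasLog f s

section Basic

variable {X Y : Type*} [TopologicalSpace X] [TopologicalSpace Y] {f g : X → Circle} {s t : Set X}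

lemma HasLog.continuousOn (h : HasLog f s) : ContinuousOn f s := by
  obtain ⟨φ, hc, he⟩ := h
  exact (Circle.exp.continuous.comp_continuousOn hc).congr he

lemma HasLog.mono (h : HasLog f s) (hts : t ⊆ s) : HasLog f t := by
  obtain ⟨φ, hc, he⟩ := h
  exact ⟨φ, hc.mono hts, fun x hx => he x (hts hx)⟩

lemma HasLog.congr (h : HasLog f s) (hfg : ∀ x ∈ s, g x = f x) : HasLog g s := by
  obtain ⟨φ, hc, he⟩ := h
  exact ⟨φ, hc, fun x hx => (hfg x hx).trans (he x hx)⟩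

lemma HasLog.mul (hf : HasLog f s) (hg : HasLog g s) : HasLog (fun x => f x * g x) s := by
  obtain ⟨φ, hc, he⟩ := hf
  obtain ⟨ψ, hc', he'⟩ := hg
  exact ⟨fun x => φ x + ψ x, hc.add hc', fun x hx => by
    simp only [he x hx, he' x hx, Circle.exp_add]⟩

lemma HasLog.inv (hf : HasLog f s) : HasLog (fun x => (f x)⁻¹) s := by
  obtain ⟨φ, hc, he⟩ := hf
  exact ⟨fun x => -φ x, hc.neg, fun x hx => by simp only [he x hx, Circle.exp_neg]⟩

lemma HasLog.div (hf : HasLog f s) (hg : HasLog g s) : HasLog (fun x => f x / g x) s := by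
  simpa only [div_eq_mul_inv] using hf.mul hg.inv

lemma HasLog.zpow (hf : HasLog f s) (n : ℤ) : HasLog (fun x => f x ^ n) s := by
  obtain ⟨φ, hc, he⟩ := hf
  exact ⟨fun x => n * φ x, continuousOn_const.mul hc, fun x hx => by
    simp only [he x hx]; rw [← zsmul_eq_mul, Circle.exp_zsmul]⟩

lemma hasLog_one : HasLog (fun _ : X => (1 : Circle)) s :=
  ⟨fun _ => 0, continuousOn_const, fun _ _ => by simp⟩

lemma hasLog_exp {φ : X → ℝ} (h : ContinuousOn φ s) : HasLog (fun x => Circle.exp (φ x)) s :=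
  ⟨φ, h, fun _ _ => rfl⟩

lemma HasLog.comp {h : Y → X} {r : Set Y} (hf : HasLog f s) (hh : ContinuousOn h r)
    (hm : MapsTo h r s) : HasLog (fun y => f (h y)) r := by
  obtain ⟨φ, hc, he⟩ := hf
  exact ⟨fun y => φ (h y), hc.comp hh hm, fun y hy => he _ (hm hy)⟩

lemma hasLog_of_ne_neg_one (hf : ContinuousOn f s) (h : ∀ x ∈ s, f x ≠ -1) : HasLog f s := by
  refine ⟨fun x => (f x : ℂ).arg, ?_, fun x _ => by simp⟩
  intro x hx
  have h1 : ContinuousAt Complex.arg (f x : ℂ) := by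
    apply Complex.continuousAt_arg
    rw [Complex.mem_slitPlane_iff_arg]
    refine ⟨fun h2 => h x hx ?_, by simp⟩
    have := Circle.exp_arg (f x)
    rw [h2] at this
    rw [← this]
    ext
    simp
  exact ContinuousAt.comp_continuousWithinAt (f := fun y => (f y : ℂ)) h1
    ((continuous_subtype_val.comp_continuousOn hf :) x hx)

/-- Two logarithms of the same map on a preconnected set differ by a multiple of `2π`. -/
lemma log_unique {φ ψ : X → ℝ} (hs : IsPreconnected s) (hφ : ContinuousOn φ s)
    (hψ : ContinuousOn ψ s) (h : ∀ x ∈ s, Circle.exp (φ x) = Circle.exp (ψ x)) :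
    ∃ n : ℤ, ∀ x ∈ s, φ x = ψ x + n * (2 * Real.pi) := by
  rcases s.eq_empty_or_nonempty with rfl | ⟨a, ha⟩
  · exact ⟨0, by simp⟩
  have hpi := Real.pi_pos
  have key : ∀ x ∈ s, ∃ m : ℤ, φ x = ψ x + m * (2 * Real.pi) := fun x hx =>
    Circle.exp_eq_exp.1 (h x hx)
  obtain ⟨n, hn⟩ := key a ha
  refine ⟨n, fun x hx => ?_⟩
  -- the quotient of the difference by `2π` is integer-valued and continuous
  have hc : ContinuousOn (fun x => Int.floor ((φ x - ψ x) / (2 * Real.pi) + 1 / 2)) s := by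
    intro y hy
    obtain ⟨m, hm⟩ := key y hy
    have hy' : (φ y - ψ y) / (2 * Real.pi) + 1 / 2 = m + 1 / 2 := by rw [hm]; field_simp; ring
    have : ContinuousWithinAt (fun x => (φ x - ψ x) / (2 * Real.pi) + 1 / 2) s y :=
      ((((hφ.sub hψ).div_const _).add continuousOn_const) y hy)
    have hev : ∀ᶠ z in 𝓝[s] y, (φ z - ψ z) / (2 * Real.pi) + 1 / 2 ∈ Ioo (m : ℝ) (m + 1) := by
      apply this.eventually
      apply isOpen_Ioo.mem_nhds
      beta_reduce
      rw [hy']; constructor <;> linarith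
    apply (continuousWithinAt_const (b := m)).congr_of_eventuallyEq
    · filter_upwards [hev] with z hz
      exact Int.floor_eq_iff.2 ⟨hz.1.le, hz.2⟩
    · rw [hy']; exact Int.floor_eq_iff.2 ⟨by linarith, by linarith⟩
  have hconst := hs.constant hc hx ha
  obtain ⟨m, hm⟩ := key x hx
  have e1 : (φ x - ψ x) / (2 * Real.pi) + 1 / 2 = m + 1 / 2 := by rw [hm]; field_simp; ring
  have e2 : (φ a - ψ a) / (2 * Real.pi) + 1 / 2 = n + 1 / 2 := by rw [hn]; field_simp; ring
  have f1 : Int.floor ((m : ℝ) + 1 / 2) = m := Int.floor_eq_iff.2 ⟨by linarith, by linarith⟩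
  have f2 : Int.floor ((n : ℝ) + 1 / 2) = n := Int.floor_eq_iff.2 ⟨by linarith, by linarith⟩
  simp only [e1, e2, f1, f2] at hconst
  rw [hm, hconst]

lemma circle_exp_add_int (t : ℝ) (n : ℤ) :
    Circle.exp (t + n * (2 * Real.pi)) = Circle.exp t :=
  Circle.exp_eq_exp.2 ⟨n, rfl⟩

/-- Logarithms on two closed sets with preconnected intersection can be matched up. -/
lemma HasLog.union (hs : IsClosed s) (ht : IsClosed t) (hst : IsPreconnected (s ∩ t))
    (h1 : HasLog f s) (h2 : HasLog f t) : HasLog f (s ∪ t) := by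
  classical
  obtain ⟨φ, hc, he⟩ := h1
  obtain ⟨ψ, hc', he'⟩ := h2
  obtain ⟨n, hn⟩ := log_unique hst (hc.mono inter_subset_left) (hc'.mono inter_subset_right)
    (fun x hx => (he x hx.1).symm.trans (he' x hx.2))
  refine ⟨fun x => if x ∈ s then φ x else ψ x + n * (2 * Real.pi), ?_, ?_⟩
  · apply ContinuousOn.union_of_isClosed _ _ hs ht
    · exact hc.congr fun x hx => by simp [hx]
    · refine (hc'.add (continuousOn_const (c := (n : ℝ) * (2 * Real.pi)))).congr fun x hx => ?_
      by_cases hxs : x ∈ s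
      · simp [hxs, hn x ⟨hxs, hx⟩]
      · simp [hxs]
  · intro x hx
    by_cases hxs : x ∈ s
    · simp [hxs, he x hxs]
    · simp [hxs, he' x (hx.resolve_left hxs)]

/-- On open sets with nothing to match, logarithms glue. -/
lemma HasLog.union_disjoint (hs : IsClosed s) (ht : IsClosed t) (hst : Disjoint s t)
    (h1 : HasLog f s) (h2 : HasLog f t) : HasLog f (s ∪ t) :=
  h1.union hs ht (by rw [hst.inter_eq]; exact isPreconnected_empty) h2

lemma exists_extend [NormalSpace X] {φ : X → ℝ} (hs : IsClosed s) (hφ : ContinuousOn φ s) :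
    ∃ ψ : X → ℝ, Continuous ψ ∧ ∀ x ∈ s, ψ x = φ x := by
  obtain ⟨G, hG⟩ := ContinuousMap.exists_restrict_eq (Y := ℝ) hs ⟨fun x : s => φ x, continuousOn_iff_continuous_domRestrict.1 hφ⟩
  exact ⟨G, G.continuous, fun x hx => DFunLike.congr_fun hG ⟨x, hx⟩⟩

lemma HasLog.exists_extend [NormalSpace X] (h : HasLog f s) (hs : IsClosed s) :
    ∃ φ : X → ℝ, Continuous φ ∧ ∀ x ∈ s, f x = Circle.exp (φ x) := by
  obtain ⟨φ, hc, he⟩ := h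
  obtain ⟨ψ, h1, h2⟩ := SurfaceDisc.exists_extend hs hc
  exact ⟨ψ, h1, fun x hx => by rw [h2 x hx, he x hx]⟩

/-- A logarithm on a closed set extends to a neighbourhood. -/
lemma HasLog.nhds [NormalSpace X] (h : HasLog f s) (hs : IsClosed s) {U : Set X} (hU : IsOpen U)
    (hsU : s ⊆ U) (hf : ContinuousOn f U) : ∃ V, IsOpen V ∧ s ⊆ V ∧ V ⊆ U ∧ HasLog f V := by
  obtain ⟨φ, hc, he⟩ := h.exists_extend hs
  have hc2 : ContinuousOn (fun x => f x / Circle.exp (φ x)) U :=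
    hf.div' (Circle.exp.continuous.comp hc).continuousOn
  have ho := hc2.isOpen_inter_preimage hU (isOpen_compl_singleton (x := (-1 : Circle)))
  refine ⟨_, ho, fun x hx => ⟨hsU hx, ?_⟩, inter_subset_left, ?_⟩
  · simp only [mem_preimage, mem_compl_iff, mem_singleton_iff, he x hx, div_self']
    intro h
    have := congrArg (fun z : Circle => (z : ℂ)) h
    norm_num at this
  · have := (hasLog_of_ne_neg_one (hc2.mono inter_subset_left) fun x hx => hx.2).mul
      (hasLog_exp hc.continuousOn)
    exact this.congr fun x _ => by simp

lemma AllLog.image {h : Y → X} {r : Set Y} (hr : AllLog r) (hh : ContinuousOn h r) {k : X → Y}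
    (hk : ContinuousOn k (h '' r)) (hkh : ∀ y ∈ r, k (h y) = y) : AllLog (h '' r) := by
  intro f hf
  have h1 := hr (fun y => f (h y)) (hf.comp hh (mapsTo_image h r))
  have hm : MapsTo k (h '' r) r := by rintro _ ⟨y, hy, rfl⟩; rwa [hkh y hy]
  refine (h1.comp hk hm).congr ?_
  rintro _ ⟨y, hy, rfl⟩
  rw [hkh y hy]

end Basic

section Contractible

/-- Circle-valued maps on contractible spaces have logarithms. -/
lemma exists_log_of_contractible {A : Type*} [TopologicalSpace A] [ContractibleSpace A]
    (f : A → Circle) (hf : Continuous f) : ∃ φ : A → ℝ, Continuous φ ∧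
      ∀ x, f x = Circle.exp (φ x) := by
  obtain ⟨a, ⟨H⟩⟩ := (contractible_iff_id_nullhomotopic A).1 inferInstance
  let K : C(unitInterval × A, Circle) := ⟨fun p => f (H.symm p), by fun_prop⟩
  have h0 : ∀ x, K (0, x) = Circle.exp ((ContinuousMap.const A (f a : ℂ).arg) x) := by
    intro x; simp [K]
  let L := Circle.isCoveringMap_exp.liftHomotopy K _ h0
  refine ⟨fun x => L (1, x), by fun_prop, fun x => ?_⟩
  have := congrFun (Circle.isCoveringMap_exp.liftHomotopy_lifts K _ h0) (1, x)
  have h1 : K (1, x) = f x := by simp [K]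
  exact h1.symm.trans this.symm

lemma allLog_of_convex {E : Type*} [AddCommGroup E] [Module ℝ E] [TopologicalSpace E]
    [IsTopologicalAddGroup E] [ContinuousSMul ℝ E] {s : Set E} (hs : Convex ℝ s) : AllLog s := by
  classical
  intro f hf
  rcases s.eq_empty_or_nonempty with rfl | hne
  · exact ⟨fun _ => 0, continuousOn_const, by simp⟩
  have := hs.contractibleSpace hne
  obtain ⟨φ, h1, h2⟩ := exists_log_of_contractible (fun x : s => f x) (continuousOn_iff_continuous_domRestrict.1 hf)
  refine ⟨fun x => if h : x ∈ s then φ ⟨x, h⟩ else 0, ?_, fun x hx => ?_⟩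
  · rw [continuousOn_iff_continuous_domRestrict]
    convert! h1 with x
    simp
  · simpa [hx] using h2 ⟨x, hx⟩

lemma allLog_univ {X : Type*} [TopologicalSpace X] [SimplyConnectedSpace X]
    [LocallyPathConnectedSpace X] : AllLog (univ : Set X) := by
  intro f hf
  rw [continuousOn_univ] at hf
  obtain ⟨a⟩ : Nonempty X := inferInstance
  obtain ⟨F, ⟨-, hF⟩, -⟩ := Circle.isCoveringMap_exp.existsUnique_continuousMap_lifts
    (⟨f, hf⟩ : C(X, Circle)) (a₀ := a) (e₀ := (f a : ℂ).arg) (by simp)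
  exact ⟨F, F.continuous.continuousOn, fun x _ => (congrFun hF x).symm⟩

end Contractible

/-! ### Winding around a puncture in the plane -/

/-- The direction `z / |z|` of a complex number (and `1` at the origin). -/
noncomputable def dir (z : ℂ) : Circle := Circle.exp z.arg

lemma coe_dir {z : ℂ} (hz : z ≠ 0) : (dir z : ℂ) = z / ‖z‖ := by
  have h := Complex.norm_mul_exp_arg_mul_I z
  have h0 : (‖z‖ : ℂ) ≠ 0 := by simpa using hz
  rw [dir, Circle.coe_exp, eq_div_iff h0, mul_comm, h]

lemma continuousOn_dir : ContinuousOn dir {0}ᶜ := by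
  rw [continuousOn_iff_continuous_domRestrict]
  refine continuous_induced_rng.2 ?_
  have : Continuous fun z : ({0}ᶜ : Set ℂ) => (z : ℂ) / (‖(z : ℂ)‖ : ℂ) := by
    refine Continuous.div (by fun_prop) (by fun_prop) fun z => ?_
    have : (z : ℂ) ≠ 0 := z.2
    simpa using this
  convert! this with z
  exact coe_dir z.2

lemma dir_mul {z w : ℂ} (hz : z ≠ 0) (hw : w ≠ 0) : dir (z * w) = dir z * dir w := by
  ext
  rw [Circle.coe_mul, coe_dir hz, coe_dir hw, coe_dir (mul_ne_zero hz hw)]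
  simp only [norm_mul, Complex.ofReal_mul]
  ring

lemma dir_div {z w : ℂ} (hz : z ≠ 0) (hw : w ≠ 0) : dir (z / w) = dir z / dir w := by
  rw [eq_div_iff_mul_eq', ← dir_mul (div_ne_zero hz hw) hw, div_mul_cancel₀ _ hw]

lemma dir_ofReal_mul {r : ℝ} (hr : 0 < r) (z : ℂ) : dir (r * z) = dir z := by
  simp [dir, Complex.arg_real_mul z hr]

lemma dir_coe (c : Circle) : dir (c : ℂ) = c := by simp [dir]

lemma hasLog_dir_slit : HasLog dir Complex.slitPlane :=
  ⟨Complex.arg, fun _ hz => (Complex.continuousAt_arg hz).continuousWithinAt, fun _ _ => rfl⟩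

lemma continuousOn_dir_sub (a : ℂ) : ContinuousOn (fun z => dir (z - a)) {a}ᶜ :=
  continuousOn_dir.comp (by fun_prop) fun z hz => by simpa [sub_eq_zero] using hz

/-- A power of the winding map `dir` has a logarithm on a circle only if the exponent is `0`. -/
lemma eq_zero_of_hasLog_sphere {r : ℝ} (hr : 0 < r) {n : ℤ}
    (h : HasLog (fun z => dir z ^ n) (Metric.sphere 0 r)) : n = 0 := by
  obtain ⟨φ, hc, he⟩ := h
  have hm : ∀ t : ℝ, (r : ℂ) * (Circle.exp t : ℂ) ∈ Metric.sphere (0 : ℂ) r := by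
    intro t; simp [abs_of_pos hr]
  have hc1 : Continuous fun t : ℝ => φ (r * (Circle.exp t : ℂ)) :=
    hc.comp_continuous (by fun_prop) hm
  obtain ⟨m, hm'⟩ := log_unique (φ := fun t : ℝ => φ (r * (Circle.exp t : ℂ)))
    (ψ := fun t : ℝ => n * t) isPreconnected_univ hc1.continuousOn (by fun_prop) (fun t _ => by
      rw [← he _ (hm t)]
      simp only [dir_ofReal_mul hr, dir_coe]
      rw [← zsmul_eq_mul, Circle.exp_zsmul])
  have h0 := hm' 0 trivial
  have h1 := hm' (2 * Real.pi) trivial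
  simp only [Circle.exp_zero, Circle.exp_two_pi] at h0 h1
  have : (n : ℝ) * (2 * Real.pi) = 0 := by linarith
  have hpi := Real.pi_pos
  have := (mul_eq_zero.1 this).resolve_right (by positivity)
  exact_mod_cast this

/-- Every circle-valued map on a punctured disc is a power of `dir` up to a logarithm. -/
lemma exists_deg_ball {r : ℝ} {f : ℂ → Circle} (hf : ContinuousOn f (Metric.ball 0 r \ {0})) :
    ∃ n : ℤ, HasLog (fun z => f z / dir z ^ n) (Metric.ball 0 r \ {0}) := by
  rcases le_or_gt r 0 with hr | hr
  · refine ⟨0, fun _ => 0, continuousOn_const, fun x hx => ?_⟩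
    simp [Metric.ball_eq_empty.2 hr] at hx
  let H : Set ℂ := {w | w.re < Real.log r}
  have hH : Convex ℝ H := convex_halfSpace_re_lt _
  have hmap : ∀ w ∈ H, Complex.exp w ∈ Metric.ball (0 : ℂ) r \ {0} := by
    intro w hw
    refine ⟨?_, Complex.exp_ne_zero w⟩
    rw [mem_ball_zero_iff, Complex.norm_exp]
    exact (Real.lt_log_iff_exp_lt hr).1 hw
  obtain ⟨φ, hc, he⟩ := allLog_of_convex hH (fun w => f (Complex.exp w))
    (hf.comp (by fun_prop) hmap)
  have hper : ∀ w ∈ H, w + 2 * Real.pi * Complex.I ∈ H := by intro w hw; simpa [H] using hw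
  obtain ⟨n, hn⟩ := log_unique (φ := fun w => φ (w + 2 * Real.pi * Complex.I)) (ψ := φ)
    hH.isPreconnected (hc.comp (by fun_prop) hper) hc (fun w hw => by
      rw [← he w hw, ← he _ (hper w hw)]
      simp only [Complex.exp_periodic w])
  let Ψ : ℂ → ℝ := fun w => φ w - n * w.im
  have hΨc : ContinuousOn Ψ H := hc.sub (by fun_prop)
  have hΨ : ∀ w ∈ H, Ψ (w + 2 * Real.pi * Complex.I) = Ψ w := by
    intro w hw
    simp only [Ψ, hn w hw]
    simp
    ring
  have hlog : ∀ z ∈ Metric.ball (0 : ℂ) r \ {0}, Complex.log z ∈ H := by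
    intro z hz
    have h0 : z ≠ 0 := hz.2
    simp only [H, mem_ofPred_eq, Complex.log_re]
    exact Real.log_lt_log (by simpa using h0) (by simpa using hz.1)
  refine ⟨n, fun z => Ψ (Complex.log z), ?_, ?_⟩
  · have hop : IsOpen (Metric.ball (0 : ℂ) r \ {0}) := Metric.isOpen_ball.sdiff isClosed_singleton
    have hHo : IsOpen H := isOpen_lt Complex.continuous_re continuous_const
    intro z hz
    apply ContinuousAt.continuousWithinAt
    have h0 : z ≠ 0 := hz.2
    by_cases hs : z ∈ Complex.slitPlane
    · exact ContinuousAt.comp (hΨc.continuousAt (hHo.mem_nhds (hlog z hz)))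
        (continuousAt_clog hs)
    · -- near the negative axis use the branch `log (-z) ± π i`, with the same values of `Ψ`
      have hs' : -z ∈ Complex.slitPlane := by
        rw [Complex.mem_slitPlane_iff, not_or, not_lt, not_not] at hs
        rw [Complex.mem_slitPlane_iff]
        left
        have : z.re ≠ 0 := fun h => h0 (Complex.ext h hs.2)
        simpa using lt_of_le_of_ne hs.1 this
      have hneg : ∀ y ∈ Metric.ball (0 : ℂ) r \ {0},
          Complex.log (-y) + Real.pi * Complex.I ∈ H := by
        intro y hy
        have := hlog (-y) (by simpa using hy)
        simpa [H] using this
      have hc2 : ContinuousAt (fun y => Ψ (Complex.log (-y) + Real.pi * Complex.I)) z := by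
        refine ContinuousAt.comp (f := fun y : ℂ => Complex.log (-y) + Real.pi * Complex.I)
          (hΨc.continuousAt (hHo.mem_nhds (hneg z hz))) ?_
        exact (ContinuousAt.comp (f := fun y : ℂ => -y) (continuousAt_clog hs')
          continuous_neg.continuousAt).add continuousAt_const
      apply hc2.congr
      filter_upwards [hop.mem_nhds hz] with y hy
      have hexp : Complex.exp (Complex.log (-y) + Real.pi * Complex.I) =
          Complex.exp (Complex.log y) := by
        have hy0 : y ≠ 0 := hy.2
        rw [Complex.exp_add, Complex.exp_log (neg_ne_zero.2 hy0), Complex.exp_log hy0]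
        simp
      obtain ⟨m, hm⟩ := Complex.exp_eq_exp_iff_exists_int.1 hexp
      rw [hm]
      have hb := hlog y hy
      have him := congrArg Complex.im hm
      simp [Complex.log_im] at him
      have i1 := Complex.neg_pi_lt_arg (-y)
      have i2 := Complex.arg_le_pi (-y)
      have i3 := Complex.neg_pi_lt_arg y
      have i4 := Complex.arg_le_pi y
      have hpi := Real.pi_pos
      have m1 : (-1 : ℝ) < m := by nlinarith
      have m2 : (m : ℝ) < 2 := by nlinarith
      have m1' : -1 < m := by exact_mod_cast m1
      have m2' : m < 2 := by exact_mod_cast m2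
      obtain rfl | rfl : m = 0 ∨ m = 1 := by omega
      · simp
      · simpa using hΨ _ hb
  · intro z hz
    have h0 : z ≠ 0 := hz.2
    have h1 := he _ (hlog z hz)
    simp only [Complex.exp_log h0] at h1
    simp only [h1, Ψ, Circle.exp_sub, Complex.log_im, dir]
    rw [← zsmul_eq_mul, Circle.exp_zsmul]

/-- The ratio of the winding maps around two points of a ball has a logarithm off the ball. -/
lemma hasLog_dir_div_off_ball {c a b : ℂ} {r : ℝ} (ha : a ∈ Metric.closedBall c r)
    (hb : b ∈ Metric.closedBall c r) :
    HasLog (fun z => dir (z - a) / dir (z - b)) (Metric.closedBall c r)ᶜ := by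
  have hne : ∀ z ∈ (Metric.closedBall c r)ᶜ, z - a ≠ 0 ∧ z - b ≠ 0 := fun z hz =>
    ⟨sub_ne_zero.2 fun h => hz (h ▸ ha), sub_ne_zero.2 fun h => hz (h ▸ hb)⟩
  have hm : MapsTo (fun z => (z - a) / (z - b)) (Metric.closedBall c r)ᶜ Complex.slitPlane := by
    intro z hz
    obtain ⟨h1, h2⟩ := hne z hz
    by_contra hs
    -- a non-positive real ratio would put `z` on the segment `[a, b]`
    rw [Complex.mem_slitPlane_iff, not_or, not_lt, not_not] at hs
    obtain ⟨t, ht⟩ : ∃ t : ℝ, (z - a) / (z - b) = -t :=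
      ⟨-((z - a) / (z - b)).re, Complex.ext (by simp) (by simpa using hs.2)⟩
    have ht0 : 0 ≤ t := by have := hs.1; beta_reduce at this; rw [ht] at this; simpa using this
    have h3 : z = (1 / (1 + t)) • a + (t / (1 + t)) • b := by
      have h5 : (1 + t : ℂ) ≠ 0 := by
        have : (1 + t : ℝ) ≠ 0 := by positivity
        exact_mod_cast this
      rw [div_eq_iff h2] at ht
      simp only [Complex.real_smul]
      push_cast
      field_simp
      linear_combination ht
    apply hz
    rw [h3]
    exact convex_closedBall c r ha hb (by positivity) (by positivity) (by field_simp)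
  refine (hasLog_dir_slit.comp ?_ hm).congr fun z hz => (dir_div (hne z hz).1 (hne z hz).2).symm
  exact ContinuousOn.div (by fun_prop) (by fun_prop) fun z hz => (hne z hz).2

/-! ### Local winding classes on a surface -/

/-- `f` and `g` have the same winding at `x`: their ratio has a logarithm on a punctured
neighbourhood of `x`. -/
def LocEq {M : Type*} [TopologicalSpace M] (x : M) (f g : M → Circle) : Prop :=
  ∃ N ∈ 𝓝 x, HasLog (fun y => f y / g y) (N \ {x})

/-- The winding map around `x` read in the chart `e`. -/
noncomputable def tau {M : Type*} [TopologicalSpace M] (e : OpenPartialHomeomorph M ℂ) (x : M) :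
    M → Circle := fun y => dir (e y - e x)

section

variable {M : Type*} [TopologicalSpace M] {x y : M} {f g h f' g' : M → Circle}
  {e e' e'' : OpenPartialHomeomorph M ℂ}

lemma LocEq.refl (x : M) (f : M → Circle) : LocEq x f f :=
  ⟨univ, univ_mem, hasLog_one.congr fun y _ => by simp⟩

lemma LocEq.symm (h : LocEq x f g) : LocEq x g f := by
  obtain ⟨N, hN, hl⟩ := h
  exact ⟨N, hN, hl.inv.congr fun y _ => by simp⟩

lemma LocEq.mul (h : LocEq x f g) (h' : LocEq x f' g') :
    LocEq x (fun y => f y * f' y) (fun y => g y * g' y) := by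
  obtain ⟨N, hN, hl⟩ := h
  obtain ⟨N', hN', hl'⟩ := h'
  refine ⟨N ∩ N', inter_mem hN hN', ?_⟩
  exact ((hl.mono (by gcongr; exact inter_subset_left)).mul
    (hl'.mono (by gcongr; exact inter_subset_right))).congr fun y _ => by
      simp only [mul_div_mul_comm]

lemma LocEq.trans (h : LocEq x f g) (h' : LocEq x g f') : LocEq x f f' := by
  obtain ⟨N, hN, hl⟩ := h
  obtain ⟨N', hN', hl'⟩ := h'
  refine ⟨N ∩ N', inter_mem hN hN', ?_⟩
  exact ((hl.mono (by gcongr; exact inter_subset_left)).mul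
    (hl'.mono (by gcongr; exact inter_subset_right))).congr fun y _ => by
      simp

lemma LocEq.zpow (h : LocEq x f g) (n : ℤ) : LocEq x (fun y => f y ^ n) (fun y => g y ^ n) := by
  obtain ⟨N, hN, hl⟩ := h
  exact ⟨N, hN, (hl.zpow n).congr fun y _ => by simp only [div_zpow]⟩

lemma LocEq.inv (h : LocEq x f g) : LocEq x (fun y => (f y)⁻¹) (fun y => (g y)⁻¹) := by
  simpa using h.zpow (-1)

lemma LocEq.div (h : LocEq x f g) (h' : LocEq x f' g') :
    LocEq x (fun y => f y / f' y) (fun y => g y / g' y) := by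
  simpa only [div_eq_mul_inv] using h.mul h'.inv

lemma HasLog.locEq_one {s : Set M} (h : HasLog f (s \ {x})) (hs : s ∈ 𝓝 x) :
    LocEq x f fun _ => 1 := ⟨s, hs, by simpa using h⟩

/-- A map continuous at `x` does not wind around `x`. -/
lemma locEq_one_of_continuousAt {s : Set M} (hs : s ∈ 𝓝 x) (hf : ContinuousOn f s) :
    LocEq x f fun _ => 1 := by
  let N := s ∩ {y | f y / f x ≠ -1}
  have hN : N ∈ 𝓝 x := by
    refine inter_mem hs ?_
    have hc : ContinuousAt (fun y => f y / f x) x := (hf.continuousAt hs).div' continuousAt_const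
    have h1 : f x / f x ≠ -1 := by
      rw [div_self']; intro h
      have := congrArg (fun z : Circle => (z : ℂ)) h
      norm_num at this
    exact hc.eventually_ne h1
  refine HasLog.locEq_one (s := N) ?_ hN
  have h1 : HasLog (fun y => f y / f x) N :=
    hasLog_of_ne_neg_one ((hf.mono inter_subset_left).div' continuousOn_const) fun y hy => hy.2
  have h2 : HasLog (fun _ : M => f x) N :=
    ⟨fun _ => (f x : ℂ).arg, continuousOn_const, fun _ _ => by simp⟩
  exact ((h1.mul h2).mono sdiff_subset).congr fun y _ => by simp

/-- Small closed coordinate discs. -/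
lemma exists_chart_ball (hx : x ∈ e.source) {N : Set M} (hN : N ∈ 𝓝 x) :
    ∃ r > 0, Metric.closedBall (e x) r ⊆ e.target ∧
      e.symm '' Metric.closedBall (e x) r ⊆ N := by
  have h1 : e.target ∈ 𝓝 (e x) := e.open_target.mem_nhds (e.map_source hx)
  have h2 : e.symm ⁻¹' N ∈ 𝓝 (e x) := by
    apply (e.continuousAt_symm (e.map_source hx)).preimage_mem_nhds
    rwa [e.left_inv hx]
  obtain ⟨r, hr, hsub⟩ := Metric.nhds_basis_closedBall.mem_iff.1 (inter_mem h1 h2)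
  exact ⟨r, hr, fun z hz => (hsub hz).1, by rintro _ ⟨z, hz, rfl⟩; exact (hsub hz).2⟩

lemma tau_ne (hx : x ∈ e.source) (hy : y ∈ e.source) (hxy : y ≠ x) : e y - e x ≠ 0 :=
  sub_ne_zero.2 fun h => hxy (e.injOn hy hx h)

lemma continuousOn_tau (hx : x ∈ e.source) : ContinuousOn (tau e x) (e.source \ {x}) :=
  (continuousOn_dir_sub (e x)).comp (e.continuousOn.mono sdiff_subset)
    fun _ hy h => hy.2 (e.injOn hy.1 hx h)

lemma exists_locEq_tau (hx : x ∈ e.source) {N : Set M} (hN : N ∈ 𝓝 x)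
    (hf : ContinuousOn f (N \ {x})) : ∃ n : ℤ, LocEq x f fun y => tau e x y ^ n := by
  obtain ⟨r, hr, ht, hs⟩ := exists_chart_ball hx hN
  have hb : ∀ z ∈ Metric.ball (0 : ℂ) r \ {0}, z + e x ∈ Metric.closedBall (e x) r := by
    intro z hz; simpa using (mem_ball_zero_iff.1 hz.1).le
  obtain ⟨n, hn⟩ := exists_deg_ball (r := r) (f := fun z => f (e.symm (z + e x))) (by
    refine hf.comp (e.continuousOn_symm.comp (by fun_prop) fun z hz => ht (hb z hz)) ?_
    intro z hz
    refine ⟨hs ⟨_, hb z hz, rfl⟩, fun h => hz.2 ?_⟩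
    have h2 := congrArg e h
    rw [e.right_inv (ht (hb z hz))] at h2
    simpa using h2)
  refine ⟨n, e.source ∩ e ⁻¹' Metric.ball (e x) r,
    (e.isOpen_inter_preimage Metric.isOpen_ball).mem_nhds ⟨hx, Metric.mem_ball_self hr⟩, ?_⟩
  refine (hn.comp (h := fun y => e y - e x) ((e.continuousOn.sub continuousOn_const).mono
    (sdiff_subset.trans inter_subset_left)) ?_).congr ?_
  · intro y hy
    exact ⟨by simpa [dist_eq_norm] using hy.1.2, tau_ne hx hy.1.1 hy.2⟩
  · intro y hy
    simp [tau, e.left_inv hy.1.1]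

lemma hasLog_tau_zpow_sphere {r : ℝ} (hr : 0 < r)
    (ht : Metric.closedBall (e x) r ⊆ e.target) {n : ℤ}
    (h : HasLog (fun y => tau e x y ^ n) (e.symm '' Metric.sphere (e x) r)) : n = 0 := by
  have hm : ∀ z ∈ Metric.sphere (0 : ℂ) r, z + e x ∈ Metric.sphere (e x) r := by
    intro z hz; simpa using hz
  apply eq_zero_of_hasLog_sphere hr
  refine (h.comp (h := fun z => e.symm (z + e x)) (r := Metric.sphere 0 r) ?_ ?_).congr ?_
  · exact e.continuousOn_symm.comp (by fun_prop)
      fun z hz => ht (Metric.sphere_subset_closedBall (hm z hz))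
  · exact fun z hz => ⟨_, hm z hz, rfl⟩
  · intro z hz
    simp [tau, e.right_inv (ht (Metric.sphere_subset_closedBall (hm z hz)))]

lemma chart_sphere_ne {r : ℝ} (hr : 0 < r)
    (ht : Metric.closedBall (e x) r ⊆ e.target) : x ∉ e.symm '' Metric.sphere (e x) r := by
  rintro ⟨z, hz, h⟩
  have := congrArg e h
  rw [e.right_inv (ht (Metric.sphere_subset_closedBall hz))] at this
  rw [this] at hz
  simp at hz
  exact hr.ne hz

lemma eq_zero_of_locEq_tau (hx : x ∈ e.source) {n : ℤ}
    (h : LocEq x (fun y => tau e x y ^ n) fun _ => 1) : n = 0 := by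
  obtain ⟨N, hN, hl⟩ := h
  obtain ⟨r, hr, ht, hs⟩ := exists_chart_ball hx hN
  apply hasLog_tau_zpow_sphere hr ht
  refine (hl.mono fun y hy => ⟨hs (image_mono Metric.sphere_subset_closedBall hy), ?_⟩).congr
    (by simp)
  rintro rfl
  exact chart_sphere_ne hr ht hy

lemma tau_zpow_unique (hx : x ∈ e.source) {n m : ℤ} (h1 : LocEq x f fun y => tau e x y ^ n)
    (h2 : LocEq x f fun y => tau e x y ^ m) : n = m := by
  have h3 := h1.symm.trans h2
  have h4 := h3.div (LocEq.refl x fun y => tau e x y ^ m)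
  have : n - m = 0 := eq_zero_of_locEq_tau hx (by simpa [zpow_sub, div_eq_mul_inv] using h4)
  omega

lemma exists_sign (hx : x ∈ e.source) (hx' : x ∈ e'.source) :
    ∃ s : ℤˣ, LocEq x (tau e' x) fun y => tau e x y ^ (s : ℤ) := by
  obtain ⟨n, hn⟩ := exists_locEq_tau hx (e'.open_source.mem_nhds hx') (continuousOn_tau hx')
  obtain ⟨m, hm⟩ := exists_locEq_tau hx' (e.open_source.mem_nhds hx) (continuousOn_tau hx)
  have h1 : LocEq x (tau e x) fun y => tau e x y ^ (n * m) := by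
    simpa only [zpow_mul] using hm.trans (hn.zpow m)
  have h2 : n * m = 1 := tau_zpow_unique hx h1 (by simpa using LocEq.refl x (tau e x))
  exact ⟨Units.mkOfMulEqOne n m h2, hn⟩

open Classical in
/-- The sign comparing the orientations of two charts at a common point. -/
noncomputable def sgn (e e' : OpenPartialHomeomorph M ℂ) (x : M) : ℤˣ :=
  if h : x ∈ e.source ∧ x ∈ e'.source then (exists_sign h.1 h.2).choose else 1

lemma sgn_spec (hx : x ∈ e.source) (hx' : x ∈ e'.source) :
    LocEq x (tau e' x) fun y => tau e x y ^ (sgn e e' x : ℤ) := by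
  rw [sgn, dif_pos ⟨hx, hx'⟩]
  exact (exists_sign hx hx').choose_spec

lemma sgn_unique (hx : x ∈ e.source) (hx' : x ∈ e'.source) {s : ℤˣ}
    (h : LocEq x (tau e' x) fun y => tau e x y ^ (s : ℤ)) : sgn e e' x = s :=
  Units.ext (tau_zpow_unique hx (sgn_spec hx hx') h)

lemma sgn_comp (hx : x ∈ e.source) (hx' : x ∈ e'.source) (hx'' : x ∈ e''.source) :
    sgn e e'' x = sgn e' e'' x * sgn e e' x := by
  apply sgn_unique hx hx''
  have := (sgn_spec hx' hx'').trans ((sgn_spec hx hx').zpow (sgn e' e'' x))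
  simpa only [← zpow_mul, Units.val_mul, mul_comm] using this

/-- Killing a removable singularity: a map not winding around `x` can be changed inside any
neighbourhood of `x` by an exponential so as to become `1` near `x`. -/
lemma exists_mod [T2Space M] [NormalSpace M] {W : Set M} (hW : W ∈ 𝓝 x)
    (h : LocEq x f fun _ => 1) : ∃ (f' : M → Circle) (χ : M → ℝ), (∀ y ∉ W, f' y = f y) ∧
      (∀ᶠ y in 𝓝 x, f' y = 1) ∧ ContinuousOn χ {x}ᶜ ∧
      ∀ y ≠ x, f' y = f y * Circle.exp (χ y) := by
  classical
  obtain ⟨N, hN, φ, hφ, he⟩ := h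
  obtain ⟨O, hOs, hO, hxO⟩ := mem_nhds_iff.1 (inter_mem hN hW)
  obtain ⟨K, hK, hKc, hKO⟩ := exists_mem_nhds_isClosed_subset (hO.mem_nhds hxO)
  obtain ⟨K', hK', hKc', hKK⟩ := exists_mem_nhds_isClosed_subset
    (isOpen_interior.mem_nhds (mem_interior_iff_mem_nhds.2 hK))
  obtain ⟨b, hb0, hb1, -⟩ := exists_continuous_zero_one_of_isClosed
    (s := (interior K)ᶜ) (t := K') isOpen_interior.isClosed_compl hKc'
    (disjoint_left.2 fun y hy hy' => hy (hKK hy'))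
  let χ : M → ℝ := fun y => - (b y * φ y)
  have hχ0 : ∀ y ∉ K, χ y = 0 := fun y hy => by
    have : b y = 0 := hb0 fun h => hy (interior_subset h)
    simp [χ, this]
  refine ⟨fun y => if y = x then 1 else f y * Circle.exp (χ y), χ, ?_, ?_, ?_, ?_⟩
  · intro y hy
    have hyx : y ≠ x := by rintro rfl; exact hy (mem_of_mem_nhds hW)
    simp [hyx, hχ0 y fun h => hy (hOs (hKO h)).2]
  · filter_upwards [hK'] with y hy
    by_cases hyx : y = x
    · simp [hyx]
    · have h1 : b y = 1 := hb1 hy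
      have h2 := he y ⟨(hOs (hKO (interior_subset (hKK hy)))).1, hyx⟩
      simp only [div_one] at h2
      simp [hyx, χ, h1, h2, Circle.exp_neg]
  · intro y hy
    apply ContinuousAt.continuousWithinAt
    by_cases hyO : y ∈ O
    · have : ContinuousAt φ y := hφ.continuousAt (mem_of_superset
        ((hO.sdiff isClosed_singleton).mem_nhds ⟨hyO, hy⟩) fun z hz => ⟨(hOs hz.1).1, hz.2⟩)
      exact (b.continuous.continuousAt.mul this).neg
    · have : χ =ᶠ[𝓝 y] fun _ => 0 := by
        filter_upwards [hKc.isOpen_compl.mem_nhds fun h => hyO (hKO h)] with z hz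
        exact hχ0 z hz
      exact continuousAt_const.congr this.symm
  · intro y hy; simp [hy]

/-- Finitely many removable singularities do not obstruct logarithms. -/
lemma hasLog_off_finite [T2Space M] [NormalSpace M] {U : Set M} (hU : AllLog U) (F : Finset M)
    (hf : ContinuousOn f (U \ F)) (hF : ∀ x ∈ F, LocEq x f fun _ => 1) : HasLog f (U \ F) := by
  classical
  induction F using Finset.induction_on generalizing f with
  | empty => simpa using hU f (by simpa using hf)
  | insert x F hx ih =>
    obtain ⟨f', χ, -, h1, hχ, he⟩ := exists_mod univ_mem (hF x (Finset.mem_insert_self x F))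
    have hcE : ContinuousOn (fun y => Circle.exp (χ y)) {x}ᶜ :=
      Circle.exp.continuous.comp_continuousOn hχ
    have h2 : ContinuousOn f' (U \ F) := by
      intro y hy
      by_cases hyx : y = x
      · subst hyx
        exact ((continuousAt_const (y := (1 : Circle))).congr
          (h1.mono fun _ h => h.symm)).continuousWithinAt
      · have h3 : ContinuousWithinAt (fun y => f y * Circle.exp (χ y))
            (U \ (insert x F : Finset M)) y :=
          (hf y ⟨hy.1, by simp [hyx]; exact hy.2⟩).mul
            ((hcE y hyx).mono fun z hz => by
              have := hz.2; simp at this; exact this.1)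
        have h4 : ContinuousWithinAt f' (U \ (insert x F : Finset M)) y :=
          h3.congr (fun z hz => he z (by have := hz.2; simp at this; exact this.1)) (he y hyx)
        refine h4.mono_of_mem_nhdsWithin ?_
        have : U \ (insert x F : Finset M) = (U \ F) ∩ {x}ᶜ := by
          ext z; simp; tauto
        rw [this]
        exact inter_mem_nhdsWithin _ (isOpen_compl_singleton.mem_nhds hyx)
    have h3 : ∀ y ∈ F, LocEq y f' fun _ => 1 := by
      intro y hy
      have hyx : y ≠ x := by rintro rfl; exact hx hy
      have h4 := (hF y (Finset.mem_insert_of_mem hy)).mul (locEq_one_of_continuousAt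
        (isOpen_compl_singleton.mem_nhds hyx) hcE)
      obtain ⟨N, hN, hl⟩ := h4
      refine ⟨N ∩ {x}ᶜ, inter_mem hN (isOpen_compl_singleton.mem_nhds hyx), ?_⟩
      exact (hl.mono (by gcongr; exact inter_subset_left)).congr fun z hz => by
        simp [he z hz.1.2]
    have h5 := ih h2 h3
    have h6 : HasLog (fun y => f' y / Circle.exp (χ y)) (U \ (insert x F : Finset M)) :=
      (h5.mono fun z hz => ⟨hz.1, fun h => hz.2 (by simp at h; simp [h])⟩).div
        (hasLog_exp (hχ.mono fun z hz => by have := hz.2; simp at this; exact this.1))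
    refine h6.congr fun z hz => ?_
    rw [he z (by have := hz.2; simp at this; exact this.1)]
    simp

lemma allLog_chart {A : Set ℂ} (hA : Convex ℝ A) (ht : A ⊆ e.target) :
    AllLog (e.symm '' A) := by
  refine (allLog_of_convex hA).image (e.continuousOn_symm.mono ht) (k := e) ?_ ?_
  · refine e.continuousOn.mono ?_
    rintro _ ⟨z, hz, rfl⟩
    exact e.map_target (ht hz)
  · exact fun z hz => e.right_inv (ht hz)

/-- Chart signs are locally constant. -/
lemma sgn_locally_const [T2Space M] [NormalSpace M] (hx : x ∈ e.source) (hx' : x ∈ e'.source) :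
    ∀ᶠ y in 𝓝 x, sgn e e' y = sgn e e' x := by
  set s := sgn e e' x with hs
  obtain ⟨N, hN, hl⟩ := sgn_spec hx hx'
  obtain ⟨r, hr, ht, hB⟩ := exists_chart_ball hx (inter_mem hN (e'.open_source.mem_nhds hx'))
  set U := e.symm '' Metric.closedBall (e x) r with hUdef
  set S := e.symm '' Metric.sphere (e x) r with hSdef
  have hSU : S ⊆ U := image_mono Metric.sphere_subset_closedBall
  have heU : ∀ z ∈ U, z ∈ e.source ∧ e z ∈ Metric.closedBall (e x) r := by
    rintro _ ⟨w, hw, rfl⟩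
    exact ⟨e.map_target (ht hw), by rwa [e.right_inv (ht hw)]⟩
  have heS : ∀ z ∈ S, e z ∈ Metric.sphere (e x) r := by
    rintro _ ⟨w, hw, rfl⟩
    rwa [e.right_inv (ht (Metric.sphere_subset_closedBall hw))]
  have hO1 : IsOpen (e.source ∩ e ⁻¹' Metric.ball (e x) (r / 2)) :=
    e.isOpen_inter_preimage Metric.isOpen_ball
  obtain ⟨q, hq, htq, hBq⟩ := exists_chart_ball hx'
    (hO1.mem_nhds ⟨hx, Metric.mem_ball_self (by positivity)⟩)
  have hO2 : IsOpen (e'.source ∩ e' ⁻¹' Metric.ball (e' x) q) :=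
    e'.isOpen_inter_preimage Metric.isOpen_ball
  filter_upwards [hO1.mem_nhds ⟨hx, Metric.mem_ball_self (by positivity)⟩,
    hO2.mem_nhds ⟨hx', Metric.mem_ball_self hq⟩] with y hy1 hy2
  have hyS : y ∉ S := fun h => by
    have h1 := heS y h
    have h2 := hy1.2
    simp only [mem_preimage, Metric.mem_ball, Metric.mem_sphere] at h1 h2
    linarith
  -- off a smaller disc the winding maps around `x` and `y` agree up to a logarithm
  have hA : HasLog (fun z => tau e y z / tau e x z) S := by
    refine (hasLog_dir_div_off_ball (c := e x) (r := r / 2) (a := e y) (b := e x)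
      (Metric.ball_subset_closedBall hy1.2) (Metric.mem_closedBall_self (by positivity))).comp
      (h := e) (e.continuousOn.mono fun z hz => (heU z (hSU hz)).1) ?_
    intro z hz h
    have h1 := heS z hz
    simp only [Metric.mem_closedBall, Metric.mem_sphere] at h1 h
    linarith
  have hA' : HasLog (fun z => tau e' y z / tau e' x z) S := by
    refine (hasLog_dir_div_off_ball (c := e' x) (r := q) (a := e' y) (b := e' x)
      (Metric.ball_subset_closedBall hy2.2) (Metric.mem_closedBall_self (by positivity))).comp
      (h := e') (e'.continuousOn.mono fun z hz => (hB (hSU hz)).2) ?_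
    intro z hz h
    have h1 := hBq ⟨_, h, rfl⟩
    rw [e'.left_inv (hB (hSU hz)).2] at h1
    have h2 := heS z hz
    have h3 := h1.2
    simp only [mem_preimage, Metric.mem_ball, Metric.mem_sphere] at h2 h3
    linarith
  have hl' : HasLog (fun z => tau e' x z / tau e x z ^ (s : ℤ)) S :=
    hl.mono fun z hz => ⟨(hB (hSU hz)).1, by
      rintro rfl; exact chart_sphere_ne hr ht hz⟩
  apply sgn_unique hy1.1 hy2.1
  let f : M → Circle := fun z => tau e' y z / tau e y z ^ (s : ℤ)
  have hfS : HasLog f S := ((hA'.mul hl').div (hA.zpow s)).congr fun z _ => by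
    simp only [f, div_zpow, div_mul_div_cancel, div_div_div_cancel_right]
  have hfc : ContinuousOn f (U \ {y}) :=
    ((continuousOn_tau hy2.1).mono fun z hz => ⟨(hB hz.1).2, hz.2⟩).div'
      (((continuousOn_tau hy1.1).mono fun z hz => ⟨(heU z hz.1).1, hz.2⟩).zpow _)
  have hUn : U ∈ 𝓝 y := by
    refine mem_of_superset (hO1.mem_nhds hy1) fun z hz => ⟨e z, ?_, e.left_inv hz.1⟩
    have := hz.2
    simp only [mem_preimage, Metric.mem_ball] at this
    simp only [Metric.mem_closedBall]
    linarith
  obtain ⟨m, hm⟩ := exists_locEq_tau hy1.1 hUn hfc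
  have hg : HasLog (fun z => f z / tau e y z ^ m) (U \ {y}) := by
    have := hasLog_off_finite (f := fun z => f z / tau e y z ^ m)
      (allLog_chart (convex_closedBall (e x) r) ht) {y} (by
        rw [Finset.coe_singleton]
        exact hfc.div' (((continuousOn_tau hy1.1).mono
          fun z hz => ⟨(heU z hz.1).1, hz.2⟩).zpow m)) (by
        intro z hz
        obtain rfl := Finset.mem_singleton.1 hz
        simpa using hm.div (LocEq.refl z fun w => tau e z w ^ m))
    simpa using this
  have hm0 : m = 0 := by
    apply hasLog_tau_zpow_sphere hr ht
    have h1 := hg.mono (t := S) fun z hz => ⟨hSU hz, by rintro rfl; exact hyS hz⟩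
    exact ((hfS.div h1).div (hA.zpow m)).congr fun z _ => by
      simp only [div_zpow]
      simp
  subst hm0
  have := hm.mul (LocEq.refl y fun w => tau e y w ^ (s : ℤ))
  simpa [f] using this

end

/-! ### Orientation of a simply connected surface -/

section Orientation

variable (M : Type*) [TopologicalSpace M] [T2Space M] [NormalSpace M] [ChartedSpace ℂ M]

/-- The orientation double cover, glued from the signs between charts. -/
noncomputable def orientationCore : FiberBundleCore M M ℤˣ where
  baseSet i := (chartAt ℂ i).source
  isOpen_baseSet i := (chartAt ℂ i).open_source
  indexAt := id
  mem_baseSet_at x := mem_chart_source ℂ x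
  coordChange i j x v := sgn (chartAt ℂ i) (chartAt ℂ j) x * v
  coordChange_self i x hx v := by
    rw [sgn_unique hx hx (s := 1) (by simpa using LocEq.refl x (tau (chartAt ℂ i) x)), one_mul]
  continuousOn_coordChange i j := by
    rintro ⟨x, v⟩ ⟨⟨hi, hj⟩, -⟩
    apply ContinuousAt.continuousWithinAt
    have h1 : ContinuousAt (fun y => sgn (chartAt ℂ i) (chartAt ℂ j) y) x :=
      (continuousAt_const (y := sgn (chartAt ℂ i) (chartAt ℂ j) x)).congr
        ((sgn_locally_const hi hj).mono fun _ h => h.symm)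
    exact (ContinuousAt.comp (f := Prod.fst) (x := (x, v)) h1 continuousAt_fst).mul continuousAt_snd
  coordChange_comp i j k x hx v := by
    rw [sgn_comp hx.1.1 hx.1.2 hx.2, mul_assoc]

/-- A coherent choice of winding maps: near each point all `σ y` are the winding maps of a single
chart, up to a common sign. -/
def IsOrientation (σ : M → M → Circle) : Prop :=
  ∀ x, ∃ e : OpenPartialHomeomorph M ℂ, x ∈ e.source ∧ ∃ s : ℤˣ, ∀ᶠ y in 𝓝 x,
    y ∈ e.source ∧ LocEq y (σ y) fun z => tau e y z ^ (s : ℤ)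

lemma exists_orientation [SimplyConnectedSpace M] : ∃ σ, IsOrientation M σ := by
  have := ChartedSpace.locallyPathConnectedSpace ℂ M
  let Z := orientationCore M
  obtain ⟨a⟩ : Nonempty M := inferInstance
  obtain ⟨F, ⟨-, hF⟩, -⟩ := (FiberBundle.isCoveringMap (F := ℤˣ) (E := Z.Fiber)
    ).existsUnique_continuousMap_lifts (ContinuousMap.id M) a ⟨a, (1 : ℤˣ)⟩ rfl
  have hp : ∀ x, (F x).1 = x := fun x => congrFun hF x
  let o : M → ℤˣ := fun x => (F x).2
  refine ⟨fun x => fun z => tau (chartAt ℂ x) x z ^ (o x : ℤ), fun x => ?_⟩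
  refine ⟨chartAt ℂ x, mem_chart_source ℂ x, ((Z.localTriv x) (F x)).2, ?_⟩
  have hsrc : ∀ᶠ y in 𝓝 x, y ∈ (chartAt ℂ x).source :=
    (chartAt ℂ x).open_source.mem_nhds (mem_chart_source ℂ x)
  have hc : ContinuousAt (fun y => ((Z.localTriv x) (F y)).2) x := by
    refine continuousAt_snd.comp (ContinuousAt.comp (f := F) ?_ F.continuous.continuousAt)
    apply (Z.localTriv x).continuousAt
    rw [Z.mem_localTriv_source, hp]
    exact mem_chart_source ℂ x
  have hev := hc.eventually (isOpen_discrete {((Z.localTriv x) (F x)).2} |>.mem_nhds rfl)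
  filter_upwards [hsrc, hev] with y hy hy2
  refine ⟨hy, ?_⟩
  have h1 : ((Z.localTriv x) (F y)).2 = sgn (chartAt ℂ y) (chartAt ℂ x) y * o y := by
    rw [Z.localTriv_apply]
    change sgn (chartAt ℂ (F y).1) (chartAt ℂ x) (F y).1 * _ = _
    rw [hp]
  have hy2 : ((Z.localTriv x) (F y)).2 = ((Z.localTriv x) (F x)).2 := hy2
  rw [← hy2, h1]
  have h2 := ((sgn_spec (mem_chart_source ℂ y) hy).zpow
    (sgn (chartAt ℂ y) (chartAt ℂ x) y * o y : ℤˣ)).symm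
  have h3 : ((sgn (chartAt ℂ y) (chartAt ℂ x) y : ℤˣ) : ℤ) *
      ((sgn (chartAt ℂ y) (chartAt ℂ x) y * o y : ℤˣ) : ℤ) = o y := by
    rw [← Units.val_mul, ← mul_assoc, Int.units_mul_self, one_mul]
  simpa only [← zpow_mul, h3] using h2

/-- A chosen orientation of a simply connected surface. -/
noncomputable def sigma [SimplyConnectedSpace M] : M → M → Circle := (exists_orientation M).choose

lemma sigma_spec [SimplyConnectedSpace M] : IsOrientation M (sigma M) :=
  (exists_orientation M).choose_spec

end Orientation

/-! ### Dipoles and Eilenberg's separation criterion -/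

section Theta

variable {M : Type*} [TopologicalSpace M] [T2Space M] [NormalSpace M] [ChartedSpace ℂ M]
  [SimplyConnectedSpace M] {x y z : M} {W V A B : Set M} {θ θ' : M → Circle}

/-- `θ` is a dipole: it winds once positively around `x`, once negatively around `y`, is
continuous elsewhere, and is trivial off `W`. -/
structure Theta (W : Set M) (x y : M) (θ : M → Circle) : Prop where
  cont : ContinuousOn θ {x, y}ᶜ
  off : ∀ z ∉ W, θ z = 1
  left : LocEq x θ (sigma M x)
  right : LocEq y θ fun z => (sigma M y z)⁻¹

lemma Theta.symm (h : Theta W x y θ) : Theta W y x fun z => (θ z)⁻¹ where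
  cont := by rw [pair_comm]; exact h.cont.inv
  off z hz := by simp [h.off z hz]
  left := by simpa using h.right.inv
  right := h.left.inv

lemma exists_theta_near (hW : IsOpen W) (hx : x ∈ W) :
    ∀ᶠ y in 𝓝 x, y ≠ x → ∃ θ, Theta W x y θ := by
  classical
  obtain ⟨e, hxe, s, hev⟩ := sigma_spec M x
  obtain ⟨r, hr, ht, hB⟩ := exists_chart_ball hxe (hW.mem_nhds hx)
  have hO : IsOpen (e.source ∩ e ⁻¹' Metric.ball (e x) (r / 3)) :=
    e.isOpen_inter_preimage Metric.isOpen_ball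
  filter_upwards [hev, hO.mem_nhds ⟨hxe, Metric.mem_ball_self (by positivity)⟩] with y hy hyb hyx
  have hx' := hev.self_of_nhds.2
  set K : Set M := e.symm '' Metric.closedBall (e x) r with hK
  have hKc : IsClosed K := ((isCompact_closedBall (e x) r).image_of_continuousOn
    (e.continuousOn_symm.mono ht)).isClosed
  have hKs : K ⊆ e.source := by rintro _ ⟨w, hw, rfl⟩; exact e.map_target (ht hw)
  have hKmem : ∀ z ∈ e.source, z ∉ K → r < dist (e z) (e x) := by
    intro z hz hzK
    by_contra h
    exact hzK ⟨e z, by simpa using not_lt.1 h, e.left_inv hz⟩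
  let w : M → Circle := fun z => tau e x z / tau e y z
  let b : M → ℝ := fun z => max 0 (min 1 (2 * dist (e z) (e x) / r - 1))
  have hwlog : HasLog w (e.source ∩ e ⁻¹' (Metric.closedBall (e x) (r / 3))ᶜ) :=
    (hasLog_dir_div_off_ball (c := e x) (r := r / 3) (a := e x) (b := e y)
      (Metric.mem_closedBall_self (by positivity)) (Metric.ball_subset_closedBall hyb.2)).comp
      (h := e) (e.continuousOn.mono inter_subset_left) fun z hz => hz.2
  obtain ⟨ψ, hψ, hwψ⟩ := hwlog
  let θ₀ : M → Circle := fun z => w z * Circle.exp (- (b z * ψ z))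
  have hfar : ∀ z ∈ e.source, r ≤ dist (e z) (e x) → θ₀ z = 1 := by
    intro z hz hd
    have hb : b z = 1 := by
      have : 1 ≤ 2 * dist (e z) (e x) / r - 1 := by
        rw [le_sub_iff_add_le, le_div_iff₀ hr]; linarith
      simp [b, this]
    have := hwψ z ⟨hz, by simp; linarith⟩
    simp [θ₀, hb, this, Circle.exp_neg]
  have hnear : ∀ z, dist (e z) (e x) ≤ r / 2 → θ₀ z = w z := by
    intro z hd
    have hb : b z = 0 := by
      have : 2 * dist (e z) (e x) / r - 1 ≤ 0 := by
        rw [sub_nonpos, div_le_one hr]; linarith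
      simp only [b]
      rw [max_eq_left]
      exact (min_le_right _ _).trans this
    simp [θ₀, hb]
  have hwc : ContinuousOn w (e.source \ {x, y}) :=
    ((continuousOn_tau hxe).mono fun z hz => ⟨hz.1, fun h => hz.2 (by simp at h; simp [h])⟩).div'
      ((continuousOn_tau hyb.1).mono fun z hz => ⟨hz.1, fun h => hz.2 (by simp at h; simp [h])⟩)
  have hde : ContinuousOn (fun z => dist (e z) (e x)) e.source :=
    (continuous_id.dist continuous_const).comp_continuousOn e.continuousOn
  have hθ₀ : ∀ z ∈ e.source, z ∉ ({x, y} : Set M) → ContinuousAt θ₀ z := by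
    intro z hz hzxy
    have hcl : IsClosed ({x, y} : Set M) := (Set.toFinite _).isClosed
    have hw1 : ContinuousAt w z :=
      hwc.continuousAt ((e.open_source.sdiff hcl).mem_nhds ⟨hz, hzxy⟩)
    have hd1 : ContinuousAt (fun z => dist (e z) (e x)) z :=
      hde.continuousAt (e.open_source.mem_nhds hz)
    rcases lt_or_ge (dist (e z) (e x)) (r / 2) with hd | hd
    · refine hw1.congr ?_
      filter_upwards [hd1.eventually (gt_mem_nhds hd)] with u hu
      exact (hnear u hu.le).symm
    · have hψ1 : ContinuousAt ψ z := hψ.continuousAt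
        ((e.isOpen_inter_preimage Metric.isClosed_closedBall.isOpen_compl).mem_nhds
          ⟨hz, by simp; linarith⟩)
      refine hw1.mul (Circle.exp.continuous.continuousAt.comp (ContinuousAt.neg ?_))
      refine ContinuousAt.mul ?_ hψ1
      exact continuousAt_const.max (continuousAt_const.min
        (((continuousAt_const.mul hd1).div_const _).sub continuousAt_const))
  let θ₁ : M → Circle := fun z => if z ∈ K then θ₀ z else 1
  have hθ₁ : ∀ z ∈ e.source, θ₁ z = θ₀ z := by
    intro z hz
    by_cases hzK : z ∈ K
    · simp [θ₁, hzK]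
    · simp [θ₁, hzK, hfar z hz (hKmem z hz hzK).le]
  have hθ₁c : ContinuousOn θ₁ {x, y}ᶜ := by
    intro z hz
    apply ContinuousAt.continuousWithinAt
    by_cases hzs : z ∈ e.source
    · refine (hθ₀ z hzs hz).congr ?_
      filter_upwards [e.open_source.mem_nhds hzs] with u hu using (hθ₁ u hu).symm
    · refine (continuousAt_const (y := (1 : Circle))).congr ?_
      filter_upwards [hKc.isOpen_compl.mem_nhds fun h => hzs (hKs h)] with u hu
      simp only [θ₁, if_neg hu]
  have hnb : ∀ u ∈ e.source ∩ e ⁻¹' Metric.ball (e x) (r / 3), θ₁ u = w u := fun u hu => by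
    rw [hθ₁ u hu.1, hnear u]
    have := hu.2
    simp at this
    linarith
  have hloc : ∀ u ∈ e.source ∩ e ⁻¹' Metric.ball (e x) (r / 3), LocEq u θ₁ w := fun u hu =>
    ⟨_, hO.mem_nhds hu, hasLog_one.congr fun v hv => by simp [hnb v hv.1]⟩
  have hxO : x ∈ e.source ∩ e ⁻¹' Metric.ball (e x) (r / 3) :=
    ⟨hxe, Metric.mem_ball_self (by positivity)⟩
  have hwx : LocEq x w (tau e x) := by
    have := (LocEq.refl x (tau e x)).div (locEq_one_of_continuousAt (f := tau e y)
      ((e.open_source.sdiff isClosed_singleton).mem_nhds ⟨hxe, hyx.symm⟩) (continuousOn_tau hyb.1))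
    simpa using this
  have hwy : LocEq y w fun z => (tau e y z)⁻¹ := by
    have := (locEq_one_of_continuousAt (f := tau e x)
      ((e.open_source.sdiff isClosed_singleton).mem_nhds ⟨hyb.1, hyx⟩)
      (continuousOn_tau hxe)).div (LocEq.refl y (tau e y))
    simpa using this
  refine ⟨fun z => θ₁ z ^ (s : ℤ), hθ₁c.zpow _, fun z hz => ?_, ?_, ?_⟩
  · simp [θ₁, show z ∉ K from fun h => hz (hB h)]
  · exact (((hloc x hxO).trans hwx).zpow s).trans hx'.symm
  · have h1 := (((hloc y hyb).trans hwy).zpow s).trans (g := fun z => (tau e y z)⁻¹ ^ (s : ℤ))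
      (f' := fun z => (sigma M y z)⁻¹) (by simpa using hy.2.symm.inv)
    exact h1

lemma exists_theta (hW : IsOpen W) (hWc : IsPreconnected W) (hx : x ∈ W) (hy : y ∈ W)
    (hxy : x ≠ y) : ∃ θ, Theta W x y θ := by
  have key : x = y ∨ ∃ θ, Theta W x y θ := by
    refine hWc.induction₂ (fun x y => x = y ∨ ∃ θ, Theta W x y θ) ?_ ?_ ?_ hx hy
    · intro x hx
      refine mem_nhdsWithin_of_mem_nhds ?_
      filter_upwards [exists_theta_near hW hx] with y hy
      by_cases h : x = y
      · exact Or.inl h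
      · exact Or.inr (hy (Ne.symm h))
    · rintro x y z hx hy hz (rfl | ⟨θ₁, h1⟩) h
      · exact h
      rcases h with rfl | ⟨θ₂, h2⟩
      · exact Or.inr ⟨θ₁, h1⟩
      by_cases hxz : x = z
      · exact Or.inl hxz
      by_cases hxy : x = y
      · subst hxy; exact Or.inr ⟨θ₂, h2⟩
      by_cases hyz : y = z
      · subst hyz; exact Or.inr ⟨θ₁, h1⟩
      right
      have hcl : ∀ u v : M, IsOpen ({u, v}ᶜ : Set M) := fun u v => (Set.toFinite _).isClosed.isOpen_compl
      have hyl : LocEq y (fun u => θ₁ u * θ₂ u) fun _ => 1 := by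
        simpa using h1.right.mul h2.left
      obtain ⟨f, χ, hoff, hone, hχ, he⟩ := exists_mod (W := W ∩ {x, z}ᶜ)
        (inter_mem (hW.mem_nhds hy) ((hcl x z).mem_nhds (by simp [Ne.symm hxy, hyz]))) hyl
      have hE : ContinuousOn (fun u => Circle.exp (χ u)) {y}ᶜ :=
        Circle.exp.continuous.comp_continuousOn hχ
      have hfeq : ∀ u ≠ y, LocEq u f fun v => θ₁ v * θ₂ v := fun u hu => by
        have h3 := (LocEq.refl u fun v => θ₁ v * θ₂ v).mul (locEq_one_of_continuousAt
          (isOpen_compl_singleton.mem_nhds hu) hE)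
        refine LocEq.trans ⟨{y}ᶜ, isOpen_compl_singleton.mem_nhds hu, ?_⟩
          (by simpa using h3)
        exact hasLog_one.congr fun v hv => by simp [he v hv.1]
      refine ⟨f, ?_, ?_, ?_, ?_⟩
      · intro u hu
        apply ContinuousAt.continuousWithinAt
        by_cases huy : u = y
        · subst huy
          exact (continuousAt_const (y := (1 : Circle))).congr (hone.mono fun _ h => h.symm)
        · simp only [mem_compl_iff, mem_insert_iff, mem_singleton_iff, not_or] at hu
          have c1 := h1.cont.continuousAt (x := u) ((hcl x y).mem_nhds (by simp [hu.1, huy]))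
          have c2 := h2.cont.continuousAt (x := u) ((hcl y z).mem_nhds (by simp [hu.2, huy]))
          have c3 := hE.continuousAt (x := u) (isOpen_compl_singleton.mem_nhds huy)
          refine ((c1.mul c2).mul c3).congr ?_
          filter_upwards [isOpen_compl_singleton.mem_nhds huy] with v hv
          exact (he v hv).symm
      · intro u hu
        rw [hoff u fun h => hu h.1, h1.off u hu, h2.off u hu, one_mul]
      · have := (hfeq x hxy).trans (h1.left.mul (locEq_one_of_continuousAt
          ((hcl y z).mem_nhds (by simp [hxy, hxz])) h2.cont))
        simpa using this
      · have := (hfeq z (Ne.symm hyz)).trans ((locEq_one_of_continuousAt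
          ((hcl x y).mem_nhds (by simp [Ne.symm hyz, Ne.symm hxz])) h1.cont).mul h2.right)
        simpa using this
    · rintro x y - - (rfl | ⟨θ, h⟩)
      · exact Or.inl rfl
      · exact Or.inr ⟨_, h.symm⟩
  exact key.resolve_left hxy

lemma theta_unique {W W' : Set M} (h : Theta W x y θ) (h' : Theta W' x y θ') :
    HasLog (fun z => θ z / θ' z) {x, y}ᶜ := by
  classical
  have := ChartedSpace.locallyPathConnectedSpace ℂ M
  have := hasLog_off_finite (f := fun z => θ z / θ' z) allLog_univ {x, y}
    (by rw [Finset.coe_insert, Finset.coe_singleton, ← compl_eq_univ_sdiff]; exact h.cont.div' h'.cont) (by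
      intro u hu
      simp only [Finset.mem_insert, Finset.mem_singleton] at hu
      rcases hu with rfl | rfl
      · simpa using h.left.div h'.left
      · simpa using h.right.div h'.right)
  simpa [← compl_eq_univ_sdiff] using this

variable (V) in
/-- `V` carries no point singularity: no map winding once around a point of `V`, and continuous
elsewhere on the surface, has a logarithm off `V`. -/
def NoG : Prop := ∀ x ∈ V, ∀ g : M → Circle, ContinuousOn g {x}ᶜ → LocEq x g (sigma M x) →
  ¬ HasLog g Vᶜ

lemma NoG.mono (h : NoG V) (hW : W ⊆ V) : NoG W := fun x hx g h1 h2 h3 =>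
  h x (hW hx) g h1 h2 (h3.mono (compl_subset_compl.2 hW))

omit [T2Space M] [NormalSpace M] [SimplyConnectedSpace M] in
lemma isOpen_component (hA : IsClosed A) (x : M) : IsOpen (connectedComponentIn Aᶜ x) := by
  have := ChartedSpace.locallyConnectedSpace ℂ M
  exact hA.isOpen_compl.connectedComponentIn

omit [T2Space M] [NormalSpace M] [SimplyConnectedSpace M] in
lemma closure_component (hA : IsClosed A) :
    closure (connectedComponentIn Aᶜ x) ⊆ connectedComponentIn Aᶜ x ∪ A := by
  intro z hz
  by_contra h
  simp only [mem_union, not_or] at h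
  obtain ⟨u, hu1, hu2⟩ := mem_closure_iff.1 hz _ (isOpen_component hA z)
    (mem_connectedComponentIn h.2)
  have h1 := connectedComponentIn_eq hu1
  have h2 := connectedComponentIn_eq hu2
  exact h.1 (by rw [h2, ← h1]; exact mem_connectedComponentIn h.2)

lemma hasLog_theta (hA : IsClosed A) (hxA : x ∉ A) (hxy : x ≠ y)
    (hy : y ∈ connectedComponentIn Aᶜ x) (h : Theta W x y θ) : HasLog θ A := by
  obtain ⟨θ', h'⟩ := exists_theta (isOpen_component hA x) isPreconnected_connectedComponentIn
    (mem_connectedComponentIn (F := Aᶜ) hxA) hy hxy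
  have hsub := connectedComponentIn_subset Aᶜ x
  refine ((theta_unique h h').mono ?_).congr fun z hz => ?_
  · rintro z hz (rfl | rfl)
    · exact hxA hz
    · exact hsub hy hz
  · rw [h'.off z fun h => hsub h hz, div_one]

lemma mem_component_of_hasLog (hV : NoG V) (hA : IsClosed A) (hxA : x ∉ A) (hyA : y ∉ A)
    (hsub : connectedComponentIn Aᶜ x ⊆ V) (h : Theta W x y θ) (hl : HasLog θ A) :
    y ∈ connectedComponentIn Aᶜ x := by
  classical
  by_contra hy
  obtain ⟨φ, hφ, he⟩ := hl.exists_extend hA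
  set G := connectedComponentIn Aᶜ x with hG
  have hGo : IsOpen G := isOpen_component hA x
  have hxG : x ∈ G := mem_connectedComponentIn hxA
  have hE : Continuous fun z => Circle.exp (φ z) := Circle.exp.continuous.comp hφ
  let g : M → Circle := fun z => if z ∈ G then θ z else Circle.exp (φ z)
  have hgG : ∀ z ∈ G, g z = θ z := fun z hz => by simp [g, hz]
  have hgA : ∀ z ∉ G, g z = Circle.exp (φ z) := fun z hz => by simp [g, hz]
  refine hV x (hsub hxG) g ?_ ?_ ⟨φ, hφ.continuousOn, fun z hz => hgA z fun h => hz (hsub h)⟩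
  · have h1 : ContinuousOn g ((G ∪ A) \ {x}) := by
      refine (h.cont.mono ?_).congr ?_
      · rintro z ⟨hz, hzx⟩ (rfl | rfl)
        · exact hzx rfl
        · exact hz.elim hy hyA
      · rintro z ⟨hz, -⟩
        by_cases hzG : z ∈ G
        · exact hgG z hzG
        · rw [hgA z hzG, he z (hz.resolve_left hzG)]
    have h2 : ContinuousOn g Gᶜ := hE.continuousOn.congr hgA
    have hcl : IsClosed (G ∪ A) := by
      rw [← closure_subset_iff_isClosed, closure_union, hA.closure_eq]
      exact union_subset (closure_component hA) subset_union_right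
    intro z hz
    have : (univ : Set M) = (G ∪ A) ∪ Gᶜ := by ext; simp; tauto
    have h3 : ContinuousWithinAt g (G ∪ A) z := by
      by_cases hzm : z ∈ G ∪ A
      · refine (h1 z ⟨hzm, hz⟩).mono_of_mem_nhdsWithin ?_
        rw [sdiff_eq]
        exact inter_mem_nhdsWithin _ (isOpen_compl_singleton.mem_nhds hz)
      · exact continuousWithinAt_of_notMem_closure (by rwa [hcl.closure_eq])
    have h4 : ContinuousWithinAt g Gᶜ z := by
      by_cases hzm : z ∈ Gᶜ
      · exact h2 z hzm
      · exact continuousWithinAt_of_notMem_closure (by rwa [hGo.isClosed_compl.closure_eq])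
    exact ((h3.union h4).mono_of_mem_nhdsWithin (by rw [← this]; exact univ_mem))
  · exact LocEq.trans ⟨G, hGo.mem_nhds hxG, hasLog_one.congr fun z hz => by simp [hgG z hz.1]⟩ h.left

/-- Sets without circle-valued obstructions do not separate. -/
lemma mem_component_of_allLog (hV : NoG V) (hA : IsClosed A) (hA' : AllLog A) (hxA : x ∉ A)
    (hyA : y ∉ A) (hsub : connectedComponentIn Aᶜ x ⊆ V) : y ∈ connectedComponentIn Aᶜ x := by
  by_cases hxy : x = y
  · subst hxy; exact mem_connectedComponentIn hxA
  obtain ⟨θ, h⟩ := exists_theta isOpen_univ isPreconnected_univ (mem_univ x) (mem_univ y) hxy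
  refine mem_component_of_hasLog hV hA hxA hyA hsub h (hA' θ (h.cont.mono ?_))
  rintro z hz (rfl | rfl)
  · exact hxA hz
  · exact hyA hz

/-- Janiszewski's theorem. -/
lemma janiszewski (hV : NoG V) (hA : IsClosed A) (hB : IsClosed B) (hAB : IsPreconnected (A ∩ B))
    (hxA : x ∉ A) (hxB : x ∉ B) (h1 : y ∈ connectedComponentIn Aᶜ x)
    (h2 : y ∈ connectedComponentIn Bᶜ x) (hsub : connectedComponentIn (A ∪ B)ᶜ x ⊆ V) :
    y ∈ connectedComponentIn (A ∪ B)ᶜ x := by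
  have hx : x ∉ A ∪ B := by simp [hxA, hxB]
  have hy : y ∉ A ∪ B := by
    rintro (h | h)
    · exact connectedComponentIn_subset _ _ h1 h
    · exact connectedComponentIn_subset _ _ h2 h
  by_cases hxy : x = y
  · subst hxy; exact mem_connectedComponentIn hx
  obtain ⟨θ, h⟩ := exists_theta isOpen_univ isPreconnected_univ (mem_univ x) (mem_univ y) hxy
  exact mem_component_of_hasLog hV (hA.union hB) hx hy hsub h
    ((hasLog_theta hA hxA hxy h1 h).union hA hB hAB (hasLog_theta hB hxB hxy h2 h))

end Theta

/-! ### Arcs and Jordan curves -/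

section Arcs

variable {X : Type*} [TopologicalSpace X]

/-- `A` is an arc from `a` to `b`. -/
def IsArc (A : Set X) (a b : X) : Prop :=
  ∃ f : ℝ → X, ContinuousOn f (Icc 0 1) ∧ InjOn f (Icc 0 1) ∧ f '' Icc 0 1 = A ∧ f 0 = a ∧ f 1 = b

/-- `γ` is a Jordan curve. -/
def IsJordan (γ : Set X) : Prop :=
  ∃ f : AddCircle (1 : ℝ) → X, Continuous f ∧ Function.Injective f ∧ range f = γ

variable {A γ : Set X} {a b : X}

lemma isArc_of_Icc {f : ℝ → X} {s t : ℝ} (hst : s < t) (hf : ContinuousOn f (Icc s t))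
    (hi : InjOn f (Icc s t)) : IsArc (f '' Icc s t) (f s) (f t) := by
  have him : (fun r : ℝ => s + r * (t - s)) '' Icc 0 1 = Icc s t := by
    ext u
    constructor
    · rintro ⟨r, ⟨h0, h1⟩, rfl⟩
      constructor <;> nlinarith
    · rintro ⟨h0, h1⟩
      have : 0 < t - s := by linarith
      refine ⟨(u - s) / (t - s), ⟨by apply div_nonneg <;> linarith, ?_⟩, by field_simp; ring⟩
      rw [div_le_one this]; linarith
  have hm : MapsTo (fun r : ℝ => s + r * (t - s)) (Icc 0 1) (Icc s t) := by
    rw [mapsTo_iff_image_subset, him]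
  refine ⟨fun r => f (s + r * (t - s)), hf.comp (by fun_prop) hm, ?_, ?_, by simp, by simp⟩
  · intro r hr r' hr' h
    have := hi (hm hr) (hm hr') h
    have h2 : t - s ≠ 0 := by linarith
    simpa [h2] using this
  · rw [← him, image_image]

namespace IsArc

lemma symm (h : IsArc A a b) : IsArc A b a := by
  obtain ⟨f, hc, hi, rfl, rfl, rfl⟩ := h
  have hm : MapsTo (fun r : ℝ => 1 - r) (Icc 0 1) (Icc 0 1) := fun r hr => by
    constructor <;> linarith [hr.1, hr.2]
  refine ⟨fun r => f (1 - r), hc.comp (by fun_prop) hm, ?_, ?_, by simp, by simp⟩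
  · intro r hr r' hr' h
    simpa using hi (hm hr) (hm hr') h
  · ext y
    constructor
    · rintro ⟨r, hr, rfl⟩
      exact ⟨_, hm hr, rfl⟩
    · rintro ⟨r, hr, rfl⟩
      exact ⟨_, hm hr, by simp⟩

lemma left_mem (h : IsArc A a b) : a ∈ A := by
  obtain ⟨f, hc, hi, rfl, rfl, rfl⟩ := h
  exact ⟨0, by simp, rfl⟩

lemma right_mem (h : IsArc A a b) : b ∈ A := h.symm.left_mem

lemma ne (h : IsArc A a b) : a ≠ b := by
  obtain ⟨f, hc, hi, rfl, rfl, rfl⟩ := h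
  intro h
  exact zero_ne_one (hi (by simp) (by simp) h)

lemma isCompact (h : IsArc A a b) : IsCompact A := by
  obtain ⟨f, hc, hi, rfl, rfl, rfl⟩ := h
  exact isCompact_Icc.image_of_continuousOn hc

lemma isClosed [T2Space X] (h : IsArc A a b) : IsClosed A := h.isCompact.isClosed

lemma isPreconnected (h : IsArc A a b) : IsPreconnected A := by
  obtain ⟨f, hc, hi, rfl, rfl, rfl⟩ := h
  exact isPreconnected_Icc.image f hc

lemma exists_interior (h : IsArc A a b) : ∃ z ∈ A, z ≠ a ∧ z ≠ b := by
  obtain ⟨f, hc, hi, rfl, rfl, rfl⟩ := h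
  have h2 : (1 / 2 : ℝ) ∈ Icc (0 : ℝ) 1 := by constructor <;> norm_num
  refine ⟨f (1 / 2), ⟨_, h2, rfl⟩, fun h => ?_, fun h => ?_⟩
  · have := hi h2 (by simp) h; norm_num at this
  · have := hi h2 (by simp) h; norm_num at this

end IsArc

/-- A continuous injection on a compact set has a continuous inverse. -/
lemma exists_inverse {Y : Type*} [TopologicalSpace Y] [Nonempty Y] [T2Space X] {f : Y → X} {K : Set Y}
    (hK : IsCompact K) (hf : ContinuousOn f K) (hi : InjOn f K) :
    ∃ k : X → Y, ContinuousOn k (f '' K) ∧ ∀ y ∈ K, k (f y) = y := by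
  have hinv : ∀ y ∈ K, Function.invFunOn f K (f y) = y := fun y hy => hi.leftInvOn_invFunOn hy
  refine ⟨Function.invFunOn f K, ?_, hinv⟩
  have hcs := isCompact_iff_compactSpace.1 hK
  rw [continuousOn_iff_isClosed]
  intro t ht
  refine ⟨f '' (K ∩ t), ((hK.inter_right ht).image_of_continuousOn
    (hf.mono inter_subset_left)).isClosed, ?_⟩
  ext x
  constructor
  · rintro ⟨h1, y, hy, rfl⟩
    rw [mem_preimage, hinv y hy] at h1
    exact ⟨⟨y, ⟨hy, h1⟩, rfl⟩, ⟨y, hy, rfl⟩⟩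
  · rintro ⟨⟨y, ⟨hy, h1⟩, rfl⟩, -⟩
    exact ⟨by rwa [mem_preimage, hinv y hy], ⟨y, hy, rfl⟩⟩

lemma IsArc.allLog [T2Space X] (h : IsArc A a b) : AllLog A := by
  obtain ⟨f, hc, hi, rfl, rfl, rfl⟩ := h
  obtain ⟨k, hk, hkf⟩ := exists_inverse isCompact_Icc hc hi
  exact (allLog_of_convex (convex_Icc 0 1)).image hc hk hkf

lemma IsArc.image {Y : Type*} [TopologicalSpace Y] {h : X → Y} (hA : IsArc A a b)
    (hh : ContinuousOn h A) (hi : InjOn h A) : IsArc (h '' A) (h a) (h b) := by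
  obtain ⟨f, hc, hif, rfl, rfl, rfl⟩ := hA
  exact ⟨h ∘ f, hh.comp hc (mapsTo_image _ _), hi.comp hif (mapsTo_image _ _),
    by rw [image_comp], rfl, rfl⟩

namespace IsJordan

lemma isCompact (h : IsJordan γ) : IsCompact γ := by
  obtain ⟨f, hc, hi, rfl⟩ := h
  exact isCompact_range hc

lemma isClosed [T2Space X] (h : IsJordan γ) : IsClosed γ := h.isCompact.isClosed

lemma isPreconnected (h : IsJordan γ) : IsPreconnected γ := by
  obtain ⟨f, hc, hi, rfl⟩ := h
  have : ConnectedSpace (AddCircle (1 : ℝ)) := inferInstance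
  exact isPreconnected_range hc

lemma exists_rep (p : AddCircle (1 : ℝ)) (a : ℝ) : ∃ s ∈ Ico a (a + 1), (s : AddCircle (1 : ℝ)) = p := by
  have := AddCircle.coe_image_Ico_eq (1 : ℝ) a
  exact (this ▸ mem_univ p : p ∈ _)

lemma of_arcs {β₁ β₂ : Set X} (h1 : IsArc β₁ a b) (h2 : IsArc β₂ a b) (h : β₁ ∩ β₂ ⊆ {a, b}) :
    IsJordan (β₁ ∪ β₂) := by
  classical
  have hab := h1.ne
  obtain ⟨f, hfc, hfi, rfl, hf0, hf1⟩ := h1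
  obtain ⟨g, hgc, hgi, rfl, hg0, hg1⟩ := h2
  let F : ℝ → X := fun t => if t ≤ 1 / 2 then f (2 * t) else g (2 - 2 * t)
  have hF1 : ∀ t ∈ Icc (0 : ℝ) (1 / 2), F t = f (2 * t) := fun t ht => by simp only [F, if_pos ht.2]
  have hF2 : ∀ t ∈ Icc (1 / 2 : ℝ) 1, F t = g (2 - 2 * t) := by
    intro t ht
    by_cases h : t ≤ 1 / 2
    · have : t = 1 / 2 := le_antisymm h ht.1
      subst this
      simp only [F, if_pos le_rfl]
      norm_num [hf1, hg1]
    · simp only [F, if_neg h]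
  have hm1 : MapsTo (fun t : ℝ => 2 * t) (Icc 0 (1 / 2)) (Icc 0 1) := fun t ht => by
    constructor <;> simp only <;> linarith [ht.1, ht.2]
  have hm2 : MapsTo (fun t : ℝ => 2 - 2 * t) (Icc (1 / 2) 1) (Icc 0 1) := fun t ht => by
    constructor <;> simp only <;> linarith [ht.1, ht.2]
  have hu : Icc (0 : ℝ) (1 / 2) ∪ Icc (1 / 2) 1 = Icc 0 1 :=
    Icc_union_Icc_eq_Icc (by norm_num) (by norm_num)
  have hFc : ContinuousOn F (Icc 0 (0 + 1)) := by
    rw [zero_add, ← hu]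
    exact ((hfc.comp (by fun_prop) hm1).congr hF1).union_of_isClosed
      ((hgc.comp (by fun_prop) hm2).congr hF2) isClosed_Icc isClosed_Icc
  have hF01 : F 0 = F (0 + 1) := by
    rw [zero_add, hF1 0 (by norm_num), hF2 1 (by norm_num)]
    norm_num [hf0, hg0]
  refine ⟨AddCircle.liftIco 1 0 F, AddCircle.liftIco_continuous hF01 hFc, ?_, ?_⟩
  · have key : ∀ s ∈ Ico (0 : ℝ) (0 + 1), ∀ t ∈ Ico (0 : ℝ) (0 + 1), s ≤ t → F s = F t → s = t := by
      intro s hs t ht hst he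
      rw [zero_add] at hs ht
      by_cases h2 : t ≤ 1 / 2
      · rw [hF1 s ⟨hs.1, hst.trans h2⟩, hF1 t ⟨ht.1, h2⟩] at he
        have := hfi (hm1 ⟨hs.1, hst.trans h2⟩) (hm1 ⟨ht.1, h2⟩) he
        linarith
      · push Not at h2
        rw [hF2 t ⟨h2.le, ht.2.le⟩] at he
        have ht' := hm2 ⟨h2.le, ht.2.le⟩
        by_cases h3 : s ≤ 1 / 2
        · rw [hF1 s ⟨hs.1, h3⟩] at he
          have hs' := hm1 ⟨hs.1, h3⟩
          have : f (2 * s) ∈ ({a, b} : Set X) := h ⟨⟨_, hs', rfl⟩, he ▸ ⟨_, ht', rfl⟩⟩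
          rcases this with h4 | h4
          · rw [he, ← hg0] at h4
            have := hgi ht' (by simp) h4
            linarith [ht.2]
          · rw [mem_singleton_iff, he, ← hg1] at h4
            have := hgi ht' (by simp) h4
            linarith
        · push Not at h3
          rw [hF2 s ⟨h3.le, hs.2.le⟩] at he
          have := hgi (hm2 ⟨h3.le, hs.2.le⟩) ht' he
          linarith
    intro p q hpq
    obtain ⟨s, hs, rfl⟩ := exists_rep p 0
    obtain ⟨t, ht, rfl⟩ := exists_rep q 0
    rw [AddCircle.liftIco_coe_apply hs, AddCircle.liftIco_coe_apply ht] at hpq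
    rcases le_total s t with h5 | h5
    · rw [key s hs t ht h5 hpq]
    · rw [key t ht s hs h5 hpq.symm]
  · apply subset_antisymm
    · rintro _ ⟨p, rfl⟩
      obtain ⟨s, hs, rfl⟩ := exists_rep p 0
      rw [AddCircle.liftIco_coe_apply hs]
      rw [zero_add] at hs
      rcases le_total s (1 / 2) with h5 | h5
      · rw [hF1 s ⟨hs.1, h5⟩]; exact Or.inl ⟨_, hm1 ⟨hs.1, h5⟩, rfl⟩
      · rw [hF2 s ⟨h5, hs.2.le⟩]; exact Or.inr ⟨_, hm2 ⟨h5, hs.2.le⟩, rfl⟩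
    · have key : ∀ s ∈ Icc (0 : ℝ) 1, F s ∈ range (AddCircle.liftIco 1 0 F) := by
        intro s hs
        rcases hs.2.eq_or_lt with rfl | h1
        · rw [zero_add] at hF01
          rw [← hF01]
          exact ⟨_, AddCircle.liftIco_coe_apply (by simp)⟩
        · exact ⟨_, AddCircle.liftIco_coe_apply (by simp [hs.1, h1])⟩
      rintro y (⟨s, hs, rfl⟩ | ⟨s, hs, rfl⟩)
      · have := key (s / 2) ⟨by linarith [hs.1], by linarith [hs.2]⟩
        rwa [hF1 _ ⟨by linarith [hs.1], by linarith [hs.2]⟩, mul_div_cancel₀ _ two_ne_zero] at this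
      · have := key (1 - s / 2) ⟨by linarith [hs.2], by linarith [hs.1]⟩
        rw [hF2 _ ⟨by linarith [hs.2], by linarith [hs.1]⟩] at this
        convert this using 2
        ring

lemma split_param {f : AddCircle (1 : ℝ) → X} (hc : Continuous f) (hi : Function.Injective f)
    {s t : ℝ} (h1 : s < t) (h2 : t < s + 1) :
    IsArc ((fun r : ℝ => f r) '' Icc s t) (f s) (f t) ∧
    IsArc ((fun r : ℝ => f r) '' Icc t (s + 1)) (f s) (f t) ∧
    ((fun r : ℝ => f r) '' Icc s t) ∩ ((fun r : ℝ => f r) '' Icc t (s + 1)) = {f s, f t} ∧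
    ((fun r : ℝ => f r) '' Icc s t) ∪ ((fun r : ℝ => f r) '' Icc t (s + 1)) = range f := by
  have hF : Continuous fun r : ℝ => f r := hc.comp (AddCircle.continuous_mk' 1)
  have hper : f (s + 1 : ℝ) = f s := by
    congr 1; exact AddCircle.coe_add_period 1 s
  have hinj : ∀ u ∈ Ico s (s + 1), ∀ v ∈ Ico s (s + 1), f u = f v → u = v := fun u hu v hv h =>
    (AddCircle.coe_eq_coe_iff_of_mem_Ico (p := 1) (a := s) hu hv).1 (hi h)
  refine ⟨isArc_of_Icc h1 hF.continuousOn fun u hu v hv h => hinj u ⟨hu.1, hu.2.trans_lt h2⟩ v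
      ⟨hv.1, hv.2.trans_lt h2⟩ h, ?_, ?_, ?_⟩
  · have := isArc_of_Icc (f := fun r : ℝ => f r) h2 hF.continuousOn ?_
    · simpa only [hper] using this.symm
    intro u hu v hv h
    have key : ∀ u ∈ Icc t (s + 1), ∀ v ∈ Icc t (s + 1), f u = f v → u = s + 1 → v = s + 1 := by
      rintro u hu v hv h rfl
      by_contra hne
      rw [hper] at h
      have := hinj s ⟨le_rfl, by linarith⟩ v ⟨by linarith [hv.1], lt_of_le_of_ne hv.2 hne⟩ h
      linarith [hv.1]
    by_cases hu1 : u = s + 1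
    · rw [hu1, key u hu v hv h hu1]
    · have hv1 : v ≠ s + 1 := fun hv1 => hu1 (key v hv u hu h.symm hv1)
      exact hinj u ⟨by linarith [hu.1], lt_of_le_of_ne hu.2 hu1⟩ v
        ⟨by linarith [hv.1], lt_of_le_of_ne hv.2 hv1⟩ h
  · apply subset_antisymm
    · rintro _ ⟨⟨u, hu, rfl⟩, v, hv, h⟩
      simp only at h ⊢
      by_cases hv1 : v = s + 1
      · left; rw [← h, hv1, hper]
      · right
        have := hinj v ⟨by linarith [hv.1], lt_of_le_of_ne hv.2 hv1⟩ u
          ⟨hu.1, hu.2.trans_lt h2⟩ h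
        have : u = t := le_antisymm hu.2 (this ▸ hv.1)
        rw [this]; rfl
    · rintro _ (rfl | rfl)
      · exact ⟨⟨s, ⟨le_rfl, h1.le⟩, rfl⟩, ⟨s + 1, ⟨h2.le, le_rfl⟩, hper⟩⟩
      · exact ⟨⟨t, ⟨h1.le, le_rfl⟩, rfl⟩, ⟨t, ⟨le_rfl, h2.le⟩, rfl⟩⟩
  · rw [← image_union, Icc_union_Icc_eq_Icc h1.le h2.le]
    apply subset_antisymm
    · rintro _ ⟨r, -, rfl⟩; exact ⟨_, rfl⟩
    · rintro _ ⟨p, rfl⟩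
      obtain ⟨u, hu, rfl⟩ := exists_rep p s
      exact ⟨u, ⟨hu.1, hu.2.le⟩, rfl⟩

lemma split (h : IsJordan γ) (ha : a ∈ γ) (hb : b ∈ γ) (hab : a ≠ b) :
    ∃ β₁ β₂, IsArc β₁ a b ∧ IsArc β₂ a b ∧ β₁ ∩ β₂ = {a, b} ∧ β₁ ∪ β₂ = γ := by
  obtain ⟨f, hc, hi, rfl⟩ := h
  obtain ⟨p, rfl⟩ := ha
  obtain ⟨q, rfl⟩ := hb
  obtain ⟨s, hs, rfl⟩ := exists_rep p 0
  obtain ⟨t, ht, rfl⟩ := exists_rep q s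
  have hst : s < t := lt_of_le_of_ne ht.1 (by rintro rfl; exact hab rfl)
  exact ⟨_, _, split_param hc hi hst ht.2⟩

/-- Near one of its points, a Jordan curve is a short arc. -/
lemma exists_short (h : IsJordan γ) {q : X} (hq : q ∈ γ) {N : Set X} (hN : N ∈ 𝓝 q) :
    ∃ γ₀ γ₁ a b, IsArc γ₀ a b ∧ IsArc γ₁ a b ∧ γ₀ ∩ γ₁ = {a, b} ∧ γ₀ ∪ γ₁ = γ ∧ γ₀ ⊆ N ∧ q ∉ γ₁ := by
  obtain ⟨f, hc, hi, rfl⟩ := h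
  obtain ⟨p, rfl⟩ := hq
  obtain ⟨s, hs, rfl⟩ := exists_rep p 0
  have hF : Continuous fun r : ℝ => f r := hc.comp (AddCircle.continuous_mk' 1)
  obtain ⟨ε, hε, hb⟩ := Metric.nhds_basis_closedBall.mem_iff.1 (hF.continuousAt.preimage_mem_nhds hN)
  set δ := min ε (1 / 4) with hδ
  have h0 : 0 < δ := lt_min hε (by norm_num)
  have h1 : δ ≤ 1 / 4 := min_le_right _ _
  obtain ⟨k1, k2, k3, k4⟩ := split_param hc hi (s := s - δ) (t := s + δ) (by linarith) (by linarith)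
  refine ⟨_, _, _, _, k1, k2, k3, k4, ?_, ?_⟩
  · rintro _ ⟨r, hr, rfl⟩
    apply hb
    rw [Metric.mem_closedBall, Real.dist_eq, abs_le]
    have := min_le_left ε (1 / 4)
    constructor <;> linarith [hr.1, hr.2]
  · rintro ⟨r, hr, h⟩
    have h3 := (AddCircle.coe_eq_coe_iff_of_mem_Ico (p := 1) (a := s) (x := s) (y := r)
      ⟨le_rfl, by linarith⟩ ⟨by linarith [hr.1], by linarith [hr.2]⟩).1 (hi h.symm)
    linarith [hr.1]

lemma exists_homeo {Y : Type*} [TopologicalSpace Y] [T2Space X] {γ' : Set Y} (h : IsJordan γ)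
    (h' : IsJordan γ') : ∃ k : X → Y, ContinuousOn k γ ∧ BijOn k γ γ' := by
  obtain ⟨f, hc, hi, rfl⟩ := h
  obtain ⟨g, hc', hi', rfl⟩ := h'
  obtain ⟨k, hk, hkf⟩ := exists_inverse (K := univ) isCompact_univ hc.continuousOn hi.injOn
  rw [image_univ] at hk
  refine ⟨g ∘ k, hc'.comp_continuousOn hk, ?_, ?_, ?_⟩
  · rintro _ ⟨p, rfl⟩; exact ⟨_, rfl⟩
  · rintro _ ⟨p, rfl⟩ _ ⟨q, rfl⟩ h
    have := hi' h
    rw [hkf p trivial, hkf q trivial] at this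
    rw [this]
  · rintro _ ⟨p, rfl⟩
    exact ⟨f p, ⟨p, rfl⟩, by simp [hkf p trivial]⟩

end IsJordan

end Arcs

/-! ### Paths contain arcs -/

section PathArc

variable {X : Type*} [MetricSpace X] {f : ℝ → X}

/-- A path that never returns to a point it has left runs along an arc. -/
lemma isArc_of_light (hf : Continuous f) (hm : ∀ s r t, s ≤ r → r ≤ t → f s = f t → f r = f s)
    (h01 : f 0 ≠ f 1) : IsArc (f '' Icc 0 1) (f 0) (f 1) := by
  classical
  let q : ℕ → ℝ := TopologicalSpace.denseSeq ℝ
  have hq : DenseRange q := TopologicalSpace.denseRange_denseSeq ℝ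
  let G : ℕ → ℝ → ℝ → ℝ := fun n t r => min 1 (dist (f (q n)) (f (q n + r * (max t (q n) - q n))))
  let φ : ℕ → ℝ → ℝ := fun n t => sSup (G n t '' Icc 0 1)
  have hG0 : ∀ n t r, 0 ≤ G n t r := fun n t r => le_min zero_le_one dist_nonneg
  have hG1 : ∀ n t r, G n t r ≤ 1 := fun n t r => min_le_left _ _
  have hbdd : ∀ n t, BddAbove (G n t '' Icc 0 1) := fun n t =>
    ⟨1, by rintro _ ⟨r, -, rfl⟩; exact hG1 n t r⟩
  have hne : ∀ n t, (G n t '' Icc (0 : ℝ) 1).Nonempty := fun n t => ⟨_, 0, by simp, rfl⟩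
  have hφc : ∀ n, Continuous (φ n) := by
    intro n
    apply isCompact_Icc.continuous_sSup
    change Continuous fun p : ℝ × ℝ => G n p.1 p.2
    fun_prop
  have hφ1 : ∀ n t, φ n t ≤ 1 := fun n t => csSup_le (hne n t) (by
    rintro _ ⟨r, -, rfl⟩; exact hG1 n t r)
  have hφ0 : ∀ n t, 0 ≤ φ n t := fun n t => (hG0 n t 0).trans (le_csSup (hbdd n t) ⟨0, by simp, rfl⟩)
  have hmono : ∀ n, Monotone (φ n) := by
    intro n t t' htt
    apply csSup_le (hne n t)
    rintro _ ⟨r, hr, rfl⟩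
    by_cases h : q n < max t' (q n)
    · have h1 : 0 < max t' (q n) - q n := by linarith
      have h2 : max t (q n) ≤ max t' (q n) := max_le_max htt le_rfl
      have h3 : 0 ≤ max t (q n) - q n := by linarith [le_max_right t (q n)]
      refine le_csSup (hbdd n t') ⟨r * (max t (q n) - q n) / (max t' (q n) - q n), ⟨?_, ?_⟩, ?_⟩
      · have := hr.1; positivity
      · rw [div_le_one h1]; nlinarith [hr.1, hr.2]
      · simp only [G]; rw [div_mul_cancel₀ _ h1.ne']
    · have h4 : t' ≤ q n := by simpa using h
      have h5 : max t (q n) = q n := max_eq_right (htt.trans h4)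
      refine le_trans (b := 0) ?_ (hφ0 n t')
      simp only [G, h5]; simp
  have hzero : ∀ n t, t ≤ q n → φ n t = 0 := by
    intro n t ht
    apply le_antisymm _ (hφ0 n t)
    apply csSup_le (hne n t)
    rintro _ ⟨r, hr, rfl⟩
    simp only [G, max_eq_right ht]; simp
  have hpos : ∀ n t, q n ≤ t → f t ≠ f (q n) → 0 < φ n t := by
    intro n t ht h
    refine lt_of_lt_of_le ?_ (le_csSup (hbdd n t) ⟨1, by simp, rfl⟩)
    simp only [G, max_eq_left ht]
    refine lt_min one_pos (dist_pos.2 ?_)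
    simpa using h.symm
  have hsame : ∀ n s t, s ≤ t → f s = f t → φ n s = φ n t := by
    intro n s t hst he
    apply le_antisymm (hmono n hst)
    apply csSup_le (hne n t)
    rintro _ ⟨r, hr, rfl⟩
    -- the point at parameter `u` in `[q n, t]` is either in `[q n, s]` or has the value `f s`
    rcases le_total t (q n) with h | h
    · simp only [G, max_eq_right h]; simpa using hφ0 n s
    · set u := q n + r * (t - q n) with hu
      have hGt : G n t r = min 1 (dist (f (q n)) (f u)) := by simp only [G, max_eq_left h, hu]
      have hu1 : q n ≤ u := by rw [hu]; nlinarith [hr.1]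
      have hu2 : u ≤ t := by rw [hu]; nlinarith [hr.2]
      rw [hGt]
      have key : ∀ v, q n ≤ v → v ≤ s → min 1 (dist (f (q n)) (f v)) ≤ φ n s := by
        intro v hv1 hv2
        rcases hv1.eq_or_lt with rfl | hlt
        · simpa using hφ0 n s
        refine le_csSup (hbdd n s) ⟨(v - q n) / (s - q n), ⟨?_, ?_⟩, ?_⟩
        · apply div_nonneg <;> linarith
        · rw [div_le_one (by linarith)]; linarith
        · simp only [G, max_eq_left (hv1.trans hv2)]
          rw [div_mul_cancel₀ _ (by linarith : s - q n ≠ 0)]; simp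
      rcases le_total u s with hus | hus
      · exact key u hu1 hus
      · rw [hm s u t hus hu2 he]
        rcases le_total (q n) s with hqs | hqs
        · exact key s hqs le_rfl
        · rw [hm s (q n) t hqs h he]; simpa using hφ0 n s
  have hsum : ∀ t, Summable fun n => (1 / 2 : ℝ) ^ n * φ n t := fun t =>
    Summable.of_nonneg_of_le (fun n => mul_nonneg (by positivity) (hφ0 n t))
      (fun n => mul_le_of_le_one_right (by positivity) (hφ1 n t)) summable_geometric_two
  let c : ℝ → ℝ := fun t => ∑' n, (1 / 2 : ℝ) ^ n * φ n t
  have hcc : Continuous c := by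
    refine continuous_tsum (fun n => (hφc n).const_mul _) summable_geometric_two fun n t => ?_
    rw [Real.norm_eq_abs, abs_of_nonneg (mul_nonneg (by positivity) (hφ0 n t))]
    exact mul_le_of_le_one_right (by positivity) (hφ1 n t)
  have hclt : ∀ s t, s ≤ t → f s ≠ f t → c s < c t := by
    intro s t hst hne
    have hlt : s < t := lt_of_le_of_ne hst fun h => hne (by rw [h])
    obtain ⟨n, hn1, hn2⟩ : ∃ n, s < q n ∧ q n < t ∧ f (q n) ≠ f t := by
      by_contra hcon
      push Not at hcon
      have hcl : IsClosed {r | f r = f t} := isClosed_eq hf continuous_const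
      have h1 : Icc s t ⊆ {r | f r = f t} := by
        rw [← closure_Ioo hlt.ne]
        refine closure_minimal ?_ hcl
        have h2 : Ioo s t ⊆ closure (Ioo s t ∩ range q) := hq.open_subset_closure_inter isOpen_Ioo
        refine h2.trans (closure_minimal ?_ hcl)
        rintro _ ⟨h3, n, rfl⟩
        exact hcon n h3.1 h3.2
      exact hne (h1 ⟨le_rfl, hst⟩)
    refine Summable.tsum_lt_tsum (i := n) (fun m => ?_) ?_ (hsum s) (hsum t)
    · exact mul_le_mul_of_nonneg_left (hmono m hst) (by positivity)
    · rw [hzero n s hn1.le, mul_zero]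
      exact mul_pos (by positivity) (hpos n t hn2.1.le hn2.2.symm)
  have hceq : ∀ s t, s ≤ t → f s = f t → c s = c t := fun s t hst he =>
    tsum_congr fun n => by rw [hsame n s t hst he]
  have hfc : ∀ s t, c s = c t → f s = f t := by
    intro s t h
    by_contra hne
    rcases le_total s t with h1 | h1
    · exact (hclt s t h1 hne).ne h
    · exact (hclt t s h1 (Ne.symm hne)).ne h.symm
  have hcf : ∀ s t, f s = f t → c s = c t := by
    intro s t h
    rcases le_total s t with h1 | h1
    · exact hceq s t h1 h
    · exact (hceq t s h1 h.symm).symm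
  have hcm : Monotone c := fun s t hst => by
    by_cases he : f s = f t
    · exact (hceq s t hst he).le
    · exact (hclt s t hst he).le
  have hcim : c '' Icc 0 1 = Icc (c 0) (c 1) := by
    apply subset_antisymm
    · rintro _ ⟨t, ht, rfl⟩; exact ⟨hcm ht.1, hcm ht.2⟩
    · exact intermediate_value_Icc zero_le_one hcc.continuousOn
  let g : ℝ → X := fun u => f (Function.invFunOn c (Icc 0 1) u)
  have hg : ∀ t ∈ Icc (0 : ℝ) 1, g (c t) = f t := fun t ht =>
    hfc _ _ (Function.invFunOn_eq ⟨t, ht, rfl⟩)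
  have hgim : g '' Icc (c 0) (c 1) = f '' Icc 0 1 := by
    rw [← hcim, image_image]
    exact image_congr hg
  have hgc : ContinuousOn g (Icc (c 0) (c 1)) := by
    rw [continuousOn_iff_isClosed]
    intro T hT
    refine ⟨c '' (Icc 0 1 ∩ f ⁻¹' T), ((isCompact_Icc.inter_right (hT.preimage hf)).image
      hcc).isClosed, ?_⟩
    rw [← hcim]
    ext u
    constructor
    · rintro ⟨h1, t, ht, rfl⟩
      rw [mem_preimage, hg t ht] at h1
      exact ⟨⟨t, ⟨ht, h1⟩, rfl⟩, ⟨t, ht, rfl⟩⟩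
    · rintro ⟨⟨t, ⟨ht, h1⟩, rfl⟩, -⟩
      exact ⟨by rwa [mem_preimage, hg t ht], ⟨t, ht, rfl⟩⟩
  have hgi : InjOn g (Icc (c 0) (c 1)) := by
    rw [← hcim]
    rintro _ ⟨s, hs, rfl⟩ _ ⟨t, ht, rfl⟩ h
    rw [hg s hs, hg t ht] at h
    exact hcf s t h
  have := isArc_of_Icc (hclt 0 1 zero_le_one h01) hgc hgi
  rwa [hgim, hg 0 (by simp), hg 1 (by simp)] at this

/-- A closed subset of `[0, 1]` that contains the end points and across whose gaps `f` takes equal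
values. -/
def GapSet (f : ℝ → X) (K : Set ℝ) : Prop :=
  IsClosed K ∧ K ⊆ Icc 0 1 ∧ (0 : ℝ) ∈ K ∧ (1 : ℝ) ∈ K ∧
    ∀ s ∈ K, ∀ t ∈ K, s < t → Ioo s t ∩ K = ∅ → f s = f t

lemma exists_minimal_gapSet (hf : ContinuousOn f (Icc 0 1)) : ∃ K, Minimal (GapSet f) K := by
  have hne : GapSet f (Icc 0 1) := by
    refine ⟨isClosed_Icc, Subset.rfl, by simp, by simp, fun s hs t ht hst h => ?_⟩
    exfalso
    have : (s + t) / 2 ∈ Ioo s t ∩ Icc 0 1 :=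
      ⟨⟨by linarith, by linarith⟩, by linarith [hs.1, ht.1], by linarith [hs.2, ht.2]⟩
    rw [h] at this; exact this
  obtain ⟨K, -, hK⟩ := zorn_superset_nonempty {K | GapSet f K} (fun c hc hch hcne => by
    refine ⟨⋂₀ c, ?_, fun s hs => sInter_subset_of_mem hs⟩
    obtain ⟨K0, hK0⟩ := hcne
    refine ⟨isClosed_sInter fun K hK => (hc hK).1, (sInter_subset_of_mem hK0).trans (hc hK0).2.1,
      fun K hK => (hc hK).2.2.1, fun K hK => (hc hK).2.2.2.1, ?_⟩
    intro s hs t ht hst hgap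
    have hs01 := (hc hK0).2.1 (hs K0 hK0)
    have ht01 := (hc hK0).2.1 (ht K0 hK0)
    apply eq_of_forall_dist_le
    intro ε hε
    obtain ⟨δ1, hδ1, h1⟩ := Metric.continuousOn_iff.1 hf s hs01 (ε / 2) (by positivity)
    obtain ⟨δ2, hδ2, h2⟩ := Metric.continuousOn_iff.1 hf t ht01 (ε / 2) (by positivity)
    set δ := min (min δ1 δ2) ((t - s) / 3) with hδ
    have hδ0 : 0 < δ := lt_min (lt_min hδ1 hδ2) (by linarith)
    have hd1 : δ ≤ δ1 := (min_le_left _ _).trans (min_le_left _ _)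
    have hd2 : δ ≤ δ2 := (min_le_left _ _).trans (min_le_right _ _)
    have hd3 : δ ≤ (t - s) / 3 := min_le_right _ _
    -- by compactness some member of the chain misses the middle part of the gap
    obtain ⟨K, hK, hKe⟩ : ∃ K ∈ c, Icc (s + δ / 2) (t - δ / 2) ∩ K = ∅ := by
      have hne : Nonempty c := ⟨⟨K0, hK0⟩⟩
      have := (isCompact_Icc (a := s + δ / 2) (b := t - δ / 2)).elim_directed_family_closed
        (fun K : c => (K : Set ℝ)) (fun K => (hc K.2).1) (by
          rw [← sInter_eq_iInter, eq_empty_iff_forall_notMem]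
          rintro x ⟨hx1, hx2⟩
          have : x ∈ Ioo s t ∩ ⋂₀ c := ⟨⟨by linarith [hx1.1], by linarith [hx1.2]⟩, hx2⟩
          rw [hgap] at this; exact this) (by
          intro K L
          rcases hch.total K.2 L.2 with h | h
          · exact ⟨K, Subset.rfl, h⟩
          · exact ⟨L, h, Subset.rfl⟩)
      obtain ⟨K, hK⟩ := this
      exact ⟨K, K.2, hK⟩
    have hcK := (hc hK).1
    obtain ⟨s', hs', hs'm⟩ := (isCompact_Icc.inter_right hcK).exists_isGreatest
      ⟨s, ⟨le_rfl, by linarith⟩, hs K hK⟩ (s := Icc s (s + δ / 2) ∩ K)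
    obtain ⟨t', ht', ht'm⟩ := (isCompact_Icc.inter_right hcK).exists_isLeast
      ⟨t, ⟨by linarith, le_rfl⟩, ht K hK⟩ (s := Icc (t - δ / 2) t ∩ K)
    have heq : f s' = f t' := by
      refine (hc hK).2.2.2.2 s' hs'.2 t' ht'.2 (by linarith [hs'.1.2, ht'.1.1]) ?_
      rw [eq_empty_iff_forall_notMem]
      rintro x ⟨hx1, hx2⟩
      by_cases hxa : x ≤ s + δ / 2
      · exact absurd (hs'm ⟨⟨hs'.1.1.trans hx1.1.le, hxa⟩, hx2⟩) (not_le.2 hx1.1)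
      by_cases hxb : t - δ / 2 ≤ x
      · exact absurd (ht'm ⟨⟨hxb, hx1.2.le.trans ht'.1.2⟩, hx2⟩) (not_le.2 hx1.2)
      · have : x ∈ Icc (s + δ / 2) (t - δ / 2) ∩ K := ⟨⟨(not_le.1 hxa).le, (not_le.1 hxb).le⟩, hx2⟩
        rw [hKe] at this; exact this
    have e1 := h1 s' ((hc hK).2.1 hs'.2) (by
      rw [Real.dist_eq, abs_lt]; constructor <;> linarith [hs'.1.1, hs'.1.2])
    have e2 := h2 t' ((hc hK).2.1 ht'.2) (by
      rw [Real.dist_eq, abs_lt]; constructor <;> linarith [ht'.1.1, ht'.1.2])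
    calc dist (f s) (f t) ≤ dist (f s) (f s') + dist (f s') (f t) := dist_triangle _ _ _
      _ ≤ ε / 2 + ε / 2 := by rw [dist_comm (f s), heq] at *; exact add_le_add e1.le e2.le
      _ = ε := by ring) _ hne
  exact ⟨K, hK⟩

lemma minimal_gap {K : Set ℝ} (hK : Minimal (GapSet f) K) {s t : ℝ} (hs : s ∈ K) (ht : t ∈ K)
    (h : f s = f t) : Ioo s t ∩ K = ∅ := by
  obtain ⟨⟨hc, hsub, h0, h1, hg⟩, hmin⟩ := hK
  have hsub' := hsub hs
  have htub' := hsub ht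
  have hK' : GapSet f (K \ Ioo s t) := by
    refine ⟨by rw [sdiff_eq]; exact hc.inter isOpen_Ioo.isClosed_compl,
      sdiff_subset.trans hsub, ⟨h0, fun hh => by linarith [hh.1, hsub'.1]⟩,
      ⟨h1, fun hh => by linarith [hh.2, htub'.2]⟩, ?_⟩
    intro u hu v hv huv hgap
    by_cases hemp : Ioo u v ∩ K = ∅
    · exact hg u hu.1 v hv.1 huv hemp
    · obtain ⟨w, hw1, hw2⟩ := nonempty_iff_ne_empty.2 hemp
      have hw : w ∈ Ioo s t := by
        by_contra hcon
        have : w ∈ Ioo u v ∩ (K \ Ioo s t) := ⟨hw1, hw2, hcon⟩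
        rw [hgap] at this; exact this
      have hus : u = s := by
        have h3 : u ≤ s := by
          by_contra hcon; exact hu.2 ⟨not_le.1 hcon, hw1.1.trans hw.2⟩
        by_contra hcon
        have : s ∈ Ioo u v ∩ (K \ Ioo s t) :=
          ⟨⟨lt_of_le_of_ne h3 hcon, hw.1.trans hw1.2⟩, hs, fun h => lt_irrefl _ h.1⟩
        rw [hgap] at this; exact this
      have hvt : v = t := by
        have h3 : t ≤ v := by
          by_contra hcon; exact hv.2 ⟨hw.1.trans hw1.2, not_le.1 hcon⟩
        by_contra hcon
        have : t ∈ Ioo u v ∩ (K \ Ioo s t) :=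
          ⟨⟨hw1.1.trans hw.2, lt_of_le_of_ne h3 (Ne.symm hcon)⟩, ht, fun h => lt_irrefl _ h.2⟩
        rw [hgap] at this; exact this
      rw [hus, hvt, h]
  rw [eq_empty_iff_forall_notMem]
  rintro x ⟨hx1, hx2⟩
  exact (hmin hK' sdiff_subset hx2).2 hx1

/-- The image of a path contains an arc with the same end points. -/
theorem exists_arc (hf : ContinuousOn f (Icc 0 1)) (h01 : f 0 ≠ f 1) :
    ∃ A ⊆ f '' Icc 0 1, IsArc A (f 0) (f 1) := by
  obtain ⟨K, hK⟩ := exists_minimal_gapSet hf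
  have hgap := @minimal_gap _ _ _ _ hK
  obtain ⟨⟨hc, hsub, h0, h1, hg⟩, -⟩ := hK
  have hleft : ∀ t ∈ Icc (0 : ℝ) 1, ∃ u, IsGreatest (Icc 0 t ∩ K) u := fun t ht =>
    (isCompact_Icc.inter_right hc).exists_isGreatest ⟨0, ⟨le_rfl, ht.1⟩, h0⟩
  have hright : ∀ t ∈ Icc (0 : ℝ) 1, ∃ u, IsLeast (Icc t 1 ∩ K) u := fun t ht =>
    (isCompact_Icc.inter_right hc).exists_isLeast ⟨1, ⟨ht.2, le_rfl⟩, h1⟩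
  choose! l hl using hleft
  choose! r hr using hright
  have hlr : ∀ t ∈ Icc (0 : ℝ) 1, f (l t) = f (r t) := by
    intro t ht
    rcases ((hl t ht).1.1.2.trans (hr t ht).1.1.1).eq_or_lt with h | h
    · rw [h]
    · refine hg _ (hl t ht).1.2 _ (hr t ht).1.2 h ?_
      rw [eq_empty_iff_forall_notMem]
      rintro x ⟨hx1, hx2⟩
      rcases le_total x t with hxt | hxt
      · exact absurd ((hl t ht).2 ⟨⟨(hsub hx2).1, hxt⟩, hx2⟩) (not_le.2 hx1.1)
      · exact absurd ((hr t ht).2 ⟨⟨hxt, (hsub hx2).2⟩, hx2⟩) (not_le.2 hx1.2)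
  -- two parameters are either in the same gap or separated by points of `K`
  have hcase : ∀ s ∈ Icc (0 : ℝ) 1, ∀ t ∈ Icc (0 : ℝ) 1, s ≤ t → l s = l t ∨
      (s ≤ r s ∧ r s ≤ l t ∧ l t ≤ t) := by
    intro s hs t ht hst
    by_cases h : l t < s
    · left
      apply le_antisymm
      · exact (hl t ht).2 ⟨⟨(hl s hs).1.1.1, (hl s hs).1.1.2.trans hst⟩, (hl s hs).1.2⟩
      · exact (hl s hs).2 ⟨⟨(hl t ht).1.1.1, h.le⟩, (hl t ht).1.2⟩
    · right
      refine ⟨(hr s hs).1.1.1, ?_, (hl t ht).1.1.2⟩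
      exact (hr s hs).2 ⟨⟨not_lt.1 h, (hl t ht).1.1.2.trans ht.2⟩, (hl t ht).1.2⟩
  let p : ℝ → ℝ := fun t => max 0 (min 1 t)
  have hp : ∀ t, p t ∈ Icc (0 : ℝ) 1 := fun t => ⟨le_max_left _ _, max_le zero_le_one (min_le_left _ _)⟩
  have hpm : Monotone p := fun s t h => max_le_max le_rfl (min_le_min le_rfl h)
  have hpe : ∀ t ∈ Icc (0 : ℝ) 1, p t = t := fun t ht => by simp [p, ht.1, ht.2]
  have hpc : Continuous p := by fun_prop
  let F : ℝ → X := fun t => f (l t)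
  have hFc : ContinuousOn F (Icc 0 1) := by
    have hu := isCompact_Icc.uniformContinuousOn_of_continuous hf
    rw [Metric.uniformContinuousOn_iff] at hu
    have key : ∀ ε > 0, ∃ δ > 0, ∀ s ∈ Icc (0 : ℝ) 1, ∀ t ∈ Icc (0 : ℝ) 1, s ≤ t →
        dist s t < δ → dist (F s) (F t) < ε := by
      intro ε hε
      obtain ⟨δ, hδ, h⟩ := hu ε hε
      refine ⟨δ, hδ, fun s hs t ht hst hd => ?_⟩
      rcases hcase s hs t ht hst with h2 | ⟨h2, h3, h4⟩
      · simpa [F, h2] using hε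
      · change dist (f (l s)) (f (l t)) < ε
        rw [hlr s hs]
        refine h _ (hsub (hr s hs).1.2) _ (hsub (hl t ht).1.2) ?_
        rw [Real.dist_eq, abs_lt] at hd ⊢
        constructor <;> linarith [hd.1, hd.2]
    refine Metric.continuousOn_iff.2 fun s hs ε hε => ?_
    obtain ⟨δ, hδ, h⟩ := key ε hε
    refine ⟨δ, hδ, fun t ht hd => ?_⟩
    rcases le_total s t with h1 | h1
    · rw [dist_comm]; exact h s hs t ht h1 (by rwa [dist_comm])
    · exact h t ht s hs h1 hd
  have hlight : ∀ s ∈ Icc (0 : ℝ) 1, ∀ t ∈ Icc (0 : ℝ) 1, ∀ u, s ≤ u → u ≤ t → F s = F t →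
      F u = F s := by
    intro s hs t ht u hsu hut he
    have hu : u ∈ Icc (0 : ℝ) 1 := ⟨hs.1.trans hsu, hut.trans ht.2⟩
    rcases hcase s hs u hu hsu with h2 | ⟨h2, h3, h4⟩
    · simp only [F, h2]
    rcases hcase u hu t ht hut with h5 | ⟨h5, h6, h7⟩
    · rw [he]; simp only [F, h5]
    have h8 : l u ≤ r u := (hl u hu).1.1.2.trans (hr u hu).1.1.1
    have he' : f (r s) = f (l t) := by rw [← hlr s hs]; exact he
    rcases (h3.trans (h8.trans h6)).eq_or_lt with h9 | h9
    · have : l u = r s := le_antisymm (h8.trans (h6.trans h9.ge)) h3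
      change f (l u) = f (l s)
      rw [this, hlr s hs]
    · have h10 := hgap (hr s hs).1.2 (hl t ht).1.2 he'
      by_cases h11 : l u = r s
      · change f (l u) = f (l s)
        rw [h11, hlr s hs]
      by_cases h12 : l u = l t
      · change f (l u) = f (l s)
        rw [h12]; exact he.symm
      · have : l u ∈ Ioo (r s) (l t) ∩ K := ⟨⟨lt_of_le_of_ne h3 (Ne.symm h11),
          lt_of_le_of_ne (h8.trans h6) h12⟩, (hl u hu).1.2⟩
        rw [h10] at this; exact this.elim
  have hlK : ∀ t ∈ K, l t = t := fun t ht => le_antisymm (hl t (hsub ht)).1.1.2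
    ((hl t (hsub ht)).2 ⟨⟨(hsub ht).1, le_rfl⟩, ht⟩)
  have hF0 : (F ∘ p) 0 = f 0 := by simp only [F, Function.comp, hpe 0 (by simp), hlK 0 h0]
  have hF1 : (F ∘ p) 1 = f 1 := by simp only [F, Function.comp, hpe 1 (by simp), hlK 1 h1]
  have := isArc_of_light (f := F ∘ p) (hFc.comp_continuous hpc hp) (fun s u t h1 h2 h3 =>
    hlight _ (hp s) _ (hp t) _ (hpm h1) (hpm h2) h3) (by rwa [hF0, hF1])
  rw [hF0, hF1] at this
  refine ⟨_, ?_, this⟩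
  rintro _ ⟨t, ht, rfl⟩
  exact ⟨l (p t), hsub (hl _ (hp t)).1.2, rfl⟩

end PathArc

/-! ### Cells and crosscuts -/

section Cells

variable {M : Type*} [MetricSpace M] [ChartedSpace ℂ M]

lemma component_eq {G B : Set M} {x : M} (hG : IsOpen G) (hGc : IsPreconnected G) (hx : x ∈ G)
    (hd : Disjoint G B) (hcl : closure G ⊆ G ∪ B) : connectedComponentIn Bᶜ x = G := by
  apply subset_antisymm
  · refine isPreconnected_connectedComponentIn.subset_of_closure_inter_subset hG
      ⟨x, mem_connectedComponentIn (disjoint_left.1 hd hx), hx⟩ ?_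
    rintro z ⟨h1, h2⟩
    exact (hcl h1).resolve_right (connectedComponentIn_subset _ _ h2)
  · exact hGc.subset_connectedComponentIn hx (disjoint_left.1 hd)

/-- The complement of a Jordan curve `γ` is the union of the open connected sets `U` and
`(U ∪ γ)ᶜ`; both have `γ` in their closure, `U ∪ γ` is compact, and `w` lies outside. -/
structure IsCell (V : Set M) (w : M) (U γ : Set M) : Prop where
  isOpen : IsOpen U
  conn : IsPreconnected U
  jordan : IsJordan γ
  conn_ext : IsPreconnected (U ∪ γ)ᶜ
  disj : Disjoint U γ
  sub_closure : γ ⊆ closure U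
  sub_closure_ext : γ ⊆ closure (U ∪ γ)ᶜ
  compact : IsCompact (U ∪ γ)
  sub : U ⊆ V
  ext : w ∉ U ∪ γ

/-- `A` is an arc through `U` joining the points `a`, `b` of `γ`, which divide `γ` into the arcs
`β₁` and `β₂`. -/
structure IsCrosscut (U γ A : Set M) (a b : M) (β₁ β₂ : Set M) : Prop where
  arc : IsArc A a b
  arc₁ : IsArc β₁ a b
  arc₂ : IsArc β₂ a b
  inter : β₁ ∩ β₂ = {a, b}
  union : β₁ ∪ β₂ = γ
  inter_curve : A ∩ γ = {a, b}
  sub : A ⊆ U ∪ {a, b}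

variable {V U γ A β₁ β₂ : Set M} {w a b x y : M}

lemma IsCrosscut.symm (h : IsCrosscut U γ A a b β₁ β₂) : IsCrosscut U γ A a b β₂ β₁ :=
  ⟨h.arc, h.arc₂, h.arc₁, by rw [inter_comm, h.inter], by rw [union_comm, h.union],
    h.inter_curve, h.sub⟩

lemma IsCell.isClosed_curve (h : IsCell V w U γ) : IsClosed γ := h.jordan.isClosed

lemma IsCell.closure_subset (h : IsCell V w U γ) : closure U ⊆ U ∪ γ :=
  closure_minimal subset_union_left h.compact.isClosed

lemma IsCell.component (h : IsCell V w U γ) (hx : x ∈ U) : connectedComponentIn γᶜ x = U :=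
  component_eq h.isOpen h.conn hx h.disj h.closure_subset

lemma IsCell.component_sub (h : IsCell V w U γ) {B : Set M} (hB : γ ⊆ B) (hx : x ∈ U) :
    connectedComponentIn Bᶜ x ⊆ U := by
  rw [← h.component hx]
  exact connectedComponentIn_mono x (compl_subset_compl.2 hB)

lemma IsCell.nonempty (h : IsCell V w U γ) : U.Nonempty := by
  obtain ⟨f, hc, hi, hr⟩ := h.jordan
  exact closure_nonempty_iff.1 ⟨f 0, h.sub_closure (hr ▸ mem_range_self _)⟩

lemma exists_connected_nhd {q : M} {N : Set M} (hN : N ∈ 𝓝 q) :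
    ∃ N' ⊆ N, IsOpen N' ∧ q ∈ N' ∧ IsPreconnected N' := by
  have := ChartedSpace.locallyConnectedSpace ℂ M
  obtain ⟨N', h1, h2, h3, h4⟩ := locallyConnectedSpace_iff_subsets_isOpen_isConnected.1 this q N hN
  exact ⟨N', h1, h2, h3, h4.isPreconnected⟩

variable [SimplyConnectedSpace M]

/-- The boundary of a bounded region is not contained in an arc. -/
lemma not_closure_subset_arc (hV : NoG V) {G B : Set M} (hG : IsOpen G) (hGc : IsPreconnected G)
    (hx : x ∈ G) (hGV : G ⊆ V) (hB : IsClosed B) (hB' : AllLog B) (hd : Disjoint G B)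
    (hw : w ∉ G ∪ B) : ¬ closure G ⊆ G ∪ B := by
  intro hcl
  have h1 := component_eq hG hGc hx hd hcl
  have h2 := mem_component_of_allLog hV hB hB' (disjoint_left.1 hd hx) (fun h => hw (Or.inr h))
    (h1.trans_subset hGV)
  exact hw (Or.inl (h1 ▸ h2))

/-- One of the two parts of a cell cut by a crosscut. -/
lemma crosscut_aux (hV : NoG V) (hU : IsCell V w U γ) (h : IsCrosscut U γ A a b β₁ β₂)
    (hx : x ∈ U \ A) {q : M} (hq : q ∈ closure (connectedComponentIn (γ ∪ A)ᶜ x)) (hq2 : q ∈ β₂)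
    (hqa : q ∉ ({a, b} : Set M)) : w ∈ connectedComponentIn (A ∪ β₁)ᶜ x := by
  have hγ : q ∈ γ := h.union ▸ Or.inr hq2
  have hqn : q ∉ A ∪ β₁ := by
    rintro (h1 | h1)
    · exact hqa (h.inter_curve ▸ ⟨h1, hγ⟩)
    · exact hqa (h.inter ▸ ⟨h1, hq2⟩)
  have hcl : IsClosed (A ∪ β₁) := h.arc.isClosed.union h.arc₁.isClosed
  obtain ⟨N, hN1, hN2, hN3, hN4⟩ := exists_connected_nhd (hcl.isOpen_compl.mem_nhds hqn)
  obtain ⟨u, hu1, hu2⟩ := mem_closure_iff.1 hq N hN2 hN3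
  obtain ⟨v, hv1, hv2⟩ := mem_closure_iff.1 (hU.sub_closure_ext hγ) N hN2 hN3
  have hAsub : A ∪ β₁ ⊆ U ∪ γ := by
    refine union_subset (h.sub.trans (union_subset_union_right _ ?_)) ?_
    · rw [← h.inter_curve]; exact inter_subset_right
    · rw [← h.union]; exact subset_union_left.trans subset_union_right
  have hxγ : x ∉ γ ∪ A := fun hh => hh.elim (disjoint_left.1 hU.disj hx.1) hx.2
  have hc1 : IsPreconnected (connectedComponentIn (γ ∪ A)ᶜ x ∪ N) :=
    isPreconnected_connectedComponentIn.union u hu2 hu1 hN4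
  have hc2 := hc1.union v (Or.inr hv1) hv2 hU.conn_ext
  refine hc2.subset_connectedComponentIn (Or.inl (Or.inl (mem_connectedComponentIn hxγ))) ?_
    (Or.inr hU.ext)
  refine union_subset (union_subset ?_ hN1) (compl_subset_compl.2 hAsub)
  refine (connectedComponentIn_subset _ _).trans (compl_subset_compl.2 ?_)
  rw [← h.union]
  exact union_subset subset_union_right (subset_union_left.trans subset_union_left)

/-- `x` lies in the part of the cell adjacent to `β₁`. -/
lemma crosscut_type (hV : NoG V) (hU : IsCell V w U γ) (h : IsCrosscut U γ A a b β₁ β₂)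
    (hx : x ∈ U \ A) :
    (w ∈ connectedComponentIn (A ∪ β₂)ᶜ x ∧
      closure (connectedComponentIn (γ ∪ A)ᶜ x) ⊆ connectedComponentIn (γ ∪ A)ᶜ x ∪ (A ∪ β₁)) ∨
    (w ∈ connectedComponentIn (A ∪ β₁)ᶜ x ∧
      closure (connectedComponentIn (γ ∪ A)ᶜ x) ⊆ connectedComponentIn (γ ∪ A)ᶜ x ∪ (A ∪ β₂)) := by
  set G := connectedComponentIn (γ ∪ A)ᶜ x with hG
  have hcl : IsClosed (γ ∪ A) := hU.isClosed_curve.union h.arc.isClosed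
  have hGo : IsOpen G := isOpen_component hcl x
  have hxγ : x ∉ γ ∪ A := fun hh => hh.elim (disjoint_left.1 hU.disj hx.1) hx.2
  have hGx : x ∈ G := mem_connectedComponentIn hxγ
  have hGU : G ⊆ U := hU.component_sub subset_union_left hx.1
  have hGcl : closure G ⊆ G ∪ (γ ∪ A) := closure_component hcl
  have hGd : Disjoint G (γ ∪ A) := disjoint_left.2 fun z hz => connectedComponentIn_subset _ _ hz
  have hAsub : A ⊆ U ∪ γ := by
    refine h.sub.trans (union_subset_union_right _ ?_)
    rw [← h.inter_curve]; exact inter_subset_right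
  have hnotA : ¬ closure G ⊆ G ∪ A :=
    not_closure_subset_arc (w := w) hV hGo isPreconnected_connectedComponentIn hGx
      (hGU.trans hU.sub) h.arc.isClosed h.arc.allLog (hGd.mono_right subset_union_right)
      fun hh => hU.ext (hh.elim (fun k => Or.inl (hGU k)) fun k => hAsub k)
  have hab : ({a, b} : Set M) ⊆ A := by rw [← h.inter_curve]; exact inter_subset_left
  obtain ⟨q, hq, hqn⟩ := not_subset.1 hnotA
  have hqγ : q ∈ γ := by
    rcases hGcl hq with h1 | h1 | h1
    · exact (hqn (Or.inl h1)).elim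
    · exact h1
    · exact (hqn (Or.inr h1)).elim
  have hqab : q ∉ ({a, b} : Set M) := fun h1 => hqn (Or.inr (hab h1))
  -- the closure cannot reach both arcs, by Janiszewski's theorem
  have hboth : ∀ p ∈ closure G, ∀ r ∈ closure G, p ∈ β₁ → r ∈ β₂ → p ∉ ({a, b} : Set M) →
      r ∉ ({a, b} : Set M) → False := by
    intro p hp r hr hp1 hr2 hpa hra
    have h1 := crosscut_aux hV hU h hx hr hr2 hra
    have h2 := crosscut_aux hV hU h.symm hx hp hp1 hpa
    have hu : (A ∪ β₁) ∪ (A ∪ β₂) = γ ∪ A := by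
      rw [← h.union]; ext; simp; tauto
    have hi : (A ∪ β₁) ∩ (A ∪ β₂) = A := by
      rw [← union_inter_distrib_left, h.inter, union_eq_self_of_subset_right hab]
    have hx1 : x ∉ A ∪ β₁ := fun hh => hxγ (hu ▸ Or.inl hh)
    have hx2 : x ∉ A ∪ β₂ := fun hh => hxγ (hu ▸ Or.inr hh)
    have := janiszewski hV (h.arc.isClosed.union h.arc₁.isClosed)
      (h.arc.isClosed.union h.arc₂.isClosed) (by rw [hi]; exact h.arc.isPreconnected) hx1 hx2 h1 h2
      (by rw [hu]; exact hGU.trans hU.sub)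
    rw [hu] at this
    exact hU.ext (Or.inl (hGU this))
  have hfin : ∀ β β' : Set M, β ∪ β' = γ → (∀ r ∈ closure G, r ∈ β' → r ∉ ({a, b} : Set M) → False) →
      closure G ⊆ G ∪ (A ∪ β) := by
    intro β β' hβ hno r hr
    rcases hGcl hr with h1 | h1 | h1
    · exact Or.inl h1
    · by_cases h2 : r ∈ ({a, b} : Set M)
      · exact Or.inr (Or.inl (hab h2))
      · rw [← hβ] at h1
        exact Or.inr (Or.inr (h1.resolve_right fun h3 => hno r hr h3 h2))
    · exact Or.inr (Or.inl h1)
  rw [← h.union] at hqγ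
  rcases hqγ with h1 | h1
  · left
    exact ⟨crosscut_aux hV hU h.symm hx hq h1 hqab, hfin _ _ h.union fun r hr hr2 hra =>
      hboth q hq r hr h1 hr2 hqab hra⟩
  · right
    exact ⟨crosscut_aux hV hU h hx hq h1 hqab, hfin _ _ (by rw [union_comm, h.union])
      fun r hr hr2 hra => hboth r hr q hq hr2 h1 hra hqab⟩

lemma crosscut_part (hV : NoG V) (hU : IsCell V w U γ) (h : IsCrosscut U γ A a b β₁ β₂) :
    ∃ U₁, IsOpen U₁ ∧ IsPreconnected U₁ ∧ U₁.Nonempty ∧ U₁ ⊆ U \ A ∧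
      closure U₁ ⊆ U₁ ∪ (A ∪ β₁) ∧ ∀ x ∈ U \ A, x ∉ U₁ → w ∈ connectedComponentIn (A ∪ β₁)ᶜ x ∧
      closure (connectedComponentIn (γ ∪ A)ᶜ x) ⊆ connectedComponentIn (γ ∪ A)ᶜ x ∪ (A ∪ β₂) := by
  have hcl : IsClosed (γ ∪ A) := hU.isClosed_curve.union h.arc.isClosed
  have hab : ({a, b} : Set M) ⊆ A := by rw [← h.inter_curve]; exact inter_subset_left
  have hsub : ∀ x ∈ U \ A, connectedComponentIn (γ ∪ A)ᶜ x ⊆ U \ A := fun x hx z hz =>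
    ⟨hU.component_sub subset_union_left hx.1 hz,
      fun h1 => connectedComponentIn_subset _ _ hz (Or.inr h1)⟩
  have hmem : ∀ x ∈ U \ A, x ∉ γ ∪ A := fun x hx hh =>
    hh.elim (disjoint_left.1 hU.disj hx.1) hx.2
  -- points of the same type lie in the same component
  have hsame : ∀ x ∈ U \ A, ∀ y ∈ U \ A, ∀ β β' : Set M, IsCrosscut U γ A a b β β' →
      w ∈ connectedComponentIn (A ∪ β')ᶜ x → w ∈ connectedComponentIn (A ∪ β')ᶜ y →
      y ∈ connectedComponentIn (γ ∪ A)ᶜ x := by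
    intro x hx y hy β β' h hwx hwy
    have hu : γ ∪ (A ∪ β') = γ ∪ A := by
      rw [← h.union]; ext; simp; tauto
    have hi : γ ∩ (A ∪ β') = β' := by
      rw [inter_union_distrib_left, inter_comm γ A, h.inter_curve, ← h.union, union_inter_cancel_right]
      apply union_eq_self_of_subset_left
      rw [← h.inter]; exact inter_subset_right
    have hyw : y ∈ connectedComponentIn (A ∪ β')ᶜ x := by
      rw [connectedComponentIn_eq hwx, ← connectedComponentIn_eq hwy]
      exact mem_connectedComponentIn fun hh => hmem y hy (hu ▸ Or.inr hh)
    have := janiszewski hV hU.isClosed_curve (h.arc.isClosed.union h.arc₂.isClosed)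
      (by rw [hi]; exact h.arc₂.isPreconnected) (disjoint_left.1 hU.disj hx.1)
      (fun hh => hmem x hx (hu ▸ Or.inr hh)) (by rw [hU.component hx.1]; exact hy.1) hyw
      ((hU.component_sub subset_union_left hx.1).trans hU.sub)
    rwa [hu] at this
  -- a point of the first type exists near an interior point of `β₁`
  obtain ⟨x, hx, hwx, hclx⟩ : ∃ x ∈ U \ A, w ∈ connectedComponentIn (A ∪ β₂)ᶜ x ∧
      closure (connectedComponentIn (γ ∪ A)ᶜ x) ⊆
        connectedComponentIn (γ ∪ A)ᶜ x ∪ (A ∪ β₁) := by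
    by_contra hcon
    push Not at hcon
    have htype := fun x hx => (crosscut_type hV hU h (x := x) hx).resolve_left
      fun hh => (hcon x hx hh.1) hh.2
    obtain ⟨q, hq, hqa, hqb⟩ := h.arc₁.exists_interior
    have hqγ : q ∈ γ := h.union ▸ Or.inl hq
    have hqab : q ∉ ({a, b} : Set M) := by simp [hqa, hqb]
    have hqA : q ∉ A := fun hh => hqab (h.inter_curve ▸ ⟨hh, hqγ⟩)
    have hqc : q ∈ closure (U \ A) := by
      rw [mem_closure_iff_nhds]
      intro N hN
      obtain ⟨z, hz1, hz2⟩ := mem_closure_iff_nhds.1 (hU.sub_closure hqγ) _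
        (inter_mem hN (h.arc.isClosed.isOpen_compl.mem_nhds hqA))
      exact ⟨z, hz1.1, hz2, hz1.2⟩
    obtain ⟨x, hx⟩ := closure_nonempty_iff.1 ⟨q, hqc⟩
    have hall : U \ A ⊆ connectedComponentIn (γ ∪ A)ᶜ x := fun y hy =>
      hsame x hx y hy _ _ h.symm (htype x hx).1 (htype y hy).1
    rcases (htype x hx).2 (closure_mono hall hqc) with h1 | h1 | h1
    · exact disjoint_left.1 hU.disj (hsub x hx h1).1 hqγ
    · exact hqA h1
    · exact hqab (h.inter ▸ ⟨hq, h1⟩)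
  refine ⟨connectedComponentIn (γ ∪ A)ᶜ x, isOpen_component hcl x,
    isPreconnected_connectedComponentIn, ⟨x, mem_connectedComponentIn (hmem x hx)⟩, hsub x hx,
    hclx, fun y hy hyx => ?_⟩
  exact (crosscut_type hV hU h hy).resolve_left fun hh => hyx (hsame x hx y hy _ _ h hwx hh.1)

/-- A crosscut divides a cell into two cells. -/
theorem exists_cut (hV : NoG V) (hU : IsCell V w U γ) (h : IsCrosscut U γ A a b β₁ β₂) :
    ∃ U₁ U₂, IsCell V w U₁ (A ∪ β₁) ∧ IsCell V w U₂ (A ∪ β₂) ∧ Disjoint U₁ U₂ ∧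
      U₁ ∪ U₂ = U \ A := by
  have hab : ({a, b} : Set M) ⊆ A := by rw [← h.inter_curve]; exact inter_subset_left
  have habγ : ({a, b} : Set M) ⊆ γ := by rw [← h.inter_curve]; exact inter_subset_right
  obtain ⟨U₁, ho1, hc1, hn1, hs1, hcl1, hr1⟩ := crosscut_part hV hU h
  obtain ⟨U₂, ho2, hc2, hn2, hs2, hcl2, hr2⟩ := crosscut_part hV hU h.symm
  have hdU : ∀ G ⊆ U \ A, Disjoint G (γ ∪ A) := fun G hG => disjoint_left.2 fun z hz hh =>
    hh.elim (disjoint_left.1 hU.disj (hG hz).1) (hG hz).2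
  have hgen : ∀ (β β' G : Set M), IsCrosscut U γ A a b β β' → IsOpen G → IsPreconnected G →
      G ⊆ U \ A → closure G ⊆ G ∪ (A ∪ β) → ∀ x ∈ G, connectedComponentIn (A ∪ β)ᶜ x = G ∧
      connectedComponentIn (γ ∪ A)ᶜ x = G ∧ w ∉ G ∧ A ∪ β ⊆ closure G ∧ w ∉ A ∪ β := by
    intro β β' G h ho hc hs hcl x hx
    have hβ : A ∪ β ⊆ γ ∪ A := by rw [← h.union]; intro z; simp; tauto
    have hd := (hdU G hs).mono_right hβ
    have hwG : w ∉ G := fun hh => hU.ext (Or.inl (hs hh).1)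
    have hwA : w ∉ A ∪ β := by
      rintro (hh | hh)
      · exact hU.ext ((h.sub hh).imp id fun k => habγ k)
      · exact hU.ext (Or.inr (h.union ▸ Or.inl hh))
    refine ⟨component_eq ho hc hx hd hcl, component_eq ho hc hx (hdU G hs)
      (hcl.trans (union_subset_union_right _ hβ)), hwG, ?_, hwA⟩
    intro z hz
    by_contra hzn
    have hJ : IsJordan (A ∪ β) := IsJordan.of_arcs h.arc h.arc₁ (by
      rw [← h.inter_curve, ← h.union]; exact inter_subset_inter_right _ subset_union_left)
    obtain ⟨γ₀, γ₁, p, q, k1, k2, k3, k4, k5, k6⟩ :=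
      hJ.exists_short hz (isClosed_closure.isOpen_compl.mem_nhds hzn)
    refine not_closure_subset_arc (w := w) hV ho hc hx (hs.trans (sdiff_subset.trans hU.sub))
      k2.isClosed k2.allLog (hd.mono_right (k4 ▸ subset_union_right)) ?_ ?_
    · rintro (hh | hh)
      · exact hwG hh
      · exact hwA (k4 ▸ Or.inr hh)
    · intro r hr
      rcases hcl hr with h1 | h1
      · exact Or.inl h1
      · rw [← k4] at h1
        exact Or.inr (h1.resolve_left fun h2 => k5 h2 hr)
  obtain ⟨x1, hx1⟩ := hn1
  obtain ⟨x2, hx2⟩ := hn2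
  obtain ⟨e1, e1', f1, g1, i1⟩ := hgen _ _ _ h ho1 hc1 hs1 hcl1 x1 hx1
  obtain ⟨e2, e2', f2, g2, i2⟩ := hgen _ _ _ h.symm ho2 hc2 hs2 hcl2 x2 hx2
  have hd12 : Disjoint U₁ U₂ := by
    rw [disjoint_left]
    intro z hz1 hz2
    have h12 : U₁ = U₂ := by
      rw [← (hgen _ _ _ h ho1 hc1 hs1 hcl1 z hz1).2.1,
        ← (hgen _ _ _ h.symm ho2 hc2 hs2 hcl2 z hz2).2.1]
    obtain ⟨q, hq, hqa, hqb⟩ := h.arc₁.exists_interior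
    have hqγ : q ∈ γ := h.union ▸ Or.inl hq
    have hqab : q ∉ ({a, b} : Set M) := by simp [hqa, hqb]
    rcases hcl2 (h12 ▸ g1 (Or.inr hq)) with h1 | h1 | h1
    · exact disjoint_left.1 hU.disj (hs2 h1).1 hqγ
    · exact hqab (h.inter_curve ▸ ⟨h1, hqγ⟩)
    · exact hqab (h.inter ▸ ⟨hq, h1⟩)
  have hun : U₁ ∪ U₂ = U \ A := by
    apply subset_antisymm (union_subset hs1 hs2)
    intro x hx
    by_contra hxn
    simp only [mem_union, not_or] at hxn
    obtain ⟨r1, r1'⟩ := hr1 x hx hxn.1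
    obtain ⟨r2, r2'⟩ := hr2 x hx hxn.2
    -- `x` would see `w` past both curves
    have hxm : x ∉ γ ∪ A := fun hh => hh.elim (disjoint_left.1 hU.disj hx.1) hx.2
    have hu : (A ∪ β₁) ∪ (A ∪ β₂) = γ ∪ A := by
      rw [← h.union]; ext; simp; tauto
    have hi : (A ∪ β₁) ∩ (A ∪ β₂) = A := by
      rw [← union_inter_distrib_left, h.inter, union_eq_self_of_subset_right hab]
    have hsubx := hU.component_sub (B := γ ∪ A) subset_union_left hx.1
    have := janiszewski hV (h.arc.isClosed.union h.arc₁.isClosed)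
      (h.arc.isClosed.union h.arc₂.isClosed) (by rw [hi]; exact h.arc.isPreconnected)
      (fun hh => hxm (hu ▸ Or.inl hh)) (fun hh => hxm (hu ▸ Or.inr hh)) r1 r2
      (by rw [hu]; exact hsubx.trans hU.sub)
    rw [hu] at this
    exact hU.ext (Or.inl (hsubx this))
  have hcell : ∀ β β' G G' : Set M, IsCrosscut U γ A a b β β' → IsOpen G → IsPreconnected G →
      G ⊆ U \ A → closure G ⊆ G ∪ (A ∪ β) → A ∪ β ⊆ closure G → A ∪ β' ⊆ closure G' →
      IsPreconnected G' → G ∪ G' = U \ A → Disjoint G G' → w ∉ A ∪ β → IsCell V w G (A ∪ β) := by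
    intro β β' G G' h ho hc hs hcl hsub hsub' hc' hGG hdGG hwA
    have hβ : A ∪ β ⊆ γ ∪ A := by rw [← h.union]; intro z; simp; tauto
    have hAU : A ⊆ U ∪ γ := h.sub.trans (union_subset_union_right _ habγ)
    have hβγ : β ⊆ γ := h.union ▸ subset_union_left
    have hβγ' : β' ⊆ γ := h.union ▸ subset_union_right
    have hGU : G ∪ (A ∪ β) ⊆ U ∪ γ :=
      union_subset (hs.trans (sdiff_subset.trans subset_union_left))
        (union_subset hAU (hβγ.trans subset_union_right))
    have hclG : IsClosed (G ∪ (A ∪ β)) := by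
      have : G ∪ (A ∪ β) = closure G :=
        subset_antisymm (union_subset subset_closure hsub) hcl
      rw [this]; exact isClosed_closure
    have hG'U : G' ⊆ U \ A := hGG ▸ subset_union_right
    obtain ⟨q, hq, hqa, hqb⟩ := h.arc₂.exists_interior
    have hqab : q ∉ ({a, b} : Set M) := by simp [hqa, hqb]
    -- the outside is the old outside, the open arc `β'` and the other part
    have hext : (G ∪ (A ∪ β))ᶜ = ((U ∪ γ)ᶜ ∪ (β' \ {a, b})) ∪ (G' ∪ (β' \ {a, b})) := by
      ext z
      constructor
      · intro hz
        simp only [mem_compl_iff, mem_union, not_or] at hz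
        by_cases hzU : z ∈ U
        · have : z ∈ G ∪ G' := hGG ▸ ⟨hzU, hz.2.1⟩
          exact Or.inr (Or.inl (this.resolve_left hz.1))
        · by_cases hzγ : z ∈ γ
          · rw [← h.union] at hzγ
            exact Or.inl (Or.inr ⟨hzγ.resolve_left hz.2.2, fun hh => hz.2.1 (hab hh)⟩)
          · exact Or.inl (Or.inl fun hh => hh.elim hzU hzγ)
      · have hβ'' : ∀ z ∈ β' \ {a, b}, z ∉ G ∪ (A ∪ β) := by
          rintro z ⟨h1, h2⟩ (h3 | h3 | h3)
          · exact disjoint_left.1 hU.disj (hs h3).1 (hβγ' h1)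
          · exact h2 (h.inter_curve ▸ ⟨h3, hβγ' h1⟩)
          · exact h2 (h.inter ▸ ⟨h3, h1⟩)
        rintro ((h1 | h1) | (h1 | h1))
        · exact fun hh => h1 (hGU hh)
        · exact hβ'' z h1
        · rintro (h3 | h3 | h3)
          · exact disjoint_left.1 hdGG h3 h1
          · exact (hG'U h1).2 h3
          · exact disjoint_left.1 hU.disj (hG'U h1).1 (hβγ h3)
        · exact hβ'' z h1
    refine ⟨ho, hc, IsJordan.of_arcs h.arc h.arc₁ ?_, ?_, (hdU G hs).mono_right hβ, hsub, ?_,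
      hU.compact.of_isClosed_subset hclG hGU, hs.trans (sdiff_subset.trans hU.sub), ?_⟩
    · rw [← h.inter_curve, ← h.union]; exact inter_subset_inter_right _ subset_union_left
    · rw [hext]
      refine IsPreconnected.union q (Or.inr ⟨hq, hqab⟩) (Or.inr ⟨hq, hqab⟩) ?_ ?_
      · exact hU.conn_ext.subset_closure subset_union_left (union_subset subset_closure
          (sdiff_subset.trans (hβγ'.trans hU.sub_closure_ext)))
      · exact hc'.subset_closure subset_union_left (union_subset subset_closure
          (sdiff_subset.trans (subset_union_right.trans hsub')))
    · rintro z (hz | hz)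
      · exact closure_mono (hext ▸ subset_union_left.trans subset_union_right)
          (hsub' (Or.inl hz))
      · exact closure_mono (hext ▸ subset_union_left.trans subset_union_left)
          (hU.sub_closure_ext (hβγ hz))
    · rintro (hh | hh)
      · exact hU.ext (Or.inl (hs hh).1)
      · exact hwA hh
  exact ⟨U₁, U₂, hcell _ _ _ _ h ho1 hc1 hs1 hcl1 g1 g2 hc2 hun hd12 i1,
    hcell _ _ _ _ h.symm ho2 hc2 hs2 hcl2 g2 g1 hc1 (by rw [union_comm, hun]) hd12.symm i2,
    hd12, hun⟩

end Cells

/-! ### Gaps of a circle in a cell -/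

section Gaps

variable {X : Type*} [TopologicalSpace X] [T2Space X]

lemma IsJordan.continuous_param {f : AddCircle (1 : ℝ) → X} (hc : Continuous f) :
    Continuous fun r : ℝ => f r := hc.comp (AddCircle.continuous_mk' 1)

lemma IsJordan.param_inj {f : AddCircle (1 : ℝ) → X} (hi : Function.Injective f) {s u v : ℝ}
    (hu : u ∈ Ico s (s + 1)) (hv : v ∈ Ico s (s + 1)) (h : f u = f v) : u = v :=
  (AddCircle.coe_eq_coe_iff_of_mem_Ico (p := 1) (a := s) hu hv).1 (hi h)

lemma IsJordan.param_period (f : AddCircle (1 : ℝ) → X) (s : ℝ) : f (s + 1 : ℝ) = f s := by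
  congr 1; exact AddCircle.coe_add_period 1 s

/-- A connected part of a Jordan curve missing the ends of a subarc but meeting it lies in it. -/
lemma IsJordan.subset_subarc {f : AddCircle (1 : ℝ) → X} (hc : Continuous f)
    (hi : Function.Injective f) {s t : ℝ} (h1 : s < t) (h2 : t < s + 1) {α : Set X}
    (hα : IsPreconnected α) (hsub : α ⊆ range f) (hs : f s ∉ α) (ht : f t ∉ α) {r : ℝ}
    (hr : r ∈ Ioo s t) (hrα : f r ∈ α) : α ⊆ (fun r : ℝ => f r) '' Ioo s t := by
  obtain ⟨a1, a2, a3, a4⟩ := split_param hc hi h1 h2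
  have hdis : α ∩ (((fun r : ℝ => f r) '' Icc s t) ∩ ((fun r : ℝ => f r) '' Icc t (s + 1))) = ∅ := by
    rw [a3]
    ext z
    simp only [mem_inter_iff, mem_insert_iff, mem_singleton_iff, mem_empty_iff_false, iff_false]
    rintro ⟨h, rfl | rfl⟩
    exacts [hs h, ht h]
  have key : α ⊆ (fun r : ℝ => f r) '' Icc s t := by
    rcases (isPreconnected_iff_subset_of_disjoint_closed.1 hα) _ _ a1.isClosed a2.isClosed
      (a4 ▸ hsub) hdis with h | h
    · exact h
    · exfalso
      have : f r ∈ α ∩ (((fun r : ℝ => f r) '' Icc s t) ∩ ((fun r : ℝ => f r) '' Icc t (s + 1))) :=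
        ⟨hrα, ⟨r, ⟨hr.1.le, hr.2.le⟩, rfl⟩, h hrα⟩
      rw [hdis] at this
      exact this
  intro z hz
  obtain ⟨u, hu, rfl⟩ := key hz
  refine ⟨u, ⟨lt_of_le_of_ne hu.1 ?_, lt_of_le_of_ne hu.2 ?_⟩, rfl⟩
  · rintro rfl; exact hs hz
  · rintro rfl; exact ht hz

/-- A point of a Jordan curve has neighbourhoods in which the curve is a prescribed short arc. -/
lemma IsJordan.nhds_subarc {f : AddCircle (1 : ℝ) → X} (hc : Continuous f)
    (hi : Function.Injective f) (τ : ℝ) {δ : ℝ} (hδ : 0 < δ) (hδ' : δ < 1 / 2) :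
    ((fun r : ℝ => f r) '' Icc (τ + δ) (τ - δ + 1))ᶜ ∈ 𝓝 (f τ) ∧
    ∀ z ∈ range f, z ∉ ((fun r : ℝ => f r) '' Icc (τ + δ) (τ - δ + 1)) →
      ∃ r ∈ Ioo (τ - δ) (τ + δ), f r = z := by
  constructor
  · refine IsClosed.compl_mem_nhds
      (isCompact_Icc.image (IsJordan.continuous_param hc)).isClosed ?_
    rintro ⟨u, hu, h⟩
    have := IsJordan.param_inj hi (s := τ) (u := u) (v := τ) ⟨by linarith [hu.1], by linarith [hu.2]⟩
      ⟨le_rfl, by linarith⟩ h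
    linarith [hu.1]
  · rintro _ ⟨p, rfl⟩ hz
    obtain ⟨u, hu, rfl⟩ := exists_rep p (τ - δ)
    refine ⟨u, ⟨lt_of_le_of_ne hu.1 ?_, ?_⟩, rfl⟩
    · intro h
      subst h
      exact hz ⟨τ - δ + 1, ⟨by linarith, le_rfl⟩, IsJordan.param_period f _⟩
    · by_contra h
      exact hz ⟨u, ⟨by linarith, hu.2.le⟩, rfl⟩

/-- A component of `σ ∩ U` is an open arc with both ends on `γ`. -/
lemma gap_arc {σ U γ : Set X} {z : X} (hσ : IsJordan σ) (hγ : IsClosed γ) (hU : IsOpen U)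
    (hd : Disjoint U γ) (hcl : closure U ⊆ U ∪ γ) (hz : z ∈ σ ∩ U)
    (h2 : ∃ p ∈ σ ∩ γ, ∃ q ∈ σ ∩ γ, p ≠ q) :
    ∃ A a b, IsArc A a b ∧ A ∩ γ = {a, b} ∧ A ⊆ connectedComponentIn (σ ∩ U) z ∪ {a, b} ∧
      connectedComponentIn (σ ∩ U) z ⊆ A := by
  obtain ⟨f, hc, hi, rfl⟩ := hσ
  obtain ⟨⟨p0, rfl⟩, hzU⟩ := hz
  obtain ⟨r, -, rfl⟩ := IsJordan.exists_rep p0 0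
  have hF := IsJordan.continuous_param hc
  set S : Set ℝ := {t | f t ∈ γ} with hS
  have hSc : IsClosed S := hγ.preimage hF
  obtain ⟨p, ⟨⟨p', rfl⟩, hpγ⟩, q, ⟨⟨q', rfl⟩, hqγ⟩, hpq⟩ := h2
  obtain ⟨u1, hu1, hu1'⟩ := IsJordan.exists_rep p' r
  obtain ⟨u2, hu2, hu2'⟩ := IsJordan.exists_rep p' (r - 1)
  obtain ⟨t, ht, htl⟩ := (isCompact_Icc.inter_right hSc : IsCompact (Icc r (r + 1) ∩ S)).exists_isLeast
    ⟨u1, ⟨hu1.1, hu1.2.le⟩, by rw [hS, mem_ofPred_eq, hu1']; exact hpγ⟩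
  obtain ⟨s, hs, hsl⟩ := (isCompact_Icc.inter_right hSc :
    IsCompact (Icc (r - 1) r ∩ S)).exists_isGreatest
    ⟨u2, ⟨hu2.1, by linarith [hu2.2]⟩, by rw [hS, mem_ofPred_eq, hu2']; exact hpγ⟩
  have hrS : r ∉ S := fun h => disjoint_left.1 hd hzU h
  have hsr : s < r := lt_of_le_of_ne hs.1.2 (by rintro rfl; exact hrS hs.2)
  have hrt : r < t := lt_of_le_of_ne ht.1.1 (by rintro rfl; exact hrS ht.2)
  have hgap : ∀ u ∈ Ioo s t, u ∉ S := by
    intro u hu huS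
    rcases le_total u r with h | h
    · exact absurd (hsl ⟨⟨by linarith [hs.1.1, hu.1], h⟩, huS⟩) (not_le.2 hu.1)
    · exact absurd (htl ⟨⟨h, by linarith [ht.1.2, hu.2]⟩, huS⟩) (not_le.2 hu.2)
  have hts : t < s + 1 := by
    have h1 : t ≤ s + 1 := htl ⟨⟨by linarith [hs.1.1], by linarith⟩, by
      rw [hS, mem_ofPred_eq, IsJordan.param_period f]; exact hs.2⟩
    refine lt_of_le_of_ne h1 fun h => ?_
    have key : ∀ p' : AddCircle (1 : ℝ), f p' ∈ γ → f p' = f s := by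
      intro p' hp'
      obtain ⟨u, hu, rfl⟩ := IsJordan.exists_rep p' s
      by_cases hus : u = s
      · rw [hus]
      · exact absurd hp' (hgap u ⟨lt_of_le_of_ne hu.1 (Ne.symm hus), h ▸ hu.2⟩)
    exact hpq ((key _ hpγ).trans (key _ hqγ).symm)
  have hst : s < t := hsr.trans hrt
  have hIU : (fun r : ℝ => f r) '' Ioo s t ⊆ U := by
    refine (isPreconnected_Ioo.image _ hF.continuousOn).subset_of_closure_inter_subset hU
      ⟨f r, ⟨r, ⟨hsr, hrt⟩, rfl⟩, hzU⟩ ?_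
    rintro _ ⟨h1, u, hu, rfl⟩
    exact (hcl h1).resolve_right (hgap u hu)
  have hsγ : f s ∈ γ := hs.2
  have htγ : f t ∈ γ := ht.2
  have hcomp : connectedComponentIn (range f ∩ U) (f r) = (fun r : ℝ => f r) '' Ioo s t := by
    apply subset_antisymm
    · refine IsJordan.subset_subarc hc hi hst hts isPreconnected_connectedComponentIn
        ((connectedComponentIn_subset _ _).trans inter_subset_left) ?_ ?_ (r := r) ⟨hsr, hrt⟩
        (mem_connectedComponentIn ⟨⟨_, rfl⟩, hzU⟩)
      · exact fun h => disjoint_left.1 hd (connectedComponentIn_subset _ _ h).2 hsγ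
      · exact fun h => disjoint_left.1 hd (connectedComponentIn_subset _ _ h).2 htγ
    · refine (isPreconnected_Ioo.image _ hF.continuousOn).subset_connectedComponentIn
        ⟨r, ⟨hsr, hrt⟩, rfl⟩ (subset_inter ?_ hIU)
      rintro _ ⟨u, -, rfl⟩
      exact ⟨_, rfl⟩
  have hIcc : (fun r : ℝ => f r) '' Icc s t ⊆ (fun r : ℝ => f r) '' Ioo s t ∪ {f s, f t} := by
    rintro _ ⟨u, hu, rfl⟩
    by_cases h1 : u = s
    · right; left; rw [h1]
    by_cases h2 : u = t
    · right; right; rw [h2]; rfl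
    exact Or.inl ⟨u, ⟨lt_of_le_of_ne hu.1 (Ne.symm h1), lt_of_le_of_ne hu.2 h2⟩, rfl⟩
  refine ⟨_, _, _, (IsJordan.split_param hc hi hst hts).1, ?_, ?_, ?_⟩
  · apply subset_antisymm
    · rintro z ⟨h1, h2⟩
      exact (hIcc h1).resolve_left fun h => disjoint_left.1 hd (hIU h) h2
    · rintro _ (rfl | rfl)
      · exact ⟨⟨s, ⟨le_rfl, hst.le⟩, rfl⟩, hsγ⟩
      · exact ⟨⟨t, ⟨hst.le, le_rfl⟩, rfl⟩, htγ⟩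
  · rw [hcomp]; exact hIcc
  · rw [hcomp]; exact image_mono Ioo_subset_Icc_self

end Gaps

/-! ### Cutting a cell along a circle -/

section Sep

variable {M : Type*} [MetricSpace M] [ChartedSpace ℂ M]

/-- A Jordan curve `σ` with interior `I`, enclosing the compact set `B'` and enclosed in the open
set `B`. -/
structure IsRing (w : M) (B' I σ B : Set M) : Prop where
  jordan : IsJordan σ
  isOpen : IsOpen I
  disj : Disjoint I σ
  closed : IsClosed (I ∪ σ)
  conn_ext : IsPreconnected (I ∪ σ)ᶜ
  inner_closed : IsClosed B'
  inner_conn : IsPreconnected B'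
  inner_sub : B' ⊆ I
  isOpen_outer : IsOpen B
  sub_outer : I ∪ σ ⊆ B
  ext : w ∉ B

/-- The gaps of the circle `σ` in the cell `U` that separate a point of `B'` from a point
off `B`. -/
def Sep (B' σ B U γ : Set M) : Set (Set M) :=
  {α | ∃ z ∈ σ ∩ U, α = connectedComponentIn (σ ∩ U) z ∧
    ∃ x ∈ U ∩ B', ∃ y ∈ U \ B, y ∉ connectedComponentIn (α ∪ γ)ᶜ x}

variable {V U γ A β₁ β₂ B' I σ B α : Set M} {w a b x y : M}

/-- If a cell meets `B'`, does not contain it and leaves `B`, then its boundary crosses the circle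
at least twice. -/
lemma IsRing.two_points (h : IsRing w B' I σ B) (hU : IsCell V w U γ) (hx : (U ∩ B').Nonempty)
    (hB : ¬ B' ⊆ U) (hy : (U \ B).Nonempty) : ∃ p ∈ σ ∩ γ, ∃ q ∈ σ ∩ γ, p ≠ q := by
  have hγ : (γ ∩ B').Nonempty := by
    by_contra hn
    apply hB
    refine h.inner_conn.subset_of_closure_inter_subset hU.isOpen (by rwa [inter_comm]) ?_
    rintro z ⟨h1, h2⟩
    exact (hU.closure_subset h1).resolve_right fun h3 => hn ⟨z, h3, h2⟩
  have hnot : ¬ γ ⊆ I ∪ σ := by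
    intro hsub
    obtain ⟨y, hyU, hyB⟩ := hy
    have h1 : (I ∪ σ)ᶜ ⊆ U := by
      refine h.conn_ext.subset_of_closure_inter_subset hU.isOpen
        ⟨y, fun hh => hyB (h.sub_outer hh), hyU⟩ ?_
      rintro z ⟨h1, h2⟩
      exact (hU.closure_subset h1).resolve_right fun h3 => h2 (hsub h3)
    exact hU.ext (Or.inl (h1 fun hh => h.ext (h.sub_outer hh)))
  obtain ⟨u, huγ, huB⟩ := hγ
  obtain ⟨v, hvγ, hv⟩ := not_subset.1 hnot
  have huI := h.inner_sub huB
  have huv : u ≠ v := by rintro rfl; exact hv (Or.inl huI)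
  obtain ⟨δ₁, δ₂, a1, a2, a3, a4⟩ := hU.jordan.split huγ hvγ huv
  have key : ∀ δ, IsArc δ u v → ∃ p ∈ σ, p ∈ δ := by
    intro δ hδ
    by_contra hn
    push Not at hn
    apply hv
    left
    refine hδ.isPreconnected.subset_of_closure_inter_subset h.isOpen ⟨u, hδ.left_mem, huI⟩ ?_
      hδ.right_mem
    rintro z ⟨h1, h2⟩
    exact (closure_minimal subset_union_left h.closed h1).resolve_right fun h3 => hn z h3 h2
  obtain ⟨p, hp, hp1⟩ := key _ a1
  obtain ⟨q, hq, hq2⟩ := key _ a2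
  refine ⟨p, ⟨hp, a4 ▸ Or.inl hp1⟩, q, ⟨hq, a4 ▸ Or.inr hq2⟩, ?_⟩
  rintro rfl
  have : p ∈ ({u, v} : Set M) := a3 ▸ ⟨hp1, hq2⟩
  rcases this with rfl | rfl
  · exact disjoint_left.1 h.disj huI hp
  · exact hv (Or.inr hp)

lemma exists_disc {N : Set M} {q : M} (hN : N ∈ 𝓝 q) :
    ∃ D ⊆ N, D ∈ 𝓝 q ∧ AllLog D ∧ IsClosed D ∧ IsPreconnected D := by
  have hq := mem_chart_source ℂ q
  obtain ⟨r, hr, h1, h2⟩ := exists_chart_ball hq hN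
  have hcont := (chartAt ℂ q).continuousOn_symm.mono h1
  refine ⟨_, h2, ?_, allLog_chart (convex_closedBall _ _) h1,
    ((isCompact_closedBall _ _).image_of_continuousOn hcont).isClosed,
    (convex_closedBall _ _).isPreconnected.image _ hcont⟩
  have := (chartAt ℂ q).image_mem_nhds (x := q) hq
    (s := (chartAt ℂ q).source ∩ (chartAt ℂ q) ⁻¹' Metric.closedBall ((chartAt ℂ q) q) r) ?_
  · have h3 := (chartAt ℂ q).symm.image_mem_nhds (x := (chartAt ℂ q) q)
      ((chartAt ℂ q).map_source hq) (Metric.closedBall_mem_nhds _ hr)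
    rwa [(chartAt ℂ q).left_inv hq] at h3
  · exact inter_mem ((chartAt ℂ q).open_source.mem_nhds hq)
      (((chartAt ℂ q).continuousAt hq).preimage_mem_nhds (Metric.closedBall_mem_nhds _ hr))

variable [SimplyConnectedSpace M]

/-- Only finitely many gaps separate: short gaps do not. -/
lemma finite_sep (hV : NoG V) (h : IsRing w B' I σ B) (hU : IsCell V w U γ)
    (h2 : ∃ p ∈ σ ∩ γ, ∃ q ∈ σ ∩ γ, p ≠ q) : (Sep B' σ B U γ).Finite := by
  classical
  by_contra hinf
  have hinf : (Sep B' σ B U γ).Infinite := hinf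
  choose! z hz using fun α (hα : α ∈ Sep B' σ B U γ) => hα
  have hzα : ∀ α ∈ Sep B' σ B U γ, z α ∈ α := fun α hα => by
    exact (hz α hα).2.1.ge (mem_connectedComponentIn (hz α hα).1)
  have hcomp : ∀ α ∈ Sep B' σ B U γ, ∀ u ∈ α, α = connectedComponentIn (σ ∩ U) u := by
    intro α hα u hu
    exact (hz α hα).2.1.trans (connectedComponentIn_eq ((hz α hα).2.1 ▸ hu))
  have hinj : InjOn z (Sep B' σ B U γ) := by
    intro α hα α' hα' he
    rw [hcomp α hα _ (hzα α hα), hcomp α' hα' _ (hzα α' hα'), he]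
  have hσc : IsCompact σ := h.jordan.isCompact
  obtain ⟨q, hqσ, hq⟩ := (hinf.image hinj).exists_accPt_of_subset_isCompact hσc
    (by rintro _ ⟨α, hα, rfl⟩; exact (hz α hα).1.1)
  obtain ⟨f, hc, hi, hr⟩ := h.jordan
  obtain ⟨p, rfl⟩ : q ∈ range f := hr ▸ hqσ
  obtain ⟨τ, -, rfl⟩ := IsJordan.exists_rep p 0
  have hF := IsJordan.continuous_param hc
  -- if `N` is a neighbourhood of `f τ`, then infinitely many gaps lie in `N`
  have key : ∀ N ∈ 𝓝 (f τ), (∀ (F : Set (Set M)), F.Finite → ∃ α ∈ Sep B' σ B U γ, α ∉ F ∧ z α ∈ N) := by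
    intro N hN F hF
    have := (accPt_iff_frequently_nhdsNE.1 hq)
    have h3 : ∀ᶠ y in 𝓝[≠] (f τ), y ∈ N ∧ y ∉ z '' F := by
      have h5 : ∀ᶠ y in 𝓝[≠] (f τ), y ∈ N := mem_nhdsWithin_of_mem_nhds hN
      refine h5.and ?_
      have h4 : ((z '' F) \ {(f τ : M)})ᶜ ∈ 𝓝 (f τ : M) :=
        ((hF.image z).subset sdiff_subset).isClosed.isOpen_compl.mem_nhds (by simp)
      filter_upwards [mem_nhdsWithin_of_mem_nhds h4, self_mem_nhdsWithin] with u hu1 hu2 hu3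
      exact hu1 ⟨hu3, hu2⟩
    obtain ⟨y, ⟨α, hα, rfl⟩, hy1, hy2⟩ := (this.and_eventually h3).exists
    exact ⟨α, hα, fun hh => hy2 ⟨α, hh, rfl⟩, hy1⟩
  -- every neighbourhood contains a separating gap with closure inside
  have key2 : ∀ N ∈ 𝓝 (f τ), ∃ α ∈ Sep B' σ B U γ, α ⊆ N := by
    intro N hN
    obtain ⟨ε, hε, hb⟩ := Metric.nhds_basis_ball.mem_iff.1 (hF.continuousAt.preimage_mem_nhds hN)
    set δ := min ε (1 / 4) with hδ
    have h0 : 0 < δ := lt_min hε (by norm_num)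
    have h1 : δ ≤ 1 / 4 := min_le_right _ _
    obtain ⟨n1, n2⟩ := IsJordan.nhds_subarc hc hi τ h0 (by linarith)
    obtain ⟨α, hα, hαF, hαN⟩ := key _ n1 {connectedComponentIn (σ ∩ U) (f (τ - δ : ℝ)),
      connectedComponentIn (σ ∩ U) (f (τ + δ : ℝ))} (by simp)
    obtain ⟨r, hr1, hr2⟩ := n2 (z α) (hr ▸ (hz α hα).1.1) hαN
    refine ⟨α, hα, ?_⟩
    have hαc := (hz α hα).2.1
    have hpre : IsPreconnected α := by rw [hαc]; exact isPreconnected_connectedComponentIn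
    have hsub : α ⊆ σ ∩ U := by rw [hαc]; exact connectedComponentIn_subset _ _
    have := IsJordan.subset_subarc hc hi (s := τ - δ) (t := τ + δ) (by linarith) (by linarith)
      hpre (hsub.trans (hr ▸ inter_subset_left))
      (fun hh => hαF (Or.inl (hcomp α hα _ hh))) (fun hh => hαF (Or.inr (hcomp α hα _ hh)))
      hr1 (hr2 ▸ hzα α hα)
    refine this.trans ?_
    rintro _ ⟨u, hu, rfl⟩
    apply hb
    rw [Metric.mem_ball, Real.dist_eq, abs_lt]
    have := min_le_left ε (1 / 4)
    constructor <;> linarith [hu.1, hu.2]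
  have hτσ : f τ ∈ σ := hr ▸ ⟨_, rfl⟩
  have hN0 : B ∩ B'ᶜ ∈ 𝓝 (f τ) := inter_mem
    (h.isOpen_outer.mem_nhds (h.sub_outer (Or.inr hτσ)))
    (h.inner_closed.isOpen_compl.mem_nhds fun hh => disjoint_left.1 h.disj (h.inner_sub hh) hτσ)
  obtain ⟨D, hDN, hD, hDl, hDc, -⟩ := exists_disc hN0
  -- it suffices to find a separating gap whose closure and the adjacent part of `γ` lie in `D`
  obtain ⟨γ₀, hγ₀c, hγ₀p, hγ₀D, hγ₀γ, N, hN, hNγ⟩ : ∃ γ₀ : Set M, IsClosed γ₀ ∧ IsPreconnected γ₀ ∧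
      γ₀ ⊆ D ∧ γ₀ ⊆ γ ∧ ∃ N ∈ 𝓝 (f τ), N ∩ γ ⊆ γ₀ := by
    by_cases hτγ : f τ ∈ γ
    · obtain ⟨γ₀, γ₁, a, b, k1, k2, k3, k4, k5, k6⟩ := hU.jordan.exists_short hτγ hD
      refine ⟨γ₀, k1.isClosed, k1.isPreconnected, k5, k4 ▸ subset_union_left, γ₁ᶜ,
        k2.isClosed.isOpen_compl.mem_nhds k6, ?_⟩
      rintro u ⟨hu1, hu2⟩
      rw [← k4] at hu2
      exact hu2.resolve_right hu1
    · exact ⟨∅, isClosed_empty, isPreconnected_empty, empty_subset _, empty_subset _, γᶜ,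
        hU.isClosed_curve.isOpen_compl.mem_nhds hτγ, fun u hu => hu.1 hu.2⟩
  obtain ⟨D', hD'N, hD', -, hD'c, -⟩ := exists_disc (inter_mem hN hD)
  obtain ⟨α, hα, hαD⟩ := key2 D' hD'
  obtain ⟨hzσ, hαeq, x, hx, y, hy, hxy⟩ := hz α hα
  obtain ⟨A, a, b, hA, hAγ, hAs, hsA⟩ := gap_arc h.jordan hU.isClosed_curve hU.isOpen hU.disj
    hU.closure_subset hzσ h2
  rw [← hαeq] at hAs hsA
  have habγ : ({a, b} : Set M) ⊆ γ := by rw [← hAγ]; exact inter_subset_right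
  have hun : α ∪ γ = (γ₀ ∪ A) ∪ γ := by
    apply subset_antisymm
    · exact union_subset_union_left _ (hsA.trans subset_union_right)
    · refine union_subset (union_subset (hγ₀γ.trans subset_union_right)
        (hAs.trans (union_subset_union_right _ habγ))) subset_union_right
  -- `A` is the closure of `α`
  have hAcl : A ⊆ closure α := by
    obtain ⟨g, g1, g2, g3, g4, g5⟩ := hA
    have h3 : g '' Ioo 0 1 ⊆ α := by
      rintro _ ⟨u, hu, rfl⟩
      refine (hAs (g3 ▸ ⟨u, Ioo_subset_Icc_self hu, rfl⟩)).resolve_right ?_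
      rintro (hh | hh)
      · have := g2 (Ioo_subset_Icc_self hu) ⟨le_rfl, zero_le_one⟩ (hh.trans g4.symm)
        exact hu.1.ne' this
      · have := g2 (Ioo_subset_Icc_self hu) ⟨zero_le_one, le_rfl⟩ (Eq.trans hh g5.symm)
        exact hu.2.ne this
    rw [← g3, ← closure_Ioo zero_ne_one]
    refine (ContinuousOn.image_closure ?_).trans (closure_mono h3)
    rwa [closure_Ioo zero_ne_one]
  have hAD : A ⊆ D' := hAcl.trans (closure_minimal hαD hD'c)
  have hxα : x ∉ γ := fun hh => disjoint_left.1 hU.disj hx.1 hh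
  have hyα : y ∉ γ := fun hh => disjoint_left.1 hU.disj hy.1 hh
  have hxD : x ∉ D := fun hh => (hDN hh).2 hx.2
  have hyD : y ∉ D := fun hh => hy.2 (hDN hh).1
  have hsubD : γ₀ ∪ A ⊆ D := union_subset hγ₀D (hAD.trans (hD'N.trans inter_subset_right))
  have hxne : x ≠ y := by rintro rfl; exact hy.2 (h.sub_outer (Or.inl (h.inner_sub hx.2)))
  obtain ⟨θ, hθ⟩ := exists_theta isOpen_univ isPreconnected_univ (mem_univ x) (mem_univ y) hxne
  have l1 : HasLog θ D := hDl θ (hθ.cont.mono (by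
    rintro u hu (rfl | rfl)
    exacts [hxD hu, hyD hu]))
  have l2 : HasLog θ γ := hasLog_theta hU.isClosed_curve hxα hxne
    (by rw [hU.component hx.1]; exact hy.1) hθ
  have hcl1 : IsClosed (γ₀ ∪ A) := hγ₀c.union hA.isClosed
  have hInt : (γ₀ ∪ A) ∩ γ = γ₀ := by
    apply subset_antisymm
    · rintro u ⟨hu | hu, hu2⟩
      · exact hu
      · exact hNγ ⟨(hD'N (hAD hu)).1, hu2⟩
    · exact fun u hu => ⟨Or.inl hu, hγ₀γ hu⟩
  have l3 := (l1.mono hsubD).union hcl1 hU.isClosed_curve (by rw [hInt]; exact hγ₀p) l2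
  apply hxy
  rw [hun]
  refine mem_component_of_hasLog hV (hcl1.union hU.isClosed_curve) ?_ ?_ ?_ hθ l3
  · rintro (hh | hh)
    exacts [hxD (hsubD hh), hxα hh]
  · rintro (hh | hh)
    exacts [hyD (hsubD hh), hyα hh]
  · exact (hU.component_sub subset_union_right hx.1).trans hU.sub

end Sep

section Sep

lemma eq_of_exp_eq {a b : ℝ} (h : Circle.exp a = Circle.exp b) (hab : |a - b| < 1) : a = b := by
  obtain ⟨m, hm⟩ := Circle.exp_eq_exp.1 h
  rw [hm, add_sub_cancel_left, abs_mul, abs_of_pos Real.two_pi_pos] at hab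
  have : m = 0 := by
    by_contra hne
    have h1 : (1 : ℝ) ≤ |(m : ℝ)| := by exact_mod_cast Int.one_le_abs hne
    nlinarith [Real.pi_gt_three]
  simpa [this] using hm

variable {M : Type*} [MetricSpace M] [ChartedSpace ℂ M] [SimplyConnectedSpace M]
variable {V U γ A β₁ β₂ B' I σ B α : Set M} {w a b x y : M}

/-- A cell reaching from `B'` to the complement of `B` has a separating gap. Otherwise the map `θ`
winding around `x` and `y` would have a logarithm on the union of `γ` and all gaps. -/
lemma exists_sep (hV : NoG V) (h : IsRing w B' I σ B) (hU : IsCell V w U γ)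
    (h2 : ∃ p ∈ σ ∩ γ, ∃ q ∈ σ ∩ γ, p ≠ q) (hx : x ∈ U ∩ B') (hy : y ∈ U \ B) :
    (Sep B' σ B U γ).Nonempty := by
  classical
  by_contra hn
  have hall : ∀ z ∈ σ ∩ U, y ∈ connectedComponentIn (connectedComponentIn (σ ∩ U) z ∪ γ)ᶜ x := by
    intro z hz
    by_contra hh
    exact hn ⟨_, z, hz, rfl, x, hx, y, hy, hh⟩
  have hxI : x ∈ I := h.inner_sub hx.2
  have hxσ : x ∉ σ := fun hh => disjoint_left.1 h.disj hxI hh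
  have hyσ : y ∉ σ := fun hh => hy.2 (h.sub_outer (Or.inr hh))
  have hxγ : x ∉ γ := fun hh => disjoint_left.1 hU.disj hx.1 hh
  have hyγ : y ∉ γ := fun hh => disjoint_left.1 hU.disj hy.1 hh
  have hxne : x ≠ y := by rintro rfl; exact hy.2 (h.sub_outer (Or.inl (h.inner_sub hx.2)))
  have hσcl := h.jordan.isClosed
  have hγcl := hU.isClosed_curve
  obtain ⟨θ, hθ⟩ := exists_theta isOpen_univ isPreconnected_univ (mem_univ x) (mem_univ y) hxne
  obtain ⟨lam, hlam, hlame⟩ : HasLog θ γ := hasLog_theta hγcl hxγ hxne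
    (by rw [hU.component hx.1]; exact hy.1) hθ
  have hψ : ∀ α, (∃ z ∈ σ ∩ U, α = connectedComponentIn (σ ∩ U) z) →
      ∃ ψ : M → ℝ, ContinuousOn ψ (α ∪ γ) ∧ (∀ z ∈ α ∪ γ, θ z = Circle.exp (ψ z)) ∧
        ∀ z ∈ γ, ψ z = lam z := by
    rintro _ ⟨z, hz, rfl⟩
    obtain ⟨A, a, b, hA, hAγ, hAs, hsA⟩ := gap_arc h.jordan hγcl hU.isOpen hU.disj
      hU.closure_subset hz h2
    have hcl : IsClosed (connectedComponentIn (σ ∩ U) z ∪ γ) := by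
      have : connectedComponentIn (σ ∩ U) z ∪ γ = A ∪ γ := by
        apply subset_antisymm (union_subset_union_left _ hsA)
        refine union_subset (hAs.trans (union_subset_union_right _ ?_)) subset_union_right
        rw [← hAγ]; exact inter_subset_right
      rw [this]; exact hA.isClosed.union hγcl
    obtain ⟨ψ, hψ, hψe⟩ := hasLog_theta hcl (x := x) (y := y) (by
      rintro (hh | hh)
      · exact hxσ (connectedComponentIn_subset _ _ hh).1
      · exact hxγ hh) hxne (hall z hz) hθ
    obtain ⟨n, hn⟩ := log_unique hU.jordan.isPreconnected hlam (hψ.mono subset_union_right)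
      (fun z hz => (hlame z hz).symm.trans (hψe z (Or.inr hz)))
    refine ⟨fun z => ψ z + n * (2 * Real.pi), hψ.add continuousOn_const, fun z hz => ?_,
      fun z hz => (hn z hz).symm⟩
    rw [circle_exp_add_int]; exact hψe z hz
  choose! ψ hψc hψe hψl using hψ
  set Sg : Set M := γ ∪ (σ ∩ U) with hSg
  set φ : M → ℝ := fun z => if z ∈ γ then lam z else ψ (connectedComponentIn (σ ∩ U) z) z with hφ
  have hφγ : ∀ z ∈ γ, φ z = lam z := fun z hz => by simp [hφ, hz]
  have hφα : ∀ z ∈ σ ∩ U, ∀ u ∈ connectedComponentIn (σ ∩ U) z ∪ γ,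
      φ u = ψ (connectedComponentIn (σ ∩ U) z) u := by
    intro z hz u hu
    by_cases huγ : u ∈ γ
    · rw [hφγ u huγ, hψl _ ⟨z, hz, rfl⟩ u huγ]
    · rw [connectedComponentIn_eq (hu.resolve_right huγ)]
      simp [hφ, huγ]
  have hφe : ∀ z ∈ Sg, θ z = Circle.exp (φ z) := by
    rintro z (hz | hz)
    · rw [hφγ z hz]; exact hlame z hz
    · rw [hφα z hz z (Or.inl (mem_connectedComponentIn hz))]
      exact hψe _ ⟨z, hz, rfl⟩ z (Or.inl (mem_connectedComponentIn hz))
  have hSgcl : IsClosed Sg := by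
    have : Sg = γ ∪ (σ ∩ (U ∪ γ)) := by ext; simp [hSg]; tauto
    rw [this]
    exact hγcl.union (hσcl.inter hU.compact.isClosed)
  obtain ⟨f, hc, hi, hr⟩ := h.jordan
  have hF := IsJordan.continuous_param hc
  have hφc : ContinuousOn φ Sg := by
    intro q hq
    by_cases hqσ : q ∉ σ
    · have hqγ : q ∈ γ := hq.resolve_right fun hh => hqσ hh.1
      refine ((hlam.congr hφγ) q hqγ).mono_of_mem_nhdsWithin ?_
      filter_upwards [self_mem_nhdsWithin,
        mem_nhdsWithin_of_mem_nhds (hσcl.isOpen_compl.mem_nhds hqσ)] with u hu1 hu2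
      exact hu1.resolve_right fun hh => hu2 hh.1
    push Not at hqσ
    obtain ⟨p, rfl⟩ : q ∈ range f := hr ▸ hqσ
    obtain ⟨τ, -, rfl⟩ := IsJordan.exists_rep p 0
    -- neighbourhoods of `f τ` in `σ` are short subarcs
    have hshort : ∀ N ∈ 𝓝 (f τ), ∃ δ > 0, ∃ N' ∈ 𝓝 (f τ),
        (∀ z ∈ σ ∩ N', ∃ r ∈ Ioo (τ - δ) (τ + δ), f r = z) ∧
        ∀ r ∈ Ioo (τ - δ) (τ + δ), f r ∈ N := by
      intro N hN
      obtain ⟨ε, hε, hb⟩ := Metric.nhds_basis_ball.mem_iff.1 (hF.continuousAt.preimage_mem_nhds hN)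
      set δ := min ε (1 / 4) with hδ
      have h0 : 0 < δ := lt_min hε (by norm_num)
      have h1 : δ ≤ 1 / 4 := min_le_right _ _
      obtain ⟨n1, n2⟩ := IsJordan.nhds_subarc hc hi τ h0 (by linarith)
      refine ⟨δ, h0, _, n1, fun z hz => n2 z (hr ▸ hz.1) hz.2, fun r hr => ?_⟩
      apply hb
      rw [Metric.mem_ball, Real.dist_eq, abs_lt]
      have := min_le_left ε (1 / 4)
      constructor <;> linarith [hr.1, hr.2]
    have hsub : ∀ T : Set ℝ, (fun r : ℝ => f r) '' T ⊆ σ := by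
      rintro T _ ⟨r, -, rfl⟩; exact hr ▸ ⟨_, rfl⟩
    by_cases hqU : f τ ∈ U
    · obtain ⟨δ, hδ, N', hN', k1, k2⟩ := hshort U (hU.isOpen.mem_nhds hqU)
      have hsubα : (fun r : ℝ => f r) '' Ioo (τ - δ) (τ + δ) ⊆
          connectedComponentIn (σ ∩ U) (f τ) := by
        refine (isPreconnected_Ioo.image _ hF.continuousOn).subset_connectedComponentIn
          ⟨τ, ⟨by linarith, by linarith⟩, rfl⟩ (subset_inter (hsub _) ?_)
        rintro _ ⟨r, hr, rfl⟩; exact k2 r hr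
      have hqS : f τ ∈ σ ∩ U := ⟨hqσ, hqU⟩
      refine (((hψc _ ⟨_, hqS, rfl⟩).congr (hφα _ hqS)) _
        (Or.inl (mem_connectedComponentIn hqS))).mono_of_mem_nhdsWithin ?_
      filter_upwards [self_mem_nhdsWithin, mem_nhdsWithin_of_mem_nhds hN'] with u hu1 hu2
      rcases hu1 with hu1 | hu1
      · exact Or.inr hu1
      · obtain ⟨r, hr1, rfl⟩ := k1 u ⟨hu1.1, hu2⟩
        exact Or.inl (hsubα ⟨r, hr1, rfl⟩)
    · have hqγ : f τ ∈ γ := hq.resolve_right fun hh => hqU hh.2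
      obtain ⟨D, hDN, hD, hDl, hDc, -⟩ := exists_disc (N := {x, y}ᶜ) (q := f τ)
        ((toFinite {x, y}).isClosed.isOpen_compl.mem_nhds (by
          rintro (hh | hh)
          · exact hxγ (hh ▸ hqγ)
          · exact hyγ (hh ▸ hqγ)))
      obtain ⟨ν', hν', hνe'⟩ := hDl θ (hθ.cont.mono hDN)
      have hqD := mem_of_mem_nhds hD
      obtain ⟨m, hm⟩ := Circle.exp_eq_exp.1 ((hlame _ hqγ).symm.trans (hνe' _ hqD))
      obtain ⟨ν, hν, hνe, hνq⟩ : ∃ ν : M → ℝ, ContinuousOn ν D ∧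
          (∀ z ∈ D, θ z = Circle.exp (ν z)) ∧ lam (f τ) = ν (f τ) :=
        ⟨fun z => ν' z + m * (2 * Real.pi), hν'.add continuousOn_const,
          fun z hz => by rw [circle_exp_add_int]; exact hνe' z hz, hm⟩
      -- `lam` and `ν` agree on `γ` near `f τ`
      have hnear : ∀ᶠ z in 𝓝[γ] (f τ), lam z = ν z := by
        have h1 : ContinuousWithinAt (fun z => lam z - ν z) γ (f τ) :=
          (hlam _ hqγ).sub ((hν _ hqD).mono_of_mem_nhdsWithin (mem_nhdsWithin_of_mem_nhds hD))
        have h3 : Metric.ball (0 : ℝ) 1 ∈ 𝓝 (lam (f τ) - ν (f τ)) := by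
          rw [hνq, sub_self]; exact Metric.ball_mem_nhds _ one_pos
        filter_upwards [h1 h3, self_mem_nhdsWithin, mem_nhdsWithin_of_mem_nhds hD] with z hz1 hz2 hz3
        refine eq_of_exp_eq ((hlame z hz2).symm.trans (hνe z hz3)) ?_
        simpa using hz1
      obtain ⟨N₁, hN₁, hN₁'⟩ := mem_nhdsWithin_iff_exists_mem_nhds_inter.1 hnear
      obtain ⟨δ, hδ, N', hN', k1, k2⟩ := hshort (N₁ ∩ D) (inter_mem hN₁ hD)
      have hν2 : ContinuousWithinAt ν Sg (f τ) :=
        (hν _ hqD).mono_of_mem_nhdsWithin (mem_nhdsWithin_of_mem_nhds hD)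
      refine hν2.congr_of_eventuallyEq ?_ (by rw [hφγ _ hqγ, hνq])
      filter_upwards [self_mem_nhdsWithin, mem_nhdsWithin_of_mem_nhds hN',
        mem_nhdsWithin_of_mem_nhds hN₁] with u hu1 hu2 hu3
      by_cases huγ : u ∈ γ
      · rw [hφγ u huγ]; exact hN₁' ⟨hu3, huγ⟩
      have hu1 : u ∈ σ ∩ U := hu1.resolve_left huγ
      obtain ⟨r, hr1, rfl⟩ := k1 u ⟨hu1.1, hu2⟩
      -- the subarc from `f r` towards `f τ` up to the first point of `γ`
      set g : ℝ → M := fun t => f ((r + t * (τ - r) : ℝ)) with hg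
      have hgc : Continuous g := hF.comp (by fun_prop)
      obtain ⟨t, ht, htl⟩ := (isCompact_Icc.inter_right (hγcl.preimage hgc) :
        IsCompact (Icc 0 1 ∩ g ⁻¹' γ)).exists_isLeast ⟨1, ⟨zero_le_one, le_rfl⟩, by
          change f _ ∈ γ; rw [one_mul, add_sub_cancel]; exact hqγ⟩
      have hg0 : g 0 = f r := by simp [hg]
      have hgm : ∀ s ∈ Icc (0 : ℝ) 1, g s ∈ N₁ ∩ D := by
        intro s hs
        have : r + s * (τ - r) ∈ Ioo (τ - δ) (τ + δ) := by
          have hτ : τ ∈ Ioo (τ - δ) (τ + δ) := ⟨by linarith, by linarith⟩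
          have := (convex_Ioo (τ - δ) (τ + δ)) hr1 hτ (sub_nonneg.2 hs.2) hs.1 (by ring)
          simp only [smul_eq_mul] at this
          convert this using 1; ring
        exact k2 _ this
      have hgσ : ∀ s, g s ∈ σ := fun s => hr ▸ ⟨_, rfl⟩
      have hIco : g '' Ico 0 t ⊆ U := by
        have ht0 : 0 < t := lt_of_le_of_ne ht.1.1 (by
          rintro rfl
          exact huγ (hg0 ▸ ht.2))
        refine (isPreconnected_Ico.image _ hgc.continuousOn).subset_of_closure_inter_subset hU.isOpen
          ⟨g 0, ⟨0, ⟨le_rfl, ht0⟩, rfl⟩, hg0 ▸ hu1.2⟩ ?_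
        rintro _ ⟨h1, s, hs, rfl⟩
        exact (hU.closure_subset h1).resolve_right fun hh =>
          absurd (htl ⟨⟨hs.1, hs.2.le.trans ht.1.2⟩, hh⟩) (not_le.2 hs.2)
      have hIcoα : g '' Ico 0 t ⊆ connectedComponentIn (σ ∩ U) (f r) := by
        have ht0 : 0 < t := lt_of_le_of_ne ht.1.1 (by
          rintro rfl
          exact huγ (hg0 ▸ ht.2))
        refine (isPreconnected_Ico.image _ hgc.continuousOn).subset_connectedComponentIn
          ⟨0, ⟨le_rfl, ht0⟩, hg0⟩ (subset_inter ?_ hIco)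
        rintro _ ⟨s, -, rfl⟩; exact hgσ s
      have hIccα : g '' Icc 0 t ⊆ connectedComponentIn (σ ∩ U) (f r) ∪ γ := by
        rintro _ ⟨s, hs, rfl⟩
        rcases eq_or_lt_of_le hs.2 with rfl | hlt
        · exact Or.inr ht.2
        · exact Or.inl (hIcoα ⟨s, ⟨hs.1, hlt⟩, rfl⟩)
      have hIccD : g '' Icc 0 t ⊆ D := by
        rintro _ ⟨s, hs, rfl⟩
        exact (hgm s ⟨hs.1, hs.2.trans ht.1.2⟩).2
      obtain ⟨n, hn⟩ := log_unique (isPreconnected_Icc.image _ hgc.continuousOn)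
        ((hψc _ ⟨_, hu1, rfl⟩).mono hIccα) (hν.mono hIccD)
        (fun z hz => (hψe _ ⟨_, hu1, rfl⟩ z (hIccα hz)).symm.trans (hνe z (hIccD hz)))
      have e1 := hn (g t) ⟨t, ⟨ht.1.1, le_rfl⟩, rfl⟩
      have e2 : lam (g t) = ν (g t) := hN₁' ⟨(hgm t ht.1).1, ht.2⟩
      rw [hψl _ ⟨_, hu1, rfl⟩ _ ht.2, e2, left_eq_add] at e1
      have e3 := hn (f r) ⟨0, ⟨le_rfl, ht.1.1⟩, hg0⟩
      rw [hφα _ hu1 _ (Or.inl (mem_connectedComponentIn hu1)), e3, e1, add_zero]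
  have hlog : HasLog θ Sg := ⟨φ, hφc, hφe⟩
  have hmem := mem_component_of_hasLog hV hSgcl (x := x) (y := y)
    (by rintro (hh | hh); exacts [hxγ hh, hxσ hh.1])
    (by rintro (hh | hh); exacts [hyγ hh, hyσ hh.1])
    ((hU.component_sub subset_union_left hx.1).trans hU.sub) hθ hlog
  have hsubI : connectedComponentIn Sgᶜ x ⊆ I := by
    refine isPreconnected_connectedComponentIn.subset_of_closure_inter_subset h.isOpen
      ⟨x, mem_connectedComponentIn (by rintro (hh | hh); exacts [hxγ hh, hxσ hh.1]), hxI⟩ ?_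
    rintro z ⟨h1, h2⟩
    refine (closure_minimal subset_union_left h.closed h1).resolve_right fun h3 => ?_
    exact connectedComponentIn_subset _ _ h2
      (Or.inr ⟨h3, hU.component_sub subset_union_left hx.1 h2⟩)
  exact hy.2 (h.sub_outer (Or.inl (hsubI hmem)))

/-- Cutting along a separating gap leaves fewer separating gaps. -/
lemma sep_cut (hV : NoG V) (hU : IsCell V w U γ) {U₁ U₂ : Set M} {z : M}
    (hα : α = connectedComponentIn (σ ∩ U) z)
    (hA : IsCrosscut U γ A a b β₁ β₂) (hAs : A ⊆ α ∪ {a, b}) (hsA : α ⊆ A)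
    (hσ : IsJordan σ)
    (h1 : IsCell V w U₁ (A ∪ β₁)) (h2 : IsOpen U₂) (hd : Disjoint U₁ U₂) (hu : U₁ ∪ U₂ = U \ A)
    (hp : ∃ p ∈ σ ∩ γ, ∃ q ∈ σ ∩ γ, p ≠ q) :
    Sep B' σ B U₁ (A ∪ β₁) ⊆ Sep B' σ B U γ \ {α} := by
  rintro α' ⟨u, hu1, rfl, x, hx, y, hy, hxy⟩
  have hU1 : U₁ ⊆ U \ A := hu ▸ subset_union_left
  have huU : u ∈ σ ∩ U := ⟨hu1.1, (hU1 hu1.2).1⟩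
  have habγ : ({a, b} : Set M) ⊆ γ := by rw [← hA.inter_curve]; exact inter_subset_right
  have huα : u ∉ α := fun hh => (hU1 hu1.2).2 (hsA hh)
  have hdis : Disjoint (connectedComponentIn (σ ∩ U) u) A := by
    rw [disjoint_left]
    intro v hv hvA
    rcases hAs hvA with hh | hh
    · rw [hα] at hh huα
      rw [connectedComponentIn_eq hh, ← connectedComponentIn_eq hv] at huα
      exact huα (mem_connectedComponentIn huU)
    · exact disjoint_left.1 hU.disj (connectedComponentIn_subset _ _ hv).2 (habγ hh)
  have hcomp : connectedComponentIn (σ ∩ U₁) u = connectedComponentIn (σ ∩ U) u := by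
    apply subset_antisymm
    · exact connectedComponentIn_mono u (inter_subset_inter_right _ (hU1.trans sdiff_subset))
    · refine isPreconnected_connectedComponentIn.subset_connectedComponentIn
        (mem_connectedComponentIn huU) (subset_inter
          ((connectedComponentIn_subset _ _).trans inter_subset_left) ?_)
      refine isPreconnected_connectedComponentIn.subset_left_of_subset_union h1.isOpen h2 hd ?_
        ⟨u, mem_connectedComponentIn huU, hu1.2⟩
      rw [hu]
      exact fun v hv => ⟨(connectedComponentIn_subset _ _ hv).2, disjoint_left.1 hdis hv⟩
  rw [hcomp] at hxy ⊢
  refine ⟨⟨u, huU, rfl, x, ⟨(hU1 hx.1).1, hx.2⟩, y, ⟨(hU1 hy.1).1, hy.2⟩, fun hmem => hxy ?_⟩, ?_⟩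
  · set α' := connectedComponentIn (σ ∩ U) u with hα'
    obtain ⟨A', a', b', hA', hAγ', hAs', hsA'⟩ := gap_arc hσ hU.isClosed_curve hU.isOpen hU.disj
      hU.closure_subset huU hp
    have hcl : IsClosed (α' ∪ γ) := by
      have : α' ∪ γ = A' ∪ γ := by
        apply subset_antisymm (union_subset_union_left _ hsA')
        refine union_subset (hAs'.trans (union_subset_union_right _ ?_)) subset_union_right
        rw [← hAγ']; exact inter_subset_right
      rw [this]; exact hA'.isClosed.union hU.isClosed_curve
    have hβγ : β₁ ⊆ γ := hA.union ▸ subset_union_left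
    have hInt : (α' ∪ γ) ∩ (A ∪ β₁) = β₁ := by
      apply subset_antisymm
      · rintro v ⟨hv1, hv2 | hv2⟩
        · rcases hv1 with hv1 | hv1
          · exact absurd hv2 (disjoint_left.1 hdis hv1)
          · have : v ∈ ({a, b} : Set M) := hA.inter_curve ▸ ⟨hv2, hv1⟩
            have : v ∈ β₁ ∩ β₂ := hA.inter.symm ▸ this
            exact this.1
        · exact hv2
      · exact fun v hv => ⟨Or.inr (hβγ hv), Or.inr hv⟩
    have hxm : ∀ x ∈ U₁, x ∉ α' → x ∉ α' ∪ γ := by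
      rintro x hx hx' (hh | hh)
      · exact hx' hh
      · exact disjoint_left.1 hU.disj (hU1 hx).1 hh
    by_cases hxα : x ∈ α'
    · have : connectedComponentIn (α' ∪ γ)ᶜ x = ∅ := connectedComponentIn_eq_empty fun h => h (Or.inl hxα)
      rw [this] at hmem
      exact hmem.elim
    have h3 := janiszewski hV hcl h1.isClosed_curve (by rw [hInt]; exact hA.arc₁.isPreconnected)
      (hxm x hx.1 hxα) (disjoint_left.1 h1.disj hx.1) hmem
      (by rw [h1.component hx.1]; exact hy.1)
      ((hU.component_sub (subset_union_right.trans subset_union_left) (hU1 hx.1).1).trans hU.sub)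
    refine connectedComponentIn_mono x (compl_subset_compl.2 ?_) h3
    exact union_subset_union_left _ subset_union_left
  · intro hh
    have hh : connectedComponentIn (σ ∩ U) u = α := hh
    exact huα (hh ▸ mem_connectedComponentIn huU)

end Sep

section Cuttable

variable {M : Type*} [MetricSpace M] [ChartedSpace ℂ M]

/-- The cell `U` with boundary `γ` can be divided by finitely many successive crosscuts into cells
with property `P`. -/
inductive Cuttable (V : Set M) (w : M) (P : Set M → Set M → Prop) : Set M → Set M → Prop
  | leaf {U γ : Set M} : IsCell V w U γ → P U γ → Cuttable V w P U γ
  | cut {U γ A β₁ β₂ U₁ U₂ : Set M} {a b : M} : IsCell V w U γ → IsCrosscut U γ A a b β₁ β₂ →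
      Disjoint U₁ U₂ → U₁ ∪ U₂ = U \ A → Cuttable V w P U₁ (A ∪ β₁) →
      Cuttable V w P U₂ (A ∪ β₂) → Cuttable V w P U γ

variable {V U γ B' I σ B : Set M} {w : M}

lemma Cuttable.isCell {P : Set M → Set M → Prop} (h : Cuttable V w P U γ) : IsCell V w U γ := by
  cases h <;> assumption

lemma Cuttable.bind {P Q : Set M → Set M → Prop} (h : Cuttable V w P U γ)
    (hPQ : ∀ U' γ', IsCell V w U' γ' → P U' γ' → Cuttable V w Q U' γ') : Cuttable V w Q U γ := by
  induction h with
  | leaf h1 h2 => exact hPQ _ _ h1 h2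
  | cut h1 h2 h3 h4 _ _ ih1 ih2 => exact .cut h1 h2 h3 h4 ih1 ih2

/-- The complement of a closed coordinate disc is connected. -/
lemma conn_compl_disc [ConnectedSpace M] (e : OpenPartialHomeomorph M ℂ) {c : ℂ} {ρ r : ℝ}
    (hρ : 0 ≤ ρ) (hρr : ρ < r) (ht : Metric.closedBall c r ⊆ e.target) :
    IsPreconnected (e.symm '' Metric.closedBall c ρ)ᶜ := by
  have htb : Metric.ball c r ⊆ e.target := Metric.ball_subset_closedBall.trans ht
  have hsub : Metric.closedBall c ρ ⊆ Metric.ball c r := Metric.closedBall_subset_ball hρr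
  have hK : IsClosed (e.symm '' Metric.closedBall c ρ) :=
    ((isCompact_closedBall c ρ).image_of_continuousOn
      (e.continuousOn_symm.mono (hsub.trans htb))).isClosed
  have hBo : IsOpen (e.symm '' Metric.ball c r) :=
    e.symm.isOpen_image_of_subset_source Metric.isOpen_ball htb
  have hAn : IsPreconnected (e.symm '' (Metric.ball c r \ Metric.closedBall c ρ)) := by
    refine IsPreconnected.image ?_ _ (e.continuousOn_symm.mono (sdiff_subset.trans htb))
    have : Metric.ball c r \ Metric.closedBall c ρ =
        (fun p : ℝ × ℂ => c + p.1 * p.2) '' (Ioo ρ r ×ˢ Metric.sphere 0 1) := by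
      ext z
      simp only [Set.mem_sdiff, Metric.mem_ball, Metric.mem_closedBall, not_le, mem_image, mem_prod,
        mem_Ioo, mem_sphere_zero_iff_norm, Prod.exists, dist_eq_norm]
      constructor
      · rintro ⟨h1, h2⟩
        have h0 : 0 < ‖z - c‖ := hρ.trans_lt h2
        refine ⟨‖z - c‖, (z - c) / ‖z - c‖, ⟨⟨h2, h1⟩, ?_⟩, ?_⟩
        · rw [norm_div, Complex.norm_real, norm_norm, div_self h0.ne']
        · rw [mul_div_cancel₀ _ (by exact_mod_cast h0.ne')]; ring
      · rintro ⟨t, u, ⟨⟨h1, h2⟩, h3⟩, rfl⟩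
        have : ‖c + t * u - c‖ = t := by
          rw [add_sub_cancel_left, norm_mul, h3, mul_one, Complex.norm_real, Real.norm_eq_abs,
            abs_of_pos (hρ.trans_lt h1)]
        rw [this]; exact ⟨h2, h1⟩
    rw [this]
    refine IsPreconnected.image (isPreconnected_Ioo.prod (isPreconnected_sphere ?_ _ _)) _
      (by fun_prop)
    rw [Complex.rank_real_complex]; norm_num
  have hBK : ∀ z ∈ e.symm '' Metric.ball c r, z ∉ e.symm '' Metric.closedBall c ρ →
      z ∈ e.symm '' (Metric.ball c r \ Metric.closedBall c ρ) := by
    rintro _ ⟨u, hu, rfl⟩ h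
    exact ⟨u, ⟨hu, fun hh => h ⟨u, hh, rfl⟩⟩, rfl⟩
  have hAnK : e.symm '' (Metric.ball c r \ Metric.closedBall c ρ) ⊆
      (e.symm '' Metric.closedBall c ρ)ᶜ := by
    rintro _ ⟨u, hu, rfl⟩ ⟨v, hv, hvu⟩
    exact hu.2 (e.symm.injOn (htb (hsub hv)) (htb hu.1) hvu ▸ hv)
  rw [isPreconnected_iff_subset_of_disjoint]
  have key : ∀ u v : Set M, IsOpen u → IsOpen v → (e.symm '' Metric.closedBall c ρ)ᶜ ⊆ u ∪ v →
      (e.symm '' Metric.closedBall c ρ)ᶜ ∩ (u ∩ v) = ∅ →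
      e.symm '' (Metric.ball c r \ Metric.closedBall c ρ) ⊆ u →
      (e.symm '' Metric.closedBall c ρ)ᶜ ⊆ u := by
    intro u v hu hv huv hd hs
    have hcl : IsClopen (v ∩ (e.symm '' Metric.closedBall c ρ)ᶜ) := by
      refine ⟨?_, hv.inter hK.isOpen_compl⟩
      have : (v ∩ (e.symm '' Metric.closedBall c ρ)ᶜ)ᶜ =
          e.symm '' Metric.ball c r ∪ (u ∩ (e.symm '' Metric.closedBall c ρ)ᶜ) := by
        ext z
        constructor
        · intro hz
          by_cases hzK : z ∈ e.symm '' Metric.closedBall c ρ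
          · exact Or.inl (image_mono hsub hzK)
          · exact Or.inr ⟨(huv hzK).resolve_right fun hh => hz ⟨hh, hzK⟩, hzK⟩
        · rintro (hz | hz) ⟨h1, h2⟩
          · have : z ∈ (∅ : Set M) := hd ▸ ⟨h2, hs (hBK z hz h2), h1⟩
            exact this
          · have : z ∈ (∅ : Set M) := hd ▸ ⟨h2, hz.1, h1⟩
            exact this
      rw [← isOpen_compl_iff, this]
      exact hBo.union (hu.inter hK.isOpen_compl)
    rcases isClopen_iff.1 hcl with h | h
    · intro z hz
      refine (huv hz).resolve_right fun hh => ?_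
      have : z ∈ (∅ : Set M) := h ▸ ⟨hh, hz⟩
      exact this
    · have h1 : e.symm c ∈ v ∩ (e.symm '' Metric.closedBall c ρ)ᶜ := h ▸ mem_univ _
      exact absurd ⟨c, Metric.mem_closedBall_self hρ, rfl⟩ h1.2
  intro u v hu hv huv hd
  rcases (isPreconnected_iff_subset_of_disjoint.1 hAn) u v hu hv (hAnK.trans huv)
    (subset_empty_iff.1 (hd ▸ inter_subset_inter_left _ hAnK)) with h | h
  · exact Or.inl (key u v hu hv huv hd h)
  · exact Or.inr (key v u hv hu (by rwa [union_comm]) (by rwa [inter_comm v u]) h)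

lemma isJordan_sphere (e : OpenPartialHomeomorph M ℂ) {c : ℂ} {ρ : ℝ} (hρ : 0 < ρ)
    (ht : Metric.sphere c ρ ⊆ e.target) : IsJordan (e.symm '' Metric.sphere c ρ) := by
  let g : AddCircle (1 : ℝ) → ℂ := fun t => c + ρ * (AddCircle.toCircle t : ℂ)
  have hg : ∀ t, g t ∈ Metric.sphere c ρ := fun t => by
    rw [mem_sphere_iff_norm, add_sub_cancel_left, norm_mul, Circle.norm_coe, mul_one,
      Complex.norm_real, Real.norm_eq_abs, abs_of_pos hρ]
  have hgi : Function.Injective g := by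
    intro t t' h
    have h1 : (ρ : ℂ) ≠ 0 := by exact_mod_cast hρ.ne'
    exact AddCircle.injective_toCircle one_ne_zero
      (Circle.ext (mul_left_cancel₀ h1 (add_left_cancel h)))
  refine ⟨fun t => e.symm (g t), ?_, ?_, ?_⟩
  · refine e.continuousOn_symm.comp_continuous ?_ fun t => ht (hg t)
    have : Continuous fun t : AddCircle (1 : ℝ) => AddCircle.toCircle t := AddCircle.continuous_toCircle
    fun_prop
  · exact fun t t' h => hgi (e.symm.injOn (ht (hg t)) (ht (hg t')) h)
  · ext z
    constructor
    · rintro ⟨t, rfl⟩; exact ⟨_, hg t, rfl⟩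
    · rintro ⟨u, hu, rfl⟩
      have hu' : ‖u - c‖ = ρ := by simpa [dist_eq_norm] using hu
      have hne : (ρ : ℂ) ≠ 0 := by exact_mod_cast hρ.ne'
      obtain ⟨t, ht⟩ := (AddCircle.homeomorphCircle (T := 1) one_ne_zero).surjective (dir (u - c))
      refine ⟨t, ?_⟩
      have h1 : AddCircle.toCircle t = dir (u - c) := by
        rw [← AddCircle.homeomorphCircle_apply one_ne_zero]; exact ht
      have h0 : u - c ≠ 0 := norm_pos_iff.1 (hu'.symm ▸ hρ)
      simp only [g, h1, coe_dir h0, hu', mul_div_cancel₀ _ hne]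
      congr 1; ring

/-- Small rings around a point. -/
lemma exists_ring [ConnectedSpace M] {q : M} {N : Set M} (hN : N ∈ 𝓝 q) (hw : w ∉ N) :
    ∃ B' I σ B, IsRing w B' I σ B ∧ B' ∈ 𝓝 q ∧ B ⊆ N := by
  have hq := mem_chart_source ℂ q
  obtain ⟨r, hr, h1, h2⟩ := exists_chart_ball hq hN
  set e := chartAt ℂ q
  have hcc : ∀ s ≤ r, Metric.closedBall (e q) s ⊆ e.target := fun s hs =>
    (Metric.closedBall_subset_closedBall hs).trans h1
  have hI : ∀ s ≤ r, IsOpen (e.symm '' Metric.ball (e q) s) := fun s hs =>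
    e.symm.isOpen_image_of_subset_source Metric.isOpen_ball
      (Metric.ball_subset_closedBall.trans (hcc s hs))
  have hC : ∀ s ≤ r, IsClosed (e.symm '' Metric.closedBall (e q) s) := fun s hs =>
    ((isCompact_closedBall _ s).image_of_continuousOn
      (e.continuousOn_symm.mono (hcc s hs))).isClosed
  have hun : e.symm '' Metric.ball (e q) (r / 2) ∪ e.symm '' Metric.sphere (e q) (r / 2) =
      e.symm '' Metric.closedBall (e q) (r / 2) := by
    rw [← image_union, Metric.ball_union_sphere]
  refine ⟨e.symm '' Metric.closedBall (e q) (r / 4), e.symm '' Metric.ball (e q) (r / 2),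
    e.symm '' Metric.sphere (e q) (r / 2), e.symm '' Metric.ball (e q) r, ?_, ?_, ?_⟩
  · constructor
    · exact isJordan_sphere e (by linarith)
        (Metric.sphere_subset_closedBall.trans (hcc _ (by linarith)))
    · exact hI _ (by linarith)
    · rw [disjoint_left]
      rintro _ ⟨u, hu, rfl⟩ ⟨v, hv, hvu⟩
      have := e.symm.injOn (hcc _ (by linarith : r / 2 ≤ r) (Metric.sphere_subset_closedBall hv))
        (hcc _ (by linarith : r / 2 ≤ r) (Metric.ball_subset_closedBall hu)) hvu
      subst this
      exact absurd hv (ne_of_lt hu)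
    · rw [hun]; exact hC _ (by linarith)
    · rw [hun]; exact conn_compl_disc e (by linarith) (by linarith) h1
    · exact hC _ (by linarith)
    · exact (convex_closedBall _ _).isPreconnected.image _
        (e.continuousOn_symm.mono (hcc _ (by linarith)))
    · exact image_mono (Metric.closedBall_subset_ball (by linarith))
    · exact hI _ le_rfl
    · rw [hun]; exact image_mono (Metric.closedBall_subset_ball (by linarith))
    · exact fun hh => hw (h2 (image_mono Metric.ball_subset_closedBall hh))
  · have h3 := e.symm.image_mem_nhds (x := e q)
      (e.map_source hq) (Metric.closedBall_mem_nhds _ (by linarith : 0 < r / 4))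
    rwa [e.left_inv hq] at h3
  · exact (image_mono Metric.ball_subset_closedBall).trans h2

variable [SimplyConnectedSpace M]

/-- Cutting along the separating gaps of a circle: every part misses `B'` or lies in `B`. -/
lemma cuttable_ring (hV : NoG V) (h : IsRing w B' I σ B) (hU : IsCell V w U γ) (hB : ¬ B' ⊆ U) :
    Cuttable V w (fun U' _ => U' ⊆ U ∧ (Disjoint U' B' ∨ U' ⊆ B)) U γ := by
  have key : ∀ n : ℕ, ∀ U' γ', IsCell V w U' γ' → U' ⊆ U → (Sep B' σ B U' γ').ncard ≤ n →
      Cuttable V w (fun U' _ => U' ⊆ U ∧ (Disjoint U' B' ∨ U' ⊆ B)) U' γ' := by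
    intro n
    induction n with
    | zero =>
      intro U' γ' hU' hs hn
      refine .leaf hU' ⟨hs, ?_⟩
      by_contra hh
      push Not at hh
      have hx := not_disjoint_iff_nonempty_inter.1 hh.1
      have hy := sdiff_nonempty.2 hh.2
      have h2 := h.two_points hU' hx (fun k => hB (k.trans hs)) hy
      have h3 := exists_sep hV h hU' h2 hx.choose_spec hy.choose_spec
      have h4 := (ncard_pos (finite_sep hV h hU' h2)).2 h3
      omega
    | succ n ih =>
      intro U' γ' hU' hs hn
      by_cases hh : Disjoint U' B' ∨ U' ⊆ B
      · exact .leaf hU' ⟨hs, hh⟩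
      push Not at hh
      have hx := not_disjoint_iff_nonempty_inter.1 hh.1
      have hy := sdiff_nonempty.2 hh.2
      have h2 := h.two_points hU' hx (fun k => hB (k.trans hs)) hy
      obtain ⟨α, hα⟩ := exists_sep hV h hU' h2 hx.choose_spec hy.choose_spec
      have hfin := finite_sep hV h hU' h2
      obtain ⟨z, hz, hαz, -⟩ := id hα
      obtain ⟨A, a, b, hA, hAγ, hAs, hsA⟩ := gap_arc h.jordan hU'.isClosed_curve hU'.isOpen
        hU'.disj hU'.closure_subset hz h2
      rw [← hαz] at hAs hsA
      have hαU : α ⊆ U' := by rw [hαz]; exact (connectedComponentIn_subset _ _).trans inter_subset_right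
      have hab : ({a, b} : Set M) ⊆ γ' := by rw [← hAγ]; exact inter_subset_right
      obtain ⟨β₁, β₂, b1, b2, b3, b4⟩ := hU'.jordan.split (hab (Or.inl rfl)) (hab (Or.inr rfl)) hA.ne
      have hcc : IsCrosscut U' γ' A a b β₁ β₂ := ⟨hA, b1, b2, b3, b4, hAγ,
        hAs.trans (union_subset_union_left _ hαU)⟩
      obtain ⟨U₁, U₂, c1, c2, hd, hu⟩ := exists_cut hV hU' hcc
      have hlt : (Sep B' σ B U' γ' \ {α}).ncard ≤ n := by
        rw [ncard_sdiff_singleton_of_mem hα]; omega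
      have s1 := sep_cut (B' := B') (B := B) hV hU' hαz hcc hAs hsA h.jordan c1 c2.isOpen hd hu h2
      have s2 := sep_cut (B' := B') (B := B) hV hU' hαz hcc.symm hAs hsA h.jordan c2 c1.isOpen
        hd.symm (by rwa [union_comm]) h2
      have hs1 : U₁ ⊆ U' \ A := hu ▸ subset_union_left
      have hs2 : U₂ ⊆ U' \ A := hu ▸ subset_union_right
      exact .cut hU' hcc hd hu
        (ih _ _ c1 ((hs1.trans sdiff_subset).trans hs)
          ((ncard_le_ncard s1 (hfin.subset sdiff_subset)).trans hlt))
        (ih _ _ c2 ((hs2.trans sdiff_subset).trans hs)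
          ((ncard_le_ncard s2 (hfin.subset sdiff_subset)).trans hlt))
  exact key _ U γ hU Subset.rfl le_rfl

/-- Every cell can be divided into arbitrarily small cells. -/
theorem cuttable_small (hV : NoG V) (hU : IsCell V w U γ) {ε : ℝ} (hε : 0 < ε) :
    Cuttable V w (fun U' _ => ∃ q, U' ⊆ Metric.ball q ε) U γ := by
  classical
  have hring : ∀ q ∈ U ∪ γ, ∃ B' I σ B, IsRing w B' I σ B ∧ B' ∈ 𝓝 q ∧ B ⊆ Metric.ball q ε := by
    intro q hq
    have hne : w ≠ q := by rintro rfl; exact hU.ext hq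
    obtain ⟨B', I, σ, B, h1, h2, h3⟩ := exists_ring (q := q) (w := w) (N := Metric.ball q ε ∩ {w}ᶜ)
      (inter_mem (Metric.ball_mem_nhds _ hε) (isOpen_compl_singleton.mem_nhds hne.symm)) (by simp)
    exact ⟨B', I, σ, B, h1, h2, h3.trans inter_subset_left⟩
  choose! B' I σ B h1 h2 h3 using hring
  obtain ⟨t, ht, htU⟩ := hU.compact.elim_nhds_subcover B' h2
  have key : ∀ n : ℕ, ∀ t : Finset M, t.card ≤ n → (∀ q ∈ t, q ∈ U ∪ γ) → ∀ U' γ',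
      IsCell V w U' γ' → U' ⊆ ⋃ q ∈ t, B' q →
      Cuttable V w (fun U' _ => ∃ q, U' ⊆ Metric.ball q ε) U' γ' := by
    intro n
    induction n with
    | zero =>
      intro t htn ht U' γ' hU' hs
      obtain ⟨x, hx⟩ := hU'.nonempty
      have : t = ∅ := by simpa using htn
      subst this
      simpa using hs hx
    | succ n ih =>
      intro t htn ht U' γ' hU' hs
      obtain ⟨q, hq, hqB⟩ : ∃ q ∈ t, ¬ B' q ⊆ U' := by
        by_contra hh
        push Not at hh
        have hcl : IsClopen U' := by
          refine ⟨?_, hU'.isOpen⟩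
          rw [subset_antisymm hs (iUnion₂_subset hh)]
          exact isClosed_biUnion_finset fun q hq => (h1 q (ht q hq)).inner_closed
        rcases isClopen_iff.1 hcl with h | h
        · exact hU'.nonempty.ne_empty h
        · exact hU'.ext (Or.inl (h ▸ mem_univ _))
      refine (cuttable_ring hV (h1 q (ht q hq)) hU' hqB).bind ?_
      rintro U'' γ'' hU'' ⟨k1, k2 | k2⟩
      · refine ih (t.erase q) (by rw [Finset.card_erase_of_mem hq]; omega)
          (fun p hp => ht p (Finset.mem_of_mem_erase hp)) U'' γ'' hU'' ?_
        intro x hx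
        obtain ⟨p, hp, hxp⟩ := mem_iUnion₂.1 (hs (k1 hx))
        refine mem_iUnion₂.2 ⟨p, Finset.mem_erase.2 ⟨?_, hp⟩, hxp⟩
        rintro rfl
        exact disjoint_left.1 k2 hx hxp
      · exact .leaf hU'' ⟨q, k2.trans (h3 q (ht q hq))⟩
  exact key _ t le_rfl ht U γ hU (subset_union_left.trans htU)

end Cuttable

/-! ### Accessibility of boundary points -/

section Access

/-- Infinitely many paths shrinking to a point concatenate to a path ending there. -/
lemma joinedIn_of_seq {X : Type*} [TopologicalSpace X] {F : Set X} {a : X} {x : ℕ → X}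
    {N : ℕ → Set X} (hp : ∀ n, JoinedIn (F ∩ N n) (x n) (x (n + 1)))
    (hN : ∀ O ∈ 𝓝 a, ∃ n₀, ∀ n ≥ n₀, N n ⊆ O) : JoinedIn (insert a F) a (x 0) := by
  let p : ∀ n, Path (x n) (x (n + 1)) := fun n => (hp n).somePath
  have hpm : ∀ n s, (p n).extend s ∈ F ∩ N n := by
    intro n s
    exact (hp n).somePath_mem _
  let E : ℕ → ℝ → X := fun n => (p n).extend
  have hE0 : ∀ n, E n 0 = x n := fun n => (p n).extend_zero
  have hE1 : ∀ n, E n 1 = x (n + 1) := fun n => (p n).extend_one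
  let g : ℝ → X := fun s => E ⌊s⌋₊ (s - ⌊s⌋₊)
  have hg : ∀ n : ℕ, ∀ s ∈ Icc (n : ℝ) (n + 1), g s = E n (s - n) := by
    intro n s hs
    rcases hs.2.lt_or_eq with h | h
    · have : ⌊s⌋₊ = n := by
        rw [Nat.floor_eq_iff ((Nat.cast_nonneg n).trans hs.1)]; exact ⟨hs.1, h⟩
      simp only [g, this]
    · have h1 : s = ((n + 1 : ℕ) : ℝ) := by rw [h]; push_cast; ring
      have h2 : ⌊s⌋₊ = n + 1 := by rw [h1, Nat.floor_natCast]
      simp only [g, h2]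
      rw [← h1, sub_self, hE0]
      have : s - n = 1 := by rw [h]; ring
      rw [this, hE1]
  have hgc : ∀ n : ℕ, ContinuousOn g (Icc 0 (n : ℝ)) := by
    intro n
    induction n with
    | zero => simp
    | succ n ih =>
      have h1 : Icc (0 : ℝ) ((n + 1 : ℕ) : ℝ) = Icc (0 : ℝ) n ∪ Icc (n : ℝ) (n + 1) := by
        rw [Icc_union_Icc_eq_Icc (Nat.cast_nonneg n) (by linarith)]; push_cast; rfl
      rw [h1]
      refine ih.union_of_isClosed ?_ isClosed_Icc isClosed_Icc
      refine ContinuousOn.congr ?_ (hg n)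
      exact ((p n).continuous_extend.comp (continuous_id.sub continuous_const)).continuousOn
  have hgc' : ContinuousOn g (Ici 0) := by
    intro s hs
    have h1 : s < ((⌊s⌋₊ + 1 : ℕ) : ℝ) := by push_cast; exact Nat.lt_floor_add_one s
    refine (hgc (⌊s⌋₊ + 1) s ⟨hs, h1.le⟩).mono_of_mem_nhdsWithin ?_
    rw [← Ici_inter_Iic]
    exact inter_mem self_mem_nhdsWithin (mem_nhdsWithin_of_mem_nhds (Iic_mem_nhds h1))
  let f : ℝ → X := fun t => if t = 0 then a else g (1 / t - 1)
  have hsub : ∀ t ∈ Icc (0 : ℝ) 1, f t ∈ insert a F := by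
    intro t _
    by_cases h : t = 0
    · simp [f, h]
    · simp only [f, h, if_false]; exact Or.inr (hpm _ _).1
  refine JoinedIn.ofLine (f := f) ?_ (by simp [f]) ?_ (image_subset_iff.2 hsub)
  · intro t ht
    by_cases h : t = 0
    · subst h
      have : f 0 = a := by simp [f]
      rw [ContinuousWithinAt, this]
      intro O hO
      rw [Filter.mem_map]
      obtain ⟨n₀, hn⟩ := hN O hO
      have h1 : Iio (1 / ((n₀ : ℝ) + 1)) ∈ 𝓝 (0 : ℝ) := Iio_mem_nhds (by positivity)
      filter_upwards [self_mem_nhdsWithin, mem_nhdsWithin_of_mem_nhds h1] with s hs hs'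
      by_cases h0 : s = 0
      · simp only [h0, mem_preimage, this]; exact mem_of_mem_nhds hO
      · have hpos : 0 < s := lt_of_le_of_ne hs.1 (Ne.symm h0)
        simp only [f, mem_preimage, h0, if_false]
        refine hn _ ?_ (hpm _ _).2
        apply Nat.le_floor
        have h2 : s < 1 / ((n₀ : ℝ) + 1) := hs'
        rw [lt_div_iff₀ (by positivity)] at h2
        rw [le_sub_iff_add_le, le_div_iff₀ hpos]
        linarith [mul_comm s ((n₀ : ℝ) + 1)]
    · have hpos : 0 < t := lt_of_le_of_ne ht.1 (Ne.symm h)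
      have h1 : ContinuousWithinAt (fun t : ℝ => g (1 / t - 1)) (Icc 0 1 ∩ Ioi 0) t := by
        refine ContinuousWithinAt.comp (t := Ici 0) (hgc' _ ?_) ?_ ?_
        · simp only [mem_Ici, sub_nonneg]; rw [le_div_iff₀ hpos]; linarith [ht.2]
        · exact ((continuousAt_const.div continuousAt_id h).sub
            continuousAt_const).continuousWithinAt
        · rintro s ⟨hs, hs0⟩
          simp only [mem_Ici, sub_nonneg]; rw [le_div_iff₀ hs0]; linarith [hs.2]
      have h2 : ContinuousWithinAt f (Icc 0 1 ∩ Ioi 0) t := by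
        refine h1.congr ?_ ?_
        · rintro s ⟨_, hs0⟩
          have : s ≠ 0 := ne_of_gt hs0
          simp [f, this]
        · simp [f, h]
      exact (continuousWithinAt_inter (Ioi_mem_nhds hpos)).1 h2
  · have := hg 0 0 (by simp)
    simp only [f, one_ne_zero, if_false, div_one, sub_self]
    rw [this]; simp [hE0]

variable {M : Type*} [MetricSpace M] [ChartedSpace ℂ M] [SimplyConnectedSpace M]
  {V U γ : Set M} {w a b : M}

lemma joinedIn_of_component {A T : Set M} {x y : M} (hA : IsClosed A)
    (hy : y ∈ connectedComponentIn Aᶜ x) (hT : connectedComponentIn Aᶜ x ⊆ T) :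
    JoinedIn T x y := by
  have := ChartedSpace.locallyPathConnectedSpace ℂ M
  have := ChartedSpace.locallyConnectedSpace ℂ M
  have hx : x ∈ Aᶜ := by
    by_contra h; rw [connectedComponentIn_eq_empty h] at hy; exact hy
  have h1 : IsConnected (connectedComponentIn Aᶜ x) := isConnected_connectedComponentIn_iff.2 hx
  have h2 := (hA.isOpen_compl.connectedComponentIn (x := x)).isConnected_iff_isPathConnected.1 h1
  exact (h2.joinedIn _ (mem_connectedComponentIn hx) _ hy).mono hT

/-- A cell is uniformly locally connected at its boundary points. -/
lemma IsCell.ulc (hV : NoG V) (hU : IsCell V w U γ) (ha : a ∈ γ) {N : Set M} (hN : N ∈ 𝓝 a) :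
    ∃ N' ∈ 𝓝 a, ∀ x ∈ U ∩ N', ∀ y ∈ U ∩ N', JoinedIn (U ∩ N) x y := by
  obtain ⟨r, hr, ht, hrN⟩ := exists_chart_ball (mem_chart_source ℂ a) hN
  set e := chartAt ℂ a
  have hBt : Metric.ball (e a) r ⊆ e.target := Metric.ball_subset_closedBall.trans ht
  have hBo : IsOpen (e.symm '' Metric.ball (e a) r) :=
    e.symm.isOpen_image_of_subset_source Metric.isOpen_ball hBt
  have haB : a ∈ e.symm '' Metric.ball (e a) r :=
    ⟨e a, Metric.mem_ball_self hr, e.left_inv (mem_chart_source ℂ a)⟩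
  obtain ⟨γ₀, γ₁, p, q, h0, h1, h01, hun, h0B, ha1⟩ := hU.jordan.exists_short ha (hBo.mem_nhds haB)
  set σ := e.symm '' Metric.sphere (e a) r
  have hσ : IsClosed σ := ((isCompact_sphere _ _).image_of_continuousOn
    (e.continuousOn_symm.mono (Metric.sphere_subset_closedBall.trans ht))).isClosed
  have hBσ : Disjoint (e.symm '' Metric.ball (e a) r) σ := by
    rw [disjoint_left]
    rintro _ ⟨u, hu, rfl⟩ ⟨v, hv, h⟩
    have := e.symm.injOn (ht (Metric.sphere_subset_closedBall hv)) (hBt hu) h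
    subst this
    rw [Metric.mem_ball] at hu; rw [Metric.mem_sphere] at hv; exact hu.ne hv
  have hBcl : closure (e.symm '' Metric.ball (e a) r) ⊆ e.symm '' Metric.ball (e a) r ∪ σ := by
    have h : e.symm '' Metric.ball (e a) r ∪ σ = e.symm '' Metric.closedBall (e a) r := by
      rw [← image_union, Metric.ball_union_sphere]
    rw [h]
    exact closure_minimal (image_mono Metric.ball_subset_closedBall)
      ((isCompact_closedBall _ _).image_of_continuousOn (e.continuousOn_symm.mono ht)).isClosed
  obtain ⟨N', hN'1, hN'2, hN'3, hN'4⟩ :=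
    exists_connected_nhd ((hBo.inter h1.isClosed.isOpen_compl).mem_nhds ⟨haB, ha1⟩)
  refine ⟨N', hN'2.mem_nhds hN'3, fun x hx y hy => ?_⟩
  have hxγ : x ∉ γ := disjoint_left.1 hU.disj hx.1
  have hN'd : N' ⊆ (σ ∪ γ₁)ᶜ := fun z hz hh =>
    hh.elim (disjoint_left.1 hBσ (hN'1 hz).1) (hN'1 hz).2
  have hI : γ ∩ (σ ∪ γ₁) = γ₁ := by
    apply subset_antisymm
    · rintro z ⟨hz, h | h⟩
      · rw [← hun] at hz
        exact hz.resolve_left fun hh => disjoint_left.1 hBσ (h0B hh) h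
      · exact h
    · intro z hz
      exact ⟨hun ▸ Or.inr hz, Or.inr hz⟩
  have hcl : IsClosed (σ ∪ γ₁) := hσ.union h1.isClosed
  have hy' := janiszewski hV hU.isClosed_curve hcl (by rw [hI]; exact h1.isPreconnected) hxγ
    (hN'd hx.2) (by rw [hU.component hx.1]; exact hy.1)
    (hN'4.subset_connectedComponentIn hx.2 hN'd hy.2)
    ((hU.component_sub subset_union_left hx.1).trans hU.sub)
  refine joinedIn_of_component (hU.isClosed_curve.union hcl) hy' (subset_inter
    (hU.component_sub subset_union_left hx.1) ?_)
  refine (?_ : _ ⊆ e.symm '' Metric.ball (e a) r).trans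
    ((image_mono Metric.ball_subset_closedBall).trans hrN)
  refine isPreconnected_connectedComponentIn.subset_of_closure_inter_subset hBo
    ⟨x, mem_connectedComponentIn ?_, (hN'1 hx.2).1⟩ ?_
  · rintro (h | h)
    · exact hxγ h
    · exact hN'd hx.2 h
  · rintro z ⟨hz1, hz2⟩
    refine (hBcl hz1).resolve_right fun h => connectedComponentIn_subset _ _ hz2 ?_
    exact Or.inr (Or.inl h)

/-- Every boundary point of a cell is accessible from the cell. -/
lemma IsCell.accessible (hV : NoG V) (hU : IsCell V w U γ) (ha : a ∈ γ) :
    ∃ x ∈ U, JoinedIn (insert a U) a x := by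
  have h := fun n : ℕ => hU.ulc hV ha (N := Metric.ball a (1 / ((n : ℝ) + 1)))
    (Metric.ball_mem_nhds a (by positivity))
  choose N' hN' hj using h
  have hI : ∀ n : ℕ, (⋂ k ∈ Finset.range (n + 1), N' k) ∈ 𝓝 a := fun n =>
    (Filter.biInter_finset_mem _).2 fun k _ => hN' k
  have hx : ∀ n : ℕ, ∃ x ∈ U, x ∈ ⋂ k ∈ Finset.range (n + 1), N' k := fun n => by
    obtain ⟨x, h1, h2⟩ := mem_closure_iff_nhds.1 (hU.sub_closure ha) _ (hI n)
    exact ⟨x, h2, h1⟩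
  choose x hxU hxN using hx
  refine ⟨x 0, hxU 0, joinedIn_of_seq (N := fun n : ℕ => Metric.ball a (1 / ((n : ℝ) + 1)))
    (fun n => hj n _ ⟨hxU n, ?_⟩ _ ⟨hxU (n + 1), ?_⟩) ?_⟩
  · exact mem_iInter₂.1 (hxN n) n (by simp)
  · exact mem_iInter₂.1 (hxN (n + 1)) n (by simp)
  · intro O hO
    obtain ⟨ε, hε, hO'⟩ := Metric.mem_nhds_iff.1 hO
    obtain ⟨n₀, hn₀⟩ := exists_nat_one_div_lt hε
    refine ⟨n₀, fun n hn => (Metric.ball_subset_ball ?_).trans hO'⟩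
    exact (Nat.one_div_le_one_div hn).trans hn₀.le

/-- Any two boundary points of a cell are the ends of a crosscut. -/
lemma IsCell.exists_crosscut (hV : NoG V) (hU : IsCell V w U γ) (ha : a ∈ γ) (hb : b ∈ γ)
    (hab : a ≠ b) : ∃ A, IsArc A a b ∧ A ∩ γ = {a, b} ∧ A ⊆ U ∪ {a, b} := by
  have := ChartedSpace.locallyPathConnectedSpace ℂ M
  obtain ⟨x, hx, hjx⟩ := hU.accessible hV ha
  obtain ⟨y, hy, hjy⟩ := hU.accessible hV hb
  have hpc := hU.isOpen.isConnected_iff_isPathConnected.1 ⟨hU.nonempty, hU.conn⟩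
  have hxy := hpc.joinedIn x hx y hy
  have hT : JoinedIn (U ∪ {a, b}) a b := by
    refine ((hjx.mono ?_).trans (hxy.mono subset_union_left)).trans (hjy.mono ?_).symm
    · rintro z (rfl | h); exacts [Or.inr (Or.inl rfl), Or.inl h]
    · rintro z (rfl | h); exacts [Or.inr (Or.inr rfl), Or.inl h]
  let P := hT.somePath
  obtain ⟨A, hA, hA'⟩ := exists_arc (f := P.extend) P.continuous_extend.continuousOn
    (by simpa using hab)
  rw [Path.extend_zero, Path.extend_one] at hA'
  have hsub : A ⊆ U ∪ {a, b} := by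
    refine hA.trans ?_
    rintro _ ⟨t, ht, rfl⟩
    rw [P.extend_apply ht]
    exact hT.somePath_mem _
  refine ⟨A, hA', ?_, hsub⟩
  apply subset_antisymm
  · rintro z ⟨hz, hzγ⟩
    exact (hsub hz).resolve_left fun h => disjoint_left.1 hU.disj h hzγ
  · rintro z (rfl | rfl)
    · exact ⟨hA'.left_mem, ha⟩
    · exact ⟨hA'.right_mem, hb⟩

end Access

/-! ### Homeomorphisms from nested matched covers -/

section Families

variable {α β : Type*} [MetricSpace α] [MetricSpace β]

/-- A sequence of finite covers `Lₙ` of `X` and `Y` by matched pairs of compact sets. -/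
structure IsNest (X : Set α) (Y : Set β) (L : ℕ → List (Set α × Set β)) : Prop where
  compact : ∀ n, ∀ c ∈ L n, IsCompact c.1 ∧ IsCompact c.2
  nonempty : ∀ n, ∀ c ∈ L n, c.1.Nonempty ∧ c.2.Nonempty
  sub : ∀ n, ∀ c ∈ L n, c.1 ⊆ X ∧ c.2 ⊆ Y
  cover : ∀ n, ∀ x ∈ X, ∃ c ∈ L n, x ∈ c.1
  cover' : ∀ n, ∀ y ∈ Y, ∃ c ∈ L n, y ∈ c.2
  refines : ∀ n, ∀ c ∈ L (n + 1), ∃ d ∈ L n, c.1 ⊆ d.1 ∧ c.2 ⊆ d.2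
  mesh : ∀ ε > 0, ∃ n, ∀ c ∈ L n, ∃ q, c.1 ⊆ Metric.closedBall q ε
  mesh' : ∀ ε > 0, ∃ n, ∀ c ∈ L n, ∃ q, c.2 ⊆ Metric.closedBall q ε
  adj : ∀ n, ∀ c ∈ L n, ∀ d ∈ L n, (c.1 ∩ d.1).Nonempty ↔ (c.2 ∩ d.2).Nonempty

variable {X : Set α} {Y : Set β} {L : ℕ → List (Set α × Set β)}

lemma IsNest.swap (h : IsNest X Y L) : IsNest Y X (fun n => (L n).map Prod.swap) where
  compact := by
    intro n c hc
    obtain ⟨d, hd, rfl⟩ := List.mem_map.1 hc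
    exact (h.compact n d hd).symm
  nonempty := by
    intro n c hc
    obtain ⟨d, hd, rfl⟩ := List.mem_map.1 hc
    exact (h.nonempty n d hd).symm
  sub := by
    intro n c hc
    obtain ⟨d, hd, rfl⟩ := List.mem_map.1 hc
    exact (h.sub n d hd).symm
  cover := fun n x hx => by
    obtain ⟨c, hc, hx⟩ := h.cover' n x hx
    exact ⟨_, List.mem_map_of_mem hc, hx⟩
  cover' := fun n x hx => by
    obtain ⟨c, hc, hx⟩ := h.cover n x hx
    exact ⟨_, List.mem_map_of_mem hc, hx⟩
  refines := by
    intro n c hc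
    obtain ⟨d, hd, rfl⟩ := List.mem_map.1 hc
    obtain ⟨c', hc', h1, h2⟩ := h.refines n d hd
    exact ⟨_, List.mem_map_of_mem hc', h2, h1⟩
  mesh := fun ε hε => by
    obtain ⟨n, hn⟩ := h.mesh' ε hε
    refine ⟨n, fun c hc => ?_⟩
    obtain ⟨d, hd, rfl⟩ := List.mem_map.1 hc
    exact hn d hd
  mesh' := fun ε hε => by
    obtain ⟨n, hn⟩ := h.mesh ε hε
    refine ⟨n, fun c hc => ?_⟩
    obtain ⟨d, hd, rfl⟩ := List.mem_map.1 hc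
    exact hn d hd
  adj := by
    intro n c hc d hd
    obtain ⟨c, hc', rfl⟩ := List.mem_map.1 hc
    obtain ⟨d, hd', rfl⟩ := List.mem_map.1 hd
    exact (h.adj n c hc' d hd').symm

/-- The limit relation of a nest. -/
def nestRel (L : ℕ → List (Set α × Set β)) : Set (α × β) :=
  {p | ∀ n, ∃ c ∈ L n, p.1 ∈ c.1 ∧ p.2 ∈ c.2}

lemma IsNest.isCompact (h : IsNest X Y L) : IsCompact (nestRel L) := by
  have h1 : nestRel L = ⋂ n, ⋃ c ∈ L n, c.1 ×ˢ c.2 := by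
    ext p
    simp only [nestRel, mem_prod, mem_iInter, mem_iUnion, exists_prop]; rfl
  have h2 : ∀ n, IsCompact (⋃ c ∈ L n, c.1 ×ˢ c.2) := fun n =>
    (L n).finite_toSet.isCompact_biUnion fun c hc => (h.compact n c hc).1.prod (h.compact n c hc).2
  rw [h1]
  exact (h2 0).of_isClosed_subset (isClosed_iInter fun n => (h2 n).isClosed) (iInter_subset _ 0)

lemma IsNest.bij (h : IsNest X Y L) : BijOn Prod.fst (nestRel L) X := by
  refine ⟨?_, ?_, ?_⟩
  · intro p hp
    obtain ⟨c, hc, h1, -⟩ := hp 0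
    exact (h.sub 0 c hc).1 h1
  · rintro ⟨x, y⟩ hp ⟨x', y'⟩ hp' (rfl : x = x')
    refine Prod.ext rfl (eq_of_forall_dist_le fun ε hε => ?_)
    obtain ⟨n, hn⟩ := h.mesh' (ε / 4) (by positivity)
    obtain ⟨c, hc, h1, h2⟩ := hp n
    obtain ⟨d, hd, h3, h4⟩ := hp' n
    obtain ⟨z, hz, hz'⟩ := (h.adj n c hc d hd).1 ⟨x, h1, h3⟩
    obtain ⟨q, hq⟩ := hn c hc
    obtain ⟨q', hq'⟩ := hn d hd
    have e1 := hq h2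
    have e2 := hq hz
    have e3 := hq' hz'
    have e4 := hq' h4
    simp only [Metric.mem_closedBall] at e1 e2 e3 e4
    have t1 := dist_triangle_right y z q
    have t2 := dist_triangle_right z y' q'
    have t3 := dist_triangle y z y'
    change dist y y' ≤ ε
    linarith
  · intro x hx
    let K : ℕ → Set β := fun n => ⋃ c ∈ L n, {y | x ∈ c.1 ∧ y ∈ c.2}
    have hK : ∀ n, IsCompact (K n) := fun n => by
      refine (L n).finite_toSet.isCompact_biUnion fun c hc => ?_
      by_cases hxc : x ∈ c.1
      · simpa [hxc] using (h.compact n c hc).2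
      · simp [hxc]
    have hK1 : ∀ n, K (n + 1) ⊆ K n := by
      intro n y hy
      simp only [K, mem_iUnion] at hy ⊢
      obtain ⟨c, hc, h1, h2⟩ := hy
      obtain ⟨d, hd, h3, h4⟩ := h.refines n c hc
      exact ⟨d, hd, h3 h1, h4 h2⟩
    have hK2 : ∀ n, (K n).Nonempty := by
      intro n
      obtain ⟨c, hc, hxc⟩ := h.cover n x hx
      obtain ⟨y, hy⟩ := (h.nonempty n c hc).2
      exact ⟨y, by simp only [K, mem_iUnion]; exact ⟨c, hc, hxc, hy⟩⟩
    obtain ⟨y, hy⟩ := IsCompact.nonempty_iInter_of_sequence_nonempty_isCompact_isClosed K hK1 hK2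
      (hK 0) (fun n => (hK n).isClosed)
    refine ⟨(x, y), fun n => ?_, rfl⟩
    have := mem_iInter.1 hy n
    simp only [K, mem_iUnion, exists_prop] at this
    exact this

lemma homeo_of_bijOn {γ δ : Type*} [TopologicalSpace γ] [TopologicalSpace δ] [T2Space δ]
    {R : Set γ} {X : Set δ} (hR : IsCompact R) {f : γ → δ} (hf : ContinuousOn f R)
    (hb : BijOn f R X) : Nonempty (R ≃ₜ X) := by
  have := isCompact_iff_compactSpace.1 hR
  refine ⟨Continuous.homeoOfEquivCompactToT2 (f := hb.equiv f) ?_⟩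
  exact Continuous.subtype_mk (continuousOn_iff_continuous_domRestrict.1 hf) _

lemma IsNest.homeo (h : IsNest X Y L) : Nonempty (X ≃ₜ Y) := by
  obtain ⟨e⟩ := homeo_of_bijOn h.isCompact continuous_fst.continuousOn h.bij
  have hb : BijOn Prod.snd (nestRel L) Y := by
    have h1 : nestRel L = Prod.swap ⁻¹' nestRel (fun n => (L n).map Prod.swap) := by
      ext p
      simp only [nestRel, mem_preimage]
      refine forall_congr' fun n => ⟨?_, ?_⟩
      · rintro ⟨c, hc, h1, h2⟩
        exact ⟨_, List.mem_map_of_mem hc, h2, h1⟩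
      · rintro ⟨c, hc, h1, h2⟩
        obtain ⟨d, hd, rfl⟩ := List.mem_map.1 hc
        exact ⟨d, hd, h2, h1⟩
    have h2 := h.swap.bij
    refine ⟨fun p hp => ?_, fun p hp q hq hpq => ?_, fun y hy => ?_⟩
    · rw [h1] at hp; exact h2.mapsTo hp
    · rw [h1] at hp hq; exact Prod.swap_injective (h2.injOn hp hq hpq)
    · obtain ⟨p, hp, rfl⟩ := h2.surjOn hy
      exact ⟨p.swap, by rw [h1]; simpa using hp, rfl⟩
  obtain ⟨e'⟩ := homeo_of_bijOn h.isCompact continuous_snd.continuousOn hb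
  exact ⟨e.symm.trans e'⟩

end Families

/-! ### Simultaneous subdivision of two cells -/

section BackForth

/-- A cell `(U, γ)` of `M` together with a cell `(U', γ')` of `M'`. -/
structure Quad (M M' : Type*) where
  (U γ : Set M)
  (U' γ' : Set M')

variable {M M' : Type*}

/-- The closed cell of the first ambient space. -/
def Quad.X (c : Quad M M') : Set M := c.U ∪ c.γ

/-- The pair with its two members exchanged. -/
def Quad.swap (c : Quad M M') : Quad M' M := ⟨c.U', c.γ', c.U, c.γ⟩

/-- The closed cell of the second ambient space. -/
def Quad.Y (c : Quad M M') : Set M' := c.U' ∪ c.γ'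

variable [MetricSpace M'] [ChartedSpace ℂ M'] [MetricSpace M] [ChartedSpace ℂ M]

/-- Subdivisions of `X` and `Y` into matched cells, with a homeomorphism `h` between the unions of
the boundary curves that respects the matching. -/
structure IsState (V : Set M) (w : M) (V' : Set M') (w' : M') (X : Set M) (Y : Set M')
    (L : List (Quad M M')) (h : M → M') : Prop where
  cell : ∀ c ∈ L, IsCell V w c.U c.γ
  cell' : ∀ c ∈ L, IsCell V' w' c.U' c.γ'
  cont : ∀ c ∈ L, ContinuousOn h c.γ
  bij : ∀ c ∈ L, BijOn h c.γ c.γ'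
  cover : ∀ x, x ∈ X ↔ ∃ c ∈ L, x ∈ c.X
  cover' : ∀ y, y ∈ Y ↔ ∃ c ∈ L, y ∈ c.Y
  inter : L.Pairwise fun c d => c.X ∩ d.X ⊆ c.γ ∩ d.γ
  inter' : L.Pairwise fun c d => c.Y ∩ d.Y ⊆ c.γ' ∩ d.γ'
  inj : ∀ c ∈ L, ∀ d ∈ L, ∀ x ∈ c.γ, ∀ y ∈ d.γ, h x = h y → x = y

variable {V U γ A β₁ β₂ U₁ U₂ X : Set M} {w a b : M} {V' Y : Set M'} {w' : M'}
  {L L' : List (Quad M M')} {h : M → M'}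

lemma IsState.perm (hs : IsState V w V' w' X Y L h) (hp : L.Perm L') :
    IsState V w V' w' X Y L' h where
  cell := fun c hc => hs.cell c (hp.mem_iff.2 hc)
  cell' := fun c hc => hs.cell' c (hp.mem_iff.2 hc)
  cont := fun c hc => hs.cont c (hp.mem_iff.2 hc)
  bij := fun c hc => hs.bij c (hp.mem_iff.2 hc)
  cover := fun x => by simp only [hs.cover, hp.mem_iff]
  cover' := fun x => by simp only [hs.cover', hp.mem_iff]
  inter := hs.inter.perm hp fun {c d} hh => by
    rw [inter_comm, inter_comm d.γ]; exact hh
  inter' := hs.inter'.perm hp fun {c d} hh => by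
    rw [inter_comm, inter_comm d.γ']; exact hh
  inj := fun c hc d hd => hs.inj c (hp.mem_iff.2 hc) d (hp.mem_iff.2 hd)

lemma IsState.symm (hs : IsState V w V' w' X Y L h) :
    ∃ h', IsState V' w' V w Y X (L.map Quad.swap) h' := by
  have : Nonempty M := ⟨w⟩
  let Γ : Set M := ⋃ c ∈ L, c.γ
  have hΓ : ∀ c ∈ L, c.γ ⊆ Γ := fun c hc => subset_biUnion_of_mem (u := fun c : Quad M M' => c.γ) hc
  have hinj : InjOn h Γ := by
    intro x hx y hy hxy
    simp only [Γ, mem_iUnion, exists_prop] at hx hy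
    obtain ⟨c, hc, hx⟩ := hx
    obtain ⟨d, hd, hy⟩ := hy
    exact hs.inj c hc d hd x hx y hy hxy
  have hinv : ∀ x ∈ Γ, Function.invFunOn h Γ (h x) = x := fun x hx => hinj.leftInvOn_invFunOn hx
  refine ⟨Function.invFunOn h Γ, ?_, ?_, ?_, ?_, ?_, ?_, ?_, ?_, ?_⟩
  · intro c hc
    obtain ⟨d, hd, rfl⟩ := List.mem_map.1 hc
    exact hs.cell' d hd
  · intro c hc
    obtain ⟨d, hd, rfl⟩ := List.mem_map.1 hc
    exact hs.cell d hd
  · intro c hc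
    obtain ⟨d, hd, rfl⟩ := List.mem_map.1 hc
    obtain ⟨k, hk, hk'⟩ := exists_inverse (hs.cell d hd).jordan.isCompact (hs.cont d hd)
      (hs.bij d hd).injOn
    rw [(hs.bij d hd).image_eq] at hk
    refine ContinuousOn.congr hk ?_
    intro y hy
    obtain ⟨x, hx, rfl⟩ := (hs.bij d hd).surjOn hy
    rw [hk' x hx, hinv x (hΓ d hd hx)]
  · intro c hc
    obtain ⟨d, hd, rfl⟩ := List.mem_map.1 hc
    refine ⟨?_, ?_, ?_⟩
    · intro y hy
      obtain ⟨x, hx, rfl⟩ := (hs.bij d hd).surjOn hy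
      rw [hinv x (hΓ d hd hx)]; exact hx
    · intro y hy y' hy' hh
      obtain ⟨x, hx, rfl⟩ := (hs.bij d hd).surjOn hy
      obtain ⟨x', hx', rfl⟩ := (hs.bij d hd).surjOn hy'
      rw [hinv x (hΓ d hd hx), hinv x' (hΓ d hd hx')] at hh
      rw [hh]
    · intro x hx
      exact ⟨h x, (hs.bij d hd).mapsTo hx, hinv x (hΓ d hd hx)⟩
  · intro x
    rw [hs.cover']
    simp only [List.mem_map]
    constructor
    · rintro ⟨c, hc, hx⟩; exact ⟨_, ⟨c, hc, rfl⟩, hx⟩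
    · rintro ⟨_, ⟨c, hc, rfl⟩, hx⟩; exact ⟨c, hc, hx⟩
  · intro x
    rw [hs.cover]
    simp only [List.mem_map]
    constructor
    · rintro ⟨c, hc, hx⟩; exact ⟨_, ⟨c, hc, rfl⟩, hx⟩
    · rintro ⟨_, ⟨c, hc, rfl⟩, hx⟩; exact ⟨c, hc, hx⟩
  · rw [List.pairwise_map]; exact hs.inter'
  · rw [List.pairwise_map]; exact hs.inter
  · intro c hc d hd y hy y' hy' hh
    obtain ⟨c, hc', rfl⟩ := List.mem_map.1 hc
    obtain ⟨d, hd', rfl⟩ := List.mem_map.1 hd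
    obtain ⟨x, hx, rfl⟩ := (hs.bij c hc').surjOn hy
    obtain ⟨x', hx', rfl⟩ := (hs.bij d hd').surjOn hy'
    rw [hinv x (hΓ c hc' hx), hinv x' (hΓ d hd' hx')] at hh
    rw [hh]

/-- Set-theoretic bookkeeping for a cut cell. -/
lemma cut_sets (hd : Disjoint U γ) (hc : IsCrosscut U γ A a b β₁ β₂) (h12 : Disjoint U₁ U₂)
    (hU : U₁ ∪ U₂ = U \ A) :
    (U₁ ∪ (A ∪ β₁)) ∪ (U₂ ∪ (A ∪ β₂)) = U ∪ γ ∧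
    (U₁ ∪ (A ∪ β₁)) ∩ (U₂ ∪ (A ∪ β₂)) ⊆ (A ∪ β₁) ∩ (A ∪ β₂) ∧
    (∀ Z ζ : Set M, (U ∪ γ) ∩ Z ⊆ γ ∩ ζ → (U₁ ∪ (A ∪ β₁)) ∩ Z ⊆ (A ∪ β₁) ∩ ζ) := by
  have hAγ : A ⊆ U ∪ γ := hc.sub.trans (union_subset_union_right _
    (by rw [← hc.inter_curve]; exact inter_subset_right))
  have h1 : ∀ x ∈ U₁, x ∈ U ∧ x ∉ A := fun x hx => by
    have : x ∈ U \ A := hU ▸ Or.inl hx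
    exact this
  have h2 : ∀ x ∈ U₂, x ∈ U ∧ x ∉ A := fun x hx => by
    have : x ∈ U \ A := hU ▸ Or.inr hx
    exact this
  have hb1 : β₁ ⊆ γ := hc.union ▸ subset_union_left
  have hb2 : β₂ ⊆ γ := hc.union ▸ subset_union_right
  rw [disjoint_left] at hd h12
  refine ⟨?_, ?_, ?_⟩
  · apply subset_antisymm
    · rintro x ((h | h | h) | (h | h | h))
      exacts [Or.inl (h1 x h).1, hAγ h, Or.inr (hb1 h), Or.inl (h2 x h).1, hAγ h, Or.inr (hb2 h)]
    · rintro x (h | h)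
      · by_cases hA : x ∈ A
        · exact Or.inl (Or.inr (Or.inl hA))
        · have : x ∈ U₁ ∪ U₂ := hU ▸ ⟨h, hA⟩
          rcases this with h | h
          exacts [Or.inl (Or.inl h), Or.inr (Or.inl h)]
      · rw [← hc.union] at h
        rcases h with h | h
        exacts [Or.inl (Or.inr (Or.inr h)), Or.inr (Or.inr (Or.inr h))]
  · rintro x ⟨h | h, h' | h'⟩
    · exact absurd h' (h12 h)
    · rcases h' with h' | h'
      · exact absurd h' (h1 x h).2
      · exact absurd (hb2 h') (hd (h1 x h).1)
    · rcases h with h | h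
      · exact absurd h (h2 x h').2
      · exact absurd (hb1 h) (hd (h2 x h').1)
    · exact ⟨h, h'⟩
  · rintro Z ζ hZ x ⟨hx, hxZ⟩
    have hxX : x ∈ U ∪ γ := by
      rcases hx with h | h | h
      exacts [Or.inl (h1 x h).1, hAγ h, Or.inr (hb1 h)]
    obtain ⟨hxγ, hxζ⟩ := hZ ⟨hxX, hxZ⟩
    refine ⟨hx.resolve_left fun h => hd (h1 x h).1 hxγ, hxζ⟩

lemma exists_arc_homeo {α β : Type*} [TopologicalSpace α] [T2Space α] [TopologicalSpace β]
    {A : Set α} {A' : Set β} {a b : α} {a' b' : β} (h : IsArc A a b) (h' : IsArc A' a' b') :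
    ∃ k : α → β, ContinuousOn k A ∧ BijOn k A A' ∧ k a = a' ∧ k b = b' := by
  obtain ⟨f, hf, hi, rfl, rfl, rfl⟩ := h
  obtain ⟨f', hf', hi', rfl, rfl, rfl⟩ := h'
  obtain ⟨g, hg, hgf⟩ := exists_inverse isCompact_Icc hf hi
  have h0 : (0 : ℝ) ∈ Icc (0 : ℝ) 1 := ⟨le_rfl, zero_le_one⟩
  have h1 : (1 : ℝ) ∈ Icc (0 : ℝ) 1 := ⟨zero_le_one, le_rfl⟩
  have hm : MapsTo g (f '' Icc 0 1) (Icc 0 1) := by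
    rintro _ ⟨t, ht, rfl⟩; rw [hgf t ht]; exact ht
  refine ⟨f' ∘ g, hf'.comp hg hm, ⟨fun x hx => mem_image_of_mem _ (hm hx), ?_, ?_⟩, ?_, ?_⟩
  · rintro _ ⟨t, ht, rfl⟩ _ ⟨s, hs, rfl⟩ hts
    simp only [Function.comp, hgf t ht, hgf s hs] at hts
    rw [hi' ht hs hts]
  · rintro _ ⟨t, ht, rfl⟩
    exact ⟨f t, ⟨t, ht, rfl⟩, by simp only [Function.comp, hgf t ht]⟩
  · simp only [Function.comp, hgf 0 h0]
  · simp only [Function.comp, hgf 1 h1]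

variable [SimplyConnectedSpace M'] [SimplyConnectedSpace M]

/-- Cutting one cell of a state; the partner cell is cut along a crosscut with the corresponding
ends. -/
lemma IsState.cut (hV' : NoG V') {c : Quad M M'}
    (hs : IsState V w V' w' X Y (c :: L) h) (hc : IsCrosscut c.U c.γ A a b β₁ β₂)
    (hd : Disjoint U₁ U₂) (hun : U₁ ∪ U₂ = c.U \ A) (hc1 : IsCell V w U₁ (A ∪ β₁))
    (hc2 : IsCell V w U₂ (A ∪ β₂)) :
    ∃ U₁' γ₁' U₂' γ₂' h', IsState V w V' w' X Y
      (⟨U₁, A ∪ β₁, U₁', γ₁'⟩ :: ⟨U₂, A ∪ β₂, U₂', γ₂'⟩ :: L) h' ∧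
      (U₁' ∪ γ₁') ∪ (U₂' ∪ γ₂') = c.Y := by
  classical
  have hcm : c ∈ c :: L := List.mem_cons_self
  have hbij := hs.bij c hcm
  have haγ : a ∈ c.γ := hc.union ▸ Or.inl hc.arc₁.left_mem
  have hbγ : b ∈ c.γ := hc.union ▸ Or.inl hc.arc₁.right_mem
  have hb1 : β₁ ⊆ c.γ := hc.union ▸ subset_union_left
  have hb2 : β₂ ⊆ c.γ := hc.union ▸ subset_union_right
  have hab : h a ≠ h b := fun hh => hc.arc.ne (hbij.injOn haγ hbγ hh)
  obtain ⟨A', hA', hA'γ, hA'U⟩ := (hs.cell' c hcm).exists_crosscut hV' (hbij.mapsTo haγ)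
    (hbij.mapsTo hbγ) hab
  have hcr : IsCrosscut c.U' c.γ' A' (h a) (h b) (h '' β₁) (h '' β₂) := by
    refine ⟨hA', hc.arc₁.image ((hs.cont c hcm).mono hb1) (hbij.injOn.mono hb1),
      hc.arc₂.image ((hs.cont c hcm).mono hb2) (hbij.injOn.mono hb2), ?_, ?_, hA'γ, hA'U⟩
    · rw [← hbij.injOn.image_inter hb1 hb2, hc.inter, image_pair]
    · rw [← image_union, hc.union, hbij.image_eq]
  obtain ⟨U₁', U₂', hc1', hc2', hd', hun'⟩ := exists_cut hV' (hs.cell' c hcm) hcr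
  obtain ⟨k, hkc, hkb, hka, hkb'⟩ := exists_arc_homeo hc.arc hA'
  obtain ⟨s1, s2, s3⟩ := cut_sets (hs.cell c hcm).disj hc hd hun
  obtain ⟨-, -, s4⟩ := cut_sets (hs.cell c hcm).disj hc.symm hd.symm (by rwa [union_comm])
  obtain ⟨s1', s2', s3'⟩ := cut_sets (hs.cell' c hcm).disj hcr hd' hun'
  obtain ⟨-, -, s4'⟩ := cut_sets (hs.cell' c hcm).disj hcr.symm hd'.symm (by rwa [union_comm])
  have hp := List.pairwise_cons.1 hs.inter
  have hp' := List.pairwise_cons.1 hs.inter'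
  let h' : M → M' := fun x => if x ∈ A then k x else h x
  -- `A` meets the curves of the state only in its ends
  have hAΓ : ∀ d ∈ c :: L, ∀ x ∈ A, x ∈ d.γ → x = a ∨ x = b := by
    intro d hd x hx hxd
    rcases List.mem_cons.1 hd with rfl | hd
    · have : x ∈ ({a, b} : Set M) := hc.inter_curve ▸ ⟨hx, hxd⟩
      exact this
    · refine (hc.sub hx).resolve_left fun hxU => ?_
      exact disjoint_left.1 (hs.cell c hcm).disj hxU (hp.1 d hd ⟨Or.inl hxU, Or.inr hxd⟩).1
  have hAΓ' : ∀ d ∈ c :: L, ∀ x ∈ A', x ∈ d.γ' → x = h a ∨ x = h b := by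
    intro d hd x hx hxd
    rcases List.mem_cons.1 hd with rfl | hd
    · have : x ∈ ({h a, h b} : Set M') := hA'γ ▸ ⟨hx, hxd⟩
      exact this
    · refine (hA'U hx).resolve_left fun hxU => ?_
      exact disjoint_left.1 (hs.cell' c hcm).disj hxU (hp'.1 d hd ⟨Or.inl hxU, Or.inr hxd⟩).1
  have heqA : ∀ x ∈ A, h' x = k x := fun x hx => if_pos hx
  have heqΓ : ∀ d ∈ c :: L, ∀ x ∈ d.γ, h' x = h x := by
    intro d hd x hx
    by_cases hxA : x ∈ A
    · rw [heqA x hxA]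
      rcases hAΓ d hd x hxA hx with rfl | rfl
      exacts [hka, hkb']
    · exact if_neg hxA
  have hcont : ∀ β : Set M, IsClosed β → β ⊆ c.γ → ContinuousOn h' (A ∪ β) := by
    intro β hβ hβγ
    refine ContinuousOn.union_of_isClosed (hkc.congr heqA) ?_ hc.arc.isClosed hβ
    exact ((hs.cont c hcm).mono hβγ).congr fun x hx => heqΓ c hcm x (hβγ hx)
  -- mixed injectivity
  have hmix : ∀ d ∈ c :: L, ∀ x ∈ A, ∀ y ∈ d.γ, h' x = h' y → x = y := by
    intro d hd x hx y hy hxy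
    rw [heqA x hx, heqΓ d hd y hy] at hxy
    rcases hAΓ' d hd (k x) (hkb.mapsTo hx) (hxy ▸ (hs.bij d hd).mapsTo hy) with hh | hh
    · have hxa : x = a := hkb.injOn hx hc.arc.left_mem (hh.trans hka.symm)
      exact hxa ▸ hs.inj c hcm d hd a haγ y hy (hh ▸ hxy)
    · have hxa : x = b := hkb.injOn hx hc.arc.right_mem (hh.trans hkb'.symm)
      exact hxa ▸ hs.inj c hcm d hd b hbγ y hy (hh ▸ hxy)
  have hinjA : ∀ x ∈ A, ∀ y ∈ A, h' x = h' y → x = y := by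
    intro x hx y hy hxy
    rw [heqA x hx, heqA y hy] at hxy
    exact hkb.injOn hx hy hxy
  have hinj : ∀ x y, (x ∈ A ∨ ∃ d ∈ c :: L, x ∈ d.γ) → (y ∈ A ∨ ∃ d ∈ c :: L, y ∈ d.γ) →
      h' x = h' y → x = y := by
    rintro x y (hx | ⟨d, hd, hx⟩) (hy | ⟨d', hd', hy⟩) hxy
    · exact hinjA x hx y hy hxy
    · exact hmix d' hd' x hx y hy hxy
    · exact (hmix d hd y hy x hx hxy.symm).symm
    · rw [heqΓ d hd x hx, heqΓ d' hd' y hy] at hxy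
      exact hs.inj d hd d' hd' x hx y hy hxy
  have hbij' : ∀ β : Set M, β ⊆ c.γ → BijOn h' (A ∪ β) (A' ∪ h '' β) := by
    intro β hβ
    refine ⟨?_, ?_, ?_⟩
    · rintro x (hx | hx)
      · rw [heqA x hx]; exact Or.inl (hkb.mapsTo hx)
      · rw [heqΓ c hcm x (hβ hx)]; exact Or.inr ⟨x, hx, rfl⟩
    · intro x hx y hy hxy
      exact hinj x y (hx.imp_right fun hx => ⟨c, hcm, hβ hx⟩)
        (hy.imp_right fun hx => ⟨c, hcm, hβ hx⟩) hxy
    · rintro y (hy | ⟨x, hx, rfl⟩)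
      · obtain ⟨x, hx, rfl⟩ := hkb.surjOn hy
        exact ⟨x, Or.inl hx, heqA x hx⟩
      · exact ⟨x, Or.inr hx, heqΓ c hcm x (hβ hx)⟩
  have hcur : ∀ d ∈ (⟨U₁, A ∪ β₁, U₁', A' ∪ h '' β₁⟩ :: ⟨U₂, A ∪ β₂, U₂', A' ∪ h '' β₂⟩ :: L :
      List (Quad M M')), ∀ x ∈ d.γ, x ∈ A ∨ ∃ d ∈ c :: L, x ∈ d.γ := by
    intro d hd x hx
    simp only [List.mem_cons] at hd
    rcases hd with rfl | rfl | hd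
    · exact hx.imp_right fun hx => ⟨c, hcm, hb1 hx⟩
    · exact hx.imp_right fun hx => ⟨c, hcm, hb2 hx⟩
    · exact Or.inr ⟨d, List.mem_cons_of_mem _ hd, hx⟩
  refine ⟨U₁', A' ∪ h '' β₁, U₂', A' ∪ h '' β₂, h', ⟨?_, ?_, ?_, ?_, ?_, ?_, ?_, ?_, ?_⟩, s1'⟩
  · simp only [List.forall_mem_cons]
    exact ⟨hc1, hc2, fun d hd => hs.cell d (List.mem_cons_of_mem _ hd)⟩
  · simp only [List.forall_mem_cons]
    exact ⟨hc1', hc2', fun d hd => hs.cell' d (List.mem_cons_of_mem _ hd)⟩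
  · simp only [List.forall_mem_cons]
    exact ⟨hcont _ hc.arc₁.isClosed hb1, hcont _ hc.arc₂.isClosed hb2, fun d hd =>
      (hs.cont d (List.mem_cons_of_mem _ hd)).congr (heqΓ d (List.mem_cons_of_mem _ hd))⟩
  · simp only [List.forall_mem_cons]
    exact ⟨hbij' _ hb1, hbij' _ hb2, fun d hd =>
      (hs.bij d (List.mem_cons_of_mem _ hd)).congr fun x hx =>
        (heqΓ d (List.mem_cons_of_mem _ hd) x hx).symm⟩
  · intro x
    rw [hs.cover]
    simp only [List.exists_mem_cons_iff, Quad.X]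
    rw [← s1, ← or_assoc]; rfl
  · intro x
    rw [hs.cover']
    simp only [List.exists_mem_cons_iff, Quad.Y]
    rw [← s1', ← or_assoc]; rfl
  · simp only [List.pairwise_cons, List.forall_mem_cons]
    exact ⟨⟨s2, fun d hd => s3 _ _ (hp.1 d hd)⟩, fun d hd => s4 _ _ (hp.1 d hd), hp.2⟩
  · simp only [List.pairwise_cons, List.forall_mem_cons]
    exact ⟨⟨s2', fun d hd => s3' _ _ (hp'.1 d hd)⟩, fun d hd => s4' _ _ (hp'.1 d hd), hp'.2⟩
  · intro d hd d' hd' x hx y hy hxy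
    exact hinj x y (hcur d hd x hx) (hcur d' hd' y hy) hxy

lemma IsState.cuttable (hV' : NoG V') {P : Set M → Set M → Prop} (hcut : Cuttable V w P U γ) :
    ∀ {U' γ' : Set M'} {L : List (Quad M M')} {h : M → M'},
    IsState V w V' w' X Y (⟨U, γ, U', γ'⟩ :: L) h →
    ∃ L' h', IsState V w V' w' X Y (L' ++ L) h' ∧
      ∀ c ∈ L', P c.U c.γ ∧ c.X ⊆ U ∪ γ ∧ c.Y ⊆ U' ∪ γ' := by
  induction hcut with
  | @leaf U γ h1 h2 =>
    intro U' γ' L h hs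
    exact ⟨[⟨U, γ, U', γ'⟩], h, hs, by simp [h2, Quad.X, Quad.Y]⟩
  | @cut U γ A β₁ β₂ U₁ U₂ a b h1 h2 h3 h4 hcut1 hcut2 ih1 ih2 =>
    intro U' γ' L h hs
    obtain ⟨U₁', γ₁', U₂', γ₂', h', hs', hY⟩ :=
      hs.cut hV' h2 h3 h4 hcut1.isCell hcut2.isCell
    obtain ⟨L1, h'', hs1, hL1⟩ := ih1 hs'
    obtain ⟨L2, h''', hs2, hL2⟩ := ih2 (hs1.perm List.perm_middle)
    obtain ⟨s1, -, -⟩ := cut_sets h1.disj h2 h3 h4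
    have hY' : (U₁' ∪ γ₁') ∪ (U₂' ∪ γ₂') = U' ∪ γ' := hY
    refine ⟨L2 ++ L1, h''', by rwa [List.append_assoc], fun c hc => ?_⟩
    rw [← s1, ← hY']
    rcases List.mem_append.1 hc with hc | hc
    · obtain ⟨p, q, r⟩ := hL2 c hc
      exact ⟨p, q.trans subset_union_right, r.trans subset_union_right⟩
    · obtain ⟨p, q, r⟩ := hL1 c hc
      exact ⟨p, q.trans subset_union_left, r.trans subset_union_left⟩

/-- Refining all cells of a state to small ones. -/
lemma IsState.refine (hV : NoG V) (hV' : NoG V') {ε : ℝ} (hε : 0 < ε)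
    (hs : IsState V w V' w' X Y L h) :
    ∃ L' h', IsState V w V' w' X Y L' h' ∧ ∀ c ∈ L', (∃ q, c.X ⊆ Metric.closedBall q ε) ∧
      ∃ d ∈ L, c.X ⊆ d.X ∧ c.Y ⊆ d.Y := by
  have key : ∀ (L R : List (Quad M M')) (h : M → M'), IsState V w V' w' X Y (L ++ R) h →
      ∃ L' h', IsState V w V' w' X Y (L' ++ R) h' ∧
      ∀ c ∈ L', (∃ q, c.X ⊆ Metric.closedBall q ε) ∧ ∃ d ∈ L, c.X ⊆ d.X ∧ c.Y ⊆ d.Y := by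
    intro L
    induction L with
    | nil => intro R h hs; exact ⟨[], h, hs, by simp⟩
    | cons c L ih =>
      intro R h hs
      obtain ⟨Lc, h1, hs1, hLc⟩ := IsState.cuttable hV'
        (cuttable_small hV (hs.cell c List.mem_cons_self) hε) hs
      have hs1 : IsState V w V' w' X Y (Lc ++ (L ++ R)) h1 := hs1
      have hs2 : IsState V w V' w' X Y (L ++ (Lc ++ R)) h1 := hs1.perm (by
        rw [← List.append_assoc, ← List.append_assoc]
        exact List.perm_append_comm.append_right R)
      obtain ⟨L', h2, hs3, hL'⟩ := ih _ _ hs2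
      refine ⟨L' ++ Lc, h2, by rwa [List.append_assoc], fun d hd => ?_⟩
      rcases List.mem_append.1 hd with hd | hd
      · obtain ⟨hq, d', hd', hdd⟩ := hL' d hd
        exact ⟨hq, d', List.mem_cons_of_mem _ hd', hdd⟩
      · obtain ⟨⟨q, hq⟩, h3, h4⟩ := hLc d hd
        refine ⟨⟨q, ?_⟩, c, List.mem_cons_self, h3, h4⟩
        have hcl : closure d.U ⊆ Metric.closedBall q ε :=
          closure_minimal (hq.trans Metric.ball_subset_closedBall) Metric.isClosed_closedBall
        have hcell := hs3.cell d (by simp [hd])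
        exact union_subset (subset_closure.trans hcl) (hcell.sub_closure.trans hcl)
  obtain ⟨L', h', hs', hL'⟩ := key L [] h (by simpa using hs)
  exact ⟨L', h', by simpa using hs', hL'⟩

lemma IsState.refine₂ (hV : NoG V) (hV' : NoG V') {ε : ℝ} (hε : 0 < ε)
    (hs : IsState V w V' w' X Y L h) :
    ∃ L' h', IsState V w V' w' X Y L' h' ∧ ∀ c ∈ L', (∃ q, c.X ⊆ Metric.closedBall q ε) ∧
      (∃ q, c.Y ⊆ Metric.closedBall q ε) ∧ ∃ d ∈ L, c.X ⊆ d.X ∧ c.Y ⊆ d.Y := by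
  obtain ⟨L1, h1, hs1, hL1⟩ := hs.refine hV hV' hε
  obtain ⟨h2, hs2⟩ := hs1.symm
  obtain ⟨L3, h3, hs3, hL3⟩ := hs2.refine hV' hV hε
  obtain ⟨h4, hs4⟩ := hs3.symm
  refine ⟨_, h4, hs4, fun c hc => ?_⟩
  obtain ⟨c, hc', rfl⟩ := List.mem_map.1 hc
  obtain ⟨hq, d, hd, h5, h6⟩ := hL3 c hc'
  obtain ⟨d, hd', rfl⟩ := List.mem_map.1 hd
  obtain ⟨⟨q', hq'⟩, d', hd'', h7, h8⟩ := hL1 d hd'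
  exact ⟨⟨q', Subset.trans h6 hq'⟩, hq, d', hd'', Subset.trans h6 h7, Subset.trans h5 h8⟩

/-- Any two closed cells are homeomorphic. -/
theorem IsCell.homeo (hV : NoG V) (hV' : NoG V') {U' γ' : Set M'} (hU : IsCell V w U γ)
    (hU' : IsCell V' w' U' γ') : Nonempty ((U ∪ γ : Set M) ≃ₜ (U' ∪ γ' : Set M')) := by
  obtain ⟨k, hk, hkb⟩ := hU.jordan.exists_homeo hU'.jordan
  have h0 : IsState V w V' w' (U ∪ γ) (U' ∪ γ') [⟨U, γ, U', γ'⟩] k := by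
    refine ⟨by simpa using hU, by simpa using hU', by simpa using hk, by simpa using hkb,
      by simp [Quad.X], by simp [Quad.Y], List.pairwise_singleton _ _, List.pairwise_singleton _ _,
      ?_⟩
    intro c hc d hd x hx y hy hxy
    rw [List.mem_singleton] at hc hd
    subst hc hd
    exact hkb.injOn hx hy hxy
  let St := {p : List (Quad M M') × (M → M') // IsState V w V' w' (U ∪ γ) (U' ∪ γ') p.1 p.2}
  have hstep : ∀ (n : ℕ) (s : St), ∃ s' : St, ∀ c ∈ s'.1.1,
      (∃ q, c.X ⊆ Metric.closedBall q (1 / ((n : ℝ) + 1))) ∧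
      (∃ q, c.Y ⊆ Metric.closedBall q (1 / ((n : ℝ) + 1))) ∧
      ∃ d ∈ s.1.1, c.X ⊆ d.X ∧ c.Y ⊆ d.Y := by
    rintro n ⟨⟨L, h⟩, hs⟩
    obtain ⟨L', h', hs', hL'⟩ := hs.refine₂ hV hV' (ε := 1 / ((n : ℝ) + 1)) (by positivity)
    exact ⟨⟨⟨L', h'⟩, hs'⟩, hL'⟩
  choose nxt hnxt using hstep
  let s : ℕ → St := fun n => Nat.rec ⟨⟨_, k⟩, h0⟩ (fun n s => nxt n s) n
  have hsn : ∀ n, s (n + 1) = nxt n (s n) := fun n => rfl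
  have hL : IsNest (U ∪ γ) (U' ∪ γ') (fun n => (s n).1.1.map fun c => (c.X, c.Y)) := by
    refine ⟨?_, ?_, ?_, ?_, ?_, ?_, ?_, ?_, ?_⟩
    · intro n c hc
      obtain ⟨d, hd, rfl⟩ := List.mem_map.1 hc
      exact ⟨((s n).2.cell d hd).compact, ((s n).2.cell' d hd).compact⟩
    · intro n c hc
      obtain ⟨d, hd, rfl⟩ := List.mem_map.1 hc
      exact ⟨((s n).2.cell d hd).nonempty.mono subset_union_left,
        ((s n).2.cell' d hd).nonempty.mono subset_union_left⟩
    · intro n c hc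
      obtain ⟨d, hd, rfl⟩ := List.mem_map.1 hc
      exact ⟨fun x hx => ((s n).2.cover x).2 ⟨d, hd, hx⟩,
        fun x hx => ((s n).2.cover' x).2 ⟨d, hd, hx⟩⟩
    · intro n x hx
      obtain ⟨c, hc, h⟩ := ((s n).2.cover x).1 hx
      exact ⟨_, List.mem_map_of_mem hc, h⟩
    · intro n x hx
      obtain ⟨c, hc, h⟩ := ((s n).2.cover' x).1 hx
      exact ⟨_, List.mem_map_of_mem hc, h⟩
    · intro n c hc
      obtain ⟨d, hd, rfl⟩ := List.mem_map.1 hc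
      rw [hsn] at hd
      obtain ⟨-, -, d', hd', h⟩ := hnxt n (s n) d hd
      exact ⟨_, List.mem_map_of_mem hd', h⟩
    · intro ε hε
      obtain ⟨n, hn⟩ := exists_nat_one_div_lt hε
      refine ⟨n + 1, fun c hc => ?_⟩
      obtain ⟨d, hd, rfl⟩ := List.mem_map.1 hc
      rw [hsn] at hd
      obtain ⟨⟨q, hq⟩, -, -⟩ := hnxt n (s n) d hd
      exact ⟨q, hq.trans (Metric.closedBall_subset_closedBall hn.le)⟩
    · intro ε hε
      obtain ⟨n, hn⟩ := exists_nat_one_div_lt hε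
      refine ⟨n + 1, fun c hc => ?_⟩
      obtain ⟨d, hd, rfl⟩ := List.mem_map.1 hc
      rw [hsn] at hd
      obtain ⟨-, ⟨q, hq⟩, -⟩ := hnxt n (s n) d hd
      exact ⟨q, hq.trans (Metric.closedBall_subset_closedBall hn.le)⟩
    · intro n c hc d hd
      obtain ⟨c, hc', rfl⟩ := List.mem_map.1 hc
      obtain ⟨d, hd', rfl⟩ := List.mem_map.1 hd
      have hst := (s n).2
      by_cases hcd : c = d
      · subst hcd
        simp only [inter_self]
        exact iff_of_true ((hst.cell c hc').nonempty.mono subset_union_left)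
          ((hst.cell' c hc').nonempty.mono subset_union_left)
      · have : Std.Symm fun c d : Quad M M' => c.X ∩ d.X ⊆ c.γ ∩ d.γ :=
          ⟨fun c d hh => by rw [inter_comm, inter_comm d.γ]; exact hh⟩
        have : Std.Symm fun c d : Quad M M' => c.Y ∩ d.Y ⊆ c.γ' ∩ d.γ' :=
          ⟨fun c d hh => by rw [inter_comm, inter_comm d.γ']; exact hh⟩
        have i1 := hst.inter.forall hc' hd' hcd
        have i2 := hst.inter'.forall hc' hd' hcd
        constructor
        · rintro ⟨x, hx⟩
          obtain ⟨h1, h2⟩ := i1 hx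
          exact ⟨_, Or.inr ((hst.bij c hc').mapsTo h1), Or.inr ((hst.bij d hd').mapsTo h2)⟩
        · rintro ⟨y, hy⟩
          obtain ⟨h1, h2⟩ := i2 hy
          obtain ⟨x, hx, rfl⟩ := (hst.bij c hc').surjOn h1
          obtain ⟨x', hx', hxx⟩ := (hst.bij d hd').surjOn h2
          have := hst.inj d hd' c hc' x' hx' x hx hxx
          subst this
          exact ⟨x', Or.inr hx, Or.inr hx'⟩
  exact hL.homeo

end BackForth

/-! ### The unit disc is a cell -/

section Plane

lemma noG_ball (R : ℝ) : NoG (Metric.ball (0 : ℂ) R) := by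
  intro x hx g hg hgs hl
  obtain ⟨e, hxe, s, hev⟩ := sigma_spec ℂ x
  have h1 : LocEq x (sigma ℂ x) fun y => tau e x y ^ (s : ℤ) := hev.self_of_nhds.2
  have hxr : x ∈ (OpenPartialHomeomorph.refl ℂ).source := mem_univ _
  obtain ⟨t, ht⟩ := exists_sign hxr hxe
  have h2 := (hgs.trans h1).trans (ht.zpow s)
  simp only [← zpow_mul] at h2
  have h3 : LocEq x (fun y => tau (OpenPartialHomeomorph.refl ℂ) x y ^ ((t : ℤ) * s) / g y)
      (fun _ => 1) := by
    have := (h2.symm).div (LocEq.refl x g)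
    simpa using this
  have hcont : ContinuousOn (tau (OpenPartialHomeomorph.refl ℂ) x) {x}ᶜ :=
    (continuousOn_tau hxr).mono fun y hy => ⟨mem_univ _, hy⟩
  have h4 := hasLog_off_finite (allLog_of_convex convex_univ) {x}
    (f := fun y => tau (OpenPartialHomeomorph.refl ℂ) x y ^ ((t : ℤ) * s) / g y)
    (by
      have : univ \ (({x} : Finset ℂ) : Set ℂ) = {x}ᶜ := by ext; simp
      rw [this]
      exact (((continuous_zpow _).comp_continuousOn hcont).div' hg)) (by simpa using h3)
  have hR : 0 < R := Metric.pos_of_mem_ball hx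
  have hS : Metric.sphere x (2 * R) ⊆ (Metric.ball (0 : ℂ) R)ᶜ := by
    intro y hy
    simp only [Metric.mem_sphere, mem_compl_iff, Metric.mem_ball, not_lt] at hy hx ⊢
    have := dist_triangle_right y x 0
    linarith
  have hSx : Metric.sphere x (2 * R) ⊆ univ \ (({x} : Finset ℂ) : Set ℂ) := by
    intro y hy
    refine ⟨mem_univ _, ?_⟩
    rintro hh
    have : y = x := by simpa using hh
    subst this
    simp at hy
    linarith
  have h5 := (h4.mono hSx).mul (hl.mono hS)
  have h6 := hasLog_tau_zpow_sphere (e := OpenPartialHomeomorph.refl ℂ) (x := x)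
    (n := (t : ℤ) * s) (r := 2 * R) (by linarith) (by simp) ((by simpa using h5))
  exact absurd h6 (mul_ne_zero t.ne_zero s.ne_zero)

lemma isCell_disc : IsCell (Metric.ball (0 : ℂ) 2) 3 (Metric.ball (0 : ℂ) 1)
    (Metric.sphere (0 : ℂ) 1) := by
  have hun : Metric.ball (0 : ℂ) 1 ∪ Metric.sphere 0 1 = Metric.closedBall 0 1 :=
    Metric.ball_union_sphere
  refine ⟨Metric.isOpen_ball, (convex_ball _ _).isPreconnected, ?_, ?_, ?_, ?_, ?_, ?_, ?_, ?_⟩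
  · simpa using isJordan_sphere (OpenPartialHomeomorph.refl ℂ) (c := 0) (ρ := 1) one_pos (by simp)
  · rw [hun]
    have := conn_compl_disc (OpenPartialHomeomorph.refl ℂ) (c := 0) (ρ := 1) (r := 2) zero_le_one
      one_lt_two (by simp)
    simpa using this
  · rw [disjoint_left]; intro x hx hx'
    simp only [Metric.mem_ball, Metric.mem_sphere] at hx hx'; linarith
  · rw [closure_ball _ one_ne_zero]; exact Metric.sphere_subset_closedBall
  · rw [hun]
    intro x hx
    rw [mem_sphere_zero_iff_norm] at hx
    rw [Metric.mem_closure_iff]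
    intro ε hε
    refine ⟨((1 + ε / 2 : ℝ) : ℂ) * x, ?_, ?_⟩
    · rw [mem_compl_iff, mem_closedBall_zero_iff, norm_mul, Complex.norm_real, hx, mul_one,
        Real.norm_eq_abs, abs_of_pos (by positivity)]
      linarith
    · have : x - ((1 + ε / 2 : ℝ) : ℂ) * x = -((ε / 2 : ℝ) : ℂ) * x := by push_cast; ring
      rw [dist_eq_norm, this, norm_mul, norm_neg, Complex.norm_real, hx, mul_one, Real.norm_eq_abs,
        abs_of_pos (by positivity)]
      linarith
  · rw [hun]; exact isCompact_closedBall _ _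
  · exact Metric.ball_subset_ball one_le_two
  · rw [hun, mem_closedBall_zero_iff]; norm_num

variable {M : Type*} [MetricSpace M] [ChartedSpace ℂ M] [SimplyConnectedSpace M]

/-- A closed cell is homeomorphic to the closed unit disc. -/
theorem IsCell.homeo_disc {V U γ : Set M} {w : M} (hV : NoG V) (hU : IsCell V w U γ) :
    Nonempty ((U ∪ γ : Set M) ≃ₜ Metric.closedBall (0 : ℂ) 1) := by
  have h := IsCell.homeo hV (noG_ball 2) hU isCell_disc
  rwa [Metric.ball_union_sphere] at h

end Plane

/-! ### Extending circle-valued maps in the plane, up to finitely many points -/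

section Planar

open MeasureTheory in
/-- A continuous map `T → S¹` from a closed set of the plane extends over any compact set, except
for finitely many singular points: approximate by a smooth map, whose zeros after a small
translation are isolated by Sard's theorem. -/
lemma exists_extension_plane {T K : Set ℂ} (hT : IsClosed T) (hK : IsCompact K) {f : ℂ → Circle}
    (hf : ContinuousOn f T) :
    ∃ Z : Finset ℂ, (∀ z ∈ Z, z ∉ T) ∧ (∀ z ∈ Z, z ∈ K) ∧ ∃ F : ℂ → Circle,
      ContinuousOn F (K \ Z) ∧ ∀ z ∈ T, F z = f z := by
  obtain ⟨G, hG⟩ := ContinuousMap.exists_restrict_eq (Y := ℂ) hT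
    ⟨fun x : T => (f x : ℂ), continuous_subtype_val.comp (continuousOn_iff_continuous_domRestrict.1 hf)⟩
  have hG' : ∀ x ∈ T, G x = f x := fun x hx => DFunLike.congr_fun hG ⟨x, hx⟩
  obtain ⟨Q, hQ, hQd, -⟩ := G.continuous.exists_contDiff_approx (1 : ℕ∞) (ε := fun _ => (1/4 : ℝ))
    continuous_const (fun _ => by norm_num)
  have hQdiff : Differentiable ℝ Q := hQ.differentiable (by simp)
  set s : Set ℂ := {z | (fderiv ℝ Q z).det = 0} with hs
  have hnull : volume (Q '' s) = 0 := by
    apply addHaar_image_eq_zero_of_det_fderivWithin_eq_zero (f' := fun z => fderiv ℝ Q z)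
    · intro x _
      exact (hQdiff x).hasFDerivAt.hasFDerivWithinAt
    · intro x hx
      exact hx
  obtain ⟨c0, hc0, hc0s⟩ : ∃ c0 ∈ Metric.ball (0 : ℂ) (1/4), c0 ∉ Q '' s := by
    by_contra! h
    have h1 := measure_mono_null (μ := volume) (fun z hz => h z hz) hnull
    have h2 := Metric.measure_ball_pos (volume : Measure ℂ) (0 : ℂ) (r := 1/4) (by norm_num)
    exact h2.ne' h1
  have hiso : ∀ z, Q z = c0 → ∀ᶠ w in 𝓝[≠] z, Q w ≠ c0 := by
    intro z hz
    have hdet : (fderiv ℝ Q z).det ≠ 0 := fun h => hc0s ⟨z, h, hz⟩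
    refine (hQdiff z).hasFDerivAt.eventually_ne ?_
    have := (ContinuousLinearMap.toContinuousLinearEquivOfDetNeZero _ hdet).antilipschitz
    exact ⟨_, this⟩
  have hfin : (K ∩ {z | Q z = c0}).Finite := by
    by_contra hinf
    obtain ⟨x, hx, hacc⟩ := Set.Infinite.exists_accPt_of_subset_isCompact hinf hK inter_subset_left
    rw [accPt_iff_frequently_nhdsNE] at hacc
    have hcl : IsClosed {z | Q z = c0} := isClosed_eq hQ.continuous continuous_const
    have hxQ : Q x = c0 := by
      have h1 : x ∈ closure {z | Q z = c0} :=
        mem_closure_iff_frequently.2 ((hacc.filter_mono nhdsWithin_le_nhds).mono fun y hy => hy.2)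
      rwa [hcl.closure_eq] at h1
    obtain ⟨y, hy, hy'⟩ := (hacc.and_eventually (hiso x hxQ)).exists
    exact hy' hy.2
  have hdist : ∀ z ∈ T, dist (Q z - c0) (f z) < 1/2 := by
    intro z hz
    have h1 := hQd z
    rw [hG' z hz] at h1
    rw [mem_ball_zero_iff] at hc0
    rw [dist_eq_norm] at h1 ⊢
    calc ‖Q z - c0 - f z‖ = ‖(Q z - f z) - c0‖ := by congr 1; ring
      _ ≤ ‖Q z - f z‖ + ‖c0‖ := norm_sub_le _ _
      _ < 1/2 := by linarith
  have hne : ∀ z ∈ T, Q z - c0 ≠ 0 := by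
    intro z hz h
    have := hdist z hz
    rw [h, dist_eq_norm, zero_sub, norm_neg, Circle.norm_coe] at this
    norm_num at this
  have hcont : ContinuousOn (fun z => dir (Q z - c0)) {z | Q z = c0}ᶜ :=
    continuousOn_dir.comp (hQ.continuous.sub continuous_const).continuousOn fun z hz => sub_ne_zero.2 hz
  have hlog : HasLog (fun z => f z / dir (Q z - c0)) T := by
    refine hasLog_of_ne_neg_one (hf.div' (hcont.mono fun z hz h => hne z hz (sub_eq_zero.2 h))) ?_
    intro z hz h
    have h1 : f z = - dir (Q z - c0) := by rw [div_eq_iff_eq_mul] at h; simpa using h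
    have h2 := hdist z hz
    have h3 : (f z : ℂ) = - ((Q z - c0) / (‖Q z - c0‖ : ℂ)) := by
      rw [h1, ← coe_dir (hne z hz)]; rfl
    have hp : 0 < ‖Q z - c0‖ := norm_pos_iff.2 (hne z hz)
    have h4 : Q z - c0 - f z = ((1 + ‖Q z - c0‖⁻¹ : ℝ) : ℂ) * (Q z - c0) := by
      rw [h3]; push_cast; field_simp; ring
    rw [dist_eq_norm, h4, norm_mul, Complex.norm_real, Real.norm_eq_abs,
      abs_of_pos (by positivity), add_mul, inv_mul_cancel₀ hp.ne'] at h2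
    linarith
  obtain ⟨χ, hχ, hχe⟩ := hlog.exists_extend hT
  refine ⟨hfin.toFinset, ?_, ?_, fun z => dir (Q z - c0) * Circle.exp (χ z), ?_, ?_⟩
  · intro z hz hzT
    rw [Set.Finite.mem_toFinset] at hz
    exact hne z hzT (sub_eq_zero.2 hz.2)
  · intro z hz
    rw [Set.Finite.mem_toFinset] at hz
    exact hz.1
  · refine (hcont.mono ?_).mul (Circle.exp.continuous.comp hχ).continuousOn
    rintro z ⟨hz, hz'⟩ h
    exact hz' (by rw [Set.Finite.coe_toFinset]; exact ⟨hz, h⟩)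
  · intro z hz
    change dir (Q z - c0) * Circle.exp (χ z) = f z
    rw [← hχe z hz]; simp

end Planar

/-! ### Moving singularities, and invariance of domain in the plane -/

section Push

variable {M : Type*} [TopologicalSpace M] [T2Space M] [NormalSpace M] [ChartedSpace ℂ M]
  [SimplyConnectedSpace M]

/-- A map defined on a punctured neighbourhood winds like a power of the local orientation. -/
lemma exists_locEq_sigma {x : M} {N : Set M} (hN : N ∈ 𝓝 x) {f : M → Circle}
    (hf : ContinuousOn f (N \ {x})) : ∃ n : ℤ, LocEq x f fun y => sigma M x y ^ n := by
  obtain ⟨e, hxe, s, hev⟩ := sigma_spec M x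
  have h1 : LocEq x (sigma M x) fun y => tau e x y ^ (s : ℤ) := hev.self_of_nhds.2
  obtain ⟨n, hn⟩ := exists_locEq_tau hxe hN hf
  refine ⟨s * n, hn.trans ?_⟩
  have := (h1.zpow (s * n)).symm
  have hss : (s : ℤ) * (s * n) = n := by
    rw [← mul_assoc]; rcases Int.units_eq_one_or s with h | h <;> simp [h]
  simpa only [← zpow_mul, hss] using this

/-- A non-winding singularity is removed by a modification in a given neighbourhood. -/
lemma exists_remove {X W : Set M} {a : M} {A : Set M}
    (haA : a ∉ A) {f : M → Circle} (hf : ContinuousOn f (X \ (A ∪ {a})))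
    (h : LocEq a f fun _ => 1) (hW : W ∈ 𝓝 a) :
    ∃ f' : M → Circle, ContinuousOn f' (X \ A) ∧ ∀ z ∉ W, f' z = f z := by
  obtain ⟨f', χ, h1, h2, h3, h4⟩ := exists_mod hW h
  refine ⟨f', ?_, h1⟩
  intro z hz
  by_cases hza : z = a
  · subst hza
    have : ContinuousAt f' z := continuousAt_const.congr (h2.mono fun y hy => hy.symm)
    exact this.continuousWithinAt
  · have hc : ContinuousOn f' (X \ (A ∪ {a})) :=
      (hf.mul (Circle.exp.continuous.comp_continuousOn (h3.mono fun y hy h => hy.2 (Or.inr h)))).congr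
        fun y hy => h4 y fun h => hy.2 (Or.inr h)
    have hm : X \ (A ∪ {a}) ∈ 𝓝[X \ A] z := by
      have : {a}ᶜ ∈ 𝓝[X \ A] z := mem_nhdsWithin_of_mem_nhds (isOpen_compl_singleton.mem_nhds hza)
      filter_upwards [this, self_mem_nhdsWithin] with y hy hy'
      exact ⟨hy'.1, by rintro (h | h); exacts [hy'.2 h, hy h]⟩
    exact (hc z ⟨hz.1, by rintro (h | h); exacts [hz.2 h, hza h]⟩).mono_of_mem_nhdsWithin hm

/-- All singularities inside a connected open set `W` are moved to one point `y` of `W`. -/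
lemma exists_push {X W : Set M} {y : M} (hW : IsOpen W) (hWc : IsPreconnected W) (hy : y ∈ W)
    (Z : Finset M) (hyZ : y ∉ Z) (hZX : ∀ z ∈ Z, X ∈ 𝓝 z) (hZW : ∀ z ∈ Z, z ∈ W)
    {F : M → Circle} (hF : ContinuousOn F (X \ (Z ∪ {y} : Set M))) :
    ∃ F' : M → Circle, ContinuousOn F' (X \ {y}) ∧ ∀ z ∉ W, F' z = F z := by
  classical
  induction Z using Finset.induction_on generalizing F with
  | empty => exact ⟨F, by simpa using hF, fun _ _ => rfl⟩
  | insert a Z ha ih =>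
    have hay : a ≠ y := fun h => hyZ (by simp [h])
    have hcl : IsClosed ((Z : Set M) ∪ {y}) := (Z.finite_toSet.union (finite_singleton y)).isClosed
    have haA : a ∉ (Z : Set M) ∪ {y} := by simp [ha, hay]
    have hF1 : ContinuousOn F (X \ (((Z : Set M) ∪ {y}) ∪ {a})) := by
      refine hF.mono ?_
      rintro z ⟨hz, hz'⟩
      refine ⟨hz, fun h => hz' ?_⟩
      simp only [Finset.coe_insert, mem_union, mem_insert_iff, mem_singleton_iff] at h ⊢
      tauto
    have hN : X ∩ ((Z : Set M) ∪ {y})ᶜ ∈ 𝓝 a :=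
      inter_mem (hZX a (by simp)) (hcl.isOpen_compl.mem_nhds haA)
    obtain ⟨n, hn⟩ := exists_locEq_sigma hN (hF1.mono (by
      rintro z ⟨⟨h1, h2⟩, h3⟩; exact ⟨h1, by rintro (h | h); exacts [h2 h, h3 h]⟩))
    obtain ⟨θ, hθ⟩ := exists_theta hW hWc (hZW a (by simp)) hy hay
    have hm : LocEq a (fun z => F z / θ z ^ n) fun _ => 1 := by
      simpa using hn.div (hθ.left.zpow n)
    obtain ⟨f', hf', hoff⟩ := exists_remove (X := X) haA
      (f := fun z => F z / θ z ^ n)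
      (hF1.div' ((continuous_zpow n).comp_continuousOn (hθ.cont.mono (by
        rintro z ⟨-, hz⟩ h
        apply hz
        rcases h with h | h
        · exact Or.inr h
        · exact Or.inl (Or.inr h))))) hm (hW.mem_nhds (hZW a (by simp)))
    obtain ⟨F', h1, h2⟩ := ih (fun h => hyZ (by simp [h])) (fun z hz => hZX z (by simp [hz]))
      (fun z hz => hZW z (by simp [hz])) hf'
    refine ⟨F', h1, fun z hz => ?_⟩
    rw [h2 z hz, hoff z hz, hθ.off z hz]; simp

/-- If `NoG V` fails, a map on a closed neighbourhood of `V` with finitely many singularities in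
`V` can be changed inside `V` to a continuous map. -/
lemma exists_push_of_not_noG {X V : Set M} (hV : IsOpen V) (hVc : IsPreconnected V)
    (hXV : ∀ z ∈ V, X ∈ 𝓝 z) (hG : ¬ NoG V) (Z : Finset M) (hZV : ∀ z ∈ Z, z ∈ V)
    {F : M → Circle} (hF : ContinuousOn F (X \ Z)) :
    ∃ F' : M → Circle, ContinuousOn F' X ∧ ∀ z ∉ V, F' z = F z := by
  classical
  simp only [NoG, not_forall, not_not] at hG
  obtain ⟨x, hx, g, hg, hgs, hl⟩ := hG
  obtain ⟨F₁, hF₁, h₁⟩ := exists_push (X := X) hV hVc hx (Z.erase x) (by simp)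
    (fun z hz => hXV z (hZV z (Finset.mem_of_mem_erase hz)))
    (fun z hz => hZV z (Finset.mem_of_mem_erase hz)) (F := F) (hF.mono (by
      rintro z ⟨hz, hz'⟩
      refine ⟨hz, fun h => hz' ?_⟩
      by_cases hzx : z = x
      · exact Or.inr hzx
      · exact Or.inl (by simpa [hzx] using h)))
  obtain ⟨n, hn⟩ := exists_locEq_sigma (hXV x hx) hF₁
  obtain ⟨φ, hφ, he⟩ := hl.exists_extend hV.isClosed_compl
  have hm : LocEq x (fun z => F₁ z / g z ^ n) fun _ => 1 := by simpa using hn.div (hgs.zpow n)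
  obtain ⟨F₂, hF₂, h₂⟩ := exists_remove (X := X) (A := ∅)
    (notMem_empty _) (f := fun z => F₁ z / g z ^ n) (by
      simp only [empty_union]
      exact hF₁.div' ((continuous_zpow n).comp_continuousOn (hg.mono fun z hz => hz.2))) hm
    (hV.mem_nhds hx)
  refine ⟨fun z => F₂ z * Circle.exp (φ z) ^ n, ?_, ?_⟩
  · rw [sdiff_empty] at hF₂
    exact hF₂.mul ((continuous_zpow n).comp (Circle.exp.continuous.comp hφ)).continuousOn
  · intro z hz
    change F₂ z * Circle.exp (φ z) ^ n = F z
    rw [h₂ z hz, ← he z hz, h₁ z hz]; simp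

end Push

section PlanarTopology

/-- Invariance of domain in the plane. -/
lemma planar_domain {k : ℂ → ℂ} {ρ : ℝ} (hρ : 0 < ρ)
    (hk : ContinuousOn k (Metric.closedBall 0 ρ)) (hi : InjOn k (Metric.closedBall 0 ρ)) :
    k '' Metric.closedBall 0 ρ ∈ 𝓝 (k 0) := by
  classical
  set D := Metric.closedBall (0 : ℂ) ρ with hD
  have hDc : IsCompact D := isCompact_closedBall _ _
  have hSD : Metric.sphere (0 : ℂ) ρ ⊆ D := Metric.sphere_subset_closedBall
  have hBD : Metric.ball (0 : ℂ) ρ ⊆ D := Metric.ball_subset_closedBall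
  set J := k '' Metric.sphere 0 ρ with hJ
  have hJc : IsCompact J := (isCompact_sphere _ _).image_of_continuousOn (hk.mono hSD)
  have hnJ : ∀ z ∈ Metric.ball (0 : ℂ) ρ, k z ∉ J := by
    rintro z hz ⟨w, hw, hwz⟩
    have := hi (hSD hw) (hBD hz) hwz
    subst this
    rw [Metric.mem_ball] at hz; rw [Metric.mem_sphere] at hw; linarith
  have h0 : (0 : ℂ) ∈ Metric.ball (0 : ℂ) ρ := Metric.mem_ball_self hρ
  set W := connectedComponentIn Jᶜ (k 0) with hW
  have hWo : IsOpen W := isOpen_component hJc.isClosed _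
  have hWx : k 0 ∈ W := mem_connectedComponentIn (hnJ 0 h0)
  by_contra hnot
  obtain ⟨y, hyW, hyD⟩ : ∃ y ∈ W, y ∉ k '' D := by
    by_contra! h
    exact hnot (mem_of_superset (hWo.mem_nhds hWx) h)
  obtain ⟨k', hk', hkk⟩ := exists_inverse hDc hk hi
  have hBW : k '' Metric.ball 0 ρ ⊆ W :=
    IsPreconnected.subset_connectedComponentIn
      ((convex_ball _ _).isPreconnected.image _ (hk.mono hBD)) ⟨0, h0, rfl⟩ (by
        rintro _ ⟨z, hz, rfl⟩; exact hnJ z hz)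
  have hkD : IsCompact (k '' D) := hDc.image_of_continuousOn hk
  obtain ⟨R, hR⟩ := hkD.isBounded.subset_ball (0 : ℂ)
  have hfJ : ContinuousOn (fun z => dir (k' z)) J := by
    refine continuousOn_dir.comp (hk'.mono (image_mono hSD)) ?_
    rintro _ ⟨z, hz, rfl⟩
    rw [hkk z (hSD hz)]
    rintro (rfl : z = 0)
    simp at hz; exact hρ.ne hz
  obtain ⟨Z, hZJ, -, F, hF, hFe⟩ :=
    exists_extension_plane hJc.isClosed (isCompact_closedBall (0 : ℂ) R) hfJ
  obtain ⟨F', hF', hoff⟩ := exists_push (X := Metric.ball 0 R \ ((Z.filter (· ∉ W) : Finset ℂ) : Set ℂ))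
      hWo isPreconnected_connectedComponentIn hyW
    ((Z.filter (· ∈ W)).filter (fun z => z ∈ Metric.ball (0 : ℂ) R ∧ z ≠ y)) (by simp)
    (by
      intro z hz
      simp only [Finset.mem_filter] at hz
      refine inter_mem (Metric.isOpen_ball.mem_nhds hz.2.1)
        ((Finset.finite_toSet _).isClosed.isOpen_compl.mem_nhds ?_)
      simp [hz.1.2])
    (by intro z hz; simp only [Finset.mem_filter] at hz; exact hz.1.2) (F := F) (hF.mono (by
      rintro z ⟨⟨hz1, hz2⟩, hz3⟩
      refine ⟨Metric.ball_subset_closedBall hz1, fun h => ?_⟩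
      simp only [Finset.coe_filter, mem_ofPred_eq, mem_union, mem_singleton_iff, Finset.mem_filter, not_and, not_or, not_not] at hz2 hz3
      exact hz3.2 (hz3.1 ⟨h, hz2 h⟩ hz1)))
  have hsub : k '' D ⊆ (Metric.ball 0 R \ ((Z.filter (· ∉ W) : Finset ℂ) : Set ℂ)) \ {y} := by
    rintro _ ⟨z, hz, rfl⟩
    refine ⟨⟨hR ⟨z, hz, rfl⟩, ?_⟩, ?_⟩
    · intro h
      simp only [Finset.coe_filter, mem_ofPred_eq] at h
      by_cases hzb : z ∈ Metric.ball (0 : ℂ) ρ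
      · exact h.2 (hBW ⟨z, hzb, rfl⟩)
      · refine hZJ _ h.1 ⟨z, ?_, rfl⟩
        simp only [hD, Metric.mem_closedBall, Metric.mem_ball, Metric.mem_sphere, not_lt] at hz hzb ⊢
        exact le_antisymm hz hzb
    · rintro rfl; exact hyD ⟨z, hz, rfl⟩
  have hall : AllLog (k '' D) := (allLog_of_convex (convex_closedBall _ _)).image hk hk' hkk
  have hlog := (hall F' (hF'.mono hsub)).comp (h := k) (hk.mono hSD) (r := Metric.sphere 0 ρ)
    (fun z hz => ⟨z, hSD hz, rfl⟩)
  have hlog2 : HasLog (fun z => dir z ^ (1 : ℤ)) (Metric.sphere 0 ρ) := by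
    refine hlog.congr fun z hz => ?_
    have hzJ : k z ∈ J := ⟨z, hz, rfl⟩
    rw [hoff _ (fun h => connectedComponentIn_subset _ _ h hzJ), hFe _ hzJ, hkk z (hSD hz), zpow_one]
  exact one_ne_zero (eq_zero_of_hasLog_sphere hρ hlog2)

/-- A compact set of the plane on which all logarithms exist does not separate the plane. -/
lemma isPreconnected_compl_of_allLog {T : Set ℂ} (hT : IsCompact T) (hl : AllLog T) :
    IsPreconnected Tᶜ := by
  obtain ⟨R₀, hR₀⟩ := hT.isBounded.subset_ball (0 : ℂ)
  set R := max R₀ 0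
  have hTR : T ⊆ Metric.closedBall 0 R :=
    hR₀.trans (Metric.ball_subset_closedBall.trans (Metric.closedBall_subset_closedBall (le_max_left _ _)))
  have hout : IsPreconnected (Metric.closedBall (0 : ℂ) R)ᶜ := by
    have := conn_compl_disc (OpenPartialHomeomorph.refl ℂ) (c := 0) (ρ := R) (r := R + 1)
      (le_max_right _ _) (by linarith) (by simp)
    simpa using this
  have hmeet : ∀ x ∉ T, ∃ y, ‖y‖ > R ∧ y ∈ connectedComponentIn Tᶜ x := by
    intro x hx
    by_contra! hno
    have hsub : connectedComponentIn Tᶜ x ⊆ Metric.ball 0 (R + 1) := by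
      intro y hy
      rw [mem_ball_zero_iff]
      by_contra h
      exact hno y (by push Not at h; linarith) hy
    have hy : ((R + 1 : ℝ) : ℂ) ∉ T := by
      intro h
      have := hTR h
      rw [mem_closedBall_zero_iff, Complex.norm_real, Real.norm_eq_abs,
        abs_of_pos (by have := le_max_right R₀ 0; linarith)] at this
      linarith
    have := hsub (mem_component_of_allLog (noG_ball _) hT.isClosed hl hx hy hsub)
    rw [mem_ball_zero_iff, Complex.norm_real, Real.norm_eq_abs,
        abs_of_pos (by have := le_max_right R₀ 0; linarith)] at this
    linarith
  refine isPreconnected_of_forall_pair ?_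
  intro x hx y hy
  obtain ⟨x', hx'R, hx'⟩ := hmeet x hx
  obtain ⟨y', hy'R, hy'⟩ := hmeet y hy
  have hsubT : (Metric.closedBall (0 : ℂ) R)ᶜ ⊆ Tᶜ := compl_subset_compl.2 hTR
  have h1 : y' ∈ connectedComponentIn Tᶜ x' :=
    hout.subset_connectedComponentIn (by simpa using hx'R) hsubT (by simpa using hy'R)
  rw [← connectedComponentIn_eq hx'] at h1
  refine ⟨connectedComponentIn Tᶜ x, connectedComponentIn_subset _ _, mem_connectedComponentIn hx, ?_,
    isPreconnected_connectedComponentIn⟩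
  rw [connectedComponentIn_eq h1, ← connectedComponentIn_eq hy']
  exact mem_connectedComponentIn hy

end PlanarTopology

/-! ### Subsurfaces with boundary: local structure -/

/-- The closed upper half-plane. -/
def halfPlane : Set ℂ := {z | 0 ≤ z.im}

/-- `h` restricted to `H ∩ ball 0 r` (with `H` the plane or the half-plane) is a homeomorphism onto
a relatively open subset of `B`, and sends `0` to `x`. -/
structure BChart {M : Type*} [TopologicalSpace M] (H : Set ℂ) (B : Set M) (x : M) (h : ℂ → M)
    (r : ℝ) : Prop where
  pos : 0 < r
  cont : ContinuousOn h (H ∩ Metric.ball 0 r)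
  inj : InjOn h (H ∩ Metric.ball 0 r)
  zero : h 0 = x
  isOpen : ∀ A : Set ℂ, IsOpen A → ∃ O : Set M, IsOpen O ∧ O ∩ B = h '' (A ∩ (H ∩ Metric.ball 0 r))

/-- `B` is a surface with boundary in the subspace topology. -/
def IsBSurface {M : Type*} [TopologicalSpace M] (B : Set M) : Prop :=
  ∀ x ∈ B, ∃ h r, BChart univ B x h r ∨ BChart halfPlane B x h r

section LocalB

variable {M : Type*} [TopologicalSpace M] {H : Set ℂ} {B : Set M} {x : M} {h : ℂ → M} {r : ℝ}

lemma zero_mem_halfPlane : (0 : ℂ) ∈ halfPlane := by simp [halfPlane]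

lemma isClosed_halfPlane : IsClosed halfPlane := isClosed_le continuous_const Complex.continuous_im

lemma convex_halfPlane : Convex ℝ halfPlane := convex_halfSpace_im_ge 0

lemma BChart.mapsTo (hh : BChart H B x h r) : MapsTo h (H ∩ Metric.ball 0 r) B := by
  obtain ⟨O, -, hO⟩ := hh.isOpen univ isOpen_univ
  intro z hz
  have : h z ∈ O ∩ B := by rw [hO]; exact ⟨z, ⟨mem_univ _, hz⟩, rfl⟩
  exact this.2

lemma BChart.shrink (hh : BChart H B x h r) {r' : ℝ} (h0 : 0 < r') (hr : r' ≤ r) :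
    BChart H B x h r' where
  pos := h0
  cont := hh.cont.mono (inter_subset_inter_right _ (Metric.ball_subset_ball hr))
  inj := hh.inj.mono (inter_subset_inter_right _ (Metric.ball_subset_ball hr))
  zero := hh.zero
  isOpen A hA := by
    obtain ⟨O, hO, hOB⟩ := hh.isOpen (A ∩ Metric.ball 0 r') (hA.inter Metric.isOpen_ball)
    refine ⟨O, hO, ?_⟩
    rw [hOB]
    congr 1
    ext z
    constructor
    · rintro ⟨⟨h1, h2⟩, h3, h4⟩; exact ⟨h1, h3, h2⟩
    · rintro ⟨h1, h3, h2⟩; exact ⟨⟨h1, h2⟩, h3, Metric.ball_subset_ball hr h2⟩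

lemma BChart.exists_shrink (hh : BChart H B x h r) (hH : 0 ∈ H) {N : Set M} (hN : N ∈ 𝓝 x) :
    ∃ r', 0 < r' ∧ r' ≤ r ∧ h '' (H ∩ Metric.ball 0 r') ⊆ N := by
  have h1 : h ⁻¹' N ∈ 𝓝[H ∩ Metric.ball 0 r] 0 :=
    hh.cont 0 ⟨hH, Metric.mem_ball_self hh.pos⟩ (by rwa [hh.zero])
  rw [Metric.mem_nhdsWithin_iff] at h1
  obtain ⟨ε, hε, h2⟩ := h1
  refine ⟨min ε r, lt_min hε hh.pos, min_le_right _ _, ?_⟩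
  rintro _ ⟨z, ⟨hz, hz'⟩, rfl⟩
  exact h2 ⟨Metric.ball_subset_ball (min_le_left _ _) hz',
    hz, Metric.ball_subset_ball (min_le_right _ _) hz'⟩

lemma BChart.shift (hh : BChart H B x h r) {w : ℂ} {r' : ℝ} (hr' : 0 < r') {H' : Set ℂ}
    (hH : ∀ z, ‖z‖ < r' → (z ∈ H' ↔ z + w ∈ H)) (hb : ∀ z, ‖z‖ < r' → ‖z + w‖ < r) :
    BChart H' B (h w) (fun z => h (z + w)) r' where
  pos := hr'
  cont := hh.cont.comp (by fun_prop) fun z hz => ⟨(hH z (by simpa using hz.2)).1 hz.1,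
    by simpa using hb z (by simpa using hz.2)⟩
  inj z hz z' hz' he := by
    have := hh.inj ⟨(hH z (by simpa using hz.2)).1 hz.1, by simpa using hb z (by simpa using hz.2)⟩
      ⟨(hH z' (by simpa using hz'.2)).1 hz'.1, by simpa using hb z' (by simpa using hz'.2)⟩ he
    simpa using this
  zero := by simp
  isOpen A hA := by
    obtain ⟨O, hO, hOB⟩ := hh.isOpen ((fun z => z - w) ⁻¹' (A ∩ Metric.ball 0 r'))
      ((hA.inter Metric.isOpen_ball).preimage (by fun_prop))
    refine ⟨O, hO, ?_⟩
    rw [hOB]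
    ext y
    constructor
    · rintro ⟨z, ⟨⟨h1, h2⟩, h3, h4⟩, rfl⟩
      refine ⟨z - w, ⟨h1, ?_, h2⟩, by simp⟩
      exact (hH _ (by simpa using h2)).2 (by simpa using h3)
    · rintro ⟨z, ⟨h1, h2, h3⟩, rfl⟩
      refine ⟨z + w, ⟨⟨by simpa using h1, by simpa using h3⟩, ?_, ?_⟩, rfl⟩
      · exact (hH z (by simpa using h3)).1 h2
      · simpa using hb z (by simpa using h3)

/-- Images of relative neighbourhoods of `0` are relative neighbourhoods of `x`, cut out by
arbitrarily small open sets. -/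
lemma BChart.exists_open (hh : BChart H B x h r) (hH : 0 ∈ H) {N : Set M} (hN : N ∈ 𝓝 x) :
    ∃ r', 0 < r' ∧ r' ≤ r ∧ ∃ O ⊆ N, IsOpen O ∧ x ∈ O ∧ O ∩ B = h '' (H ∩ Metric.ball 0 r') := by
  obtain ⟨r', h0, hr, hsub⟩ := hh.exists_shrink hH (interior_mem_nhds.2 hN)
  obtain ⟨O, hO, hOB⟩ := (hh.shrink h0 hr).isOpen univ isOpen_univ
  rw [univ_inter] at hOB
  have hxO : x ∈ O ∩ B := by rw [hOB]; exact ⟨0, ⟨hH, Metric.mem_ball_self h0⟩, hh.zero⟩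
  refine ⟨r', h0, hr, O ∩ interior N, inter_subset_right.trans interior_subset, hO.inter isOpen_interior,
    ⟨hxO.1, mem_interior_iff_mem_nhds.2 hN⟩, ?_⟩
  rw [inter_right_comm, hOB, inter_eq_left]
  exact hsub

variable [T2Space M] [ChartedSpace ℂ M]

/-- A point with a planar chart in `B` is interior to `B`. -/
lemma BChart.mem_interior (hh : BChart univ B x h r) : B ∈ 𝓝 x := by
  set e := chartAt ℂ x
  have hxe : x ∈ e.source := mem_chart_source ℂ x
  obtain ⟨r', h0, hr, hsub⟩ := hh.exists_shrink (mem_univ _) (e.open_source.mem_nhds hxe)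
  have hD : Metric.closedBall (0 : ℂ) (r' / 2) ⊆ univ ∩ Metric.ball 0 r' := fun z hz =>
    ⟨mem_univ _, Metric.closedBall_subset_ball (by linarith) hz⟩
  have hD' : Metric.closedBall (0 : ℂ) (r' / 2) ⊆ univ ∩ Metric.ball 0 r :=
    hD.trans (inter_subset_inter_right _ (Metric.ball_subset_ball hr))
  have hs : MapsTo h (Metric.closedBall (0 : ℂ) (r' / 2)) e.source := fun z hz => hsub ⟨z, hD hz, rfl⟩
  have := planar_domain (k := fun z => e (h z)) (half_pos h0)
    (e.continuousOn.comp (hh.cont.mono hD') hs)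
    (e.injOn.comp (hh.inj.mono hD') hs)
  have h2 : e ⁻¹' ((fun z => e (h z)) '' Metric.closedBall 0 (r' / 2)) ∈ 𝓝 x :=
    (e.continuousAt hxe) (by simpa [hh.zero] using this)
  filter_upwards [h2, e.open_source.mem_nhds hxe] with y hy hye
  obtain ⟨z, hz, hzy⟩ := hy
  rw [← e.injOn (hs hz) hye hzy]
  exact hh.mapsTo (hD' hz)

lemma allLog_half {ρ : ℝ} (hρ : 0 < ρ) : AllLog ((halfPlane ∩ Metric.ball 0 ρ) \ {0}) := by
  have hconv : Convex ℝ (halfPlane ∩ Metric.ball (0 : ℂ) ρ) := convex_halfPlane.inter (convex_ball _ _)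
  have hp : (Complex.I * (ρ / 2 : ℝ) : ℂ) ∈ halfPlane ∩ Metric.ball (0 : ℂ) ρ := by
    constructor
    · simp [halfPlane]; positivity
    · rw [mem_ball_zero_iff, norm_mul, Complex.norm_I, one_mul, Complex.norm_real, Real.norm_eq_abs,
        abs_of_pos (by positivity)]
      linarith
  have hstar : StarConvex ℝ (Complex.I * (ρ / 2 : ℝ) : ℂ) ((halfPlane ∩ Metric.ball (0 : ℂ) ρ) \ {0}) := by
    intro z hz a b ha hb hab
    refine ⟨hconv hp hz.1 ha hb hab, fun h0 => ?_⟩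
    have him := congrArg Complex.im (show a • (Complex.I * (ρ / 2 : ℝ) : ℂ) + b • z = 0 from h0)
    simp only [Complex.add_im, Complex.real_smul, Complex.mul_im, Complex.ofReal_re, Complex.ofReal_im,
      Complex.I_re, Complex.I_im, Complex.mul_re, Complex.zero_im] at him
    have hz0 : 0 ≤ z.im := hz.1.1
    have h1 : 0 ≤ b * z.im := mul_nonneg hb hz0
    have h2 : a * (ρ / 2) = 0 := le_antisymm (by nlinarith) (by positivity)
    have ha0 : a = 0 := by
      rcases mul_eq_zero.1 h2 with h | h
      · exact h
      · linarith
    have hb1 : b = 1 := by linarith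
    subst ha0 hb1
    exact hz.2 (by simpa using h0)
  have hne : ((halfPlane ∩ Metric.ball (0 : ℂ) ρ) \ {0}).Nonempty := by
    refine ⟨_, hp, ?_⟩
    intro h
    have := congrArg Complex.im (show (Complex.I * (ρ / 2 : ℝ) : ℂ) = 0 from h)
    simp at this; linarith
  have := hstar.contractibleSpace hne
  intro f hf
  obtain ⟨φ, hφ, he⟩ := exists_log_of_contractible _ (continuousOn_iff_continuous_domRestrict.1 hf)
  classical
  refine ⟨fun z => if hz : z ∈ (halfPlane ∩ Metric.ball (0 : ℂ) ρ) \ {0} then φ ⟨z, hz⟩ else 0, ?_, ?_⟩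
  · rw [continuousOn_iff_continuous_domRestrict]
    refine hφ.congr fun z => ?_
    rw [Set.domRestrict_apply, dif_pos z.2]
  · intro z hz
    simp only [hz, dif_pos]
    exact he ⟨z, hz⟩

/-- A boundary point of a half-plane chart is not interior to `B`. -/
lemma BChart.notMem_interior (hh : BChart halfPlane B x h r) : B ∉ 𝓝 x := by
  intro hB
  set e := chartAt ℂ x
  have hxe : x ∈ e.source := mem_chart_source ℂ x
  obtain ⟨r', h0, hr, O, hON, hO, hxO, hOB⟩ :=
    (hh.shrink (half_pos hh.pos) (by linarith [hh.pos])).exists_open zero_mem_halfPlane (e.open_source.mem_nhds hxe)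
  have hN : h '' (halfPlane ∩ Metric.ball 0 r') ∈ 𝓝 x := by
    rw [← hOB]; exact inter_mem (hO.mem_nhds hxO) hB
  have hKsub : halfPlane ∩ Metric.closedBall 0 (r / 2) ⊆ halfPlane ∩ Metric.ball 0 r :=
    inter_subset_inter_right _ (Metric.closedBall_subset_ball (by linarith [hh.pos]))
  have hK : IsCompact (halfPlane ∩ Metric.closedBall (0 : ℂ) (r / 2)) :=
    (isCompact_closedBall _ _).inter_left isClosed_halfPlane
  obtain ⟨k, hk, hkk⟩ := exists_inverse hK (hh.cont.mono hKsub) (hh.inj.mono hKsub)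
  have hsubK : (halfPlane ∩ Metric.ball 0 r') \ {0} ⊆ halfPlane ∩ Metric.closedBall 0 (r / 2) := by
    rintro z ⟨⟨hz, hz'⟩, -⟩
    exact ⟨hz, Metric.ball_subset_closedBall (Metric.ball_subset_ball hr hz')⟩
  have hall := (allLog_half h0).image (hh.cont.mono (hsubK.trans hKsub)) (hk.mono (image_mono hsubK))
    fun z hz => hkk z (hsubK hz)
  have heq : h '' ((halfPlane ∩ Metric.ball 0 r') \ {0}) = h '' (halfPlane ∩ Metric.ball 0 r') \ {x} := by
    have h0m : (0 : ℂ) ∈ halfPlane ∩ Metric.ball 0 r := ⟨zero_mem_halfPlane, Metric.mem_ball_self hh.pos⟩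
    ext y; constructor
    · rintro ⟨z, hz, rfl⟩
      refine ⟨⟨z, hz.1, rfl⟩, fun hzx => hz.2 ?_⟩
      exact hh.inj (hKsub (hsubK hz)) h0m (by rw [hh.zero]; exact hzx)
    · rintro ⟨⟨z, hz, rfl⟩, hzx⟩
      exact ⟨z, ⟨hz, fun h0 => hzx (by rw [show z = 0 from h0]; exact hh.zero)⟩, rfl⟩
  rw [heq] at hall
  have hl := hall (tau e x) ((continuousOn_tau hxe).mono fun y hy =>
    ⟨hON (by have := hy.1; rw [← hOB] at this; exact this.1), hy.2⟩)
  have := eq_zero_of_locEq_tau hxe (n := 1) (by simpa using hl.locEq_one hN)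
  exact one_ne_zero this

lemma BChart.image_mem_interior (hh : BChart halfPlane B x h r) {w : ℂ} (hw : 0 < w.im)
    (hwr : ‖w‖ < r) : h w ∈ interior B := by
  rw [mem_interior_iff_mem_nhds]
  refine BChart.mem_interior (hh.shift (H' := univ) (w := w) (r' := min w.im (r - ‖w‖))
    (lt_min hw (by linarith)) ?_ ?_)
  · intro z hz
    simp only [mem_univ, true_iff, halfPlane, mem_ofPred_eq, Complex.add_im]
    have := (abs_le.1 (Complex.abs_im_le_norm z)).1
    have := hz.trans_le (min_le_left _ _)
    linarith
  · intro z hz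
    have := hz.trans_le (min_le_right _ _)
    have := norm_add_le z w
    linarith

lemma BChart.shift_real (hh : BChart halfPlane B x h r) {t : ℝ} (ht : |t| < r) :
    BChart halfPlane B (h t) (fun z => h (z + t)) (r - |t|) :=
  hh.shift (by linarith) (fun z _ => by simp [halfPlane]) fun z hz => by
    have := norm_add_le z t
    rw [Complex.norm_real, Real.norm_eq_abs] at this
    linarith

lemma BChart.image_notMem_interior (hh : BChart halfPlane B x h r) {t : ℝ} (ht : |t| < r) :
    h t ∉ interior B := by
  rw [mem_interior_iff_mem_nhds]
  exact (hh.shift_real ht).notMem_interior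

lemma IsBSurface.exists_half (hB : IsBSurface B) (hx : x ∈ B) (hx' : x ∉ interior B) :
    ∃ h r, BChart halfPlane B x h r := by
  obtain ⟨h, r, hh | hh⟩ := hB x hx
  · exact absurd (mem_interior_iff_mem_nhds.2 hh.mem_interior) hx'
  · exact ⟨h, r, hh⟩

end LocalB

/-! ### The complement of a subsurface near its boundary -/

section Sides

lemma isPreconnected_halfAnnulus {r₁ r₂ : ℝ} (h2 : 0 < r₂) :
    IsPreconnected ((halfPlane ∩ Metric.closedBall 0 r₁) \ Metric.ball 0 r₂) := by
  have : (halfPlane ∩ Metric.closedBall 0 r₁) \ Metric.ball 0 r₂ =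
      (fun p : ℝ × ℝ => (p.1 : ℂ) * Complex.exp (p.2 * Complex.I)) '' (Icc r₂ r₁ ×ˢ Icc 0 Real.pi) := by
    ext z
    simp only [mem_image, Prod.exists, mem_prod, mem_Icc]
    constructor
    · rintro ⟨⟨h, h'⟩, h''⟩
      refine ⟨‖z‖, z.arg, ⟨⟨by simpa using h'', by simpa using h'⟩, ?_, Complex.arg_le_pi z⟩,
        Complex.norm_mul_exp_arg_mul_I z⟩
      exact Complex.arg_nonneg_iff.2 h
    · rintro ⟨s, t, ⟨⟨hs, hs'⟩, ht, ht'⟩, rfl⟩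
      have hn : ‖(s : ℂ) * Complex.exp (t * Complex.I)‖ = s := by
        rw [norm_mul, Complex.norm_exp_ofReal_mul_I, mul_one, Complex.norm_real, Real.norm_eq_abs,
          abs_of_pos (by linarith)]
      refine ⟨⟨?_, by rw [mem_closedBall_zero_iff, hn]; exact hs'⟩,
        by rw [mem_ball_zero_iff, hn]; linarith⟩
      change 0 ≤ ((s : ℂ) * Complex.exp (t * Complex.I)).im
      rw [Complex.im_ofReal_mul, Complex.exp_ofReal_mul_I_im]
      exact mul_nonneg (by linarith) (Real.sin_nonneg_of_nonneg_of_le_pi ht ht')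
  rw [this]
  exact (isPreconnected_Icc.prod isPreconnected_Icc).image _ (by fun_prop)

variable {M : Type*} [TopologicalSpace M] [T2Space M] [ChartedSpace ℂ M] {B : Set M} {x : M}
  {h : ℂ → M} {r : ℝ}

/-- Near a boundary point, the complement of `B` lies in a single component of `Bᶜ`. The proof
applies Janiszewski's theorem in the plane to the image of a closed half-disc and to the union of
the image of a half-annulus with the exterior of a small ball. -/
lemma BChart.one_sided (hh : BChart halfPlane B x h r) :
    ∃ N ∈ 𝓝 x, ∀ a ∈ N \ B, ∀ b ∈ N \ B, b ∈ connectedComponentIn Bᶜ a := by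
  set e := chartAt ℂ x
  have hxe : x ∈ e.source := mem_chart_source ℂ x
  obtain ⟨r₀, h00, hr0, hsub0⟩ := hh.exists_shrink zero_mem_halfPlane (e.open_source.mem_nhds hxe)
  obtain ⟨r₁, h10, hr1, O, hON, hO, hxO, hOB⟩ := (hh.shrink (half_pos h00) (by linarith)).exists_open
    zero_mem_halfPlane univ_mem
  set D := halfPlane ∩ Metric.closedBall (0 : ℂ) r₁ with hD
  have hD0 : D ⊆ halfPlane ∩ Metric.ball 0 r₀ :=
    inter_subset_inter_right _ (Metric.closedBall_subset_ball (by linarith))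
  have hDr : D ⊆ halfPlane ∩ Metric.ball 0 r :=
    hD0.trans (inter_subset_inter_right _ (Metric.ball_subset_ball hr0))
  have hDs : MapsTo h D e.source := fun z hz => hsub0 ⟨z, hD0 hz, rfl⟩
  set k : ℂ → ℂ := fun z => e (h z) with hk
  have hkc : ContinuousOn k D := e.continuousOn.comp (hh.cont.mono hDr) hDs
  have hki : InjOn k D := e.injOn.comp (hh.inj.mono hDr) hDs
  have hDc : IsCompact D := (isCompact_closedBall _ _).inter_left isClosed_halfPlane
  have h0D : (0 : ℂ) ∈ D := ⟨zero_mem_halfPlane, Metric.mem_closedBall_self h10.le⟩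
  have hk0 : k 0 = e x := by simp [hk, hh.zero]
  obtain ⟨R, hR, hRt, hRO⟩ := exists_chart_ball hxe (hO.mem_nhds hxO)
  obtain ⟨r₂, h20, hr2⟩ : ∃ r₂, 0 < r₂ ∧ ∀ z ∈ D, ‖z‖ < r₂ → k z ∈ Metric.ball (e x) R := by
    have h1 : k ⁻¹' Metric.ball (e x) R ∈ 𝓝[D] 0 :=
      hkc 0 h0D (by rw [hk0]; exact Metric.ball_mem_nhds _ hR)
    obtain ⟨ε, hε, h2⟩ := Metric.mem_nhdsWithin_iff.1 h1
    exact ⟨ε, hε, fun z hz hz' => h2 ⟨by simpa using hz', hz⟩⟩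
  set An := D \ Metric.ball 0 r₂ with hAn
  have hAnc : IsCompact An := hDc.diff Metric.isOpen_ball
  have hkAn : IsCompact (k '' An) := hAnc.image_of_continuousOn (hkc.mono sdiff_subset)
  have hxAn : e x ∉ k '' An := by
    rintro ⟨z, hz, hzx⟩
    have := hki hz.1 h0D (by rw [hzx, hk0])
    subst this
    exact hz.2 (Metric.mem_ball_self h20)
  obtain ⟨ε, hε, hεs⟩ := Metric.isOpen_iff.1 (hkAn.isClosed.isOpen_compl.inter Metric.isOpen_ball)
    (e x) ⟨hxAn, Metric.mem_ball_self hR⟩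
  refine ⟨e.source ∩ e ⁻¹' Metric.ball (e x) ε, inter_mem (e.open_source.mem_nhds hxe)
    (e.continuousAt hxe (Metric.ball_mem_nhds _ hε)), ?_⟩
  rintro a ⟨⟨hae, haε⟩, haB⟩ b ⟨⟨hbe, hbε⟩, hbB⟩
  have hnT : ∀ c ∈ e.source, c ∉ B → e c ∉ k '' D := by
    rintro c hce hcB ⟨z, hz, hzc⟩
    have := e.injOn (hDs hz) hce hzc
    exact hcB (this ▸ hh.mapsTo (hDr hz))
  have hTc : IsCompact (k '' D) := hDc.image_of_continuousOn hkc
  obtain ⟨k', hk', hkk⟩ := exists_inverse hDc hkc hki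
  have hall : AllLog (k '' D) :=
    (allLog_of_convex (convex_halfPlane.inter (convex_closedBall _ _))).image hkc hk' hkk
  have hT := isPreconnected_compl_of_allLog hTc hall
  set B' := (Metric.ball (e x) R)ᶜ ∪ k '' An with hB'
  have hB'c : IsClosed B' := Metric.isOpen_ball.isClosed_compl.union hkAn.isClosed
  have hinter : k '' D ∩ B' = k '' An := by
    apply Subset.antisymm
    · rintro _ ⟨⟨z, hz, rfl⟩, h1 | h1⟩
      · refine ⟨z, ⟨hz, fun hzb => h1 (hr2 z hz (by simpa using hzb))⟩, rfl⟩
      · exact h1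
    · exact fun z hz => ⟨image_mono sdiff_subset hz, Or.inr hz⟩
  have hεB : Metric.ball (e x) ε ⊆ B'ᶜ := by
    rintro z hz (h1 | h1)
    · exact h1 (hεs hz).2
    · exact (hεs hz).1 h1
  have hsubR : (k '' D ∪ B')ᶜ ⊆ Metric.ball (e x) R := by
    intro z hz
    by_contra h1
    exact hz (Or.inr (Or.inl h1))
  have hJ := janiszewski (noG_ball (‖e x‖ + R)) hTc.isClosed hB'c
    (by rw [hinter]; exact (isPreconnected_halfAnnulus h20).image _ (hkc.mono sdiff_subset))
    (hnT a hae haB) (hεB haε)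
    (hT.subset_connectedComponentIn (hnT a hae haB) Subset.rfl (hnT b hbe hbB))
    ((convex_ball _ _).isPreconnected.subset_connectedComponentIn haε hεB hbε)
    ((connectedComponentIn_subset _ _).trans (hsubR.trans (by
      intro z hz
      rw [Metric.mem_ball, dist_eq_norm] at hz
      rw [mem_ball_zero_iff]
      have := norm_add_le (e x) (z - e x)
      rw [add_sub_cancel] at this
      linarith)))
  set G := connectedComponentIn (k '' D ∪ B')ᶜ (e a) with hG
  have hGs : G ⊆ (k '' D ∪ B')ᶜ := connectedComponentIn_subset _ _
  have hGt : G ⊆ e.target := hGs.trans (hsubR.trans (Metric.ball_subset_closedBall.trans hRt))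
  have haG : e a ∈ G := mem_connectedComponentIn (by
    rintro (h1 | h1); exacts [hnT a hae haB h1, hεB haε h1])
  have hpre : IsPreconnected (e.symm '' G) :=
    isPreconnected_connectedComponentIn.image _ (e.symm.continuousOn.mono hGt)
  refine hpre.subset_connectedComponentIn ⟨e a, haG, e.left_inv hae⟩ ?_ ⟨e b, hJ, e.left_inv hbe⟩
  rintro _ ⟨g, hg, rfl⟩ hgB
  have h1 : e.symm g ∈ O ∩ B :=
    ⟨hRO ⟨g, Metric.ball_subset_closedBall (hsubR (hGs hg)), rfl⟩, hgB⟩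
  rw [hOB] at h1
  obtain ⟨z, hz, hzg⟩ := h1
  refine hGs hg (Or.inl ⟨z, inter_subset_inter_right _ Metric.ball_subset_closedBall hz, ?_⟩)
  simp only [hk, hzg]
  exact e.right_inv (hGt hg)

/-- Small relatively open pieces of `B` around a boundary point. -/
lemma BChart.local_int (hh : BChart halfPlane B x h r) {N : Set M} (hN : N ∈ 𝓝 x) :
    ∃ O ⊆ N, IsOpen O ∧ x ∈ O ∧ IsPreconnected (O ∩ B) ∧ IsPreconnected (O ∩ interior B) ∧
      O ∩ B ⊆ closure (O ∩ interior B) := by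
  obtain ⟨r', h0, hr, O, hON, hO, hxO, hOB⟩ := hh.exists_open zero_mem_halfPlane hN
  have hh' := hh.shrink h0 hr
  have hInt : O ∩ interior B = h '' ({z | 0 < z.im} ∩ Metric.ball 0 r') := by
    apply Subset.antisymm
    · rintro y ⟨hyO, hy⟩
      have : y ∈ O ∩ B := ⟨hyO, interior_subset hy⟩
      rw [hOB] at this
      obtain ⟨z, ⟨hz, hz'⟩, rfl⟩ := this
      refine ⟨z, ⟨?_, hz'⟩, rfl⟩
      refine lt_of_le_of_ne (show (0 : ℝ) ≤ z.im from hz) fun h1 => ?_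
      have hre : z = (z.re : ℂ) := by apply Complex.ext <;> simp [← h1]
      refine hh'.image_notMem_interior (t := z.re) ?_ (hre ▸ hy)
      exact (Complex.abs_re_le_norm z).trans_lt (by simpa using hz')
    · rintro _ ⟨z, ⟨hz, hz'⟩, rfl⟩
      have h1 : h z ∈ O ∩ B := by rw [hOB]; exact ⟨z, ⟨le_of_lt (show (0 : ℝ) < z.im from hz), hz'⟩, rfl⟩
      exact ⟨h1.1, hh'.image_mem_interior hz (by simpa using hz')⟩
  refine ⟨O, hON, hO, hxO, ?_, ?_, ?_⟩
  · rw [hOB]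
    exact (convex_halfPlane.inter (convex_ball _ _)).isPreconnected.image _ hh'.cont
  · rw [hInt]
    refine ((convex_halfSpace_im_gt 0).inter (convex_ball _ _)).isPreconnected.image _
      (hh'.cont.mono (inter_subset_inter_left _ ?_))
    intro z hz
    exact le_of_lt (show (0 : ℝ) < z.im from hz)
  · rw [hInt, hOB]
    rintro _ ⟨z, hz, rfl⟩
    have hzc : z ∈ closure ({z : ℂ | 0 < z.im} ∩ Metric.ball 0 r') := by
      rw [mem_closure_iff_seq_limit]
      have hlim : Tendsto (fun n : ℕ => (1 - ((1 / ((n : ℝ) + 1) : ℝ) : ℂ)) * z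
          + ((1 / ((n : ℝ) + 1) : ℝ) : ℂ) * (Complex.I * (r' / 2 : ℝ))) atTop (𝓝 z) := by
        have h1 : Tendsto (fun n : ℕ => ((1 / ((n : ℝ) + 1) : ℝ) : ℂ)) atTop (𝓝 0) := by
          have := (Complex.continuous_ofReal.tendsto 0).comp tendsto_one_div_add_atTop_nhds_zero_nat
          rw [Complex.ofReal_zero] at this
          exact this
        have h2 := ((tendsto_const_nhds (x := (1 : ℂ))).sub h1).mul_const z
        have h3 := h2.add (h1.mul_const (Complex.I * (r' / 2 : ℝ)))
        simpa using h3
      refine ⟨_, fun n => ⟨?_, ?_⟩, hlim⟩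
      · have hp : 0 < 1 / ((n : ℝ) + 1) := by positivity
        have hp1 : 1 / ((n : ℝ) + 1) ≤ 1 := by
          rw [div_le_one (by positivity)]; linarith [n.cast_nonneg (α := ℝ)]
        generalize 1 / ((n : ℝ) + 1) = t at hp hp1
        have hz0 : 0 ≤ z.im := hz.1
        have : ((1 - (t : ℂ)) * z + (t : ℂ) * (Complex.I * (r' / 2 : ℝ))).im
            = (1 - t) * z.im + t * (r' / 2) := by simp
        change 0 < ((1 - (t : ℂ)) * z + (t : ℂ) * (Complex.I * (r' / 2 : ℝ))).im
        rw [this]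
        have h1 := mul_nonneg (sub_nonneg.2 hp1) hz0
        have h2 : 0 < t * (r' / 2) := by positivity
        linarith
      · have hp : 0 < 1 / ((n : ℝ) + 1) := by positivity
        have hp1 : 1 / ((n : ℝ) + 1) ≤ 1 := by
          rw [div_le_one (by positivity)]; linarith [n.cast_nonneg (α := ℝ)]
        generalize 1 / ((n : ℝ) + 1) = t at hp hp1
        have hcv := (convex_ball (0 : ℂ) r') hz.2 (show (Complex.I * (r' / 2 : ℝ) : ℂ) ∈ _ by
          rw [mem_ball_zero_iff, norm_mul, Complex.norm_I, one_mul, Complex.norm_real,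
            Real.norm_eq_abs, abs_of_pos (by positivity)]
          linarith) (sub_nonneg.2 hp1) hp.le (by ring)
        simpa using hcv
    exact (hh'.cont z hz).mono (inter_subset_inter_left _ fun w hw => le_of_lt
      (show (0 : ℝ) < w.im from hw)) |>.mem_closure_image hzc
  
/-- Near a boundary point, the boundary of `B` is the image of the real line. -/
lemma BChart.exists_open_boundary (hh : BChart halfPlane B x h r) (A : Set ℝ) (hA : IsOpen A) :
    ∃ O : Set M, IsOpen O ∧
      O ∩ (B \ interior B) = (fun t : ℝ => h t) '' (A ∩ Metric.ball 0 r) := by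
  obtain ⟨O, hO, hOB⟩ := hh.isOpen (Complex.re ⁻¹' A) (hA.preimage Complex.continuous_re)
  refine ⟨O, hO, ?_⟩
  ext y; constructor
  · rintro ⟨hyO, hyB, hyi⟩
    have : y ∈ O ∩ B := ⟨hyO, hyB⟩
    rw [hOB] at this
    obtain ⟨z, ⟨hzA, hz, hz'⟩, rfl⟩ := this
    have him : z.im = 0 := by
      by_contra h1
      exact hyi (hh.image_mem_interior (lt_of_le_of_ne hz (Ne.symm h1)) (by simpa using hz'))
    have hre : z = (z.re : ℂ) := by apply Complex.ext <;> simp [him]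
    refine ⟨z.re, ⟨hzA, ?_⟩, congrArg h hre.symm⟩
    rw [mem_ball_zero_iff] at hz' ⊢
    exact (Complex.abs_re_le_norm z).trans_lt hz'
  · rintro ⟨t, ⟨htA, ht⟩, rfl⟩
    rw [mem_ball_zero_iff, Real.norm_eq_abs] at ht
    have : h t ∈ O ∩ B := by
      rw [hOB]
      exact ⟨t, ⟨by simpa using htA, by simp [halfPlane], by simpa using ht⟩, rfl⟩
    exact ⟨this.1, this.2, hh.image_notMem_interior ht⟩

end Sides

/-! ### Components of the complement of a subsurface -/

section Unicoherent

variable {M : Type*} [TopologicalSpace M] [NormalSpace M]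

/-- Unicoherence of a space on which all logarithms exist. -/
lemma unicoherent (hM : AllLog (univ : Set M)) {X Y : Set M} (hX : IsClosed X) (hY : IsClosed Y)
    (hXc : IsPreconnected X) (hYc : IsPreconnected Y) (hXY : X ∪ Y = univ) :
    IsPreconnected (X ∩ Y) := by
  classical
  rw [isPreconnected_closed_iff]
  intro P P' hP hP' hsub ⟨p, hp, hpP⟩ ⟨q, hq, hqP⟩
  by_contra hne
  rw [not_nonempty_iff_eq_empty] at hne
  obtain ⟨f, hf0, hf1, -⟩ := exists_continuous_zero_one_of_isClosed
    (s := (X ∩ Y) ∩ P) (t := (X ∩ Y) ∩ P') ((hX.inter hY).inter hP) ((hX.inter hY).inter hP') (by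
      rw [disjoint_left]; intro z hz hz'
      exact notMem_empty z (hne ▸ (⟨hz.1, hz.2, hz'.2⟩ : z ∈ X ∩ Y ∩ (P ∩ P'))))
  set g : M → Circle := fun z => if z ∈ X then Circle.exp (Real.pi * f z) else Circle.exp (-(Real.pi * f z))
  have hgX : ∀ z ∈ X, g z = Circle.exp (Real.pi * f z) := fun z hz => if_pos hz
  have hgY : ∀ z ∈ Y, g z = Circle.exp (-(Real.pi * f z)) := by
    intro z hz
    by_cases hzX : z ∈ X
    · rw [hgX z hzX]
      rcases hsub ⟨hzX, hz⟩ with h | h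
      · rw [hf0 ⟨⟨hzX, hz⟩, h⟩]; simp
      · rw [hf1 ⟨⟨hzX, hz⟩, h⟩]
        rw [Circle.exp_eq_exp]
        exact ⟨1, by simp; ring⟩
    · exact if_neg hzX
  have hgc : ContinuousOn g univ := by
    rw [← hXY]
    refine ContinuousOn.union_of_isClosed ?_ ?_ hX hY
    · refine ContinuousOn.congr (Continuous.continuousOn ?_) hgX
      exact Circle.exp.continuous.comp (by fun_prop)
    · refine ContinuousOn.congr (Continuous.continuousOn ?_) hgY
      exact Circle.exp.continuous.comp (by fun_prop)
  obtain ⟨φ, hφ, he⟩ := hM g hgc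
  obtain ⟨n, hn⟩ := log_unique hXc (hφ.mono (subset_univ _))
    (show ContinuousOn (fun z => Real.pi * f z) X by fun_prop)
    (fun z hz => by rw [← he z (mem_univ _), hgX z hz])
  obtain ⟨m, hm⟩ := log_unique hYc (hφ.mono (subset_univ _))
    (show ContinuousOn (fun z => -(Real.pi * f z)) Y by fun_prop)
    (fun z hz => by rw [← he z (mem_univ _), hgY z hz])
  have e1 : f p = 0 := hf0 ⟨hp, hpP⟩
  have e2 : f q = 1 := hf1 ⟨hq, hqP⟩
  have h1 := (hn p hp.1).symm.trans (hm p hp.2)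
  have h2 := (hn q hq.1).symm.trans (hm q hq.2)
  rw [e1] at h1
  rw [e2] at h2
  have hpi := Real.pi_pos
  have h3 : (n : ℝ) = m := by
    have : (n : ℝ) * (2 * Real.pi) = m * (2 * Real.pi) := by linarith
    exact mul_right_cancel₀ (by positivity) this
  rw [h3] at h2
  linarith

end Unicoherent

section Comp

variable {M : Type*} [TopologicalSpace M] [T2Space M] [ChartedSpace ℂ M] {B Q V : Set M} {x z v : M}

/-- Each point of `B` has a neighbourhood in which `B` agrees with its component. -/
lemma IsBSurface.exists_nhd_component (hB : IsBSurface B) (hz : z ∈ B) :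
    ∃ O, IsOpen O ∧ z ∈ O ∧ O ∩ B ⊆ connectedComponentIn B z := by
  have key : ∀ (H : Set ℂ) h r, BChart H B z h r → Convex ℝ H → 0 ∈ H →
      ∃ O, IsOpen O ∧ z ∈ O ∧ O ∩ B ⊆ connectedComponentIn B z := by
    intro H h r hh hc h0
    obtain ⟨r', hr', hr, O, -, hO, hzO, hOB⟩ := hh.exists_open h0 univ_mem
    refine ⟨O, hO, hzO, ?_⟩
    refine IsPreconnected.subset_connectedComponentIn ?_ ⟨hzO, hz⟩ inter_subset_right
    rw [hOB]
    exact (hc.inter (convex_ball _ _)).isPreconnected.image _ (hh.shrink hr' hr).cont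
  obtain ⟨h, r, hh | hh⟩ := hB z hz
  · exact key _ h r hh convex_univ (mem_univ _)
  · exact key _ h r hh convex_halfPlane zero_mem_halfPlane

lemma isClosed_connectedComponentIn' (hB : IsClosed B) : IsClosed (connectedComponentIn B x) := by
  by_cases hx : x ∈ B
  · rw [← closure_subset_iff_isClosed]
    exact isPreconnected_connectedComponentIn.closure.subset_connectedComponentIn
      (subset_closure (mem_connectedComponentIn hx))
      (closure_minimal (connectedComponentIn_subset _ _) hB)
  · rw [connectedComponentIn_eq_empty hx]; exact isClosed_empty

lemma IsBSurface.component (hB : IsBSurface B) : IsBSurface (connectedComponentIn B x) := by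
  intro z hz
  have hzB := connectedComponentIn_subset _ _ hz
  obtain ⟨O, hO, hzO, hsub⟩ := hB.exists_nhd_component hzB
  rw [← connectedComponentIn_eq hz] at hsub
  have key : ∀ (H : Set ℂ) h r, BChart H B z h r → 0 ∈ H →
      ∃ r', BChart H (connectedComponentIn B x) z h r' := by
    intro H h r hh h0
    obtain ⟨r', hr', hr, hs⟩ := hh.exists_shrink h0 (hO.mem_nhds hzO)
    have hh' := hh.shrink hr' hr
    refine ⟨r', hh'.pos, hh'.cont, hh'.inj, hh'.zero, fun A hA => ?_⟩
    obtain ⟨O', hO', hOB'⟩ := hh'.isOpen A hA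
    refine ⟨O', hO', ?_⟩
    rw [← hOB']
    apply Subset.antisymm (inter_subset_inter_right _ (connectedComponentIn_subset _ _))
    intro y hy
    refine ⟨hy.1, hsub ⟨?_, hy.2⟩⟩
    rw [hOB'] at hy
    exact hs (image_mono inter_subset_right hy)
  obtain ⟨h, r, hh | hh⟩ := hB z hzB
  · obtain ⟨r', h'⟩ := key _ h r hh (mem_univ _)
    exact ⟨h, r', Or.inl h'⟩
  · obtain ⟨r', h'⟩ := key _ h r hh zero_mem_halfPlane
    exact ⟨h, r', Or.inr h'⟩

lemma IsBSurface.subset_closure_interior (hQ : IsBSurface Q) : Q ⊆ closure (interior Q) := by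
  intro z hz
  by_cases hzi : z ∈ interior Q
  · exact subset_closure hzi
  · obtain ⟨h, r, hh⟩ := hQ.exists_half hz hzi
    obtain ⟨O, -, -, hzO, -, -, hcl⟩ := hh.local_int univ_mem
    exact closure_mono inter_subset_right (hcl ⟨hzO, hz⟩)

/-- The interior of a connected surface with boundary is connected. -/
lemma IsBSurface.isPreconnected_interior (hQ : IsBSurface Q) (hc : IsPreconnected Q) :
    IsPreconnected (interior Q) := by
  have := ChartedSpace.locallyConnectedSpace ℂ M
  refine isPreconnected_of_forall_pair fun a ha b hb => ?_
  set G := connectedComponentIn (interior Q) a with hG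
  have hGo : IsOpen G := isOpen_interior.connectedComponentIn
  have hGmem : ∀ y ∈ interior Q, y ∈ closure G → y ∈ G := by
    intro y hy hyG
    obtain ⟨w, hw, hwG⟩ := mem_closure_iff.1 hyG _ (isOpen_interior.connectedComponentIn)
      (mem_connectedComponentIn hy)
    have h1 := connectedComponentIn_eq hwG
    have h2 := connectedComponentIn_eq hw
    rw [hG, h1, ← h2]
    exact mem_connectedComponentIn hy
  have hsub : Q ⊆ closure G := by
    have hau : a ∈ closure G := subset_closure (mem_connectedComponentIn ha)
    refine (isPreconnected_iff_subset_of_disjoint.1 hc (interior (closure G ∪ Qᶜ)) (closure G)ᶜ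
      isOpen_interior isClosed_closure.isOpen_compl ?_ ?_).elim
      (fun h y hy => (interior_subset (h hy)).resolve_right (not_not.2 hy))
      (fun h => absurd hau (h (interior_subset ha)))
    · intro x hx
      by_cases hxG : x ∈ closure G
      swap
      · exact Or.inr hxG
      refine Or.inl (mem_interior_iff_mem_nhds.2 ?_)
      by_cases hxi : x ∈ interior Q
      · exact mem_of_superset (hGo.mem_nhds (hGmem x hxi hxG))
          (subset_closure.trans subset_union_left)
      obtain ⟨h, r, hh⟩ := hQ.exists_half hx hxi
      obtain ⟨O, -, hO, hxO, -, hOi, hcl⟩ := hh.local_int univ_mem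
      obtain ⟨w, hwO, hwG⟩ := mem_closure_iff.1 hxG O hO hxO
      have hwi := connectedComponentIn_subset _ _ hwG
      have hOG : O ∩ interior Q ⊆ G := by
        rw [hG, connectedComponentIn_eq hwG]
        exact hOi.subset_connectedComponentIn ⟨hwO, hwi⟩ inter_subset_right
      refine mem_of_superset (hO.mem_nhds hxO) fun y hy => ?_
      by_cases hyQ : y ∈ Q
      · exact Or.inl (closure_mono hOG (hcl ⟨hy, hyQ⟩))
      · exact Or.inr hyQ
    · ext y
      simp only [mem_inter_iff, mem_empty_iff_false, iff_false]
      rintro ⟨hy, hyu, hyv⟩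
      exact (interior_subset hyu).elim hyv (not_not.2 hy)
  exact ⟨G, connectedComponentIn_subset _ _, mem_connectedComponentIn ha,
    hGmem b hb (hsub (interior_subset hb)), isPreconnected_connectedComponentIn⟩

/-- Components of `Qᶜ` are locally one-sided along the boundary of `Q`. -/
lemma IsBSurface.exists_nhd_side (hQ : IsBSurface Q) (hQc : IsClosed Q)
    (hz : z ∈ closure (connectedComponentIn Qᶜ v)) (hz' : z ∉ connectedComponentIn Qᶜ v) :
    z ∈ Q ∧ z ∉ interior Q ∧ ∃ N ∈ 𝓝 z, N \ Q ⊆ connectedComponentIn Qᶜ v := by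
  have hzQ : z ∈ Q := (closure_component hQc hz).resolve_left hz'
  have hzi : z ∉ interior Q := fun h => by
    obtain ⟨w, hw, hw'⟩ := mem_closure_iff.1 hz _ isOpen_interior h
    exact connectedComponentIn_subset _ _ hw' (interior_subset hw)
  obtain ⟨h, r, hh⟩ := hQ.exists_half hzQ hzi
  obtain ⟨N, hN, hN'⟩ := hh.one_sided
  refine ⟨hzQ, hzi, N, hN, fun y hy => ?_⟩
  obtain ⟨w, hw, hw'⟩ := mem_closure_iff_nhds.1 hz N hN
  rw [connectedComponentIn_eq hw']
  exact hN' w ⟨hw, connectedComponentIn_subset _ _ hw'⟩ y hy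

/-- The frontier of a complementary component is relatively open in the boundary of `Q`. -/
lemma IsBSurface.exists_nhd_frontier (hQ : IsBSurface Q) (hQc : IsClosed Q)
    (hz : z ∈ closure (connectedComponentIn Qᶜ v)) (hz' : z ∉ connectedComponentIn Qᶜ v) :
    ∃ O, IsOpen O ∧ z ∈ O ∧ O \ Q ⊆ connectedComponentIn Qᶜ v ∧
      O ∩ (Q \ interior Q) ⊆ closure (connectedComponentIn Qᶜ v) \ connectedComponentIn Qᶜ v := by
  obtain ⟨-, -, N, hN, hNs⟩ := hQ.exists_nhd_side hQc hz hz'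
  refine ⟨interior N, isOpen_interior, mem_interior_iff_mem_nhds.2 hN,
    (sdiff_subset_sdiff_left interior_subset).trans hNs, ?_⟩
  rintro y ⟨hyN, hyQ, hyi⟩
  refine ⟨?_, fun h => connectedComponentIn_subset _ _ h hyQ⟩
  rw [← mem_compl_iff, ← closure_compl] at hyi
  refine mem_closure_iff.2 fun O hO hyO => ?_
  obtain ⟨w, ⟨hwO, hwN⟩, hwQ⟩ := mem_closure_iff.1 hyi _ (hO.inter isOpen_interior) ⟨hyO, hyN⟩
  exact ⟨w, hwO, hNs ⟨interior_subset hwN, hwQ⟩⟩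

lemma exists_mem_frontier_component [PreconnectedSpace M] (hQc : IsClosed Q) (hne : Q.Nonempty) (hv : v ∉ Q) :
    ∃ z ∈ closure (connectedComponentIn Qᶜ v), z ∈ Q := by
  by_contra! h
  have hcl : IsClosed (connectedComponentIn Qᶜ v) := by
    rw [← closure_subset_iff_isClosed]
    exact fun z hz => (closure_component hQc hz).resolve_right (h z hz)
  have := IsClopen.eq_univ ⟨hcl, isOpen_component hQc v⟩ ⟨v, mem_connectedComponentIn hv⟩
  obtain ⟨q, hq⟩ := hne
  exact connectedComponentIn_subset Qᶜ v (this ▸ mem_univ q) hq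

/-- The complement of a complementary component of a connected set is connected. -/
lemma isPreconnected_compl_component [PreconnectedSpace M] (hQc : IsClosed Q)
    (hc : IsPreconnected Q) (hne : Q.Nonempty) : IsPreconnected (connectedComponentIn Qᶜ v)ᶜ := by
  obtain ⟨q, hq⟩ := hne
  have hqV : Q ⊆ (connectedComponentIn Qᶜ v)ᶜ := fun y hy h => connectedComponentIn_subset _ _ h hy
  refine isPreconnected_of_forall q fun y hy => ?_
  by_cases hyQ : y ∈ Q
  · exact ⟨Q, hqV, hq, hyQ, hc⟩
  obtain ⟨z, hz, hzQ⟩ := exists_mem_frontier_component hQc ⟨q, hq⟩ hyQ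
  refine ⟨closure (connectedComponentIn Qᶜ y) ∪ Q, union_subset (fun w hw => ?_) hqV, Or.inr hq,
    Or.inl (subset_closure (mem_connectedComponentIn hyQ)),
    IsPreconnected.union z hz hzQ isPreconnected_connectedComponentIn.closure hc⟩
  rcases closure_component hQc hw with h | h
  · intro h'
    apply hy
    rw [connectedComponentIn_eq h', ← connectedComponentIn_eq h]
    exact mem_connectedComponentIn hyQ
  · exact hqV h

/-- The exterior of a complementary component of a connected surface with boundary is connected. -/
lemma IsBSurface.isPreconnected_ext [PreconnectedSpace M] (hQ : IsBSurface Q) (hQc : IsClosed Q)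
    (hc : IsPreconnected Q) (hne : Q.Nonempty) :
    IsPreconnected (closure (connectedComponentIn Qᶜ v))ᶜ := by
  have hInt : interior Q ⊆ (closure (connectedComponentIn Qᶜ v))ᶜ := fun y hy h => by
    obtain ⟨w, hw, hw'⟩ := mem_closure_iff.1 h _ isOpen_interior hy
    exact connectedComponentIn_subset _ _ hw' (interior_subset hw)
  obtain ⟨q, hq⟩ : (interior Q).Nonempty := by
    obtain ⟨q, hq⟩ := hne
    exact closure_nonempty_iff.1 ⟨q, hQ.subset_closure_interior hq⟩
  have hqQ := interior_subset hq
  refine isPreconnected_of_forall q fun y hy => ?_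
  -- a point of `Q` off the closure is attached to the interior of `Q`
  have key : ∀ y ∈ Q, y ∉ closure (connectedComponentIn Qᶜ v) →
      IsPreconnected (insert y (interior Q)) := fun y hyQ _ =>
    (hQ.isPreconnected_interior hc).subset_closure (subset_insert _ _)
      (insert_subset (hQ.subset_closure_interior hyQ) subset_closure)
  by_cases hyQ : y ∈ Q
  · exact ⟨_, insert_subset hy hInt, Or.inr hq, Or.inl rfl, key y hyQ hy⟩
  obtain ⟨z, hz, hzQ⟩ := exists_mem_frontier_component hQc ⟨q, hqQ⟩ hyQ
  have hne' : ∀ w ∈ connectedComponentIn Qᶜ y, w ∉ connectedComponentIn Qᶜ v := fun w hw h' => by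
    apply hy
    apply subset_closure
    rw [connectedComponentIn_eq h', ← connectedComponentIn_eq hw]
    exact mem_connectedComponentIn hyQ
  have hzV : z ∉ closure (connectedComponentIn Qᶜ v) := by
    intro h
    obtain ⟨-, -, N, hN, hNV⟩ := hQ.exists_nhd_side hQc h
      fun h' => connectedComponentIn_subset _ _ h' hzQ
    obtain ⟨w, hw, hw'⟩ := mem_closure_iff_nhds.1 hz N hN
    exact hne' w hw' (hNV ⟨hw, connectedComponentIn_subset _ _ hw'⟩)
  refine ⟨insert z (connectedComponentIn Qᶜ y) ∪ insert z (interior Q), union_subset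
    (insert_subset hzV fun w hw h => ?_) (insert_subset hzV hInt),
    Or.inr (Or.inr hq), Or.inl (Or.inr (mem_connectedComponentIn hyQ)),
    IsPreconnected.union z (Or.inl rfl) (Or.inl rfl) ?_ (key z hzQ hzV)⟩
  · obtain ⟨u, hu, hu'⟩ := mem_closure_iff.1 h _ (isOpen_component hQc y) hw
    exact hne' u hu hu'
  · exact isPreconnected_connectedComponentIn.subset_closure (subset_insert _ _)
      (insert_subset hz subset_closure)

lemma IsBSurface.frontier_subset_closure_ext (hQ : IsBSurface Q) (hQc : IsClosed Q) :
    closure (connectedComponentIn Qᶜ v) \ connectedComponentIn Qᶜ v ⊆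
      closure (closure (connectedComponentIn Qᶜ v))ᶜ := by
  rintro z ⟨hz, hz'⟩
  have hzQ := (hQ.exists_nhd_side hQc hz hz').1
  refine closure_mono (fun y hy h => ?_) (hQ.subset_closure_interior hzQ)
  obtain ⟨w, hw, hw'⟩ := mem_closure_iff.1 h _ isOpen_interior hy
  exact connectedComponentIn_subset _ _ hw' (interior_subset hw)

/-- In a simply connected surface, frontiers of complementary components are connected. -/
lemma isPreconnected_frontier_component [NormalSpace M] [SimplyConnectedSpace M] (hQc : IsClosed Q)
    (hc : IsPreconnected Q) (hne : Q.Nonempty) :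
    IsPreconnected (closure (connectedComponentIn Qᶜ v) \ connectedComponentIn Qᶜ v) := by
  have := ChartedSpace.locallyPathConnectedSpace ℂ M
  exact unicoherent allLog_univ isClosed_closure (isOpen_component hQc v).isClosed_compl
    isPreconnected_connectedComponentIn.closure (isPreconnected_compl_component hQc hc hne)
    (eq_univ_of_forall fun y => (em (y ∈ connectedComponentIn Qᶜ v)).imp_left fun h => subset_closure h)

end Comp

/-! ### Connected one-dimensional manifolds -/

section OneMan

variable {X : Type*} [TopologicalSpace X] {A B : Set X} {a b c x : X} {φ : ℝ → X}

lemma IsArc.concat (h1 : IsArc A a b) (h2 : IsArc B b c) (h : A ∩ B ⊆ {b}) : IsArc (A ∪ B) a c := by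
  classical
  obtain ⟨f, hfc, hfi, rfl, rfl, rfl⟩ := h1
  obtain ⟨g, hgc, hgi, rfl, hg0, rfl⟩ := h2
  set F : ℝ → X := fun t => if t ≤ 1 then f t else g (t - 1)
  have hF1 : ∀ t ∈ Icc (0 : ℝ) 1, F t = f t := fun t ht => if_pos ht.2
  have hF2 : ∀ t ∈ Icc (1 : ℝ) 2, F t = g (t - 1) := fun t ht => by
    rcases ht.1.eq_or_lt with h | h
    · subst h; simp [F, hg0]
    · exact if_neg (not_le.2 h)
  have hm : MapsTo (fun t : ℝ => t - 1) (Icc 1 2) (Icc 0 1) := fun t ht => by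
    constructor <;> linarith [ht.1, ht.2]
  have hU : Icc (0 : ℝ) 1 ∪ Icc 1 2 = Icc 0 2 := Icc_union_Icc_eq_Icc (by norm_num) (by norm_num)
  have hcross : ∀ s ∈ Icc (0 : ℝ) 1, ∀ t ∈ Icc (1 : ℝ) 2, F s = F t → s = t := by
    intro s hs t ht he
    rw [hF1 s hs, hF2 t ht] at he
    have h1 : f s = f 1 := h ⟨⟨s, hs, rfl⟩, ⟨t - 1, hm ht, he.symm⟩⟩
    have h2 := hfi hs (by simp) h1
    have h3 := hgi (hm ht) (by simp) (he.symm.trans (h1.trans hg0.symm))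
    linarith
  have key := isArc_of_Icc (f := F) (s := 0) (t := 2) (by norm_num) ?_ ?_
  · rw [hF1 0 (by simp), hF2 2 (by norm_num), ← hU, image_union] at key
    convert key using 2
    · exact image_congr fun t ht => (hF1 t ht).symm
    · rw [image_congr hF2, ← image_image g (fun t : ℝ => t - 1), image_sub_const_Icc]; norm_num
    · norm_num
  · rw [← hU]
    exact ContinuousOn.union_of_isClosed (hfc.congr hF1)
      ((hgc.comp (by fun_prop) hm).congr hF2) isClosed_Icc isClosed_Icc
  · rw [← hU]
    rintro s (hs | hs) t (ht | ht) he
    · rw [hF1 s hs, hF1 t ht] at he; exact hfi hs ht he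
    · exact hcross s hs t ht he
    · exact (hcross t ht s hs he.symm).symm
    · rw [hF2 s hs, hF2 t ht] at he
      linarith [hgi (hm hs) (hm ht) he]

/-- Invariance of domain in dimension one: an arc is a neighbourhood of its inner points. -/
lemma IsArc.mem_nhds (hA : IsArc A a b) (hx : x ∈ A) (hxa : x ≠ a) (hxb : x ≠ b)
    (hφ : IsOpenEmbedding φ) (hφx : φ 0 = x) : A ∈ 𝓝 x := by
  obtain ⟨f, hc, hi, rfl, rfl, rfl⟩ := hA
  obtain ⟨t, ht, rfl⟩ := hx
  have ht0 : 0 < t := lt_of_le_of_ne ht.1 (by rintro rfl; exact hxa rfl)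
  have ht1 : t < 1 := lt_of_le_of_ne ht.2 (by rintro rfl; exact hxb rfl)
  have hcat : ContinuousAt f t := hc.continuousAt (Icc_mem_nhds ht0 ht1)
  have hnb : f ⁻¹' range φ ∩ Icc 0 1 ∈ 𝓝 t :=
    inter_mem (hcat.preimage_mem_nhds (hφ.isOpen_range.mem_nhds ⟨0, hφx⟩)) (Icc_mem_nhds ht0 ht1)
  obtain ⟨δ, hδ, hsub⟩ := Metric.nhds_basis_closedBall.mem_iff.1 hnb
  rw [Real.closedBall_eq_Icc] at hsub
  set e := hφ.toOpenPartialHomeomorph φ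
  have hes : ∀ y ∈ range φ, φ (e.symm y) = y := fun y hy =>
    e.right_inv (x := y) (by simpa [e] using hy)
  set g := fun s => e.symm (f s)
  have hg : ∀ s ∈ Icc (t - δ) (t + δ), φ (g s) = f s := fun s hs => hes _ (hsub hs).1
  have hgc : ContinuousOn g (Icc (t - δ) (t + δ)) :=
    e.symm.continuousOn.comp (hc.mono fun s hs => (hsub hs).2)
      fun s hs => by simpa [e] using (hsub hs).1
  have hgi : InjOn g (Icc (t - δ) (t + δ)) := fun s hs s' hs' h =>
    hi (hsub hs).2 (hsub hs').2 (by rw [← hg s hs, ← hg s' hs', h])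
  have hl : t - δ ∈ Icc (t - δ) (t + δ) := by constructor <;> linarith
  have hm : t ∈ Icc (t - δ) (t + δ) := by constructor <;> linarith
  have hr : t + δ ∈ Icc (t - δ) (t + δ) := by constructor <;> linarith
  have key : g '' Icc (t - δ) (t + δ) ∈ 𝓝 (g t) := by
    rcases hgc.strictMonoOn_of_injOn_Icc' (by linarith) hgi with h | h
    · exact mem_of_superset (Icc_mem_nhds (h hl hm (by linarith)) (h hm hr (by linarith)))
        (intermediate_value_Icc (by linarith) hgc)
    · exact mem_of_superset (Icc_mem_nhds (h hm hr (by linarith)) (h hl hm (by linarith)))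
        (intermediate_value_Icc' (by linarith) hgc)
  have := hφ.isOpenMap.image_mem_nhds key
  rw [hg t hm] at this
  refine mem_of_superset this ?_
  rintro _ ⟨_, ⟨s, hs, rfl⟩, rfl⟩
  exact ⟨s, (hsub hs).2, (hg s hs).symm⟩

variable [T2Space X] (hX : ∀ x : X, ∃ φ : ℝ → X, IsOpenEmbedding φ ∧ φ 0 = x)
include hX

lemma IsJordan.eq_univ [ConnectedSpace X] (h : IsJordan A) : A = univ := by
  refine IsClopen.eq_univ ⟨h.isClosed, isOpen_iff_mem_nhds.2 fun q hq => ?_⟩ ?_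
  · obtain ⟨γ₀, γ₁, a, b, h0, h1, -, hU, -, hq1⟩ := h.exists_short hq univ_mem
    obtain ⟨φ, hφ, hφ0⟩ := hX q
    refine mem_of_superset (h0.mem_nhds ?_ ?_ ?_ hφ hφ0) (hU ▸ subset_union_left)
    · rw [← hU] at hq
      exact hq.resolve_right hq1
    · rintro rfl; exact hq1 h1.left_mem
    · rintro rfl; exact hq1 h1.right_mem
  · obtain ⟨f, -, -, rfl⟩ := h
    exact range_nonempty f

lemma IsArc.extend_right (hJ : ∀ γ : Set X, ¬ IsJordan γ) (hA : IsArc A a b)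
    (hφ : IsOpenEmbedding φ) {t₀ t₁ : ℝ} (ht : t₀ ≤ t₁) (h0 : φ t₀ ∈ A) :
    ∃ A' a' b', IsArc A' a' b' ∧ A ∪ φ '' Icc t₀ t₁ ⊆ A' := by
  have hP : IsClosed (φ ⁻¹' A) := hA.isClosed.preimage hφ.continuous
  -- points where `φ` leaves `A` are endpoints of `A`
  have hend : ∀ t, φ t ∈ A → (∃ᶠ s in 𝓝 t, φ s ∉ A) → φ t = a ∨ φ t = b := by
    intro t htA hf
    by_contra! hne
    obtain ⟨ψ, hψ, hψ0⟩ := hX (φ t)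
    exact hf ((hφ.continuous.continuousAt.eventually (hA.mem_nhds htA hne.1 hne.2 hψ hψ0)).mono
      fun s hs => not_not.2 hs)
  have hendr : ∀ t w, t < w → φ t ∈ A → (∀ s ∈ Ioo t w, φ s ∉ A) → φ t = a ∨ φ t = b :=
    fun t w htw htA hn => hend t htA (((Ioo_mem_nhdsGT htw : _ ∈ 𝓝[>] t) |> fun h =>
      (Filter.Eventually.frequently (mem_of_superset h hn))).filter_mono nhdsWithin_le_nhds)
  have hendl : ∀ t w, w < t → φ t ∈ A → (∀ s ∈ Ioo w t, φ s ∉ A) → φ t = a ∨ φ t = b :=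
    fun t w htw htA hn => hend t htA (((Ioo_mem_nhdsLT htw : _ ∈ 𝓝[<] t) |> fun h =>
      (Filter.Eventually.frequently (mem_of_superset h hn))).filter_mono nhdsWithin_le_nhds)
  have harc : ∀ s u : ℝ, s < u → IsArc (φ '' Icc s u) (φ s) (φ u) := fun s u h =>
    isArc_of_Icc h hφ.continuous.continuousOn hφ.injective.injOn
  have hmax : ∀ w, t₀ ≤ w → ∃ s ∈ Icc t₀ w, φ s ∈ A ∧ ∀ v ∈ Ioc s w, φ v ∉ A := by
    intro w hw
    obtain ⟨s, hs, hsm⟩ := (isCompact_Icc.inter_right hP).exists_isGreatest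
      (s := Icc t₀ w ∩ φ ⁻¹' A) ⟨t₀, ⟨le_rfl, hw⟩, h0⟩
    exact ⟨s, hs.1, hs.2, fun v hv h => not_le.2 hv.1 (hsm ⟨⟨hs.1.1.trans hv.1.le, hv.2⟩, h⟩)⟩
  obtain ⟨s, hs, hsA, hsm⟩ := hmax t₁ ht
  have hin : ∀ w ∈ Icc t₀ s, φ w ∈ A := by
    intro w hw
    by_contra hwA
    obtain ⟨s', hs', hsA', hsm'⟩ := hmax w hw.1
    obtain ⟨u, hu, hum⟩ := (isCompact_Icc.inter_right hP).exists_isLeast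
      (s := Icc w s ∩ φ ⁻¹' A) ⟨s, ⟨hw.2, le_rfl⟩, hsA⟩
    have hsw : s' < w := lt_of_le_of_ne hs'.2 (by rintro rfl; exact hwA hsA')
    have hwu : w < u := lt_of_le_of_ne hu.1.1 (by rintro rfl; exact hwA hu.2)
    have hnot : ∀ v ∈ Ioo s' u, φ v ∉ A := by
      intro v hv h
      rcases le_or_gt v w with h1 | h1
      · exact hsm' v ⟨hv.1, h1⟩ h
      · exact not_le.2 hv.2 (hum ⟨⟨h1.le, hv.2.le.trans hu.1.2⟩, h⟩)
    have hsu := hsw.trans hwu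
    have e1 := hendr s' u hsu hsA' hnot
    have e2 := hendl u s' hsu hu.2 hnot
    have hne : φ s' ≠ φ u := fun h => hsu.ne (hφ.injective h)
    have hInt : A ∩ φ '' Icc s' u ⊆ {φ s', φ u} := by
      rintro _ ⟨hvA, v, hv, rfl⟩
      by_contra hcon
      simp only [mem_insert_iff, mem_singleton_iff, not_or] at hcon
      exact hnot v ⟨lt_of_le_of_ne hv.1 (by rintro rfl; exact hcon.1 rfl),
        lt_of_le_of_ne hv.2 (by rintro rfl; exact hcon.2 rfl)⟩ hvA
    have hAsu : IsArc A (φ s') (φ u) := by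
      rcases e1 with h | h <;> rcases e2 with h' | h'
      · exact absurd (h.trans h'.symm) hne
      · rw [h, h']; exact hA
      · rw [h, h']; exact hA.symm
      · exact absurd (h.trans h'.symm) hne
    exact hJ _ (IsJordan.of_arcs hAsu (harc s' u hsu) hInt)
  rcases hs.2.eq_or_lt with h | h
  · refine ⟨A, a, b, hA, union_subset subset_rfl ?_⟩
    rintro _ ⟨v, hv, rfl⟩
    exact hin v (h ▸ hv)
  have hInt : A ∩ φ '' Icc s t₁ ⊆ {φ s} := by
    rintro _ ⟨hvA, v, hv, rfl⟩
    rcases hv.1.eq_or_lt with h1 | h1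
    · rw [h1]; rfl
    · exact absurd hvA (hsm v ⟨h1, hv.2⟩)
  obtain ⟨a', hA'⟩ : ∃ a', IsArc A a' (φ s) := by
    rcases hendr s t₁ h hsA fun v hv => hsm v ⟨hv.1, hv.2.le⟩ with h' | h'
    · exact ⟨b, h' ▸ hA.symm⟩
    · exact ⟨a, h' ▸ hA⟩
  refine ⟨_, _, _, hA'.concat (harc s t₁ h) hInt, union_subset subset_union_left ?_⟩
  rintro _ ⟨v, hv, rfl⟩
  rcases le_or_gt v s with h1 | h1
  · exact Or.inl (hin v ⟨hv.1, h1⟩)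
  · exact Or.inr ⟨v, ⟨h1.le, hv.2⟩, rfl⟩

lemma IsArc.extend (hJ : ∀ γ : Set X, ¬ IsJordan γ) (hA : IsArc A a b)
    (hφ : IsOpenEmbedding φ) {t : ℝ} (ht : t ∈ Icc (-1 : ℝ) 1) (h0 : φ t ∈ A) :
    ∃ A' a' b', IsArc A' a' b' ∧ A ⊆ A' ∧ φ '' Icc (-1) 1 ⊆ A' := by
  obtain ⟨A₁, a₁, b₁, h1, hs1⟩ := hA.extend_right hX hJ hφ ht.2 h0
  have hψ : IsOpenEmbedding fun s : ℝ => φ (-s) := hφ.comp (Homeomorph.neg ℝ).isOpenEmbedding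
  obtain ⟨A₂, a₂, b₂, h2, hs2⟩ := h1.extend_right hX hJ hψ (t₀ := -t) (t₁ := 1) (by linarith [ht.1])
    (by simpa using hs1 (Or.inl h0))
  refine ⟨A₂, a₂, b₂, h2, (subset_union_left.trans hs1).trans (subset_union_left.trans hs2), ?_⟩
  rintro _ ⟨v, hv, rfl⟩
  rcases le_or_gt v t with h | h
  · exact hs2 (Or.inr ⟨-v, ⟨by linarith, by linarith [hv.1]⟩, by simp⟩)
  · exact hs2 (Or.inl (hs1 (Or.inr ⟨v, ⟨h.le, hv.2⟩, rfl⟩)))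

/-- A connected one-dimensional manifold is a Jordan curve or is exhausted by arcs. -/
theorem jordan_or_arc [ConnectedSpace X] :
    IsJordan (univ : Set X) ∨ ∀ K : Set X, IsCompact K → ∃ A a b, IsArc A a b ∧ K ⊆ A := by
  by_cases hJ : ∃ γ : Set X, IsJordan γ
  · obtain ⟨γ, h⟩ := hJ
    exact Or.inl (h.eq_univ hX ▸ h)
  refine Or.inr ?_
  push Not at hJ
  have hnb : ∀ φ : ℝ → X, IsOpenEmbedding φ → φ '' Ioo (-1) 1 ∈ 𝓝 (φ 0) := fun φ hφ =>
    hφ.isOpenMap.image_mem_nhds (Ioo_mem_nhds (by norm_num) (by norm_num))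
  have hIoo : ∀ φ : ℝ → X, φ '' Ioo (-1) 1 ⊆ φ '' Icc (-1) 1 := fun φ => image_mono Ioo_subset_Icc_self
  have hext : ∀ A a b, IsArc A a b → ∀ x : X, ∃ A' a' b', IsArc A' a' b' ∧ A ⊆ A' ∧ A' ∈ 𝓝 x := by
    intro A a b hA
    set E := {x : X | ∃ A' a' b', IsArc A' a' b' ∧ A ⊆ A' ∧ A' ∈ 𝓝 x} with hE
    suffices E = univ from fun x => (this ▸ mem_univ x : x ∈ E)
    refine IsClopen.eq_univ ⟨?_, ?_⟩ ?_
    · refine isClosed_of_closure_subset fun x hx => ?_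
      obtain ⟨φ, hφ, rfl⟩ := hX x
      obtain ⟨_, ⟨t, ht, rfl⟩, A₁, a₁, b₁, h1, hs1, hn1⟩ := mem_closure_iff_nhds.1 hx _ (hnb φ hφ)
      obtain ⟨A₂, a₂, b₂, h2, hs2, hs2'⟩ := h1.extend hX hJ hφ (Ioo_subset_Icc_self ht)
        (mem_of_mem_nhds hn1)
      exact ⟨A₂, a₂, b₂, h2, hs1.trans hs2, mem_of_superset (hnb φ hφ) ((hIoo φ).trans hs2')⟩
    · refine isOpen_iff_mem_nhds.2 fun x ⟨A₁, a₁, b₁, h1, hs1, hn1⟩ => ?_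
      filter_upwards [eventually_mem_nhds_iff.2 hn1] with y hy
      exact ⟨A₁, a₁, b₁, h1, hs1, hy⟩
    · obtain ⟨φ, hφ, h0⟩ := hX a
      obtain ⟨A₂, a₂, b₂, h2, hs2, hs2'⟩ := hA.extend hX hJ hφ (t := 0) (by norm_num)
        (h0 ▸ hA.left_mem)
      exact ⟨φ 0, A₂, a₂, b₂, h2, hs2, mem_of_superset (hnb φ hφ) ((hIoo φ).trans hs2')⟩
  intro K hK
  have key : ∀ A a b, IsArc A a b → ∃ A' a' b', IsArc A' a' b' ∧ A ∪ K ⊆ A' := by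
    refine hK.induction_on (p := fun K => ∀ A a b, IsArc A a b → ∃ A' a' b', IsArc A' a' b' ∧
      A ∪ K ⊆ A') (fun A a b h => ⟨A, a, b, h, by simp⟩) ?_ ?_ ?_
    · intro s t hst ht A a b h
      obtain ⟨A', a', b', h', hs⟩ := ht A a b h
      exact ⟨A', a', b', h', (union_subset_union_right _ hst).trans hs⟩
    · intro s t hs ht A a b h
      obtain ⟨A', a', b', h', hs'⟩ := hs A a b h
      obtain ⟨A₂, a₂, b₂, h2, hs2⟩ := ht _ _ _ h'
      refine ⟨A₂, a₂, b₂, h2, ?_⟩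
      rw [← union_assoc]
      exact union_subset (hs'.trans (subset_union_left.trans hs2)) (subset_union_right.trans hs2)
    · intro x hx
      obtain ⟨φ, hφ, rfl⟩ := hX x
      refine ⟨_, mem_nhdsWithin_of_mem_nhds (hnb φ hφ), fun A a b h => ?_⟩
      obtain ⟨A₁, a₁, b₁, h1, hs1, hn1⟩ := hext A a b h (φ 0)
      obtain ⟨A₂, a₂, b₂, h2, hs2, hs2'⟩ := h1.extend hX hJ hφ (t := 0) (by norm_num)
        (mem_of_mem_nhds hn1)
      exact ⟨A₂, a₂, b₂, h2, union_subset (hs1.trans hs2) ((hIoo φ).trans hs2')⟩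
  obtain ⟨x⟩ : Nonempty X := inferInstance
  obtain ⟨φ, hφ, -⟩ := hX x
  obtain ⟨A, a, b, h, hs⟩ := key _ _ _
    (isArc_of_Icc (zero_lt_one' ℝ) hφ.continuous.continuousOn hφ.injective.injOn)
  exact ⟨A, a, b, h, subset_union_right.trans hs⟩

end OneMan

/-! ### The universal cover -/

section Cover

open CategoryTheory

universe u

variable {S : Type u} [TopologicalSpace S]

/-- Homotopy classes of paths from `x` to `y`, as morphisms of the fundamental groupoid. -/
abbrev PathCl (x y : S) := FundamentalGroupoid.mk x ⟶ FundamentalGroupoid.mk y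

/-- The homotopy class of a path. -/
abbrev cl {x y : S} (w : Path x y) : PathCl x y := Path.Homotopic.Quotient.mk w

lemma cl_eq_of_isSimplyConnected {U : Set S} (hU : IsSimplyConnected U) {x y : S} (w w' : Path x y)
    (hw : ∀ t, w t ∈ U) (hw' : ∀ t, w' t ∈ U) : cl w = cl w' := by
  have := hU.simplyConnectedSpace
  have hx : x ∈ U := w.source ▸ hw 0
  have hy : y ∈ U := w.target ▸ hw 1
  let v : Path (⟨x, hx⟩ : U) ⟨y, hy⟩ :=
    ⟨⟨fun t => ⟨w t, hw t⟩, by fun_prop⟩, Subtype.ext w.source, Subtype.ext w.target⟩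
  let v' : Path (⟨x, hx⟩ : U) ⟨y, hy⟩ :=
    ⟨⟨fun t => ⟨w' t, hw' t⟩, by fun_prop⟩, Subtype.ext w'.source, Subtype.ext w'.target⟩
  have h := (SimplyConnectedSpace.paths_homotopic v v').map ⟨Subtype.val, continuous_subtype_val⟩
  exact Path.Homotopic.Quotient.eq.2 h

lemma exists_sections [PathConnectedSpace S] {U : S → Set S} (hsc : ∀ i, IsSimplyConnected (U i))
    (x₀ : S) : ∃ q : ∀ _ x : S, PathCl x₀ x, ∀ i x y (w : Path x y), (∀ t, w t ∈ U i) →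
      q i y = q i x ≫ cl w := by
  classical
  choose c hc using fun i => (hsc i).nonempty
  have hj : ∀ i x, x ∈ U i → ∃ w : Path (c i) x, ∀ t, w t ∈ U i := fun i x hx =>
    ((hsc i).isPathConnected.joinedIn _ (hc i) _ hx)
  refine ⟨fun i x => cl (PathConnectedSpace.somePath x₀ (c i)) ≫
    if h : x ∈ U i then cl (hj i x h).choose else cl (PathConnectedSpace.somePath (c i) x), ?_⟩
  intro i x y w hw
  have hx : x ∈ U i := w.source ▸ hw 0
  have hy : y ∈ U i := w.target ▸ hw 1
  simp only [dif_pos hx, dif_pos hy, Category.assoc]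
  congr 1
  refine cl_eq_of_isSimplyConnected (hsc i) _ ((hj i x hx).choose.trans w)
    (hj i y hy).choose_spec fun t => ?_
  rw [Path.trans_apply]
  split_ifs
  · exact (hj i x hx).choose_spec _
  · exact hw _

/-- Loop classes at `x₀` with the discrete topology: the fibre of the universal cover. -/
def Fib (x₀ : S) := PathCl x₀ x₀

instance (x₀ : S) : TopologicalSpace (Fib x₀) := ⊥

instance (x₀ : S) : DiscreteTopology (Fib x₀) := ⟨rfl⟩

lemma eventually_cl_const [LocallyPathConnectedSpace S] {O : Set S} (hO : IsOpen O) {x : S}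
    (hx : x ∈ O) : ∀ᶠ y in 𝓝 x, ∃ w : Path x y, ∀ t, w t ∈ O := by
  filter_upwards [(hO.pathComponentIn x).mem_nhds (mem_pathComponentIn_self hx)] with y hy
  exact hy

/-- The bundle core of the universal cover: a point over `x` stands for a class of paths from
`x₀` to `x`, written over `U i` as a loop class followed by the section `q i`. -/
noncomputable def coverCore [LocallyPathConnectedSpace S] (U : S → Set S) (hUo : ∀ i, IsOpen (U i))
    (hmem : ∀ x, x ∈ U x) (x₀ : S) (q : ∀ _ x : S, PathCl x₀ x)
    (hq : ∀ i x y (w : Path x y), (∀ t, w t ∈ U i) → q i y = q i x ≫ cl w) :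
    FiberBundleCore S S (Fib x₀) where
  baseSet := U
  isOpen_baseSet := hUo
  indexAt x := x
  mem_baseSet_at := hmem
  coordChange i j x g := (show PathCl x₀ x₀ from g) ≫ q i x ≫ Groupoid.inv (q j x)
  coordChange_self i x _ v := by simp; exact Category.comp_id (X := FundamentalGroupoid.mk x₀) _
  continuousOn_coordChange i j := by
    rintro ⟨x, g⟩ ⟨⟨hi, hj⟩, -⟩
    apply ContinuousAt.continuousWithinAt
    refine (continuousAt_const (y := (show Fib x₀ from
      (show PathCl x₀ x₀ from g) ≫ q i x ≫ Groupoid.inv (q j x)))).congr ?_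
    have h1 := eventually_cl_const ((hUo i).inter (hUo j)) ⟨hi, hj⟩
    have h2 : ∀ᶠ g' in 𝓝 g, g' = g := by rw [nhds_discrete]; exact eventually_pure.2 rfl
    rw [nhds_prod_eq]
    filter_upwards [h1.prod_mk h2]
    rintro ⟨y, g'⟩ ⟨⟨w, hw⟩, rfl⟩
    simp only [hq i x y w fun t => (hw t).1, hq j x y w fun t => (hw t).2, Groupoid.inv_eq_inv,
      IsIso.inv_comp, Category.assoc, IsIso.hom_inv_id_assoc]
    rfl
  coordChange_comp i j k x _ v := by
    let v' : PathCl x₀ x₀ := v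
    change (v' ≫ _ ≫ _) ≫ _ ≫ _ = v' ≫ _ ≫ _
    simp only [Category.assoc, Groupoid.inv_eq_inv, IsIso.inv_hom_id_assoc]

theorem exists_universal_cover [PathConnectedSpace S] [LocallyPathConnectedSpace S] (U : S → Set S)
    (hUo : ∀ i, IsOpen (U i)) (hmem : ∀ x, x ∈ U x) (hsc : ∀ i, IsSimplyConnected (U i)) :
    ∃ (M : Type u) (_ : TopologicalSpace M) (p : M → S), IsCoveringMap p ∧ Function.Surjective p ∧
      SimplyConnectedSpace M := by
  have : LocallyPathConnectedSpace unitInterval := (convex_Icc (0 : ℝ) 1).locallyPathConnectedSpace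
  have : ContractibleSpace unitInterval := (convex_Icc (0 : ℝ) 1).contractibleSpace ⟨0, by simp⟩
  obtain ⟨x₀⟩ : Nonempty S := inferInstance
  obtain ⟨q, hq⟩ := exists_sections hsc x₀
  set Z := coverCore U hUo hmem x₀ q hq with hZ
  have hcov : IsCoveringMap Z.proj := FiberBundle.isCoveringMap (F := Fib x₀) (E := Z.Fiber)
  -- the point of the cover given by a class of paths, and back
  let mk : ∀ x : S, PathCl x₀ x → Z.TotalSpace := fun x κ => ⟨x, κ ≫ Groupoid.inv (q x x)⟩
  have hmkinj : ∀ x κ κ', mk x κ = mk x κ' → κ = κ' := by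
    intro x κ κ' h
    have h1 : κ ≫ Groupoid.inv (q x x) = κ' ≫ Groupoid.inv (q x x) := by
      injection h
    rw [Groupoid.inv_eq_inv] at h1
    exact (cancel_mono _).1 h1
  have hmk : ∀ m : Z.TotalSpace, ∃ κ, mk m.1 κ = m := fun m =>
    ⟨(show PathCl x₀ x₀ from m.2) ≫ q m.1 m.1, congrArg (Bundle.TotalSpace.mk m.1) (by
      change ((show PathCl x₀ x₀ from m.2) ≫ q m.1 m.1) ≫ Groupoid.inv (q m.1 m.1) = _
      rw [Category.assoc, Groupoid.comp_inv, Category.comp_id])⟩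
  have hlift : ∀ (a b : S) (γ : Path a b) (κ : PathCl x₀ a), ∃ L : unitInterval → Z.TotalSpace,
      Continuous L ∧ Z.proj ∘ L = γ ∧ L 0 = mk a κ ∧ L 1 = mk b (κ ≫ cl γ) := by
    rintro a b ⟨γ', rfl, rfl⟩ κ
    set γ : Path (γ'.toFun 0) (γ'.toFun 1) := ⟨γ', rfl, rfl⟩
    refine ⟨fun t => mk (γ t) (κ ≫ cl (γ.subpath 0 t)), ?_, rfl, ?_, ?_⟩
    · refine continuous_iff_continuousAt.2 fun t => ?_
      rw [FiberBundle.continuousAt_totalSpace (F := Fib x₀) (E := Z.Fiber)]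
      refine ⟨γ.continuous.continuousAt, ?_⟩
      set i := γ t
      have hval : ∀ s, ((trivializationAt (Fib x₀) Z.Fiber i) (mk (γ s) (κ ≫ cl (γ.subpath 0 s)))).2 =
          (κ ≫ cl (γ.subpath 0 s) ≫ Groupoid.inv (q i (γ s)) : PathCl x₀ x₀) := by
        intro s
        change ((κ ≫ cl (γ.subpath 0 s)) ≫ Groupoid.inv (q (γ s) (γ s))) ≫ q (γ s) (γ s) ≫
          Groupoid.inv (q i (γ s)) = _
        simp only [Category.assoc, Groupoid.inv_eq_inv, IsIso.inv_hom_id_assoc]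
      refine (continuousAt_const (y := (show Fib x₀ from
        κ ≫ cl (γ.subpath 0 t) ≫ Groupoid.inv (q i (γ t))))).congr ?_
      have h1 : ∀ᶠ s in 𝓝 t, ∃ w : Path t s, ∀ r, w r ∈ γ ⁻¹' U i :=
        eventually_cl_const ((hUo i).preimage γ.continuous) (hmem i)
      filter_upwards [h1] with s ⟨w, hw⟩
      have h2 := hq i _ _ (w.map γ.continuous) hw
      have h3 : cl (γ.subpath 0 s) = cl (γ.subpath 0 t) ≫ cl (w.map γ.continuous) := by
        have h4 : cl (γ.subpath t s) = cl (w.map γ.continuous) := by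
          let v : Path t s := ⟨⟨Icc.convexComb t s, by fun_prop⟩, by simp, by simp⟩
          exact Path.Homotopic.Quotient.eq.2
            ((SimplyConnectedSpace.paths_homotopic v w).map ⟨γ, γ.continuous⟩)
        rw [← h4]
        exact (Path.Homotopic.Quotient.eq.2 ⟨Path.Homotopy.subpathTransSubpath γ 0 t s⟩).symm
      refine Eq.trans ?_ (hval s).symm
      rw [h2, h3]
      simp only [Category.assoc, Groupoid.inv_eq_inv, IsIso.inv_comp, IsIso.hom_inv_id_assoc]
      rfl
    · have : cl (γ.subpath 0 0) = 𝟙 _ := by simp only [Path.subpath_self]; rfl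
      change mk _ (κ ≫ cl (γ.subpath 0 0)) = _
      rw [this]
      exact congrArg (mk _) (Category.comp_id _)
    · simp only [Path.subpath_zero_one]; rfl
  refine ⟨Z.TotalSpace, inferInstance, Z.proj, hcov, fun x => ⟨mk x (q x x), rfl⟩, ?_⟩
  rw [simply_connected_iff_loops_nullhomotopic]
  have hjoin : ∀ m, Joined (mk x₀ (𝟙 _)) m := by
    intro m
    obtain ⟨κ, hκ⟩ := hmk m
    obtain ⟨w, rfl⟩ := Path.Homotopic.Quotient.mk_surjective κ
    obtain ⟨L, hL, -, h0, h1⟩ := hlift _ _ w (𝟙 _)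
    exact ⟨⟨⟨L, hL⟩, h0, by rw [← hκ]; exact h1.trans (by rw [Category.id_comp])⟩⟩
  refine ⟨⟨⟨mk x₀ (𝟙 _)⟩, fun m m' => (hjoin m).symm.trans (hjoin m')⟩, fun m γ => ?_⟩
  obtain ⟨κ, hκ⟩ := hmk m
  obtain ⟨L, hL, hLp, h0, h1⟩ := hlift _ _ (γ.map hcov.continuous) κ
  have hLγ : L = γ := hcov.eq_of_comp_eq hL γ.continuous (by rw [hLp]; rfl) 0
    (by rw [h0, γ.source]; exact hκ)
  rw [hLγ, γ.target] at h1
  have h2 := hmkinj _ _ _ (hκ.trans h1)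
  have h3 : cl (γ.map hcov.continuous) = 𝟙 _ := by
    rw [← cancel_epi κ, Category.comp_id]; exact h2.symm
  exact Path.Homotopic.Quotient.eq.1 (hcov.injective_path_homotopic_map m m h3)

end Cover

section Cover2

universe u

/-- A connected space covered by second countable open sets, each of which meets only countably
many others, is second countable (Poincaré–Volterra). -/
lemma secondCountable_of_chain {X ι : Type*} [TopologicalSpace X] [ConnectedSpace X] (W : ι → Set X)
    (ho : ∀ a, IsOpen (W a)) (hs : ∀ a, SecondCountableTopology (W a)) (hu : ∀ x, ∃ a, x ∈ W a)
    (hc : ∀ a, {b | (W a ∩ W b).Nonempty}.Countable) : SecondCountableTopology X := by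
  obtain ⟨x₀⟩ : Nonempty X := inferInstance
  obtain ⟨a₀, ha₀⟩ := hu x₀
  let A : ℕ → Set ι := Nat.rec {a₀} fun _ T => ⋃ a ∈ T, {b | (W a ∩ W b).Nonempty}
  have hA : ∀ n, (A n).Countable := fun n => by
    induction n with
    | zero => exact countable_singleton a₀
    | succ n ih => exact ih.biUnion fun a _ => hc a
  set T := ⋃ n, A n
  have hTc : T.Countable := countable_iUnion hA
  have hcl : IsClopen (⋃ a ∈ T, W a) := by
    refine ⟨⟨?_⟩, isOpen_biUnion fun a _ => ho a⟩
    refine isOpen_iff_mem_nhds.2 fun x hx => ?_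
    obtain ⟨b, hb⟩ := hu x
    filter_upwards [(ho b).mem_nhds hb] with y hy hyT
    simp only [mem_iUnion₂] at hyT
    obtain ⟨a, ha, hya⟩ := hyT
    obtain ⟨n, hn⟩ := mem_iUnion.1 ha
    exact hx (mem_biUnion (mem_iUnion.2 ⟨n + 1, mem_biUnion hn ⟨y, hya, hy⟩⟩) hb)
  have huniv := hcl.eq_univ ⟨x₀, mem_biUnion (mem_iUnion.2 ⟨0, rfl⟩) ha₀⟩
  have := hTc.to_subtype
  exact TopologicalSpace.secondCountableTopology_of_countable_cover (U := fun a : T => W a)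
    (fun a => ho a) (by rw [← huniv, biUnion_eq_iUnion])

lemma secondCountable_of_cover {M S : Type*} [TopologicalSpace M] [TopologicalSpace S]
    [ConnectedSpace M] [SecondCountableTopology S] {p : M → S} (hp : IsCoveringMap p) :
    SecondCountableTopology M := by
  choose hd U hxU hUo hpU H hH using hp
  obtain ⟨s, hsc, hsu⟩ := TopologicalSpace.countable_cover_nhds fun x => (hUo x).mem_nhds (hxU x)
  have := hsc.to_subtype
  let W : (Σ x : s, p ⁻¹' {x.1}) → Set M := fun a =>
    Subtype.val '' {m : p ⁻¹' U a.1 | (H a.1 m).2 = a.2}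
  have ho : ∀ a, IsOpen (W a) := fun a => by
    refine (hpU a.1).isOpenMap_subtype_val _ ?_
    have := hd a.1
    exact (isOpen_discrete {a.2}).preimage (continuous_snd.comp (H a.1).continuous)
  have hs : ∀ a, SecondCountableTopology (W a) := fun a => by
    have h1 : IsLocalHomeomorph (p ∘ (Subtype.val : W a → M)) :=
      IsLocalHomeomorph.comp (IsCoveringMap.isLocalHomeomorph
        fun x => ⟨hd x, U x, hxU x, hUo x, hpU x, H x, hH x⟩)
        (ho a).isOpenEmbedding_subtypeVal.isLocalHomeomorph
    refine (h1.isOpenEmbedding_of_injective ?_).isEmbedding.secondCountableTopology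
    rintro ⟨_, m, hm, rfl⟩ ⟨_, m', hm', rfl⟩ h
    have : H a.1 m = H a.1 m' := Prod.ext (Subtype.ext (by rw [hH, hH]; exact h))
      (hm.trans hm'.symm)
    exact Subtype.ext (congrArg Subtype.val ((H a.1).injective this) :)
  refine secondCountable_of_chain W ho hs (fun m => ?_) fun a => ?_
  · have : p m ∈ ⋃ x ∈ s, U x := hsu ▸ mem_univ _
    simp only [mem_iUnion₂] at this
    obtain ⟨x, hx, hm⟩ := this
    exact ⟨⟨⟨x, hx⟩, (H x ⟨m, hm⟩).2⟩, ⟨m, hm⟩, rfl, rfl⟩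
  · have := hs a
    have h1 : ∀ x : s, {g : p ⁻¹' {x.1} | (W a ∩ W ⟨x, g⟩).Nonempty}.Countable := fun x => by
      refine PairwiseDisjoint.countable_of_isOpen (α := W a)
        (s := fun g => Subtype.val ⁻¹' W ⟨x, g⟩) ?_
        (fun g _ => (ho _).preimage continuous_subtype_val) ?_
      · intro g _ g' _ hne
        refine disjoint_left.2 ?_
        rintro ⟨y, hy⟩ ⟨m, hm, hmy⟩ ⟨m', hm', hmy'⟩
        obtain rfl : m = m' := Subtype.ext (hmy.trans hmy'.symm)
        exact hne (hm.symm.trans hm')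
      · rintro g ⟨y, hy, hy'⟩
        exact ⟨⟨y, hy⟩, hy'⟩
    refine (countable_iUnion fun x => (h1 x).image
      fun g => (⟨x, g⟩ : Σ x : s, p ⁻¹' {x.1})).mono ?_
    rintro ⟨x, g⟩ h
    exact mem_iUnion.2 ⟨x, g, h, rfl⟩

/-- The universal cover of a surface, with a metric and charts in `ℂ`. -/
theorem exists_cover_surface {S : Type u} [TopologicalSpace S] [T2Space S]
    [SecondCountableTopology S] [ConnectedSpace S]
    (hsurf : ∀ x : S, ∃ U : Set S, IsOpen U ∧ x ∈ U ∧ Nonempty (U ≃ₜ ℂ)) :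
    ∃ (M : Type u) (_ : MetricSpace M) (_ : ChartedSpace ℂ M) (p : M → S), IsCoveringMap p ∧
      Function.Surjective p ∧ SimplyConnectedSpace M := by
  choose U hUo hmem e using hsurf
  have e := fun x => (e x).some
  let cS : ChartedSpace ℂ S :=
    { atlas := univ
      chartAt := fun x =>
        haveI : Nonempty (U x) := ⟨⟨x, hmem x⟩⟩
        (((hUo x).isOpenEmbedding_subtypeVal.toOpenPartialHomeomorph _).symm.trans
          (e x).toOpenPartialHomeomorph)
      mem_chart_source := fun x => by simp [hmem x]
      chart_mem_atlas := fun _ => mem_univ _ }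
  have := ChartedSpace.locallyPathConnectedSpace ℂ S
  have : PathConnectedSpace S := pathConnectedSpace_iff_connectedSpace.2 inferInstance
  obtain ⟨M, tM, p, hp, hs, hM⟩ := exists_universal_cover U hUo hmem fun x =>
    (by
      have : ContractibleSpace (U x) := (e x).contractibleSpace
      exact (inferInstance : SimplyConnectedSpace (U x)))
  have := secondCountable_of_cover hp
  have hT2 : T2Space M := ⟨fun a b hab => by
    by_cases h : p a = p b
    · exact hp.isSeparatedMap a b h hab
    · exact (separated_by_continuous hp.continuous h)⟩
  choose E hE hpE using hp.isLocalHomeomorph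
  let cM : ChartedSpace S M :=
    { atlas := univ
      chartAt := E
      mem_chart_source := hE
      chart_mem_atlas := fun _ => mem_univ _ }
  let := ChartedSpace.comp ℂ S M
  have : LocallyCompactSpace M := ChartedSpace.locallyCompactSpace ℂ M
  exact ⟨M, TopologicalSpace.metrizableSpaceMetric M, inferInstance, p, hp, hs, hM⟩

end Cover2

/-! ### Retractions onto a boundary component -/

section Retract

/-- A circle-valued map on a Jordan curve extends to the surface off finitely many points: after
division by an exponential it is `1` off a short arc, which lies in a chart. -/
lemma exists_circle_extension {M : Type*} [TopologicalSpace M] [T2Space M] [NormalSpace M]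
    [ChartedSpace ℂ M] {β : Set M} (hJ : IsJordan β) {e : M → Circle} (he : ContinuousOn e β) :
    ∃ Z : Finset M, (∀ z ∈ Z, z ∉ β) ∧ ∃ F : M → Circle, ContinuousOn F (Z : Set M)ᶜ ∧
      ∀ z ∈ β, F z = e z := by
  classical
  obtain ⟨z, hz⟩ : β.Nonempty := by obtain ⟨f, -, -, rfl⟩ := hJ; exact range_nonempty f
  set E := chartAt ℂ z
  have hzE : z ∈ E.source := mem_chart_source ℂ z
  obtain ⟨r, hr, hrt, -⟩ := exists_chart_ball hzE univ_mem
  set D := E.symm '' Metric.closedBall (E z) r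
  set O := E.symm '' Metric.ball (E z) r
  have hOo : IsOpen O :=
    E.symm.isOpen_image_of_subset_source Metric.isOpen_ball (Metric.ball_subset_closedBall.trans hrt)
  have hDs : D ⊆ E.source := by rintro _ ⟨w, hw, rfl⟩; exact E.map_target (hrt hw)
  have hDc : IsCompact D := (isCompact_closedBall _ _).image_of_continuousOn (E.continuousOn_symm.mono hrt)
  have hzO : z ∈ O := ⟨E z, Metric.mem_ball_self hr, E.left_inv hzE⟩
  have hED : ∀ y ∈ D, E y ∈ Metric.closedBall (E z) r := by
    rintro _ ⟨w, hw, rfl⟩; rwa [E.right_inv (hrt hw)]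
  have hsph : ∀ y ∈ D, y ∉ O → E y ∈ Metric.sphere (E z) r := fun y hy hyO => by
    refine ((Metric.mem_closedBall.1 (hED y hy)).lt_or_eq).resolve_left fun h =>
      hyO ⟨E y, h, E.left_inv (hDs hy)⟩
  obtain ⟨γ₀, γ₁, a, b, -, h1, -, hun, hγO, -⟩ := hJ.exists_short hz (hOo.mem_nhds hzO)
  obtain ⟨φ, hφ, hφe⟩ := (h1.allLog e (he.mono (hun ▸ subset_union_right))).exists_extend h1.isClosed
  set e₁ : M → Circle := fun y => e y / Circle.exp (φ y)
  have he₁ : ContinuousOn e₁ β := he.div' (Circle.exp.continuous.comp hφ).continuousOn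
  have he₁1 : ∀ y ∈ β, y ∉ O → e₁ y = 1 := fun y hy hyO => by
    have : y ∈ γ₁ := (hun ▸ hy : y ∈ γ₀ ∪ γ₁).resolve_left fun h => hyO (hγO h)
    simp only [e₁, hφe y this, div_self']
  set f : ℂ → Circle := fun w => if w ∈ Metric.sphere (E z) r then 1 else e₁ (E.symm w)
  have hβD : IsCompact (E '' (β ∩ D)) := (hDc.inter_left hJ.isClosed).image_of_continuousOn
    (E.continuousOn.mono (inter_subset_right.trans hDs))
  have hfβ : ∀ y ∈ β ∩ D, f (E y) = e₁ y := fun y hy => by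
    simp only [f, E.left_inv (hDs hy.2)]
    split_ifs with h
    · refine (he₁1 y hy.1 ?_).symm
      rintro ⟨w, hw, rfl⟩
      rw [E.right_inv (hrt (Metric.ball_subset_closedBall hw))] at h
      exact (Metric.mem_ball.1 hw).ne h
    · rfl
  have hf : ContinuousOn f (Metric.sphere (E z) r ∪ E '' (β ∩ D)) := by
    refine ContinuousOn.union_of_isClosed ?_ ?_ Metric.isClosed_sphere hβD.isClosed
    · exact (continuousOn_const (c := (1 : Circle))).congr fun w hw => if_pos hw
    · have : ContinuousOn (fun w => e₁ (E.symm w)) (E '' (β ∩ D)) := by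
        refine he₁.comp (E.continuousOn_symm.mono ?_) ?_
        · rintro _ ⟨y, hy, rfl⟩; exact E.map_source (hDs hy.2)
        · rintro _ ⟨y, hy, rfl⟩; rw [E.left_inv (hDs hy.2)]; exact hy.1
      refine this.congr ?_
      rintro _ ⟨y, hy, rfl⟩
      rw [hfβ y hy]
      simp only [E.left_inv (hDs hy.2)]
  obtain ⟨Z, hZT, hZK, F₀, hF₀, hF₀f⟩ := exists_extension_plane
    (Metric.isClosed_sphere.union hβD.isClosed) (isCompact_closedBall (E z) r) hf
  set F : M → Circle := fun y => if y ∈ D then F₀ (E y) else 1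
  have hF1 : ∀ y ∉ O, F y = 1 := fun y hy => by
    simp only [F]
    split_ifs with h
    · have := hsph y h hy
      rw [hF₀f _ (Or.inl this)]; exact if_pos this
    · rfl
  refine ⟨Z.image E.symm, ?_, fun y => F y * Circle.exp (φ y), ?_, ?_⟩
  · intro y hy hyβ
    obtain ⟨w, hw, rfl⟩ := Finset.mem_image.1 hy
    exact hZT w hw (Or.inr ⟨_, ⟨hyβ, w, hZK w hw, rfl⟩, E.right_inv (hrt (hZK w hw))⟩)
  · refine ContinuousOn.mul ?_ (Circle.exp.continuous.comp hφ).continuousOn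
    have hA : ContinuousOn F (D \ (Z.image E.symm : Finset M)) := by
      refine ContinuousOn.congr (f := fun y => F₀ (E y)) ?_ fun y hy => if_pos hy.1
      refine hF₀.comp (E.continuousOn.mono (sdiff_subset.trans hDs)) fun y hy =>
        ⟨hED y hy.1, fun h => hy.2 ?_⟩
      exact Finset.mem_coe.2 (Finset.mem_image.2 ⟨_, h, E.left_inv (hDs hy.1)⟩)
    have hB : ContinuousOn F Oᶜ := continuousOn_const.congr hF1
    intro y hy
    have hZo : IsOpen ((Z.image E.symm : Finset M) : Set M)ᶜ := (Finset.finite_toSet _).isClosed.isOpen_compl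
    have hF : ContinuousOn F ((D ∪ Oᶜ) \ (Z.image E.symm : Finset M)) := by
      intro y hy
      rw [union_sdiff_distrib]
      refine ContinuousWithinAt.union ?_ ?_
      · by_cases h : y ∈ D
        · exact hA y ⟨h, hy.2⟩
        · refine continuousWithinAt_of_notMem_closure fun h' => h ?_
          exact hDc.isClosed.closure_subset_iff.2 sdiff_subset h'
      · by_cases h : y ∈ O
        · refine continuousWithinAt_of_notMem_closure fun h' => ?_
          exact (hOo.isClosed_compl.closure_subset_iff.2 sdiff_subset h') h
        · exact (hB y h).mono sdiff_subset
    refine hF.mono (fun y hy => ⟨?_, hy⟩) y hy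
    by_cases h : y ∈ O
    · exact Or.inl (image_mono Metric.ball_subset_closedBall h)
    · exact Or.inr h
  · intro y hy
    have : F y = e₁ y := by
      by_cases h : y ∈ D
      · simp only [F, if_pos h]
        rw [hF₀f _ (Or.inr ⟨y, ⟨hy, h⟩, rfl⟩), hfβ y ⟨hy, h⟩]
      · have h' : y ∉ O := fun h' => h (image_mono Metric.ball_subset_closedBall h')
        rw [hF1 y h', he₁1 y hy h']
    simp only [this, e₁, div_mul_cancel]

variable {M : Type*} [TopologicalSpace M] [T2Space M] [NormalSpace M] [ChartedSpace ℂ M]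
  [SimplyConnectedSpace M] {V K : Set M}

/-- Unless the compact set `K` fills a domain `V` that carries no winding of its boundary curve,
`closure V ∩ K` retracts to the boundary curve. -/
lemma exists_retract_jordan (hV : IsOpen V) (hVc : IsPreconnected V)
    (hJ : IsJordan (closure V \ V)) (hn : ¬ (V ⊆ K ∧ NoG V)) :
    ∃ r : M → M, ContinuousOn r (closure V ∩ K) ∧ MapsTo r (closure V ∩ K) (closure V \ V) ∧
      ∀ z ∈ closure V \ V, r z = z := by
  classical
  obtain ⟨f, hf, hfi, hfr⟩ := id hJ
  obtain ⟨k, hk, hkf⟩ := exists_inverse isCompact_univ hf.continuousOn hfi.injOn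
  rw [image_univ, hfr] at hk
  let h : AddCircle (1 : ℝ) ≃ₜ Circle := AddCircle.homeomorphCircle one_ne_zero
  obtain ⟨Z, hZ, F, hF, hFe⟩ := exists_circle_extension hJ
    (e := fun z => h (k z)) (h.continuous.comp_continuousOn hk)
  set X : Set M := {z | z ∈ Z ∧ z ∉ V}ᶜ
  have hXV : ∀ z ∈ V, X ∈ 𝓝 z := fun z hz =>
    mem_of_superset (hV.mem_nhds hz) fun w hw h => h.2 hw
  have hclX : closure V ⊆ X := fun z hz h => hZ z h.1 ⟨hz, h.2⟩
  have hFX : ContinuousOn F (X \ (Z.filter (· ∈ V) : Finset M)) := hF.mono fun z hz hzZ =>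
    hz.1 ⟨hzZ, fun hzV => hz.2 (Finset.mem_coe.2 (Finset.mem_filter.2 ⟨hzZ, hzV⟩))⟩
  have key : ∃ F' : M → Circle, ContinuousOn F' (closure V ∩ K) ∧ ∀ z ∉ V, F' z = F z := by
    by_cases hVK : V ⊆ K
    · obtain ⟨F', h1, h2⟩ := exists_push_of_not_noG hV hVc hXV (fun h => hn ⟨hVK, h⟩)
        (Z.filter (· ∈ V)) (fun z hz => (Finset.mem_filter.1 hz).2) hFX
      exact ⟨F', h1.mono (inter_subset_left.trans hclX), h2⟩
    · obtain ⟨y, hy, hyK⟩ := not_subset.1 hVK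
      obtain ⟨F', h1, h2⟩ := exists_push (X := X) hV hVc hy ((Z.filter (· ∈ V)).erase y) (by simp)
        (fun z hz => hXV z (Finset.mem_filter.1 (Finset.mem_of_mem_erase hz)).2)
        (fun z hz => (Finset.mem_filter.1 (Finset.mem_of_mem_erase hz)).2) (F := F)
        (hFX.mono fun z hz => ⟨hz.1, fun hzZ => hz.2 (by
          by_cases hzy : z = y
          · exact Or.inr hzy
          · exact Or.inl (Finset.mem_coe.2 (Finset.mem_erase.2 ⟨hzy, hzZ⟩)))⟩)
      exact ⟨F', h1.mono fun z hz => ⟨hclX hz.1, fun hzy => hyK (hzy ▸ hz.2)⟩, h2⟩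
  obtain ⟨F', h1, h2⟩ := key
  refine ⟨fun z => f (h.symm (F' z)),
    (hf.comp h.symm.continuous).comp_continuousOn h1, fun z _ => hfr ▸ mem_range_self _, ?_⟩
  intro z hz
  change f (h.symm (F' z)) = z
  rw [h2 z hz.2, hFe z hz, h.symm_apply_apply]
  obtain ⟨t, rfl⟩ := hfr.symm ▸ hz
  rw [hkf t (mem_univ _)]

omit [ChartedSpace ℂ M] [SimplyConnectedSpace M] in
lemma exists_retract_arc {A : Set M} {a b : M} (hA : IsArc A a b) :
    ∃ r : M → M, Continuous r ∧ (∀ z, r z ∈ A) ∧ ∀ z ∈ A, r z = z := by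
  have hcl := hA.isClosed
  obtain ⟨f, hc, hi, rfl, -, -⟩ := hA
  obtain ⟨k, hk, hkf⟩ := exists_inverse isCompact_Icc hc hi
  obtain ⟨ψ, hψ, hψk⟩ := exists_extend hcl hk
  have hc' : Continuous fun t : ℝ => f (projIcc (0 : ℝ) 1 zero_le_one t) :=
    (continuousOn_iff_continuous_domRestrict.1 hc).comp continuous_projIcc
  refine ⟨fun z => f (projIcc (0 : ℝ) 1 zero_le_one (ψ z)), hc'.comp hψ,
    fun z => ⟨_, Subtype.prop _, rfl⟩, ?_⟩
  rintro _ ⟨t, ht, rfl⟩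
  simp only [hψk (f t) ⟨t, ht, rfl⟩, hkf t ht, projIcc_of_mem zero_le_one ht]

end Retract

section Frontier

variable {M : Type*} [TopologicalSpace M] [T2Space M] [ChartedSpace ℂ M] {Q K : Set M} {v : M}

local notation "V" => connectedComponentIn Qᶜ v

/-- The frontier of a complementary component of a subsurface is a one-manifold. -/
lemma IsBSurface.exists_line (hQ : IsBSurface Q) (hQc : IsClosed Q)
    (x : (closure V \ V : Set M)) :
    ∃ φ : ℝ → (closure V \ V : Set M), IsOpenEmbedding φ ∧ φ 0 = x := by
  obtain ⟨hxQ, hxi, -⟩ := hQ.exists_nhd_side hQc x.2.1 x.2.2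
  obtain ⟨h, r, hh⟩ := hQ.exists_half hxQ hxi
  obtain ⟨O, hO, hxO, -, hOV⟩ := hQ.exists_nhd_frontier hQc x.2.1 x.2.2
  obtain ⟨r', hr', hr, hs⟩ := hh.exists_shrink zero_mem_halfPlane (hO.mem_nhds hxO)
  replace hh := hh.shrink hr' hr
  set u := OpenPartialHomeomorph.univBall (0 : ℝ) r'
  have hut : u.target = Metric.ball 0 r' := OpenPartialHomeomorph.univBall_target 0 hr'
  have hus : u.source = univ := OpenPartialHomeomorph.univBall_source 0 r'
  have hu : ∀ t, |u t| < r' := fun t => by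
    have : u t ∈ u.target := u.map_source (hus ▸ mem_univ t)
    rwa [hut, mem_ball_zero_iff] at this
  have hu0 : u 0 = 0 := OpenPartialHomeomorph.univBall_apply_zero 0 r'
  have huc : Continuous u := by
    rw [← continuousOn_univ, ← hus]; exact u.continuousOn
  have hmem : ∀ t, ((u t : ℝ) : ℂ) ∈ halfPlane ∩ Metric.ball 0 r' := fun t =>
    ⟨by simp [halfPlane], by simpa using hu t⟩
  have hβ : ∀ t, h (u t) ∈ closure V \ V := fun t =>
    hOV ⟨hs ⟨_, hmem t, rfl⟩, hh.mapsTo (hmem t), hh.image_notMem_interior (hu t)⟩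
  refine ⟨fun t => ⟨h (u t), hβ t⟩, IsOpenEmbedding.of_continuous_injective_isOpenMap ?_ ?_ ?_, ?_⟩
  · exact (hh.cont.comp_continuous (Complex.continuous_ofReal.comp huc) hmem).subtype_mk _
  · intro s t hst
    have := Complex.ofReal_injective (hh.inj (hmem s) (hmem t) (congrArg Subtype.val hst))
    exact u.injOn (hus ▸ mem_univ s) (hus ▸ mem_univ t) this
  · intro A hA
    obtain ⟨O', hO', hOA⟩ := hh.exists_open_boundary (u '' A)
      (u.isOpen_image_of_subset_source hA (hus ▸ subset_univ A))
    refine ⟨O', hO', ?_⟩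
    ext ⟨y, hy⟩
    have hy' := hQ.exists_nhd_side hQc hy.1 hy.2
    constructor
    · intro hyO
      obtain ⟨_, ⟨⟨t, ht, rfl⟩, -⟩, hty⟩ := hOA.subset ⟨hyO, hy'.1, hy'.2.1⟩
      exact ⟨t, ht, Subtype.ext hty⟩
    · rintro ⟨t, ht, hty⟩
      exact (hOA.symm.subset ⟨u t, ⟨⟨t, ht, rfl⟩, by simpa using hu t⟩, congrArg Subtype.val hty⟩).1
  · exact Subtype.ext (by simp [hu0, hh.zero])

variable [NormalSpace M] [SimplyConnectedSpace M]

lemma IsBSurface.frontier_cases (hQ : IsBSurface Q) (hQc : IsClosed Q) (hc : IsPreconnected Q)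
    (hne : Q.Nonempty) (hv : v ∉ Q) : IsJordan (closure V \ V) ∨
      ∀ K, IsCompact K → ∃ A a b, IsArc A a b ∧ A ⊆ closure V \ V ∧ K ∩ (closure V \ V) ⊆ A := by
  obtain ⟨z, hz, hzQ⟩ := exists_mem_frontier_component hQc hne hv
  have : ConnectedSpace (closure V \ V : Set M) := isConnected_iff_connectedSpace.1
    ⟨⟨z, hz, fun h => connectedComponentIn_subset _ _ h hzQ⟩,
      isPreconnected_frontier_component hQc hc hne⟩
  refine (jordan_or_arc (hQ.exists_line (v := v) hQc)).imp ?_ fun h K hK => ?_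
  · rintro ⟨f, h1, h2, h3⟩
    exact ⟨_, continuous_subtype_val.comp h1, Subtype.val_injective.comp h2, by
      rw [range_comp, h3, image_univ, Subtype.range_val]⟩
  · have hcl : IsClosed (closure V \ V) := isClosed_closure.sdiff (isOpen_component hQc v)
    obtain ⟨A, a, b, hA, hKA⟩ := h (Subtype.val ⁻¹' K)
      (hcl.isClosedEmbedding_subtypeVal.isCompact_preimage hK)
    refine ⟨_, _, _, hA.image continuous_subtype_val.continuousOn Subtype.val_injective.injOn,
      ?_, fun y hy => ⟨⟨y, hy.2⟩, hKA hy.1, rfl⟩⟩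
    rintro _ ⟨y, -, rfl⟩
    exact y.2

lemma IsBSurface.exists_retract (hQ : IsBSurface Q) (hQc : IsClosed Q) (hc : IsPreconnected Q)
    (hne : Q.Nonempty) (hv : v ∉ Q) (hK : IsCompact K)
    (hn : ¬ (IsJordan (closure V \ V) ∧ V ⊆ K ∧ NoG V)) :
    ∃ r : M → M, ContinuousOn r (closure V ∩ K) ∧ MapsTo r (closure V ∩ K) (closure V \ V) ∧
      ∀ z ∈ K ∩ (closure V \ V), r z = z := by
  rcases hQ.frontier_cases hQc hc hne hv with h | h
  · obtain ⟨r, h1, h2, h3⟩ := exists_retract_jordan (K := K) (isOpen_component hQc v)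
      isPreconnected_connectedComponentIn h fun h' => hn ⟨h, h'⟩
    exact ⟨r, h1, h2, fun z hz => h3 z hz.2⟩
  · obtain ⟨A, a, b, hA, hAs, hKA⟩ := h K hK
    obtain ⟨r, h1, h2, h3⟩ := exists_retract_arc hA
    exact ⟨r, h1.continuousOn, fun z _ => hAs (h2 z), fun z hz => h3 z (hKA hz)⟩

end Frontier

section Fill

variable {M : Type*} [TopologicalSpace M] [T2Space M] [ChartedSpace ℂ M] [NormalSpace M]
  [SimplyConnectedSpace M] {Q K : Set M}

/-- If no complementary component of `Q` is an essential hole filled by `K`, then `K` can be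
pushed into `Q`. -/
theorem IsBSurface.exists_fill (hQ : IsBSurface Q) (hQc : IsClosed Q) (hc : IsPreconnected Q)
    (hne : Q.Nonempty) (hK : IsCompact K)
    (hn : ∀ v ∉ Q, ¬ (IsJordan (closure (connectedComponentIn Qᶜ v) \ connectedComponentIn Qᶜ v) ∧
      connectedComponentIn Qᶜ v ⊆ K ∧ NoG (connectedComponentIn Qᶜ v))) :
    ∃ R : M → M, ContinuousOn R K ∧ MapsTo R K Q ∧ ∀ z ∈ Q, R z = z := by
  classical
  -- the retraction is chosen once for each component, not for each point of it
  have h0 : ∀ W : Set M, ∃ r : M → M, (∃ v ∉ Q, W = connectedComponentIn Qᶜ v) →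
      ContinuousOn r (closure W ∩ K) ∧ MapsTo r (closure W ∩ K) (closure W \ W) ∧
      ∀ z ∈ K ∩ (closure W \ W), r z = z := fun W => by
    by_cases h : ∃ v ∉ Q, W = connectedComponentIn Qᶜ v
    · obtain ⟨v, hv, rfl⟩ := h
      obtain ⟨r, hr⟩ := hQ.exists_retract hQc hc hne hv hK (hn v hv)
      exact ⟨r, fun _ => hr⟩
    · exact ⟨id, fun h' => absurd h' h⟩
  choose r hr using h0
  set R : M → M := fun z => if z ∈ Q then z else r (connectedComponentIn Qᶜ z) z
  have hRQ : ∀ z ∈ Q, R z = z := fun z hz => if_pos hz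
  have hRV : ∀ v ∉ Q, ∀ z ∈ closure (connectedComponentIn Qᶜ v), z ∈ K →
      R z = r (connectedComponentIn Qᶜ v) z := fun v hv z hz hzK => by
    by_cases hz' : z ∈ connectedComponentIn Qᶜ v
    · rw [connectedComponentIn_eq hz']
      exact if_neg (connectedComponentIn_subset _ _ hz')
    · rw [hRQ z ((closure_component hQc hz).resolve_left hz'), (hr _ ⟨v, hv, rfl⟩).2.2 z ⟨hzK, hz, hz'⟩]
  have hRc : ∀ v ∉ Q, ContinuousOn R (closure (connectedComponentIn Qᶜ v) ∩ K) := fun v hv =>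
    (hr _ ⟨v, hv, rfl⟩).1.congr fun z hz => hRV v hv z hz.1 hz.2
  refine ⟨R, fun z hz => ?_, fun z hz => ?_, hRQ⟩
  · by_cases hzQ : z ∈ Q
    · have h1 : ContinuousWithinAt R Q z :=
        continuousWithinAt_id.congr (fun y hy => hRQ y hy) (hRQ z hzQ)
      by_cases hzi : z ∈ interior Q
      · exact (h1.continuousAt (mem_interior_iff_mem_nhds.1 hzi)).continuousWithinAt
      · obtain ⟨h, ρ, hh⟩ := hQ.exists_half hzQ hzi
        obtain ⟨N, hN, hN'⟩ := hh.one_sided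
        have hzi' := hzi
        rw [← mem_compl_iff, ← closure_compl] at hzi'
        obtain ⟨v, hvN, hv⟩ := mem_closure_iff_nhds.1 hzi' N hN
        have hzV : z ∈ closure (connectedComponentIn Qᶜ v) := mem_closure_iff_nhds.2 fun t ht => by
          obtain ⟨w, hw, hw'⟩ := mem_closure_iff_nhds.1 hzi' (t ∩ N) (inter_mem ht hN)
          exact ⟨w, hw.1, hN' v ⟨hvN, hv⟩ w ⟨hw.2, hw'⟩⟩
        refine (h1.union (hRc v hv z ⟨hzV, hz⟩)).mono_of_mem_nhdsWithin ?_
        filter_upwards [mem_nhdsWithin_of_mem_nhds hN, self_mem_nhdsWithin] with y hyN hyK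
        by_cases hy : y ∈ Q
        · exact Or.inl hy
        · exact Or.inr ⟨subset_closure (hN' v ⟨hvN, hv⟩ y ⟨hyN, hy⟩), hyK⟩
    · have hzV := mem_connectedComponentIn (F := Qᶜ) hzQ
      refine (hRc z hzQ z ⟨subset_closure hzV, hz⟩).mono_of_mem_nhdsWithin ?_
      filter_upwards [mem_nhdsWithin_of_mem_nhds ((isOpen_component hQc z).mem_nhds hzV),
        self_mem_nhdsWithin] with y hy hyK
      exact ⟨subset_closure hy, hyK⟩
  · by_cases hzQ : z ∈ Q
    · rwa [hRQ z hzQ]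
    · have hzV := subset_closure (mem_connectedComponentIn (F := Qᶜ) hzQ)
      rw [hRV z hzQ z hzV hz]
      have := (hr _ ⟨z, hzQ, rfl⟩).2.1 ⟨hzV, hz⟩
      exact (closure_component hQc this.1).resolve_left this.2

end Fill

section Innermost

lemma component_eq_of_relOpen {X : Type*} [TopologicalSpace X] {E D : Set X} {y : X}
    (hD : IsPreconnected D) (hDc : IsClosed D) (hDE : D ⊆ E) (hy : y ∈ D)
    (ho : ∀ z ∈ D, ∃ O, IsOpen O ∧ z ∈ O ∧ O ∩ E ⊆ D) : connectedComponentIn E y = D := by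
  refine subset_antisymm (fun w hw => ?_) (hD.subset_connectedComponentIn hy hDE)
  by_contra hwD
  obtain ⟨x, hx, ⟨O, ⟨hO, hOD⟩, hxO⟩, hxD⟩ := (isPreconnected_connectedComponentIn (F := E) (x := y))
    (⋃₀ {O | IsOpen O ∧ O ∩ E ⊆ D}) Dᶜ (isOpen_sUnion fun O h => h.1) hDc.isOpen_compl
    (fun x _ => by
      by_cases hx : x ∈ D
      · obtain ⟨O, h1, h2, h3⟩ := ho x hx
        exact Or.inl ⟨O, ⟨h1, h3⟩, h2⟩
      · exact Or.inr hx)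
    (by
      obtain ⟨O, h1, h2, h3⟩ := ho y hy
      exact ⟨y, mem_connectedComponentIn (hDE hy), O, ⟨h1, h3⟩, h2⟩) ⟨w, hw, hwD⟩
  exact hxD (hOD ⟨hxO, connectedComponentIn_subset _ _ hx⟩)

/-- A compact connected one-manifold is a Jordan curve. -/
lemma jordan_of_compact {X : Type*} [TopologicalSpace X] [T2Space X] [ConnectedSpace X]
    [CompactSpace X] (hX : ∀ x : X, ∃ φ : ℝ → X, IsOpenEmbedding φ ∧ φ 0 = x) :
    IsJordan (univ : Set X) := by
  refine (jordan_or_arc hX).resolve_right fun h => ?_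
  obtain ⟨A, a, b, ⟨f, hc, hi, hfA, hf0, hf1⟩, hA⟩ := h univ isCompact_univ
  obtain ⟨k, hk, hkf⟩ := exists_inverse isCompact_Icc hc hi
  rw [hfA, univ_subset_iff.1 hA, continuousOn_univ] at hk
  obtain ⟨φ, hφ, hφ0⟩ := hX a
  have hsurj : ∀ x : X, ∃ t ∈ Icc (0 : ℝ) 1, f t = x := fun x => hfA.symm.subset (hA (mem_univ x))
  have hk0 : ∀ x, 0 ≤ k x := fun x => by
    obtain ⟨t, ht, rfl⟩ := hsurj x
    rw [hkf t ht]; exact ht.1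
  have hinj : Function.Injective (k ∘ φ) := by
    refine Function.Injective.comp (fun x y hxy => ?_) hφ.injective
    obtain ⟨t, ht, rfl⟩ := hsurj x
    obtain ⟨s, hs, rfl⟩ := hsurj y
    rw [hkf t ht, hkf s hs] at hxy
    rw [hxy]
  have h00 : k (φ 0) = 0 := by rw [hφ0, ← hf0, hkf 0 (by simp)]
  -- a continuous injection of the line has no minimum
  rcases (hk.comp hφ.continuous).strictMono_of_inj hinj with h | h
  · have := h (show (-1 : ℝ) < 0 by norm_num)
    exact (hk0 (φ (-1))).not_gt (h00 ▸ this)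
  · have := h (show (0 : ℝ) < 1 by norm_num)
    exact (hk0 (φ 1)).not_gt (h00 ▸ this)

variable {M : Type*} [MetricSpace M] [ChartedSpace ℂ M] [SimplyConnectedSpace M] {B Q : Set M} {v : M}

lemma IsBSurface.jordan_frontier (hQ : IsBSurface Q) (hQc : IsClosed Q) (hc : IsPreconnected Q)
    (hne : Q.Nonempty) (hv : v ∉ Q)
    (hK : IsCompact (closure (connectedComponentIn Qᶜ v) \ connectedComponentIn Qᶜ v)) :
    IsJordan (closure (connectedComponentIn Qᶜ v) \ connectedComponentIn Qᶜ v) := by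
  obtain ⟨z, hz, hzQ⟩ := exists_mem_frontier_component hQc hne hv
  set β := closure (connectedComponentIn Qᶜ v) \ connectedComponentIn Qᶜ v
  have : ConnectedSpace β := isConnected_iff_connectedSpace.1
    ⟨⟨z, hz, fun h => connectedComponentIn_subset _ _ h hzQ⟩,
      isPreconnected_frontier_component hQc hc hne⟩
  have := isCompact_iff_compactSpace.1 hK
  obtain ⟨f, h1, h2, h3⟩ := jordan_of_compact (hQ.exists_line (v := v) hQc)
  exact ⟨_, continuous_subtype_val.comp h1, Subtype.val_injective.comp h2, by
    rw [range_comp, h3, image_univ, Subtype.range_val]⟩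

/-- An innermost complementary disc, or a disc component: inside a compact hole `V` of a component
of `B` one finds a component of `(interior B)ᶜ` or of `B` that is a closed disc. -/
theorem IsBSurface.exists_innermost (hB : IsBSurface B) (hBc : IsClosed B) (n : ℕ) :
    ∀ q ∈ B, ∀ v ∉ connectedComponentIn B q, ∀ V,
      V = connectedComponentIn (connectedComponentIn B q)ᶜ v → IsCompact (closure V) → NoG V →
      ((fun y => connectedComponentIn B y) '' (B ∩ V)).ncard = n →
    ∃ E, (E = B ∨ E = (interior B)ᶜ) ∧ ∃ y ∈ E,
      (∀ z ∈ connectedComponentIn E y, ∃ O, IsOpen O ∧ z ∈ O ∧ O ∩ E ⊆ connectedComponentIn E y) ∧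
      Nonempty (connectedComponentIn E y ≃ₜ Metric.closedBall (0 : ℂ) 1) := by
  induction n using Nat.strong_induction_on with
  | _ n ih =>
  rintro q hq v hv V rfl hVK hG hn
  set Q := connectedComponentIn B q with hQdef
  set V := connectedComponentIn Qᶜ v with hVdef
  have hQ : IsBSurface Q := hB.component
  have hQc : IsClosed Q := isClosed_connectedComponentIn' hBc
  have hQp : IsPreconnected Q := isPreconnected_connectedComponentIn
  have hqQ : q ∈ Q := mem_connectedComponentIn hq
  have hVo : IsOpen V := isOpen_component hQc v
  have hVQ : V ⊆ Qᶜ := connectedComponentIn_subset Qᶜ v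
  by_cases hVB : (B ∩ V).Nonempty
  · obtain ⟨y, hyB, hyV⟩ := hVB
    set Q' := connectedComponentIn B y with hQ'def
    have hQ' : IsBSurface Q' := hB.component
    have hQ'c : IsClosed Q' := isClosed_connectedComponentIn' hBc
    have hQ'p : IsPreconnected Q' := isPreconnected_connectedComponentIn
    have hyQ' : y ∈ Q' := mem_connectedComponentIn hyB
    have hdisj : ∀ z ∈ Q', z ∉ Q := fun z hz hz' => hVQ hyV (by
      rw [hQdef, connectedComponentIn_eq hz', ← connectedComponentIn_eq hz]; exact hyQ')
    have hQ'V : Q' ⊆ V := by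
      rw [hVdef, connectedComponentIn_eq hyV]
      exact hQ'p.subset_connectedComponentIn hyQ' hdisj
    have hqW : Vᶜ ⊆ connectedComponentIn Q'ᶜ q :=
      (isPreconnected_compl_component hQc hQp ⟨q, hqQ⟩).subset_connectedComponentIn
        (fun h => hVQ h hqQ) (compl_subset_compl.2 hQ'V)
    by_cases hW : ∃ w ∉ Q', w ∉ connectedComponentIn Q'ᶜ q
    · obtain ⟨w, hwQ', hw⟩ := hW
      have hV2 : connectedComponentIn Q'ᶜ w ⊆ V := fun z hz => by
        by_contra hzV
        apply hw
        rw [connectedComponentIn_eq (hqW hzV), ← connectedComponentIn_eq hz]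
        exact mem_connectedComponentIn hwQ'
      have hfin : ((fun y => connectedComponentIn B y) '' (B ∩ V)).Finite := by
        have hK : IsCompact (B ∩ closure V) := hVK.inter_left hBc
        refine Finite.subset ?_ (image_mono (inter_subset_inter_right B subset_closure))
        choose! O hO hzO hOB using fun z (hz : z ∈ B) => hB.exists_nhd_component hz
        obtain ⟨t, htf⟩ := hK.elim_nhds_subcover' (fun z _ => O z)
          fun z hz => (hO z hz.1).mem_nhds (hzO z hz.1)
        refine (t.finite_toSet.image fun z => connectedComponentIn B z.1).subset ?_
        rintro _ ⟨z, hz, rfl⟩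
        obtain ⟨x, hx, hzx⟩ := mem_iUnion₂.1 (htf hz)
        exact ⟨x, hx, connectedComponentIn_eq (hOB x x.2.1 ⟨hzx, hz.1⟩)⟩
      refine ih _ (?_ : _ < n) y hyB w hwQ' _ rfl
        (hVK.of_isClosed_subset isClosed_closure (closure_mono hV2)) (hG.mono hV2) rfl
      rw [← hn]
      refine ncard_lt_ncard (ssubset_iff_subset_ne.2
        ⟨image_mono (inter_subset_inter_right B hV2), fun h => ?_⟩) hfin
      obtain ⟨x, hx, hxy⟩ := h.symm.subset ⟨y, ⟨hyB, hyV⟩, rfl⟩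
      refine connectedComponentIn_subset Q'ᶜ w hx.2 ?_
      change connectedComponentIn B x = Q' at hxy
      exact hxy ▸ mem_connectedComponentIn hx.1
    · push Not at hW
      -- now `Q'` has connected complement, so it is a closed cell
      have hVeq : connectedComponentIn Q'ᶜ q = Q'ᶜ :=
        subset_antisymm (connectedComponentIn_subset _ _) hW
      have hfr : closure Q'ᶜ \ Q'ᶜ = Q' \ interior Q' := by
        rw [closure_compl, Set.sdiff_compl, inter_comm, sdiff_eq]
      have hK' : IsCompact Q' := hVK.of_isClosed_subset hQ'c (hQ'V.trans subset_closure)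
      have hJ := hQ'.jordan_frontier (v := q) hQ'c hQ'p ⟨y, hyQ'⟩ (fun h => hdisj q h hqQ)
      rw [hVeq, hfr] at hJ
      have hun : interior Q' ∪ Q' \ interior Q' = Q' := union_sdiff_cancel interior_subset
      have hcell : IsCell V q (interior Q') (Q' \ interior Q') :=
        { isOpen := isOpen_interior
          conn := hQ'.isPreconnected_interior hQ'p
          jordan := hJ (hK'.diff isOpen_interior)
          conn_ext := by rw [hun, ← hVeq]; exact isPreconnected_connectedComponentIn
          disj := disjoint_sdiff_right
          sub_closure := sdiff_subset.trans hQ'.subset_closure_interior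
          sub_closure_ext := by rw [hun, closure_compl]; exact fun z hz => hz.2
          compact := by rwa [hun]
          sub := interior_subset.trans hQ'V
          ext := by rw [hun]; exact fun h => hdisj q h hqQ }
      have := hcell.homeo_disc hG
      rw [hun] at this
      refine ⟨B, Or.inl rfl, y, hyB, fun z hz => ?_, this⟩
      obtain ⟨O, h1, h2, h3⟩ := hB.exists_nhd_component (connectedComponentIn_subset _ _ hz)
      exact ⟨O, h1, h2, by rwa [connectedComponentIn_eq hz]⟩
  · have hVB' : ∀ z ∈ V, z ∉ B := fun z hz hzB => hVB ⟨z, hzB, hz⟩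
    have hun : V ∪ closure V \ V = closure V := union_sdiff_cancel subset_closure
    obtain ⟨w, hw⟩ : (interior Q).Nonempty := by
      rw [← closure_nonempty_iff]; exact ⟨q, hQ.subset_closure_interior hqQ⟩
    have hcell : IsCell V w V (closure V \ V) :=
      { isOpen := hVo
        conn := isPreconnected_connectedComponentIn
        jordan := hQ.jordan_frontier hQc hQp ⟨q, hqQ⟩ hv (hVK.diff hVo)
        conn_ext := by rw [hun]; exact hQ.isPreconnected_ext hQc hQp ⟨q, hqQ⟩
        disj := disjoint_sdiff_right
        sub_closure := sdiff_subset
        sub_closure_ext := by rw [hun]; exact hQ.frontier_subset_closure_ext hQc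
        compact := by rwa [hun]
        sub := subset_rfl
        ext := by
          rw [hun]
          intro h
          obtain ⟨z, hz, hzV⟩ := mem_closure_iff.1 h _ isOpen_interior hw
          exact hVQ hzV (interior_subset hz) }
    have hD := hcell.homeo_disc hG
    rw [hun] at hD
    have hrel : ∀ z ∈ closure V, ∃ O, IsOpen O ∧ z ∈ O ∧ O ∩ (interior B)ᶜ ⊆ closure V := by
      intro z hz
      by_cases hzV : z ∈ V
      · exact ⟨V, hVo, hzV, inter_subset_left.trans subset_closure⟩
      · obtain ⟨O, h1, h2, h3, h4⟩ := hQ.exists_nhd_frontier hQc hz hzV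
        refine ⟨O, h1, h2, fun x hx => ?_⟩
        by_cases hxQ : x ∈ Q
        · exact (h4 ⟨hx.1, hxQ, fun h => hx.2 (interior_mono (connectedComponentIn_subset B q) h)⟩).1
        · exact subset_closure (h3 ⟨hx.1, hxQ⟩)
    have hvV : v ∈ closure V := subset_closure (mem_connectedComponentIn hv)
    have hsub : closure V ⊆ (interior B)ᶜ := fun z hz h => by
      obtain ⟨x, hx, hxV⟩ := mem_closure_iff.1 hz _ isOpen_interior h
      exact hVB' x hxV (interior_subset hx)
    have hcomp := component_eq_of_relOpen (isPreconnected_connectedComponentIn.closure)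
      isClosed_closure hsub hvV hrel
    exact ⟨_, Or.inr rfl, v, hsub hvV, by rwa [hcomp], by rwa [hcomp]⟩

end Innermost

/-! ### Descent from the universal cover -/

section Descent

/-- Brouwer's fixed point theorem in dimension two. -/
lemma exists_fixedPoint {f : ℂ → ℂ} (hf : ContinuousOn f (Metric.closedBall 0 1))
    (hm : MapsTo f (Metric.closedBall 0 1) (Metric.closedBall 0 1)) :
    ∃ z ∈ Metric.closedBall (0 : ℂ) 1, f z = z := by
  by_contra! hn
  have h1 : HasLog (fun z => dir (z - f z)) (Metric.closedBall 0 1) :=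
    allLog_of_convex (convex_closedBall _ _) _ (continuousOn_dir.comp (by fun_prop)
      fun z hz => by simpa [sub_eq_zero] using (hn z hz).symm)
  have hsub := Metric.sphere_subset_closedBall (x := (0 : ℂ)) (ε := 1)
  -- on the unit circle `z - f z = z * (1 - conj z * f z)`, whose last factor has positive real part
  have hz1 : ∀ z ∈ Metric.sphere (0 : ℂ) 1, z * (starRingEnd ℂ) z = 1 := fun z hz => by
    rw [Complex.mul_conj, Complex.normSq_eq_norm_sq, mem_sphere_zero_iff_norm.1 hz]
    norm_num
  have hsl : ∀ z ∈ Metric.sphere (0 : ℂ) 1,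
      1 - (starRingEnd ℂ) z * f z ∈ Complex.slitPlane := fun z hz => by
    have hle : ‖(starRingEnd ℂ) z * f z‖ ≤ 1 := by
      rw [norm_mul, RCLike.norm_conj, mem_sphere_zero_iff_norm.1 hz, one_mul]
      exact mem_closedBall_zero_iff.1 (hm (hsub hz))
    set w := (starRingEnd ℂ) z * f z with hw
    have hre : w.re ≤ 1 := (Complex.re_le_norm w).trans hle
    rcases hre.lt_or_eq with h | h
    · exact Or.inl (by simpa using h)
    · refine absurd ?_ (hn z (hsub hz))
      have him : w.im = 0 := by
        have := Complex.sq_norm_sub_sq_re w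
        rw [h] at this
        nlinarith [norm_nonneg w, sq_nonneg w.im]
      have hw1 : w = 1 := Complex.ext (by simpa using h) (by simpa using him)
      have : z * w = f z := by rw [hw, ← mul_assoc, hz1 z hz, one_mul]
      rw [← this, hw1, mul_one]
  have h2 : HasLog (fun z => dir (1 - (starRingEnd ℂ) z * f z)) (Metric.sphere 0 1) :=
    hasLog_dir_slit.comp (continuousOn_const.sub
      (Complex.continuous_conj.continuousOn.mul (hf.mono hsub))) hsl
  refine one_ne_zero (eq_zero_of_hasLog_sphere one_pos
    (((h1.mono hsub).div h2).congr fun z hz => ?_) : (1 : ℤ) = 0)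
  have hne := Complex.slitPlane_ne_zero (hsl z hz)
  have hz0 : z ≠ 0 := by rintro rfl; simp at hz
  have : z - f z = z * (1 - (starRingEnd ℂ) z * f z) := by
    rw [mul_sub, ← mul_assoc, hz1 z hz, one_mul, mul_one]
  rw [this, dir_mul hz0 hne]
  simp

lemma exists_fixedPoint_of_homeo {X : Type*} [TopologicalSpace X]
    (e : X ≃ₜ Metric.closedBall (0 : ℂ) 1) {τ : X → X} (hτ : Continuous τ) : ∃ x, τ x = x := by
  let P : ℂ → X := Function.extend Subtype.val e.symm fun _ => e.symm ⟨0, by simp⟩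
  have hPe : ∀ z : Metric.closedBall (0 : ℂ) 1, P z = e.symm z :=
    Subtype.val_injective.extend_apply _ _
  obtain ⟨z, hz, hf⟩ := exists_fixedPoint (f := fun z => (e (τ (P z)) : ℂ)) (by
    rw [continuousOn_iff_continuous_domRestrict]
    have : Continuous fun z => (e (τ (e.symm z)) : ℂ) := by fun_prop
    exact this.congr fun z => by simp [Set.domRestrict, hPe]) fun z _ => (e _).2
  refine ⟨P z, e.injective (Subtype.ext ?_)⟩
  rw [hf, show P z = e.symm ⟨z, hz⟩ from hPe ⟨z, hz⟩]
  simp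

variable {M S : Type*} [TopologicalSpace M] [TopologicalSpace S] [T2Space S]

/-- A disc component of `p ⁻¹' E` upstairs maps homeomorphically onto a component of `E`: a deck
transformation identifying two of its points preserves it, so it has a fixed point by Brouwer's
theorem and is trivial. -/
lemma component_disc [SimplyConnectedSpace M] [LocallyPathConnectedSpace M] {p : M → S}
    (hp : IsCoveringMap p) {E : Set S} {y : M} (hy : p y ∈ E)
    (ho : ∀ z ∈ connectedComponentIn (p ⁻¹' E) y, ∃ O, IsOpen O ∧ z ∈ O ∧
      O ∩ p ⁻¹' E ⊆ connectedComponentIn (p ⁻¹' E) y)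
    (hd : Nonempty (connectedComponentIn (p ⁻¹' E) y ≃ₜ Metric.closedBall (0 : ℂ) 1)) :
    Nonempty (connectedComponentIn E (p y) ≃ₜ Metric.closedBall (0 : ℂ) 1) := by
  obtain ⟨e⟩ := hd
  set D := connectedComponentIn (p ⁻¹' E) y with hD
  have hyD : y ∈ D := mem_connectedComponentIn hy
  have hDE : D ⊆ p ⁻¹' E := connectedComponentIn_subset _ _
  have hDc : IsCompact D := by
    have : CompactSpace D := e.symm.compactSpace
    exact isCompact_iff_compactSpace.2 this
  have hinj : InjOn p D := by
    intro a ha b hb hab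
    obtain ⟨τ, ⟨hτa, hτp⟩, -⟩ := hp.existsUnique_continuousMap_lifts ⟨p, hp.continuous⟩ a b hab.symm
    have hτE : ∀ x ∈ D, τ x ∈ p ⁻¹' E := fun x hx => by
      have := congrFun hτp x
      simp only [Function.comp, ContinuousMap.coe_mk] at this
      rw [mem_preimage, this]
      exact hDE hx
    have hDb : D = connectedComponentIn (p ⁻¹' E) b := connectedComponentIn_eq hb
    have hτD : MapsTo τ D D := by
      rw [mapsTo_iff_image_subset]
      conv_rhs => rw [hDb]
      exact (isPreconnected_connectedComponentIn.image _ τ.continuous.continuousOn)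
        |>.subset_connectedComponentIn ⟨a, ha, hτa⟩ (image_subset_iff.2 hτE)
    obtain ⟨x, hx⟩ := exists_fixedPoint_of_homeo e (τ.continuous.continuousOn.mapsToRestrict hτD)
    have := hp.eq_of_comp_eq τ.continuous continuous_id (by rw [hτp]; rfl) (x : M)
      (congrArg Subtype.val hx)
    rw [← hτa, this, id]
  have hcomp : connectedComponentIn E (p y) = p '' D := by
    refine component_eq_of_relOpen
      (isPreconnected_connectedComponentIn.image _ hp.continuous.continuousOn)
      (hDc.image hp.continuous).isClosed (image_subset_iff.2 hDE) ⟨y, hyD, rfl⟩ ?_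
    rintro _ ⟨z, hz, rfl⟩
    obtain ⟨O, hO, hzO, hOD⟩ := ho z hz
    refine ⟨p '' O, hp.isOpenMap _ hO, ⟨z, hzO, rfl⟩, ?_⟩
    rintro _ ⟨⟨w, hw, rfl⟩, hwE⟩
    exact ⟨w, hOD ⟨hw, hwE⟩, rfl⟩
  rw [hcomp]
  obtain ⟨g⟩ := homeo_of_bijOn hDc hp.continuous.continuousOn hinj.bijOn_image
  exact ⟨g.symm.trans e⟩

omit [T2Space S] in
/-- A chart of the subspace `B` gives a parametrization in the sense of `BChart`. -/
lemma exists_bchart {B : Set S} {U : Set B} (hU : IsOpen U) {H : Set ℂ} (φ : U ≃ₜ H) (u : U)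
    {H' : Set ℂ} {r : ℝ} (hr : 0 < r) (hH : ∀ z, ‖z‖ < r → (z ∈ H' ↔ z + φ u ∈ H)) :
    ∃ h, BChart H' B ((u : B) : S) h r := by
  let g : ℂ → S := Function.extend Subtype.val (fun y : H => ((φ.symm y : B) : S)) fun _ => u
  have hg : ∀ y : H, g y = ((φ.symm y : B) : S) := Subtype.val_injective.extend_apply _ _
  have hgc : ContinuousOn g H := by
    rw [continuousOn_iff_continuous_domRestrict]
    have : Continuous fun y : H => ((φ.symm y : B) : S) := by fun_prop
    exact this.congr fun y => (hg y).symm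
  have hmaps : MapsTo (fun z => z + (φ u : ℂ)) (H' ∩ Metric.ball 0 r) H := fun z hz =>
    (hH z (mem_ball_zero_iff.1 hz.2)).1 hz.1
  refine ⟨fun z => g (z + φ u), hr, hgc.comp (by fun_prop) hmaps, ?_, ?_, ?_⟩
  · intro z hz w hw hzw
    have h1 := hg ⟨_, hmaps hz⟩
    have h2 := hg ⟨_, hmaps hw⟩
    simp only at h1 h2 hzw
    rw [h1, h2] at hzw
    have := φ.symm.injective (Subtype.ext (Subtype.ext hzw))
    simpa using this
  · simp [hg]
  · intro A hA
    have hW : IsOpen {v : U | (φ v : ℂ) - φ u ∈ A ∩ Metric.ball 0 r} :=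
      (hA.inter Metric.isOpen_ball).preimage (by fun_prop)
    obtain ⟨O, hO, hOW⟩ := isOpen_induced_iff.1 (hU.isOpenMap_subtype_val _ hW)
    refine ⟨O, hO, ?_⟩
    ext s
    constructor
    · rintro ⟨hsO, hsB⟩
      have : (⟨s, hsB⟩ : B) ∈ Subtype.val '' {v : U | (φ v : ℂ) - φ u ∈ A ∩ Metric.ball 0 r} := by
        rw [← hOW]; exact hsO
      obtain ⟨v, ⟨hvA, hvb⟩, hv⟩ := this
      refine ⟨φ v - φ u, ⟨hvA, (hH _ (mem_ball_zero_iff.1 hvb)).2 (by simp), hvb⟩, ?_⟩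
      simp [hg, hv]
    · rintro ⟨z, ⟨hzA, hz⟩, rfl⟩
      have h1 := hg ⟨_, hmaps hz⟩
      simp only at h1
      have : ((φ.symm ⟨_, hmaps hz⟩ : U) : B) ∈ Subtype.val ⁻¹' O := by
        rw [hOW]
        exact ⟨_, by simpa using ⟨hzA, mem_ball_zero_iff.1 hz.2⟩, rfl⟩
      change g (z + φ u) ∈ O ∩ B
      rw [h1]
      exact ⟨this, Subtype.prop _⟩

omit [T2Space S] in
lemma isBSurface_of_charts {B : Set S} (hB : ∀ x : B, ∃ U : Set B, IsOpen U ∧ x ∈ U ∧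
      (Nonempty (U ≃ₜ EuclideanSpace ℝ (Fin 2)) ∨
        Nonempty (U ≃ₜ {p : EuclideanSpace ℝ (Fin 2) | 0 ≤ p 1}))) : IsBSurface B := by
  intro x hx
  obtain ⟨U, hU, hxU, ⟨⟨φ⟩⟩ | ⟨⟨φ⟩⟩⟩ := hB ⟨x, hx⟩
  · obtain ⟨h, hh⟩ := exists_bchart (H' := univ) hU
      ((φ.trans Complex.orthonormalBasisOneI.repr.symm.toHomeomorph).trans
        (Homeomorph.Set.univ ℂ).symm) ⟨_, hxU⟩ one_pos (by simp)
    exact ⟨h, 1, Or.inl hh⟩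
  · obtain ⟨ψ⟩ : Nonempty (U ≃ₜ halfPlane) := ⟨φ.trans
      (Homeomorph.subtype Complex.orthonormalBasisOneI.repr.symm.toHomeomorph fun q => by
        simp [halfPlane, Complex.orthonormalBasisOneI_repr_symm_apply])⟩
    have h0 : 0 ≤ (ψ ⟨_, hxU⟩ : ℂ).im := (ψ ⟨_, hxU⟩).2
    rcases h0.lt_or_eq with h1 | h1
    · obtain ⟨h, hh⟩ := exists_bchart (H' := univ) hU ψ ⟨_, hxU⟩ h1 fun z hz => by
        have := (abs_le.1 ((Complex.abs_im_le_norm z).trans hz.le)).1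
        refine iff_of_true (mem_univ z) ?_
        change 0 ≤ z.im + (ψ ⟨_, hxU⟩ : ℂ).im
        linarith
      exact ⟨h, _, Or.inl hh⟩
    · obtain ⟨h, hh⟩ := exists_bchart (H' := halfPlane) hU ψ ⟨_, hxU⟩ one_pos fun z _ => by
        change 0 ≤ z.im ↔ 0 ≤ z.im + (ψ ⟨_, hxU⟩ : ℂ).im
        rw [← h1, add_zero]
      exact ⟨h, 1, Or.inr hh⟩

omit [T2Space S] in
lemma IsBSurface.preimage {p : M → S} (hp : IsLocalHomeomorph p) {B : Set S} (hB : IsBSurface B) :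
    IsBSurface (p ⁻¹' B) := by
  intro m hm
  obtain ⟨F, hF, rfl⟩ := hp m
  have key : ∀ H : Set ℂ, 0 ∈ H → ∀ h r, BChart H B (F m) h r →
      ∃ h' r', BChart H (F ⁻¹' B) m h' r' := by
    intro H h0 h r hh
    obtain ⟨r', hr', hrr, hN⟩ := hh.exists_shrink h0 (F.open_target.mem_nhds (F.map_source hF))
    replace hh := hh.shrink hr' hrr
    have hm : MapsTo h (H ∩ Metric.ball 0 r') F.target := mapsTo_iff_image_subset.2 hN
    refine ⟨fun z => F.symm (h z), r', hr', F.continuousOn_symm.comp hh.cont hm,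
      F.symm.injOn.comp hh.inj hm, ?_, fun A hA => ?_⟩
    · rw [hh.zero, F.left_inv hF]
    · obtain ⟨O, hO, hOB⟩ := hh.isOpen A hA
      refine ⟨F.source ∩ F ⁻¹' O, F.isOpen_inter_preimage hO, ?_⟩
      ext w
      constructor
      · rintro ⟨⟨hw, hwO⟩, hwB⟩
        obtain ⟨z, hz, hzw⟩ : F w ∈ h '' (A ∩ (H ∩ Metric.ball 0 r')) := hOB ▸ ⟨hwO, hwB⟩
        refine ⟨z, hz, ?_⟩
        change F.symm (h z) = w
        rw [hzw, F.left_inv hw]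
      · rintro ⟨z, hz, rfl⟩
        have h1 : h z ∈ O ∩ B := hOB ▸ ⟨z, hz, rfl⟩
        have h2 := hm hz.2
        refine ⟨⟨F.map_target h2, ?_⟩, ?_⟩
        · simpa [F.right_inv h2] using h1.1
        · simpa [F.right_inv h2] using h1.2
  obtain ⟨h, r, hh | hh⟩ := hB _ hm
  · obtain ⟨h', r', hh'⟩ := key _ (mem_univ _) h r hh
    exact ⟨h', r', Or.inl hh'⟩
  · obtain ⟨h', r', hh'⟩ := key _ zero_mem_halfPlane h r hh
    exact ⟨h', r', Or.inr hh'⟩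

end Descent

section Main

variable {S : Type*} [TopologicalSpace S] [T2Space S] [SecondCountableTopology S]
  [ConnectedSpace S]

/-- The theorem for a loop parametrized by any compact connected space, with charts in `ℂ`. -/
theorem exists_disc_component {Y : Type} [TopologicalSpace Y] [CompactSpace Y] [ConnectedSpace Y]
    (hsurf : ∀ x : S, ∃ U : Set S, IsOpen U ∧ x ∈ U ∧ Nonempty (U ≃ₜ ℂ))
    {C : Set S} (hCc : IsClosed C) (hC : IsConnected C) (hCs : IsBSurface C) (c : C(Y, C))
    {s : S} (hS : ContinuousMap.Homotopic ⟨fun v => (c v : S), by fun_prop⟩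
      (ContinuousMap.const Y s))
    (hn : ¬ ∃ q : C, ContinuousMap.Homotopic c (ContinuousMap.const Y q)) :
    ∃ x ∈ (interior C)ᶜ,
      Nonempty (connectedComponentIn (interior C)ᶜ x ≃ₜ Metric.closedBall (0 : ℂ) 1) := by
  obtain ⟨M, _, _, p, hp, hps, _⟩ := exists_cover_surface hsurf
  have := ChartedSpace.locallyPathConnectedSpace ℂ M
  set B := p ⁻¹' C with hBdef
  have hB : IsBSurface B := hCs.preimage hp.isLocalHomeomorph
  have hBc : IsClosed B := hCc.preimage hp.continuous
  have hInt : (interior B)ᶜ = p ⁻¹' (interior C)ᶜ := by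
    rw [hBdef, ← hp.isOpenMap.preimage_interior_eq_interior_preimage hp.continuous, preimage_compl]
  -- the contraction of the loop, started at its constant end so that it lifts
  obtain ⟨G⟩ := hS.symm
  obtain ⟨m, rfl⟩ := hps s
  have hG0 : ∀ a, G.toContinuousMap (0, a) = p (ContinuousMap.const Y m a) := fun a => G.map_zero_left a
  set L := hp.liftHomotopy G.toContinuousMap (ContinuousMap.const Y m) hG0 with hL
  have hLp : ∀ x, p (L x) = G x := congrFun (hp.liftHomotopy_lifts G.toContinuousMap _ hG0)
  have hL0 : ∀ a, L (0, a) = m := hp.liftHomotopy_zero G.toContinuousMap _ hG0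
  have hL1 : ∀ a, p (L (1, a)) = c a := fun a => (hLp _).trans (G.map_one_left a)
  have hK : IsCompact (range L) := isCompact_range L.continuous
  have hL1B : ∀ a, L (1, a) ∈ B := fun a => by rw [mem_preimage, hL1]; exact (c a).2
  obtain ⟨a₀⟩ : Nonempty Y := inferInstance
  set q := L (1, a₀) with hq
  set Q := connectedComponentIn B q with hQ
  have hqB : q ∈ B := hL1B a₀
  have hL1Q : ∀ a, L (1, a) ∈ Q := fun a =>
    (isPreconnected_range (f := fun a => L (1, a)) (by fun_prop)).subset_connectedComponentIn
      ⟨a₀, rfl⟩ (range_subset_iff.2 hL1B) ⟨a, rfl⟩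
  have hQB : Q ⊆ B := connectedComponentIn_subset _ _
  by_cases hv : ∃ v ∉ Q, IsJordan (closure (connectedComponentIn Qᶜ v) \ connectedComponentIn Qᶜ v) ∧
      connectedComponentIn Qᶜ v ⊆ range L ∧ NoG (connectedComponentIn Qᶜ v)
  · obtain ⟨v, hvQ, -, hVK, hG⟩ := hv
    have hVc : IsCompact (closure (connectedComponentIn Qᶜ v)) :=
      hK.of_isClosed_subset isClosed_closure (hK.isClosed.closure_subset_iff.2 hVK)
    obtain ⟨E, hE, y, hyE, ho, hd⟩ := hB.exists_innermost hBc _ q hqB v hvQ _ rfl hVc hG rfl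
    rcases hE with rfl | rfl
    · -- here `C` itself is a disc, hence contractible
      obtain ⟨e⟩ := component_disc hp hyE ho hd
      rw [hC.isPreconnected.connectedComponentIn hyE] at e
      have : ContractibleSpace (Metric.closedBall (0 : ℂ) 1) :=
        (convex_closedBall (0 : ℂ) 1).contractibleSpace ⟨0, by simp⟩
      have : ContractibleSpace C := e.contractibleSpace
      obtain ⟨x, hx⟩ := (id_nullhomotopic C).comp_left c
      exact absurd ⟨x, hx⟩ hn
    · rw [hInt] at hyE ho hd
      exact ⟨p y, hyE, component_disc hp hyE ho hd⟩
  · exfalso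
    obtain ⟨R, hRc, hRm, hRQ⟩ := (hB.component (x := q)).exists_fill
      (isClosed_connectedComponentIn' hBc) isPreconnected_connectedComponentIn ⟨q, hL1Q a₀⟩ hK
      (fun v hvQ h => hv ⟨v, hvQ, h⟩)
    have hRL : Continuous fun x => R (L x) :=
      hRc.comp_continuous L.continuous fun x => mem_range_self x
    have hRB : ∀ x, p (R (L x)) ∈ C := fun x => hQB (hRm (mem_range_self x))
    refine hn ⟨⟨p (R m), by simpa [hL0] using hRB (0, a₀)⟩, ContinuousMap.Homotopic.symm ⟨?_⟩⟩
    exact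
      { toFun := fun x => ⟨p (R (L x)), hRB x⟩
        continuous_toFun := (hp.continuous.comp hRL).subtype_mk _
        map_zero_left := fun a => Subtype.ext (by simp [hL0])
        map_one_left := fun a => Subtype.ext (by simp [hRQ _ (hL1Q a), hL1]) }

end Main

end SurfaceDisc

/-- Lemma A.3: if a closed connected subsurface `C` of a surface `S` contains a loop
which is null-homotopic in `S` but not in `C`, then some connected component of the
complement of the interior of `C` is homeomorphic to a closed disc. -/
theorem stmt_11 {S : Type*} [TopologicalSpace S] [T2Space S] [SecondCountableTopology S]
    [ConnectedSpace S]
    (hsurf : ∀ x : S, ∃ U : Set S, IsOpen U ∧ x ∈ U ∧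
      Nonempty (U ≃ₜ EuclideanSpace ℝ (Fin 2)))
    (C : Set S) (hCclosed : IsClosed C) (hCconn : IsConnected C)
    (hCsurf : ∀ x : C, ∃ U : Set C, IsOpen U ∧ x ∈ U ∧
      (Nonempty (U ≃ₜ EuclideanSpace ℝ (Fin 2)) ∨
        Nonempty (U ≃ₜ {p : EuclideanSpace ℝ (Fin 2) | 0 ≤ p 1})))
    (c : Metric.sphere (0 : EuclideanSpace ℝ (Fin 2)) 1 → C) (hccont : Continuous c)
    (hnullS : ∃ p : S, ContinuousMap.Homotopic
      ⟨fun v => ((c v : C) : S), by continuity⟩ (ContinuousMap.const _ p))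
    (hnotnullC : ¬ ∃ q : C, ContinuousMap.Homotopic ⟨c, hccont⟩ (ContinuousMap.const _ q)) :
    ∃ x ∈ (interior C)ᶜ,
      Nonempty ((connectedComponentIn (interior C)ᶜ x) ≃ₜ
        (Metric.closedBall (0 : EuclideanSpace ℝ (Fin 2)) 1)) := by
  obtain ⟨s, hs⟩ := hnullS
  have : ConnectedSpace (Metric.sphere (0 : EuclideanSpace ℝ (Fin 2)) 1) :=
    isConnected_iff_connectedSpace.1 (isConnected_sphere
      (by rw [← Module.finrank_eq_rank, finrank_euclideanSpace_fin]; norm_num) 0 zero_le_one)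
  obtain ⟨x, hx, ⟨e⟩⟩ := SurfaceDisc.exists_disc_component
    (fun x => by
      obtain ⟨U, hU, hxU, ⟨φ⟩⟩ := hsurf x
      exact ⟨U, hU, hxU, ⟨φ.trans Complex.orthonormalBasisOneI.repr.symm.toHomeomorph⟩⟩)
    hCclosed hCconn (SurfaceDisc.isBSurface_of_charts hCsurf) ⟨c, hccont⟩ hs hnotnullC
  exact ⟨x, hx, ⟨e.trans (Homeomorph.subtype Complex.orthonormalBasisOneI.repr.toHomeomorph
    fun z => by simp)⟩⟩
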